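/- (Crespina Lemma.) Let 𝔞 be an ideal of the ring O(ℝⁿ) of real-analytic functions on ℝⁿ. Then there exists f in the saturation 𝔞~ of 𝔞 such that: (i) f(x) ≥ 0 for all x ∈ ℝⁿ and {x : f(x) = 0} = Z(𝔞) := {x ∈ ℝⁿ : a(x) = 0 for all a ∈ 𝔞}; and (ii) for every g ∈ 𝔞~ there exists u ∈ O(ℝⁿ) with u(x) > 0 for all x ∈ ℝⁿ and g(x)² ≤ f(x)·u(x) for all x ∈ ℝⁿ. -/

import Mathlib

/-!
The function `f` is a convergent sum `∑ ε_k ∑_{b ∈ G_k} b²` of weighted squares of elements of `𝔞`,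
where the finite sets `G_k ⊆ 𝔞` generate `𝔞` over the cube `[-(k+1), k+1]ⁿ`. Then `f ≥ 0` and its
zero set is that of `𝔞`. Near any point an element of `𝔞~` is a combination of the members of some
`G_j`, so its square is locally at most a constant times `f`; a positive analytic function growing
fast enough (`growth`) makes the bound global. What needs work is the choice of the `G_k` and the
`ε_k` in such a way that `f` is analytic and lies in `𝔞~`.

*Finite generation over a cube* (`finite_gen`). Germs of holomorphic functions form noetherian
rings, so finitely many elements of `𝔞` generate its stalk at a real point `p`. They generate the
stalks at all nearby real points (`strong_noether`): by induction on the dimension, with Weierstrass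
polynomials having real coefficients and Oka's coherence theorem `oka`, all real points near `p` are
joined to `p` by chains of connected sets along which membership in the image of a matrix of germs
is a closed condition. It is always open, so it propagates. Compactness gives a finite set generating
all stalks over the cube, and Cartan's Theorem B for real boxes (`thmB_box`, proved by gluing across
hyperplanes with Cartan's lemma on factoring matrices close to the identity) gives global
coefficients.

*Uniform domains of holomorphy* (`gen_seq`). A general series of this kind would fail to be analytic,
since the coefficients expressing later generators through `G_j` have no common complex domain. The
remedy is to split (`splitting`) each coefficient `c`, holomorphic near the cube `[-(k+1), k+1]ⁿ`, as
`v + w` on `[-k, k]ⁿ`, with `v` analytic on `ℝⁿ` and `w` holomorphic on the full tube over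
`[-k, k]ⁿ`. This comes from Cauchy's formula on a product of rectangles, the Cauchy kernels over
vertical sides being separated from those over horizontal sides by partial fractions
(`kernel_split`). Subtracting from a new generator the combination with coefficients `v`, which lies
in `𝔞`, leaves a generator whose coefficients `w` are holomorphic on the tube.

*Weights* (`exists_weights`). Over `[-j, j]ⁿ` the tail of the series is now a quadratic form in the
members of `G_j`, whose coefficients are series of functions holomorphic on a fixed complex
neighbourhood and, for small `ε_k`, uniformly convergent there. Hence `f` is analytic, and near each
point it is a combination of the members of some `G_j`.
-/

/-- The ring of real-analytic functions on `ℝⁿ`, as a subring of the pointwise function ring. -/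
noncomputable def ORn (n : ℕ) : Subring ((Fin n → ℝ) → ℝ) where
  carrier := {f | ∀ x, AnalyticAt ℝ f x}
  mul_mem' hf hg x := (hf x).mul (hg x)
  one_mem' _ := analyticAt_const
  add_mem' hf hg x := (hf x).add (hg x)
  zero_mem' _ := analyticAt_const
  neg_mem' hf x := (hf x).neg

/-- The saturation of a set of global real-analytic functions on `ℝⁿ`. -/
def saturation (n : ℕ) (a : Set (ORn n)) : Set (ORn n) :=
  {g | ∀ x : Fin n → ℝ, ∃ U : Set (Fin n → ℝ), IsOpen U ∧ x ∈ U ∧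
    ∃ (r : ℕ) (A : Fin r → ORn n) (c : Fin r → ((Fin n → ℝ) → ℝ)),
      (∀ i, A i ∈ a) ∧ (∀ i, ∀ y ∈ U, AnalyticAt ℝ (c i) y) ∧
      ∀ y ∈ U, (g : (Fin n → ℝ) → ℝ) y = ∑ i, c i y * (A i : (Fin n → ℝ) → ℝ) y}

/-- The common zero set of an ideal of real-analytic functions on `ℝⁿ`. -/
def ZR (n : ℕ) (a : Ideal (ORn n)) : Set (Fin n → ℝ) :=
  {x | ∀ f ∈ a, (f : (Fin n → ℝ) → ℝ) x = 0}

namespace Crespina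
open Set Filter Topology Complex Metric
set_option linter.unusedSectionVars false

/-! ### Osgood's lemma -/

section
/-- Cauchy's integral formula on a polydisc, for continuous separately holomorphic functions. -/
theorem cauchy_torus : ∀ (n : ℕ) (c : Fin n → ℂ) (R : ℝ), 0 < R → ∀ (f : (Fin n → ℂ) → ℂ),
    ContinuousOn f (closedBall c R) →
    (∀ w ∈ closedBall c R, ∀ i, DifferentiableAt ℂ (fun t => f (Function.update w i t)) (w i)) →
    ∀ z ∈ ball c R,
    (torusIntegral (fun w => (∏ i, (w i - z i)⁻¹) * f w) c (fun _ => R)) =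
      (2 * Real.pi * I) ^ n * f z := by
  intro n
  induction n with
  | zero =>
    intro c R hR f hc hd z hz
    simp [torusIntegral_dim0, Subsingleton.elim z c]
  | succ n ih =>
    intro c R hR f hc hd z hz
    have hz' : ∀ i, dist (z i) (c i) < R := by
      intro i; exact lt_of_le_of_lt (dist_le_pi_dist z c i) hz
    have hInt : TorusIntegrable (fun w => (∏ i, (w i - z i)⁻¹) * f w) c (fun _ => R) := by
      unfold TorusIntegrable
      refine ContinuousOn.integrableOn_compact isCompact_Icc (Continuous.continuousOn ?_)
      have hmem : ∀ θ, torusMap c (fun _ => R) θ ∈ closedBall c R := by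
        intro θ
        rw [mem_closedBall, dist_pi_le_iff hR.le]
        intro i
        simp [torusMap, dist_eq_norm, abs_of_pos hR]
      have hmc : Continuous (torusMap c (fun _ => R)) := by unfold torusMap; fun_prop
      refine Continuous.mul ?_ (hc.comp_continuous hmc hmem)
      refine continuous_finsetProd _ fun i _ => Continuous.inv₀ (by fun_prop) ?_
      intro θ h0
      have h1 : torusMap c (fun _ => R) θ i = z i := by linear_combination h0
      have h2 := hz' i
      rw [← h1] at h2
      simp [torusMap, dist_eq_norm, abs_of_pos hR] at h2
    rw [torusIntegral_succ hInt]
    have hcons : ∀ x y, x ∈ closedBall (c 0) R → y ∈ closedBall (c ∘ Fin.succ) R →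
        (Fin.cons x y : Fin (n+1) → ℂ) ∈ closedBall c R := by
      intro x y hx hy
      rw [mem_closedBall, dist_pi_le_iff hR.le] at *
      intro i
      refine Fin.cases ?_ (fun j => ?_) i
      · simpa using hx
      · simpa using hy j
    have hzt : (Fin.tail z) ∈ ball (c ∘ Fin.succ) R := by
      rw [mem_ball, dist_pi_lt_iff hR]
      intro j; exact hz' j.succ
    have inner : ∀ x ∈ sphere (c 0) R,
        (torusIntegral (fun y => (∏ i, ((Fin.cons x y : Fin (n+1) → ℂ) i - z i)⁻¹) *
          f (Fin.cons x y)) (c ∘ Fin.succ) ((fun _ => R) ∘ Fin.succ : Fin n → ℝ)) =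
        (x - z 0)⁻¹ • ((2 * Real.pi * I) ^ n * f (Fin.cons x (Fin.tail z))) := by
      intro x hx
      have hx' := sphere_subset_closedBall hx
      have := ih (c ∘ Fin.succ) R hR (fun y => f (Fin.cons x y)) ?_ ?_ (Fin.tail z) hzt
      · rw [← this, smul_eq_mul, ← torusIntegral_const_mul]
        congr 1
        ext y
        simp [Fin.prod_univ_succ, Fin.tail]
        ring
      · refine hc.comp (Continuous.continuousOn (by fun_prop)) fun y hy => hcons x y hx' hy
      · intro w hw i
        have := hd (Fin.cons x w) (hcons x w hx' hw) i.succ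
        simpa [Fin.cons_update] using this
    rw [circleIntegral.integral_congr hR.le inner]
    have hz0 : z 0 ∈ ball (c 0) R := hz' 0
    rw [Complex.circleIntegral_sub_inv_smul_of_differentiable_on_off_countable countable_empty hz0]
    · simp [pow_succ]; ring_nf
    · refine ContinuousOn.mul continuousOn_const (hc.comp (Continuous.continuousOn (by fun_prop))
        fun x hx => hcons x _ hx (ball_subset_closedBall hzt))
    · intro x hx
      have := hd (Fin.cons x (Fin.tail z)) (hcons x _ (ball_subset_closedBall hx.1)
        (ball_subset_closedBall hzt)) 0
      simp at this
      exact this.const_mul _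

/-- Osgood's lemma in coordinates: the Cauchy kernel is analytic in `z` with values in the Banach
algebra of continuous functions on the torus, and integration is a continuous functional. -/
theorem osgood_pi {n : ℕ} {c : Fin n → ℂ} {R : ℝ} (hR : 0 < R) {f : (Fin n → ℂ) → ℂ}
    (hc : ContinuousOn f (closedBall c R))
    (hd : ∀ w ∈ closedBall c R, ∀ i,
      DifferentiableAt ℂ (fun t => f (Function.update w i t)) (w i)) :
    AnalyticAt ℂ f c := by
  let T : Set (Fin n → ℝ) := Icc 0 fun _ => 2 * Real.pi
  have : CompactSpace T := isCompact_iff_compactSpace.mp isCompact_Icc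
  let m : MeasureTheory.Measure T := MeasureTheory.Measure.comap Subtype.val MeasureTheory.volume
  have : MeasureTheory.IsFiniteMeasure m := by
    refine ⟨?_⟩
    rw [MeasureTheory.Measure.comap_apply _ Subtype.val_injective
      (fun s hs => measurableSet_Icc.subtype_image hs) _ MeasurableSet.univ]
    refine lt_of_le_of_lt (MeasureTheory.measure_mono (t := T) (Subtype.coe_image_subset _ _)) ?_
    exact isCompact_Icc.measure_lt_top
  -- integration against `m`
  let L : C(T, ℂ) →L[ℂ] ℂ :=
    LinearMap.mkContinuous
      { toFun := fun g => ∫ t, g t ∂m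
        map_add' := fun g h => MeasureTheory.integral_add
          (g.continuous.integrable_of_hasCompactSupport (HasCompactSupport.of_compactSpace _))
          (h.continuous.integrable_of_hasCompactSupport (HasCompactSupport.of_compactSpace _))
        map_smul' := fun a g => MeasureTheory.integral_smul a g }
      (m.real univ) (fun g => by
        have := MeasureTheory.norm_integral_le_of_norm_le_const (μ := m) (f := g) (C := ‖g‖)
          (Eventually.of_forall fun t => g.norm_coe_le_norm t)
        simpa [mul_comm] using this)
  have hmem : ∀ θ, torusMap c (fun _ => R) θ ∈ closedBall c R := by
    intro θ
    rw [mem_closedBall, dist_pi_le_iff hR.le]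
    intro i
    simp [torusMap, dist_eq_norm, abs_of_pos hR]
  have hmc : Continuous (torusMap c (fun _ => R)) := by unfold torusMap; fun_prop
  let W : Fin n → C(T, ℂ) := fun i =>
    ⟨fun t => torusMap c (fun _ => R) t i, by fun_prop⟩
  let G : C(T, ℂ) := ⟨fun t => (∏ i : Fin n, (R * exp (t.1 i * I) * I)) *
    f (torusMap c (fun _ => R) t), by
      refine Continuous.mul (continuous_finsetProd _ fun i _ =>
        (continuous_const.mul (Complex.continuous_exp.comp ((Complex.continuous_ofReal.comp
          ((continuous_apply i).comp continuous_subtype_val)).mul continuous_const))).mul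
          continuous_const) (hc.comp_continuous (by fun_prop) fun t => hmem _)⟩
  let K : (Fin n → ℂ) → C(T, ℂ) := fun z =>
    (∏ i, Ring.inverse (W i - algebraMap ℂ C(T, ℂ) (z i))) * G
  have hne : ∀ z ∈ ball c R, ∀ i, ∀ t : T, torusMap c (fun _ => R) t i - z i ≠ 0 := by
    intro z hz i t h0
    have h1 : torusMap c (fun _ => R) t i = z i := by linear_combination h0
    have h2 := lt_of_le_of_lt (dist_le_pi_dist z c i) hz
    rw [← h1] at h2
    simp [torusMap, dist_eq_norm, abs_of_pos hR] at h2
  have hunit : ∀ z ∈ ball c R, ∀ i, IsUnit (W i - algebraMap ℂ C(T, ℂ) (z i)) := by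
    intro z hz i
    rw [ContinuousMap.isUnit_iff_forall_ne_zero]
    intro t
    exact hne z hz i t
  have hinv : ∀ z ∈ ball c R, ∀ i, ∀ t : T,
      Ring.inverse (W i - algebraMap ℂ C(T, ℂ) (z i)) t =
        (torusMap c (fun _ => R) t i - z i)⁻¹ := by
    intro z hz i t
    have h1 := Ring.inverse_mul_cancel _ (hunit z hz i)
    have h2 := DFunLike.congr_fun h1 t
    exact eq_inv_of_mul_eq_one_left h2
  have hK : AnalyticAt ℂ K c := by
    refine AnalyticAt.mul ?_ analyticAt_const
    refine Finset.analyticAt_fun_prod _ fun i _ => ?_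
    have hu := hunit c (mem_ball_self hR) i
    have h1 : AnalyticAt ℂ (Ring.inverse : C(T, ℂ) → C(T, ℂ))
        (W i - algebraMap ℂ C(T, ℂ) (c i)) := by
      have := analyticAt_inverse (𝕜 := ℂ) hu.unit
      simpa using this
    refine AnalyticAt.fun_comp (f := fun z : Fin n → ℂ => W i - algebraMap ℂ C(T, ℂ) (z i)) h1 ?_
    refine analyticAt_const.sub ?_
    exact ((Algebra.linearMap ℂ C(T, ℂ)).toContinuousLinearMap.comp
      (ContinuousLinearMap.proj (R := ℂ) (φ := fun _ : Fin n => ℂ) i)).analyticAt c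
  have hLK : AnalyticAt ℂ (fun z => ((2 * Real.pi * I : ℂ) ^ n)⁻¹ * L (K z)) c :=
    analyticAt_const.mul ((L.analyticAt _).comp hK)
  refine hLK.congr ?_
  filter_upwards [ball_mem_nhds c hR] with z hz
  have h1 := cauchy_torus n c R hR f hc hd z hz
  have h2 : L (K z) = torusIntegral (fun w => (∏ i, (w i - z i)⁻¹) * f w) c (fun _ => R) := by
    unfold torusIntegral
    rw [← MeasureTheory.integral_subtype_comap measurableSet_Icc]
    change ∫ t, K z t ∂m = _
    refine MeasureTheory.integral_congr_ae (Eventually.of_forall fun t => ?_)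
    simp only [K, G, ContinuousMap.mul_apply, ContinuousMap.coe_prod, Finset.prod_apply,
      ContinuousMap.coe_mk, smul_eq_mul]
    rw [Finset.prod_congr rfl fun i _ => hinv z hz i t]
    ring
  rw [h2, h1]
  have : (2 * Real.pi * I : ℂ) ^ n ≠ 0 := pow_ne_zero _ (by simp [Real.pi_ne_zero])
  field_simp

/-- Osgood's lemma: a continuous function on an open set of a finite-dimensional complex space
which is holomorphic along every complex line is analytic. -/
theorem osgood {E : Type*} [NormedAddCommGroup E] [NormedSpace ℂ E] [FiniteDimensional ℂ E]
    {U : Set E} (hU : IsOpen U) {f : E → ℂ} (hc : ContinuousOn f U)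
    (hd : ∀ z ∈ U, ∀ v : E, DifferentiableAt ℂ (fun t : ℂ => f (z + t • v)) 0) :
    ∀ z ∈ U, AnalyticAt ℂ f z := by
  intro z hz
  let e : E ≃L[ℂ] (Fin (Module.finrank ℂ E) → ℂ) :=
    ContinuousLinearEquiv.ofFinrankEq (by simp)
  have hV : e.symm ⁻¹' U ∈ 𝓝 (e z) :=
    (hU.preimage e.symm.continuous).mem_nhds (by simpa using hz)
  obtain ⟨R, hR, hRU⟩ := Metric.nhds_basis_closedBall.mem_iff.mp hV
  have key : AnalyticAt ℂ (f ∘ e.symm) (e z) := by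
    refine osgood_pi hR (hc.comp e.symm.continuous.continuousOn hRU) ?_
    intro w hw i
    have h1 := hd (e.symm w) (hRU hw) (e.symm (Pi.single i 1))
    have h2 : (fun t => (f ∘ e.symm) (Function.update w i t)) =
        (fun t : ℂ => f (e.symm w + t • e.symm (Pi.single i 1))) ∘ (fun t => t - w i) := by
      ext t
      simp only [Function.comp]
      rw [← map_smul, ← map_add]
      congr 2
      ext j
      by_cases h : j = i
      · subst h; simp
      · simp [h]
    rw [h2]
    refine DifferentiableAt.comp _ (by simpa using h1) (by fun_prop)
  have h3 := key.comp (e.toContinuousLinearMap.analyticAt z)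
  refine h3.congr (Eventually.of_forall fun y => ?_)
  simp
end

/-! ### Parameter integrals and limits of analytic functions -/

section
section Params
variable {E : Type*} [NormedAddCommGroup E] [NormedSpace ℂ E] [FiniteDimensional ℂ E]

theorem analyticAt_intervalIntegral {U : Set E} (hU : IsOpen U) {a b : ℝ} {F : E → ℝ → ℂ}
    (hc : ContinuousOn (Function.uncurry F) (U ×ˢ uIcc a b))
    (hd : ∀ t ∈ uIcc a b, ∀ x ∈ U, AnalyticAt ℂ (fun x => F x t) x) :
    ∀ x ∈ U, AnalyticAt ℂ (fun x => ∫ t in a..b, F x t) x := by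
  have hsec : ∀ x ∈ U, ContinuousOn (F x) (uIcc a b) := fun x hx =>
    hc.comp (f := fun t => (x, t)) (by fun_prop) fun t ht => ⟨hx, ht⟩
  have hmeas : ∀ x ∈ U, MeasureTheory.AEStronglyMeasurable (F x)
      (MeasureTheory.volume.restrict (uIoc a b)) := fun x hx =>
    ((hsec x hx).mono uIoc_subset_uIcc).aestronglyMeasurable measurableSet_uIoc
  have hprop : ProperSpace E := FiniteDimensional.proper ℂ E
  have hbd : ∀ x ∈ U, ∃ r > 0, closedBall x r ⊆ U ∧ ∃ C, ∀ y ∈ closedBall x r, ∀ t ∈ uIcc a b,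
      ‖F y t‖ ≤ C := by
    intro x hx
    obtain ⟨r, hr, hrU⟩ := Metric.nhds_basis_closedBall.mem_iff.mp (hU.mem_nhds hx)
    obtain ⟨C, hC⟩ := ((isCompact_closedBall x r).prod isCompact_uIcc).exists_bound_of_continuousOn
      (hc.mono (prod_mono hrU subset_rfl))
    exact ⟨r, hr, hrU, C, fun y hy t ht => hC (y, t) ⟨hy, ht⟩⟩
  refine osgood hU ?_ ?_
  · intro x hx
    obtain ⟨r, hr, hrU, C, hC⟩ := hbd x hx
    refine ContinuousAt.continuousWithinAt ?_
    refine intervalIntegral.continuousAt_of_dominated_interval (bound := fun _ => C) ?_ ?_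
      (by simp) ?_
    · filter_upwards [hU.mem_nhds hx] with y hy using hmeas y hy
    · filter_upwards [closedBall_mem_nhds x hr] with y hy
      exact Eventually.of_forall fun t ht => hC y hy t (uIoc_subset_uIcc ht)
    · exact Eventually.of_forall fun t ht => (hd t (uIoc_subset_uIcc ht) x hx).continuousAt
  · intro z hz v
    obtain ⟨r, hr, hrU, C, hC⟩ := hbd z hz
    have hcont : Continuous (fun s : ℂ => z + s • v) := by fun_prop
    have hN : (fun s : ℂ => z + s • v) ⁻¹' closedBall z r ∈ 𝓝 (0 : ℂ) := by
      refine hcont.continuousAt.preimage_mem_nhds ?_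
      simpa using closedBall_mem_nhds z hr
    obtain ⟨δ, hδ, hδN⟩ := Metric.nhds_basis_closedBall.mem_iff.mp hN
    have hdiff : ∀ t ∈ uIcc a b, ∀ s ∈ closedBall (0 : ℂ) δ,
        DifferentiableAt ℂ (fun s : ℂ => F (z + s • v) t) s := by
      intro t ht s hs
      exact DifferentiableAt.comp (g := fun x => F x t) (f := fun s : ℂ => z + s • v) s
        (hd t ht _ (hrU (hδN hs))).differentiableAt (by fun_prop)
    have h2 : (0 : ℝ) < δ / 2 := by positivity
    have key := intervalIntegral.hasDerivAt_integral_of_dominated_loc_of_deriv_le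
      (μ := MeasureTheory.volume) (a := a) (b := b)
      (F := fun (s : ℂ) t => F (z + s • v) t)
      (F' := fun (s : ℂ) t => deriv (fun s : ℂ => F (z + s • v) t) s) (x₀ := 0)
      (s := ball 0 (δ / 2)) (bound := fun _ => C / (δ / 2)) (ball_mem_nhds _ h2) ?_ ?_ ?_ ?_
      (by simp) ?_
    · exact key.2.differentiableAt
    · filter_upwards [closedBall_mem_nhds (0 : ℂ) hδ] with s hs using hmeas _ (hrU (hδN hs))
    · simpa using (hsec z hz).intervalIntegrable
    · have hlim : ∀ k : ℕ, ((δ / (k + 1) : ℝ) : ℂ) ∈ closedBall (0 : ℂ) δ := by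
        intro k
        rw [mem_closedBall, dist_zero_right, Complex.norm_real, Real.norm_of_nonneg (by positivity)]
        exact div_le_self hδ.le (by linarith [k.cast_nonneg (α := ℝ)])
      refine aestronglyMeasurable_of_tendsto_ae atTop
        (f := fun (k : ℕ) t => ((δ / (k + 1) : ℝ) : ℂ)⁻¹ •
          (F (z + (0 + ((δ / (k + 1) : ℝ) : ℂ)) • v) t - F (z + (0 : ℂ) • v) t)) ?_ ?_
      · intro k
        refine MeasureTheory.AEStronglyMeasurable.fun_const_smul
          (MeasureTheory.AEStronglyMeasurable.fun_sub ?_ ?_) _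
        · rw [zero_add]; exact hmeas _ (hrU (hδN (hlim k)))
        · simpa using hmeas z hz
      · refine (MeasureTheory.ae_restrict_iff' measurableSet_uIoc).mpr
          (Eventually.of_forall fun t ht => ?_)
        have h3 := (hdiff t (uIoc_subset_uIcc ht) 0 (mem_closedBall_self hδ.le)).hasDerivAt
        refine h3.tendsto_slope_zero.comp ?_
        refine tendsto_nhdsWithin_iff.mpr ⟨?_, Eventually.of_forall fun k => ?_⟩
        · have h4 : Tendsto (fun k : ℕ => δ / ((k : ℝ) + 1)) atTop (𝓝 0) :=
            tendsto_const_nhds.div_atTop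
              (tendsto_atTop_add_const_right _ _ tendsto_natCast_atTop_atTop)
          exact (Complex.continuous_ofReal.tendsto' 0 0 (by simp)).comp h4
        · have : (0 : ℝ) < δ / (k + 1) := by positivity
          exact mem_compl_singleton_iff.mpr (by exact_mod_cast this.ne')
    · refine Eventually.of_forall fun t ht s hs => ?_
      have hsub : closedBall s (δ / 2) ⊆ closedBall (0 : ℂ) δ := by
        refine closedBall_subset_closedBall' ?_
        have := mem_ball.mp hs
        linarith
      refine Complex.norm_deriv_le_of_forall_mem_sphere_norm_le h2 ?_ ?_
      · refine DifferentiableOn.diffContOnCl ?_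
        rw [closure_ball _ h2.ne']
        exact fun w hw => (hdiff t (uIoc_subset_uIcc ht) w (hsub hw)).differentiableWithinAt
      · intro w hw
        exact hC _ (hδN (hsub (sphere_subset_closedBall hw))) t (uIoc_subset_uIcc ht)
    · refine Eventually.of_forall fun t ht s hs => ?_
      refine (hdiff t (uIoc_subset_uIcc ht) s ?_).hasDerivAt
      exact ball_subset_closedBall (ball_subset_ball (by linarith) hs)

theorem analyticAt_circleIntegral {x₀ : E} {c : ℂ} {R : ℝ} (hR : 0 ≤ R) {h : E → ℂ → ℂ}
    (hh : ∀ ζ ∈ sphere c R, AnalyticAt ℂ (Function.uncurry h) (x₀, ζ)) :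
    AnalyticAt ℂ (fun x => ∮ ζ in C(c, R), h x ζ) x₀ := by
  obtain ⟨U, V, hU, -, hxU, hsV, hUV⟩ := generalized_tube_lemma (isCompact_singleton (x := x₀))
    (isCompact_sphere c R) (isOpen_analyticAt ℂ (Function.uncurry h))
    (by rintro ⟨x, ζ⟩ ⟨hx, hζ⟩; obtain rfl := mem_singleton_iff.mp hx; exact hh ζ hζ)
  have hx₀ : x₀ ∈ U := hxU rfl
  have hmem : ∀ θ, circleMap c R θ ∈ V := fun θ => hsV (circleMap_mem_sphere c hR θ)
  unfold circleIntegral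
  refine analyticAt_intervalIntegral hU ?_ ?_ x₀ hx₀
  · simp only [deriv_circleMap]
    refine ContinuousOn.smul (f := fun p : E × ℝ => circleMap 0 R p.2 * I)
      (Continuous.continuousOn (by fun_prop)) ?_
    intro p hp
    have h1 : ContinuousAt (Function.uncurry h) (p.1, circleMap c R p.2) :=
      (hUV (mk_mem_prod hp.1 (hmem p.2)) : AnalyticAt ℂ _ _).continuousAt
    refine ContinuousAt.continuousWithinAt ?_
    exact ContinuousAt.comp (g := Function.uncurry h) (f := fun p : E × ℝ => (p.1, circleMap c R p.2)) h1
      (by fun_prop)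
  · intro t ht x hx
    refine AnalyticAt.fun_smul analyticAt_const ?_
    have h1 : AnalyticAt ℂ (Function.uncurry h) (x, circleMap c R t) :=
      hUV (mk_mem_prod hx (hmem t))
    exact AnalyticAt.comp (g := Function.uncurry h) (f := fun x => (x, circleMap c R t)) h1
      (analyticAt_id.prod analyticAt_const)

theorem analyticOnNhd_of_tendstoLocallyUniformlyOn {ι : Type*} {l : Filter ι} [l.NeBot]
    {U : Set E} (hU : IsOpen U) {F : ι → E → ℂ} {f : E → ℂ}
    (h : TendstoLocallyUniformlyOn F f l U) (hF : ∀ᶠ i in l, AnalyticOnNhd ℂ (F i) U) :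
    AnalyticOnNhd ℂ f U := by
  refine osgood hU (h.continuousOn (hF.mono fun i hi => hi.continuousOn).frequently) ?_
  intro z hz v
  have hcont : Continuous (fun s : ℂ => z + s • v) := by fun_prop
  have hV : IsOpen ((fun s : ℂ => z + s • v) ⁻¹' U) := hU.preimage hcont
  have h1 : TendstoLocallyUniformlyOn (fun i => F i ∘ (fun s : ℂ => z + s • v))
      (f ∘ (fun s : ℂ => z + s • v)) l ((fun s : ℂ => z + s • v) ⁻¹' U) :=
    h.comp _ (mapsTo_preimage _ _) hcont.continuousOn
  have h2 := h1.differentiableOn (hF.mono fun i hi s hs =>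
    ((hi _ hs).differentiableAt.comp s (by fun_prop)).differentiableWithinAt) hV
  exact (h2 0 (by simpa using hz)).differentiableAt (hV.mem_nhds (by simpa using hz))

theorem analyticOnNhd_tsum {U : Set E} (hU : IsOpen U) {F : ℕ → E → ℂ} {u : ℕ → ℝ}
    (hu : Summable u) (hF : ∀ i, AnalyticOnNhd ℂ (F i) U) (hb : ∀ i, ∀ x ∈ U, ‖F i x‖ ≤ u i) :
    AnalyticOnNhd ℂ (fun x => ∑' i, F i x) U := by
  refine analyticOnNhd_of_tendstoLocallyUniformlyOn hU
    (tendstoUniformlyOn_tsum hu hb).tendstoLocallyUniformlyOn (Eventually.of_forall fun s => ?_)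
  exact Finset.analyticOnNhd_fun_sum _ fun i _ => hF i

end Params
end

/-! ### Monic polynomials with analytic coefficients and Weierstrass division -/

section
/-- The monic polynomial `w ^ d + ∑ α k w ^ k` with lower coefficients `α`, evaluated at `w`. -/
noncomputable def monicVal {d : ℕ} (α : Fin d → ℂ) (w : ℂ) : ℂ := w ^ d + ∑ k, α k * w ^ (k : ℕ)

/-- Coefficient of `z ^ k` in the divided difference `(P w - P z) / (w - z)`, where `P` is the monic
polynomial with lower coefficients `α`. -/
noncomputable def divDiff {d : ℕ} (α : Fin d → ℂ) (k : Fin d) (w : ℂ) : ℂ :=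
  w ^ (d - 1 - (k : ℕ)) + ∑ j : Fin d, if k < j then α j * w ^ ((j : ℕ) - 1 - (k : ℕ)) else 0

theorem sub_mul_divDiff {d : ℕ} (α : Fin d → ℂ) (w z : ℂ) :
    (w - z) * ∑ k, divDiff α k w * z ^ (k : ℕ) = monicVal α w - monicVal α z := by
  have geom : ∀ m : ℕ, (w - z) * ∑ k ∈ Finset.range m, w ^ (m - 1 - k) * z ^ k = w ^ m - z ^ m := by
    intro m
    have := (Commute.all z w).mul_geom_sum₂ m
    rw [show w ^ m - z ^ m = -(z ^ m - w ^ m) by ring, ← this, ← neg_mul, neg_sub]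
    congr 1
    exact Finset.sum_congr rfl fun k _ => mul_comm _ _
  have h1 : ∀ j : Fin d, (w - z) * ∑ k : Fin d,
      (if k < j then α j * w ^ ((j : ℕ) - 1 - (k : ℕ)) else 0) * z ^ (k : ℕ) =
      α j * (w ^ (j : ℕ) - z ^ (j : ℕ)) := by
    intro j
    rw [← geom (j : ℕ)]
    have : ∑ k : Fin d, (if k < j then α j * w ^ ((j : ℕ) - 1 - (k : ℕ)) else 0) * z ^ (k : ℕ) =
        ∑ k ∈ Finset.range (j : ℕ), α j * (w ^ ((j : ℕ) - 1 - k) * z ^ k) := by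
      refine (Fin.sum_univ_eq_sum_range (fun k => (if k < (j : ℕ) then α j * w ^ ((j : ℕ) - 1 - k)
        else 0) * z ^ k) d).trans ?_
      rw [← Finset.sum_subset (Finset.range_subset_range.mpr j.2.le)]
      · refine Finset.sum_congr rfl fun k hk => ?_
        rw [if_pos (Finset.mem_range.mp hk)]; ring
      · intro k _ hk
        rw [if_neg (by simpa using hk), zero_mul]
    rw [this, ← Finset.mul_sum]; ring
  unfold divDiff monicVal
  simp only [add_mul, Finset.sum_add_distrib, mul_add, Finset.sum_mul]
  rw [Finset.sum_comm, Fin.sum_univ_eq_sum_range (fun k => w ^ (d - 1 - k) * z ^ k) d, geom d,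
    Finset.mul_sum, Finset.sum_congr rfl fun j _ => h1 j]
  simp only [mul_sub, Finset.sum_sub_distrib]
  ring

theorem continuous_monicVal {d : ℕ} (α : Fin d → ℂ) : Continuous (monicVal α) := by
  unfold monicVal; fun_prop

theorem continuous_divDiff {d : ℕ} (α : Fin d → ℂ) (k : Fin d) : Continuous (divDiff α k) := by
  unfold divDiff
  refine Continuous.add (by fun_prop) (continuous_finsetSum _ fun j _ => ?_)
  split_ifs <;> fun_prop

/-- Cauchy kernel split as polynomial part plus multiple of the monic polynomial. -/
theorem circle_split {d : ℕ} (α : Fin d → ℂ) {c : ℂ} {R : ℝ} (hR : 0 ≤ R) {G : ℂ → ℂ}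
    (hG : ContinuousOn G (sphere c R)) (hP : ∀ w ∈ sphere c R, monicVal α w ≠ 0) {z : ℂ}
    (hz : z ∉ sphere c R) :
    ∑ k, (∮ w in C(c, R), G w / monicVal α w * divDiff α k w) * z ^ (k : ℕ) +
      monicVal α z * (∮ w in C(c, R), G w / monicVal α w * (w - z)⁻¹) =
      ∮ w in C(c, R), (w - z)⁻¹ • G w := by
  have hne : ∀ w ∈ sphere c R, w - z ≠ 0 := fun w hw h => hz (by rwa [← sub_eq_zero.mp h])
  have hq : ContinuousOn (fun w => G w / monicVal α w) (sphere c R) :=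
    hG.div (continuous_monicVal α).continuousOn hP
  have h1 : ∀ k : Fin d, CircleIntegrable (fun w => z ^ (k : ℕ) * (G w / monicVal α w * divDiff α k w)) c R :=
    fun k => ContinuousOn.circleIntegrable hR
      (continuousOn_const.mul (hq.mul (continuous_divDiff α k).continuousOn))
  have h2 : CircleIntegrable (fun w => monicVal α z * (G w / monicVal α w * (w - z)⁻¹)) c R :=
    ContinuousOn.circleIntegrable hR (continuousOn_const.mul (hq.mul
      (ContinuousOn.inv₀ (by fun_prop) hne)))
  have h3 : ∀ k : Fin d, (∮ w in C(c, R), G w / monicVal α w * divDiff α k w) * z ^ (k : ℕ) =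
      ∮ w in C(c, R), z ^ (k : ℕ) * (G w / monicVal α w * divDiff α k w) := by
    intro k; rw [circleIntegral.integral_const_mul, mul_comm]
  rw [Finset.sum_congr rfl fun k _ => h3 k, ← circleIntegral.integral_const_mul,
    ← circleIntegral.integral_fun_sum fun k _ => h1 k, ← circleIntegral.integral_add _ h2]
  · refine circleIntegral.integral_congr hR fun w hw => ?_
    have e := sub_mul_divDiff α w z
    have hw1 := hne w hw
    have hw2 := hP w hw
    have e2 : ∑ k : Fin d, z ^ (k : ℕ) * (G w / monicVal α w * divDiff α k w) =
        G w / monicVal α w * ((w - z)⁻¹ * (monicVal α w - monicVal α z)) := by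
      rw [← e, inv_mul_cancel_left₀ hw1, Finset.mul_sum]
      exact Finset.sum_congr rfl fun k _ => by ring
    simp only [e2, smul_eq_mul]
    field_simp
    ring
  · exact CircleIntegrable.fun_sum _ fun k _ => h1 k

section
variable {E : Type*} [NormedAddCommGroup E] [NormedSpace ℂ E]

/-- The function on `E × ℂ` given by the monic polynomial in the second variable with lower
coefficients `a`. -/
noncomputable def wp {d : ℕ} (a : Fin d → E → ℂ) (y : E × ℂ) : ℂ :=
  monicVal (fun k => a k y.1) y.2

/-- The function on `E × ℂ` given by a polynomial of degree `< d` in the second variable with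
coefficients `r`. -/
noncomputable def pv {d : ℕ} (r : Fin d → E → ℂ) (y : E × ℂ) : ℂ := ∑ k, r k y.1 * y.2 ^ (k : ℕ)

theorem analyticAt_pv {d : ℕ} {r : Fin d → E → ℂ} {y : E × ℂ}
    (h : ∀ k, AnalyticAt ℂ (r k) y.1) : AnalyticAt ℂ (pv r) y := by
  unfold pv
  refine Finset.analyticAt_fun_sum _ fun k _ => ?_
  exact ((h k).comp_of_eq analyticAt_fst rfl).mul (analyticAt_snd.pow _)

theorem wp_eq {d : ℕ} (a : Fin d → E → ℂ) (y : E × ℂ) : wp a y = y.2 ^ d + pv a y := rfl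

theorem analyticAt_wp {d : ℕ} {a : Fin d → E → ℂ} {y : E × ℂ}
    (h : ∀ k, AnalyticAt ℂ (a k) y.1) : AnalyticAt ℂ (wp a) y :=
  (analyticAt_snd.pow d).add (analyticAt_pv h)

/-- `wp` at a fixed base point as a polynomial. -/
noncomputable def wpoly {d : ℕ} (α : Fin d → ℂ) : Polynomial ℂ :=
  Polynomial.X ^ d + ∑ k : Fin d, Polynomial.C (α k) * Polynomial.X ^ (k : ℕ)

theorem eval_wpoly {d : ℕ} (α : Fin d → ℂ) (w : ℂ) : (wpoly α).eval w = monicVal α w := by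
  simp [wpoly, monicVal, Polynomial.eval_finsetSum]

theorem degree_lower {d : ℕ} (α : Fin d → ℂ) :
    (∑ k : Fin d, Polynomial.C (α k) * Polynomial.X ^ (k : ℕ)).degree < (d : WithBot ℕ) := by
  exact Polynomial.degree_sum_fin_lt α

theorem monic_wpoly {d : ℕ} (α : Fin d → ℂ) : (wpoly α).Monic :=
  Polynomial.monic_X_pow_add (degree_lower α)

theorem natDegree_wpoly {d : ℕ} (α : Fin d → ℂ) : (wpoly α).natDegree = d := by
  have : (wpoly α).degree = d := by
    unfold wpoly
    rw [Polynomial.degree_add_eq_left_of_degree_lt] <;> simp [degree_lower]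
  exact Polynomial.natDegree_eq_of_degree_eq_some this

theorem finite_roots {d : ℕ} (α : Fin d → ℂ) : {w | monicVal α w = 0}.Finite := by
  have := (wpoly α).rootSet_finite ℂ
  refine this.subset fun w hw => ?_
  rw [Polynomial.mem_rootSet]
  exact ⟨(monic_wpoly α).ne_zero, by simpa [eval_wpoly] using hw⟩

variable [FiniteDimensional ℂ E]

theorem analyticAt_divDiff {d : ℕ} {a : Fin d → E → ℂ} {k : Fin d} {y : E × ℂ}
    (h : ∀ k, AnalyticAt ℂ (a k) y.1) :
    AnalyticAt ℂ (fun y : E × ℂ => divDiff (fun k => a k y.1) k y.2) y := by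
  unfold divDiff
  refine (analyticAt_snd.pow _).add (Finset.analyticAt_fun_sum _ fun j _ => ?_)
  split_ifs
  · exact ((h j).comp_of_eq analyticAt_fst rfl).mul (analyticAt_snd.pow _)
  · exact analyticAt_const

/-- Simultaneous Weierstrass division: germs prescribed at all points `(x₀, ζ)` over the roots `ζ`
of a monic polynomial are congruent to one polynomial of degree `< d` over the germs at `x₀`. -/
theorem crt_exists {d : ℕ} {x₀ : E} {a : Fin d → E → ℂ} (ha : ∀ k, AnalyticAt ℂ (a k) x₀)
    (g : ℂ → E × ℂ → ℂ) (hg : ∀ ζ, wp a (x₀, ζ) = 0 → AnalyticAt ℂ (g ζ) (x₀, ζ)) :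
    ∃ r : Fin d → E → ℂ, (∀ k, AnalyticAt ℂ (r k) x₀) ∧ ∀ ζ, wp a (x₀, ζ) = 0 →
      ∃ q, AnalyticAt ℂ q (x₀, ζ) ∧ ∀ᶠ y in 𝓝 (x₀, ζ), g ζ y = pv r y + wp a y * q y := by
  let Z : Finset ℂ := (finite_roots (fun k => a k x₀)).toFinset
  have hZ : ∀ ζ, ζ ∈ Z ↔ wp a (x₀, ζ) = 0 := by
    intro ζ; simp only [Z, Set.Finite.mem_toFinset, mem_ofPred_eq]; rfl
  obtain ⟨ρ, hρ0, hρ⟩ : ∃ ρ > 0, ∀ ζ ∈ Z, (∀ w ∈ closedBall ζ ρ, AnalyticAt ℂ (g ζ) (x₀, w)) ∧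
      ∀ ζ' ∈ Z, ζ' ≠ ζ → Disjoint (closedBall ζ ρ) (closedBall ζ' ρ) := by
    have : ∀ᶠ ρ in 𝓝[>] (0 : ℝ), ∀ ζ ∈ Z, (∀ w ∈ closedBall ζ ρ, AnalyticAt ℂ (g ζ) (x₀, w)) ∧
        ∀ ζ' ∈ Z, ζ' ≠ ζ → Disjoint (closedBall ζ ρ) (closedBall ζ' ρ) := by
      refine (Finset.eventually_all _).mpr fun ζ hζ => ?_
      refine Eventually.and ?_ ((Finset.eventually_all _).mpr fun ζ' hζ' => ?_)
      · have h1 : ∀ᶠ w in 𝓝 ζ, AnalyticAt ℂ (g ζ) (x₀, w) :=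
          (Continuous.tendsto' (f := fun w : ℂ => (x₀, w)) (by fun_prop) ζ (x₀, ζ) rfl).eventually
            (hg ζ ((hZ ζ).mp hζ)).eventually_analyticAt
        obtain ⟨ε, hε, h2⟩ := Metric.nhds_basis_ball.mem_iff.mp h1
        filter_upwards [Ioo_mem_nhdsGT hε] with ρ hρ w hw
        exact h2 (closedBall_subset_ball hρ.2 hw)
      · by_cases h : ζ' = ζ
        · exact Eventually.of_forall fun _ h' => absurd h h'
        · have hpos : 0 < dist ζ ζ' / 2 := by have := dist_pos.mpr (Ne.symm h); positivity
          filter_upwards [Ioo_mem_nhdsGT hpos] with ρ hρ _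
          exact closedBall_disjoint_closedBall (by linarith [hρ.2])
    obtain ⟨ρ, h1, h2⟩ := (this.and self_mem_nhdsWithin).exists
    exact ⟨ρ, h2, h1⟩
  have hsph : ∀ ζ ∈ Z, ∀ w ∈ sphere ζ ρ, wp a (x₀, w) ≠ 0 := by
    intro ζ hζ w hw h0
    by_cases h : w = ζ
    · subst h; simp at hw; linarith
    · exact Set.disjoint_left.mp ((hρ ζ hζ).2 w ((hZ w).mpr h0) h) (sphere_subset_closedBall hw)
        (mem_closedBall_self hρ0.le)
  have hav : ∀ᶠ x in 𝓝 x₀, ∀ k, AnalyticAt ℂ (a k) x :=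
    eventually_all.mpr fun k => (ha k).eventually_analyticAt
  -- uniform neighbourhood of `x₀` on which the data are good along the circles
  have hV : ∀ ζ ∈ Z, ∀ᶠ x in 𝓝 x₀, (∀ w ∈ closedBall ζ ρ, AnalyticAt ℂ (g ζ) (x, w)) ∧
      ∀ w ∈ sphere ζ ρ, wp a (x, w) ≠ 0 := by
    intro ζ hζ
    refine Eventually.and ?_ ?_
    · obtain ⟨U, V, hU, -, hxU, hsV, hUV⟩ := generalized_tube_lemma
        (isCompact_singleton (x := x₀)) (isCompact_closedBall ζ ρ) (isOpen_analyticAt ℂ (g ζ))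
        (by rintro ⟨x, w⟩ ⟨hx, hw⟩; obtain rfl := mem_singleton_iff.mp hx; exact (hρ ζ hζ).1 w hw)
      filter_upwards [hU.mem_nhds (hxU rfl)] with x hx w hw
      exact hUV (mk_mem_prod hx (hsV hw))
    · have hc : ∀ w ∈ sphere ζ ρ, ∀ᶠ y : E × ℂ in 𝓝 x₀ ×ˢ 𝓝 w, wp a y ≠ 0 := by
        intro w hw
        rw [← nhds_prod_eq]
        exact (analyticAt_wp (y := (x₀, w)) ha).continuousAt.eventually_ne (hsph ζ hζ w hw)
      have := (isCompact_sphere ζ ρ).eventually_forall_of_forall_eventually (x₀ := x₀)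
        (P := fun x w => wp a (x, w) ≠ 0) (fun w hw => by rw [nhds_prod_eq]; exact hc w hw)
      exact this
  have hV' := (Finset.eventually_all Z).mpr hV
  refine ⟨fun k x => (2 * Real.pi * I)⁻¹ * ∑ ζ ∈ Z, ∮ w in C(ζ, ρ),
    g ζ (x, w) / wp a (x, w) * divDiff (fun k => a k x) k w, fun k => ?_, fun ζ hζ => ?_⟩
  · refine analyticAt_const.mul (Finset.analyticAt_fun_sum _ fun ζ hζ => ?_)
    refine analyticAt_circleIntegral hρ0.le fun w hw => ?_
    have h1 := (hρ ζ hζ).1 w (sphere_subset_closedBall hw)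
    exact (h1.div (analyticAt_wp (y := (x₀, w)) ha) (hsph ζ hζ w hw)).mul
      (analyticAt_divDiff (y := (x₀, w)) ha)
  · have hζZ := (hZ ζ).mpr hζ
    refine ⟨fun y => (2 * Real.pi * I)⁻¹ * ∑ ζ' ∈ Z, ∮ w in C(ζ', ρ),
      g ζ' (y.1, w) / wp a (y.1, w) * (w - y.2)⁻¹, ?_, ?_⟩
    · refine analyticAt_const.mul (Finset.analyticAt_fun_sum _ fun ζ' hζ' => ?_)
      refine analyticAt_circleIntegral hρ0.le fun w hw => ?_
      have h1 := (hρ ζ' hζ').1 w (sphere_subset_closedBall hw)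
      have hpr : AnalyticAt ℂ (fun p : (E × ℂ) × ℂ => (p.1.1, p.2)) ((x₀, ζ), w) :=
        (analyticAt_fst.comp analyticAt_fst).prod analyticAt_snd
      refine (AnalyticAt.comp (g := fun y => g ζ' y / wp a y) (f := fun p : (E × ℂ) × ℂ =>
        (p.1.1, p.2)) (h1.div (analyticAt_wp (y := (x₀, w)) ha) (hsph ζ' hζ' w hw)) hpr).mul ?_
      refine (analyticAt_snd.sub (analyticAt_snd.comp analyticAt_fst)).inv ?_
      intro h0
      have h0 : w = ζ := sub_eq_zero.mp h0
      subst h0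
      exact hsph ζ' hζ' w hw hζ
    · have e1 : ∀ᶠ y : E × ℂ in 𝓝 (x₀, ζ), y.2 ∈ ball ζ ρ :=
        continuous_snd.continuousAt.eventually_mem (ball_mem_nhds _ hρ0)
      have e2 : ∀ᶠ y : E × ℂ in 𝓝 (x₀, ζ), ∀ ζ ∈ Z,
          (∀ w ∈ closedBall ζ ρ, AnalyticAt ℂ (g ζ) (y.1, w)) ∧
          ∀ w ∈ sphere ζ ρ, wp a (y.1, w) ≠ 0 :=
        (continuous_fst.tendsto' (x₀, ζ) x₀ rfl).eventually hV'
      filter_upwards [e1, e2] with y hy1 hy2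
      have hdz : ∀ ζ' ∈ Z, ∀ w ∈ closedBall ζ' ρ,
          DifferentiableAt ℂ (fun w => g ζ' (y.1, w)) w := by
        intro ζ' hζ' w hw
        exact (AnalyticAt.comp (g := g ζ') (f := fun w => (y.1, w)) ((hy2 ζ' hζ').1 w hw)
          (analyticAt_const.prod analyticAt_id)).differentiableAt
      have hns : ∀ ζ' ∈ Z, y.2 ∉ sphere ζ' ρ := by
        intro ζ' hζ' h
        by_cases h' : ζ' = ζ
        · subst h'; exact absurd (mem_sphere.mp h) (ne_of_lt (mem_ball.mp hy1))
        · exact Set.disjoint_left.mp ((hρ ζ hζZ).2 ζ' hζ' h') (ball_subset_closedBall hy1)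
            (sphere_subset_closedBall h)
      have key : ∀ ζ' ∈ Z, _ := fun ζ' hζ' => circle_split (fun k => a k y.1) hρ0.le
        (G := fun w => g ζ' (y.1, w))
        (fun w hw => (hdz ζ' hζ' w (sphere_subset_closedBall hw)).continuousAt.continuousWithinAt)
        (hy2 ζ' hζ').2 (hns ζ' hζ')
      have tot : ∑ ζ' ∈ Z, (∮ w in C(ζ', ρ), (w - y.2)⁻¹ • g ζ' (y.1, w)) =
          2 * Real.pi * I * g ζ y := by
        rw [Finset.sum_eq_single ζ]
        · have := DifferentiableOn.circleIntegral_sub_inv_smul (f := fun w => g ζ (y.1, w))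
            (fun w hw => (hdz ζ hζZ w hw).differentiableWithinAt) hy1
          simpa using this
        · intro ζ' hζ' hne
          have hnb : ∀ w ∈ closedBall ζ' ρ, w - y.2 ≠ 0 := by
            intro w hw h0
            rw [sub_eq_zero.mp h0] at hw
            exact Set.disjoint_left.mp ((hρ ζ hζZ).2 ζ' hζ' hne) (ball_subset_closedBall hy1) hw
          have hd : ∀ w ∈ closedBall ζ' ρ,
              DifferentiableAt ℂ (fun w => (w - y.2)⁻¹ • g ζ' (y.1, w)) w := fun w hw =>
            DifferentiableAt.fun_smul (DifferentiableAt.fun_inv (by fun_prop) (hnb w hw)) (hdz ζ' hζ' w hw)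
          exact Complex.circleIntegral_eq_zero_of_differentiable_on_off_countable hρ0.le
            countable_empty (fun w hw => (hd w hw).continuousAt.continuousWithinAt)
            fun w hw => hd w (ball_subset_closedBall hw.1)
        · exact fun h => absurd hζZ h
      have hpi : (2 * Real.pi * I : ℂ) ≠ 0 := by simp [Real.pi_ne_zero]
      rw [← Finset.sum_congr rfl key, Finset.sum_add_distrib, Finset.sum_comm,
        ← Finset.mul_sum] at tot
      have hp : pv (fun k x => (2 * Real.pi * I)⁻¹ * ∑ ζ ∈ Z, ∮ w in C(ζ, ρ),
          g ζ (x, w) / wp a (x, w) * divDiff (fun k => a k x) k w) y =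
          (2 * Real.pi * I)⁻¹ * ∑ k, ∑ ζ' ∈ Z, (∮ w in C(ζ', ρ),
            g ζ' (y.1, w) / monicVal (fun k => a k y.1) w * divDiff (fun k => a k y.1) k w)
              * y.2 ^ (k : ℕ) := by
        unfold pv
        simp only [Finset.mul_sum, Finset.sum_mul, mul_assoc]
        rfl
      rw [hp]
      have : g ζ y = (2 * Real.pi * I)⁻¹ * (2 * Real.pi * I * g ζ y) := by field_simp
      rw [this, ← tot]
      simp only [wp]
      ring

end
end

/-! ### Uniqueness in Weierstrass division -/

section
theorem norm_root_le {d : ℕ} {α : Fin d → ℂ} {w : ℂ} (h : monicVal α w = 0) :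
    ‖w‖ ≤ 1 + ∑ k, ‖α k‖ := by
  by_contra! hw
  have hS : 0 ≤ ∑ k, ‖α k‖ := Finset.sum_nonneg fun _ _ => norm_nonneg _
  have h1 : 1 ≤ ‖w‖ := by linarith
  have e : w ^ d = -∑ k, α k * w ^ (k : ℕ) := eq_neg_of_add_eq_zero_left h
  rcases Nat.eq_zero_or_pos d with rfl | hd
  · simp at e
  have h2 : ‖w‖ ^ d ≤ (∑ k, ‖α k‖) * ‖w‖ ^ (d - 1) := by
    rw [← norm_pow, e, norm_neg, Finset.sum_mul]
    refine (norm_sum_le _ _).trans (Finset.sum_le_sum fun k _ => ?_)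
    rw [norm_mul, norm_pow]
    exact mul_le_mul_of_nonneg_left (pow_le_pow_right₀ h1 (by omega)) (norm_nonneg _)
  have h3 : ‖w‖ ^ d = ‖w‖ * ‖w‖ ^ (d - 1) := by rw [← pow_succ']; congr 1; omega
  rw [h3] at h2
  have := le_of_mul_le_mul_right h2 (by positivity)
  linarith

/-- Divisibility of complex polynomials tested locally at the roots of the divisor. -/
theorem poly_dvd {P R : Polynomial ℂ} (hP : P ≠ 0)
    (h : ∀ η, P.eval η = 0 → ∃ q : ℂ → ℂ, ContinuousAt q η ∧
      ∀ᶠ z in 𝓝 η, R.eval z = P.eval z * q z) : P ∣ R := by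
  by_cases hR : R = 0
  · simp [hR]
  rw [IsAlgClosed.dvd_iff_roots_le_roots hP hR, Multiset.le_iff_count]
  intro η
  rw [Polynomial.count_roots, Polynomial.count_roots]
  by_contra! hlt
  have hr : P.eval η = 0 := (Polynomial.rootMultiplicity_pos hP).mp (by omega)
  obtain ⟨q, hq, he⟩ := h η hr
  obtain ⟨P1, hP1, -⟩ := Polynomial.exists_eq_pow_rootMultiplicity_mul_and_not_dvd P hP η
  obtain ⟨R1, hR1, hR2⟩ := Polynomial.exists_eq_pow_rootMultiplicity_mul_and_not_dvd R hR η
  set m := P.rootMultiplicity η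
  set k := R.rootMultiplicity η
  have e1 : ∀ᶠ z in 𝓝[≠] η, R1.eval z = (z - η) ^ (m - k) * P1.eval z * q z := by
    filter_upwards [he.filter_mono nhdsWithin_le_nhds, self_mem_nhdsWithin] with z hz hne
    have hz' : (z - η) ^ k ≠ 0 := pow_ne_zero _ (sub_ne_zero.mpr hne)
    apply mul_left_cancel₀ hz'
    rw [hR1, hP1] at hz
    simp only [Polynomial.eval_mul, Polynomial.eval_pow, Polynomial.eval_sub, Polynomial.eval_X,
      Polynomial.eval_C] at hz
    rw [hz, show m = k + (m - k) by omega, pow_add]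
    simp only [Nat.add_sub_cancel_left]
    ring
  have t1 : Tendsto (fun z => R1.eval z) (𝓝[≠] η) (𝓝 (R1.eval η)) :=
    (R1.continuous.tendsto η).mono_left nhdsWithin_le_nhds
  have t2 : Tendsto (fun z => (z - η) ^ (m - k) * P1.eval z * q z) (𝓝[≠] η)
      (𝓝 ((η - η) ^ (m - k) * P1.eval η * q η)) := by
    refine Tendsto.mono_left ?_ nhdsWithin_le_nhds
    refine Tendsto.mul (Tendsto.mul ?_ (P1.continuous.tendsto η)) hq
    exact Continuous.tendsto (by fun_prop) η
  have := tendsto_nhds_unique (t1.congr' e1) t2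
  rw [sub_self, zero_pow (by omega), zero_mul, zero_mul] at this
  exact hR2 (Polynomial.dvd_iff_isRoot.mpr this)

section
variable {E : Type*} [NormedAddCommGroup E] [NormedSpace ℂ E]

/-- A property holding near all points over `x₀` that are roots of `wp a` holds at all roots over
points near `x₀`. -/
theorem roots_spread {d : ℕ} {x₀ : E} {a : Fin d → E → ℂ} (ha : ∀ k, ContinuousAt (a k) x₀)
    {T : E × ℂ → Prop} (hT : ∀ ζ, wp a (x₀, ζ) = 0 → ∀ᶠ y in 𝓝 (x₀, ζ), T y) :
    ∀ᶠ x in 𝓝 x₀, ∀ η, wp a (x, η) = 0 → T (x, η) := by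
  have hb : ∀ᶠ x in 𝓝 x₀, 1 + ∑ k, ‖a k x‖ < 2 + ∑ k, ‖a k x₀‖ := by
    have : ContinuousAt (fun x => 1 + ∑ k, ‖a k x‖) x₀ :=
      continuousAt_const.add (tendsto_finsetSum _ fun k _ => (ha k).norm)
    exact this.eventually_lt continuousAt_const (by linarith)
  have hcomp := (isCompact_closedBall (0 : ℂ) (2 + ∑ k, ‖a k x₀‖)).eventually_forall_of_forall_eventually
    (x₀ := x₀) (P := fun x w => wp a (x, w) = 0 → T (x, w)) (fun w _ => by
      by_cases hw : wp a (x₀, w) = 0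
      · filter_upwards [hT w hw] with y hy _ using hy
      · have hc : ContinuousAt (wp a) (x₀, w) := by
          have : ∀ k, ContinuousAt (fun y : E × ℂ => a k y.1) (x₀, w) := fun k =>
            ContinuousAt.comp (f := Prod.fst) (x := (x₀, w)) (ha k) continuousAt_fst
          refine ContinuousAt.add (continuousAt_snd.pow d) (tendsto_finsetSum _ fun k _ => ?_)
          exact (this k).mul (continuousAt_snd.pow _)
        filter_upwards [hc.eventually_ne hw] with y hy h0
        exact absurd h0 hy)
  filter_upwards [hb, hcomp] with x h1 h2 η hη
  refine h2 η ?_ hη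
  rw [mem_closedBall_zero_iff]
  exact (norm_root_le hη).trans h1.le

/-- Uniqueness of the remainder at one base point: a polynomial of degree `< d` that is divisible by
`wp a` at every root over `x` has vanishing coefficients at `x`. -/
theorem pv_zero_of_dvd {d : ℕ} {x : E} {a r : Fin d → E → ℂ}
    (h : ∀ η, wp a (x, η) = 0 → ∃ q : E × ℂ → ℂ, ContinuousAt q (x, η) ∧
      ∀ᶠ y in 𝓝 (x, η), pv r y = wp a y * q y) (k : Fin d) : r k x = 0 := by
  set P := wpoly (fun k => a k x)
  set R : Polynomial ℂ := ∑ k : Fin d, Polynomial.C (r k x) * Polynomial.X ^ (k : ℕ) with hR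
  have hcont : ∀ η, Tendsto (fun z : ℂ => (x, z)) (𝓝 η) (𝓝 (x, η)) := fun η =>
    Continuous.tendsto (by fun_prop) η
  have hd : P ∣ R := by
    refine poly_dvd (monic_wpoly _).ne_zero fun η hη => ?_
    rw [eval_wpoly] at hη
    obtain ⟨q, hq, he⟩ := h η hη
    refine ⟨fun z => q (x, z), hq.comp (hcont η), ?_⟩
    filter_upwards [(hcont η).eventually he] with z hz
    rw [eval_wpoly]
    simpa [hR, Polynomial.eval_finsetSum, pv, wp] using hz
  have h0 : R = 0 := by
    refine Polynomial.eq_zero_of_dvd_of_degree_lt hd ?_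
    rw [Polynomial.degree_eq_natDegree (monic_wpoly _).ne_zero, natDegree_wpoly]
    exact degree_lower _
  have : R.coeff k = r k x := by
    rw [hR]
    simp only [Polynomial.finsetSum_coeff, Polynomial.coeff_C_mul, Polynomial.coeff_X_pow]
    rw [Finset.sum_eq_single k]
    · simp
    · intro j _ hj
      rw [if_neg (fun h => hj (Fin.ext h.symm)), mul_zero]
    · simp
  rw [← this, h0, Polynomial.coeff_zero]

theorem crt_unique {d : ℕ} {x₀ : E} {a r : Fin d → E → ℂ} (ha : ∀ k, AnalyticAt ℂ (a k) x₀)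
    (h : ∀ ζ, wp a (x₀, ζ) = 0 → ∃ q : E × ℂ → ℂ, AnalyticAt ℂ q (x₀, ζ) ∧
      ∀ᶠ y in 𝓝 (x₀, ζ), pv r y = wp a y * q y) : ∀ᶠ x in 𝓝 x₀, ∀ k, r k x = 0 := by
  have := roots_spread (fun k => (ha k).continuousAt) (T := fun y => ∃ q : E × ℂ → ℂ,
    ContinuousAt q y ∧ ∀ᶠ y' in 𝓝 y, pv r y' = wp a y' * q y') (fun ζ hζ => by
      obtain ⟨q, hq, he⟩ := h ζ hζ
      filter_upwards [hq.eventually_analyticAt, he.eventually_nhds] with y h1 h2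
      exact ⟨q, h1.continuousAt, h2⟩)
  filter_upwards [this] with x hx k
  exact pv_zero_of_dvd hx k

end
end

/-! ### The Weierstrass preparation theorem -/

section
open scoped ContDiff

theorem lower_zero_of_dvd {d : ℕ} {α β : Fin d → ℂ}
    (h : ∀ η, monicVal α η = 0 → ∃ q : ℂ → ℂ, ContinuousAt q η ∧
      ∀ᶠ z in 𝓝 η, ∑ k, β k * z ^ (k : ℕ) = monicVal α z * q z) : β = 0 := by
  funext k
  refine pv_zero_of_dvd (E := ℂ) (x := 0) (a := fun k _ => α k) (r := fun k _ => β k)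
    (fun η hη => ?_) k
  obtain ⟨q, hq, he⟩ := h η hη
  refine ⟨fun y => q y.2, ContinuousAt.comp (f := Prod.snd) (x := ((0:ℂ), η)) hq continuousAt_snd, ?_⟩
  exact (continuous_snd.tendsto' ((0 : ℂ), η) η rfl).eventually he

section
variable {E : Type*} [NormedAddCommGroup E] [NormedSpace ℂ E] [FiniteDimensional ℂ E]

/-- Weierstrass preparation: a germ on `E × ℂ`, regular in the second variable, is a unit times a
Weierstrass polynomial. The coefficients are found by the implicit function theorem, applied to the
remainder of the division by the generic monic polynomial. -/
theorem weierstrass {x₀ : E} {h : E × ℂ → ℂ} (hh : AnalyticAt ℂ h (x₀, 0))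
    (hreg : ¬ ∀ᶠ z in 𝓝 (0 : ℂ), h (x₀, z) = 0) :
    ∃ (d : ℕ) (a : Fin d → E → ℂ) (u : E × ℂ → ℂ), (∀ k, AnalyticAt ℂ (a k) x₀) ∧
      (∀ k, a k x₀ = 0) ∧ AnalyticAt ℂ u (x₀, 0) ∧ u (x₀, 0) ≠ 0 ∧
      ∀ᶠ y in 𝓝 (x₀, 0), h y = wp a y * u y := by
  have hpath : AnalyticAt ℂ (fun z : ℂ => h (x₀, z)) 0 :=
    AnalyticAt.comp (g := h) (f := fun z : ℂ => (x₀, z)) hh (analyticAt_const.prod analyticAt_id)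
  obtain ⟨d, g, hg, hg0, hge⟩ := hpath.exists_eventuallyEq_pow_smul_nonzero_iff.mpr hreg
  simp only [sub_zero, smul_eq_mul] at hge
  let a' : Fin d → E × (Fin d → ℂ) → ℂ := fun k p => p.2 k
  have ha' : ∀ k p, AnalyticAt ℂ (a' k) p := fun k p =>
    ((ContinuousLinearMap.proj (R := ℂ) (φ := fun _ : Fin d => ℂ) k).comp
      (ContinuousLinearMap.snd ℂ E (Fin d → ℂ))).analyticAt p
  have hwp0 : ∀ x z, wp a' ((x, 0), z) = z ^ d := by
    intro x z; simp [wp, monicVal, a']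
  have hmap : AnalyticAt ℂ (fun y : (E × (Fin d → ℂ)) × ℂ => (y.1.1, y.2)) ((x₀, 0), 0) :=
    (analyticAt_fst.comp analyticAt_fst).prod analyticAt_snd
  have hh' : AnalyticAt ℂ (fun y : (E × (Fin d → ℂ)) × ℂ => h (y.1.1, y.2)) ((x₀, 0), 0) :=
    AnalyticAt.comp (g := h) (f := fun y : (E × (Fin d → ℂ)) × ℂ => (y.1.1, y.2)) hh hmap
  rcases Nat.eq_zero_or_pos d with hd | hd
  · subst hd
    refine ⟨0, fun k _ => 0, h, fun k => k.elim0, fun k => k.elim0, hh, ?_, ?_⟩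
    · have := hge.self_of_nhds
      rw [this]; simpa using hg0
    · refine Eventually.of_forall fun y => ?_
      simp [wp, monicVal]
  obtain ⟨r, hr, hq⟩ := crt_exists (x₀ := ((x₀, 0) : E × (Fin d → ℂ))) (fun k => ha' k _)
    (fun _ y => h (y.1.1, y.2)) (fun ζ hζ => by
      rw [hwp0] at hζ
      rw [pow_eq_zero_iff hd.ne'] at hζ
      rw [hζ]; exact hh')
  obtain ⟨q, hqa, hqe⟩ := hq 0 (by rw [hwp0]; exact zero_pow hd.ne')
  have hroot : ∀ η, monicVal (0 : Fin d → ℂ) η = 0 → η = 0 := by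
    intro η hη
    simpa [monicVal, hd.ne'] using hη
  have hmon : ∀ z, monicVal (0 : Fin d → ℂ) z = z ^ d := by intro z; simp [monicVal]
  have tz : Tendsto (fun z : ℂ => (((x₀, 0) : E × (Fin d → ℂ)), z)) (𝓝 0) (𝓝 ((x₀, 0), 0)) :=
    Continuous.tendsto (by fun_prop) 0
  have hq0c : ContinuousAt (fun z : ℂ => q ((x₀, 0), z)) 0 := hqa.continuousAt.comp tz
  have hr0 : (fun k => r k (x₀, 0)) = 0 := by
    refine lower_zero_of_dvd (α := 0) fun η hη => ?_
    rw [hroot η hη]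
    refine ⟨fun z => g z - q ((x₀, 0), z), hg.continuousAt.sub hq0c, ?_⟩
    filter_upwards [hge, tz.eventually hqe] with z h1 h2
    rw [hmon]
    simp only [hwp0, pv] at h2
    rw [h1] at h2
    linear_combination -h2
  have hr0' : ∀ k, r k (x₀, 0) = 0 := fun k => congrFun hr0 k
  have hq0 : q ((x₀, 0), 0) ≠ 0 := by
    have e : ∀ᶠ z in 𝓝[≠] (0 : ℂ), q ((x₀, 0), z) = g z := by
      filter_upwards [hge.filter_mono nhdsWithin_le_nhds,
        (tz.eventually hqe).filter_mono nhdsWithin_le_nhds, self_mem_nhdsWithin] with z h1 h2 h3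
      simp only [hwp0, pv, hr0', zero_mul, Finset.sum_const_zero, zero_add] at h2
      rw [h1] at h2
      exact (mul_left_cancel₀ (pow_ne_zero d h3) h2).symm
    have t1 := (hq0c.tendsto.mono_left (nhdsWithin_le_nhds (s := {0}ᶜ))).congr' e
    rw [tendsto_nhds_unique t1 (hg.continuousAt.tendsto.mono_left nhdsWithin_le_nhds)]
    exact hg0
  let f : E × (Fin d → ℂ) → (Fin d → ℂ) := fun p k => r k p
  have hf : AnalyticAt ℂ f (x₀, 0) := AnalyticAt.pi hr
  have cdf : ContDiffAt ℂ ω f (x₀, 0) := hf.contDiffAt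
  have hinj : Function.Injective (fderiv ℂ f (x₀, 0) ∘L .inr ℂ E (Fin d → ℂ)) := by
    rw [injective_iff_map_eq_zero]
    intro β hβ
    refine lower_zero_of_dvd (α := 0) fun η hη => ?_
    rw [hroot η hη]
    have hq1 : ∀ᶠ z in 𝓝 (0 : ℂ), AnalyticAt ℂ q ((x₀, 0), z) :=
      tz.eventually hqa.eventually_analyticAt
    have hq2 : ContinuousAt (fun z : ℂ => fderiv ℂ q ((x₀, 0), z) ((0, β), 0)) 0 := by
      have : ContinuousAt (fderiv ℂ q) ((x₀, 0), 0) := hqa.fderiv.continuousAt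
      exact (this.comp tz).clm_apply continuousAt_const
    refine ⟨fun z => - (fderiv ℂ q ((x₀, 0), z) ((0, β), 0)) / q ((x₀, 0), z),
      hq2.neg.div hq0c hq0, ?_⟩
    filter_upwards [hq1, hq0c.eventually_ne hq0, tz.eventually hqe.eventually_nhds] with z h1 h2 h3
    -- differentiate the division identity along `t ↦ t • β` at `t = 0`
    have tl : Tendsto (fun t : ℂ => (((x₀, t • β) : E × (Fin d → ℂ)), z)) (𝓝 0)
        (𝓝 ((x₀, 0), z)) := Continuous.tendsto' (by fun_prop) _ _ (by simp)
    have dl0 : HasDerivAt (fun t : ℂ => ((x₀, t • β) : E × (Fin d → ℂ))) (0, β) 0 := by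
      have := (hasDerivAt_const (0 : ℂ) x₀).prodMk ((hasDerivAt_id (0 : ℂ)).smul_const β)
      simpa using this
    have dl : HasDerivAt (fun t : ℂ => (((x₀, t • β) : E × (Fin d → ℂ)), z)) ((0, β), 0) 0 :=
      dl0.prodMk (hasDerivAt_const _ _)
    have dq : HasDerivAt (fun t : ℂ => q ((x₀, t • β), z)) (fderiv ℂ q ((x₀, 0), z) ((0, β), 0)) 0 := by
      refine HasFDerivAt.comp_hasDerivAt_of_eq 0 h1.differentiableAt.hasFDerivAt dl (by simp)
    have df : HasDerivAt (fun t : ℂ => f (x₀, t • β)) (fderiv ℂ f (x₀, 0) (0, β)) 0 :=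
      HasFDerivAt.comp_hasDerivAt_of_eq 0 hf.differentiableAt.hasFDerivAt dl0 (by simp)
    have hβ' : fderiv ℂ f (x₀, 0) (0, β) = 0 := by simpa using hβ
    rw [hβ'] at df
    have dr : ∀ k, HasDerivAt (fun t : ℂ => r k (x₀, t • β)) 0 0 := fun k => hasDerivAt_pi.mp df k
    have d1 : HasDerivAt (fun t : ℂ => ∑ k, r k (x₀, t • β) * z ^ (k : ℕ))
        (∑ k : Fin d, 0 * z ^ (k : ℕ)) 0 := HasDerivAt.fun_sum fun k _ => (dr k).mul_const _
    have d2 : HasDerivAt (fun t : ℂ => z ^ d + t * ∑ k, β k * z ^ (k : ℕ))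
        (∑ k, β k * z ^ (k : ℕ)) 0 := by
      simpa using ((hasDerivAt_id (0 : ℂ)).mul_const (∑ k, β k * z ^ (k : ℕ))).const_add (z ^ d)
    have d3 := d1.add (d2.mul dq)
    have e3 : (fun t : ℂ => ∑ k, r k (x₀, t • β) * z ^ (k : ℕ)) +
        (fun t : ℂ => z ^ d + t * ∑ k, β k * z ^ (k : ℕ)) * (fun t : ℂ => q ((x₀, t • β), z))
        =ᶠ[𝓝 0] fun _ => h (x₀, z) := by
      filter_upwards [tl.eventually h3] with t ht
      simp only [Pi.add_apply, Pi.mul_apply]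
      rw [ht]
      simp only [pv, wp, monicVal, a', Pi.smul_apply, smul_eq_mul, Finset.mul_sum, mul_assoc]
    have := (d3.congr_of_eventuallyEq e3.symm).unique (hasDerivAt_const _ _)
    rw [hmon]
    simp only [zero_mul, Finset.sum_const_zero, zero_add, add_zero, zero_smul] at this
    field_simp
    linear_combination this
  have hinv : (fderiv ℂ f (x₀, 0) ∘L .inr ℂ E (Fin d → ℂ)).IsInvertible := by
    let L := fderiv ℂ f (x₀, 0) ∘L .inr ℂ E (Fin d → ℂ)
    refine ⟨(LinearEquiv.ofInjectiveEndo (L : (Fin d → ℂ) →ₗ[ℂ] (Fin d → ℂ)) hinj).toContinuousLinearEquiv, ?_⟩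
    ext1 v; rfl
  have : CompleteSpace E := FiniteDimensional.complete ℂ E
  set ψ := cdf.implicitFunction (by simp) hinv with hψ
  have hψ0 : ψ x₀ = 0 := cdf.implicitFunction_apply_self (by simp) hinv
  have hψa : AnalyticAt ℂ ψ x₀ := (cdf.contDiffAt_implicitFunction (by simp) hinv).analyticAt
  have hψe : ∀ᶠ x in 𝓝 x₀, f (x, ψ x) = f (x₀, 0) :=
    cdf.eventually_apply_implicitFunction (by simp) hinv
  have hmap2 : AnalyticAt ℂ (fun y : E × ℂ => ((y.1, ψ y.1), y.2)) (x₀, 0) :=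
    (analyticAt_fst.prod (AnalyticAt.comp (g := ψ) (f := Prod.fst) (x := (x₀, (0 : ℂ))) hψa
      analyticAt_fst)).prod analyticAt_snd
  refine ⟨d, fun k x => ψ x k, fun y => q ((y.1, ψ y.1), y.2), fun k => ?_, fun k => ?_, ?_, ?_, ?_⟩
  · exact ((ContinuousLinearMap.proj (R := ℂ) (φ := fun _ : Fin d => ℂ) k).analyticAt _).comp hψa
  · simp [hψ0]
  · exact AnalyticAt.comp_of_eq (g := q) (f := fun y : E × ℂ => ((y.1, ψ y.1), y.2)) hqa hmap2
      (by simp [hψ0])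
  · simpa [hψ0] using hq0
  · have t2 : Tendsto (fun y : E × ℂ => ((y.1, ψ y.1), y.2)) (𝓝 (x₀, 0)) (𝓝 ((x₀, 0), 0)) := by
      have := hmap2.continuousAt.tendsto
      simpa [hψ0] using this
    filter_upwards [t2.eventually hqe,
      (continuous_fst.tendsto' (x₀, (0 : ℂ)) x₀ rfl).eventually hψe] with y h1 h2
    have h2' : ∀ k, r k (y.1, ψ y.1) = 0 := fun k => by
      have := congrFun h2 k
      simpa [f, hr0'] using this
    simp only [pv, h2', zero_mul, Finset.sum_const_zero, zero_add] at h1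
    exact h1

end
end

/-! ### Real points of complex space and regular real directions -/

section
/-- The inclusion `ℝⁿ → ℂⁿ`. -/
def emb {n : ℕ} (x : Fin n → ℝ) : Fin n → ℂ := fun i => (x i : ℂ)

theorem norm_emb {n : ℕ} (x : Fin n → ℝ) : ‖emb x‖ = ‖x‖ := by
  simp [emb, Pi.norm_def]

theorem continuous_emb {n : ℕ} : Continuous (emb (n := n)) :=
  continuous_pi fun i => Complex.continuous_ofReal.comp (continuous_apply i)

theorem emb_zero {n : ℕ} : emb (0 : Fin n → ℝ) = 0 := by funext i; simp [emb]

theorem emb_add {n : ℕ} (x y : Fin n → ℝ) : emb (x + y) = emb x + emb y := by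
  funext i; simp [emb]

theorem emb_sub {n : ℕ} (x y : Fin n → ℝ) : emb (x - y) = emb x - emb y := by
  funext i; simp [emb]

theorem emb_smul {n : ℕ} (t : ℝ) (y : Fin n → ℝ) : emb (t • y) = (t : ℂ) • emb y := by
  funext i; simp [emb]

theorem emb_injective {n : ℕ} : Function.Injective (emb (n := n)) := by
  intro x y h; funext i; simpa [emb] using congrFun h i

section
variable {E : Type*} [NormedAddCommGroup E] [NormedSpace ℂ E]

theorem exists_ball_analytic {f : E → ℂ} {p : E} (hf : AnalyticAt ℂ f p) :
    ∃ ρ > 0, AnalyticOnNhd ℂ f (ball p ρ) := by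
  obtain ⟨ρ, hρ, h⟩ := Metric.nhds_basis_ball.mem_iff.mp hf.eventually_analyticAt
  exact ⟨ρ, hρ, fun z hz => h hz⟩

theorem eventually_zero_of_mul {f g : E → ℂ} {p : E} (hf : AnalyticAt ℂ f p)
    (hg : AnalyticAt ℂ g p) (h : ∀ᶠ z in 𝓝 p, f z * g z = 0) :
    (∀ᶠ z in 𝓝 p, f z = 0) ∨ ∀ᶠ z in 𝓝 p, g z = 0 := by
  by_contra! hne
  obtain ⟨h1, h2⟩ := hne
  obtain ⟨ρ, hρ, hgb⟩ := exists_ball_analytic hg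
  obtain ⟨ρ', hρ', hfb⟩ := exists_ball_analytic hf
  have b1 : ∀ᶠ z in 𝓝 p, z ∈ ball p ρ := ball_mem_nhds p hρ
  have b2 : ∀ᶠ z in 𝓝 p, z ∈ ball p ρ' := ball_mem_nhds p hρ'
  have h3 := (h1.and_eventually (h.eventually_nhds.and (b1.and b2))).exists
  obtain ⟨z, hz0, hz1, hz2, hz3⟩ := h3
  have hz4 : ∀ᶠ w in 𝓝 z, f w ≠ 0 := (hfb z hz3).continuousAt.eventually_ne hz0
  have hz5 : g =ᶠ[𝓝 z] 0 := by
    filter_upwards [hz1, hz4] with w hw1 hw2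
    exact (mul_eq_zero.mp hw1).resolve_left hw2
  have := hgb.eqOn_zero_of_preconnected_of_eventuallyEq_zero
    ((convex_ball p ρ).isPreconnected) hz2 hz5
  refine h2 ?_
  filter_upwards [ball_mem_nhds p hρ] with w hw
  simpa using this hw

end

/-- `ℝⁿ` is a uniqueness set: an analytic germ vanishing on a real slice through `p` vanishes. -/
theorem totally_real {n : ℕ} {F : (Fin n → ℂ) → ℂ} {p : Fin n → ℂ} (hF : AnalyticAt ℂ F p)
    (h : ∀ᶠ x in 𝓝 (0 : Fin n → ℝ), F (p + emb x) = 0) : ∀ᶠ z in 𝓝 p, F z = 0 := by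
  obtain ⟨ρ₁, hρ₁, hA⟩ := exists_ball_analytic hF
  obtain ⟨ρ₂, hρ₂, hB⟩ := Metric.nhds_basis_ball.mem_iff.mp h
  set ρ := min ρ₁ ρ₂
  have hρ : 0 < ρ := lt_min hρ₁ hρ₂
  filter_upwards [ball_mem_nhds p (show 0 < ρ / 4 by positivity)] with z hz
  set x : Fin n → ℝ := fun i => (z i - p i).re
  set y : Fin n → ℝ := fun i => (z i - p i).im
  rw [mem_ball, dist_eq_norm] at hz
  have hx : ‖x‖ < ρ / 4 := lt_of_le_of_lt ((pi_norm_le_iff_of_nonneg (norm_nonneg _)).mpr fun i =>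
    (Complex.abs_re_le_norm _).trans (norm_le_pi_norm (z - p) i)) hz
  have hy : ‖y‖ < ρ / 4 := lt_of_le_of_lt ((pi_norm_le_iff_of_nonneg (norm_nonneg _)).mpr fun i =>
    (Complex.abs_im_le_norm _).trans (norm_le_pi_norm (z - p) i)) hz
  have hb : ∀ s : ℂ, ‖s‖ < 2 → ‖emb x + s • emb y‖ < ρ := by
    intro s hs
    have h1 := norm_add_le (emb x) (s • emb y)
    rw [norm_smul, norm_emb, norm_emb] at h1
    have : ‖s‖ * ‖y‖ ≤ 2 * (ρ / 4) := mul_le_mul hs.le hy.le (norm_nonneg _) (by norm_num)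
    linarith
  have hφ : AnalyticOnNhd ℂ (fun s : ℂ => F (p + (emb x + s • emb y))) (ball 0 2) := by
    intro s hs
    refine AnalyticAt.comp (g := F) (f := fun s : ℂ => p + (emb x + s • emb y)) (hA _ ?_) ?_
    · rw [mem_ball, dist_eq_norm, add_sub_cancel_left]
      exact (hb s (by simpa using hs)).trans_le (min_le_left _ _)
    · exact analyticAt_const.add (analyticAt_const.add (analyticAt_id.smul analyticAt_const))
  have hz0 : ∃ᶠ s in 𝓝[≠] (0 : ℂ), F (p + (emb x + s • emb y)) = 0 := by
    have t : Tendsto (fun t : ℝ => (t : ℂ)) (𝓝[≠] 0) (𝓝[≠] 0) := by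
      refine tendsto_nhdsWithin_iff.mpr ⟨?_, ?_⟩
      · exact (Complex.continuous_ofReal.tendsto' 0 0 (by simp)).mono_left nhdsWithin_le_nhds
      · filter_upwards [self_mem_nhdsWithin] with t ht
        simpa using ht
    refine t.frequently (Eventually.frequently ?_)
    have : ∀ᶠ t : ℝ in 𝓝[≠] 0, t ∈ ball (0 : ℝ) 2 :=
      nhdsWithin_le_nhds (ball_mem_nhds (0 : ℝ) (by norm_num))
    filter_upwards [this] with t ht
    rw [← emb_smul, ← emb_add]
    refine hB (show _ ∈ _ from ?_)
    rw [mem_ball_zero_iff, ← norm_emb, emb_add, emb_smul]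
    exact (hb t (by simpa using ht)).trans_le (min_le_right _ _)
  have := hφ.eqOn_zero_of_preconnected_of_frequently_eq_zero (convex_ball _ _).isPreconnected
    (mem_ball_self (by norm_num)) hz0 (show I ∈ ball (0 : ℂ) 2 by simp)
  have e : p + (emb x + I • emb y) = z := by
    funext i
    have := Complex.re_add_im (z i - p i)
    simp only [Pi.add_apply, Pi.smul_apply, emb, x, y, smul_eq_mul]
    linear_combination this
  simpa [e] using this

/-- A nonzero germ is not identically zero along some real line; this makes it regular in suitable real
linear coordinates. -/
theorem exists_real_direction {n : ℕ} {F : (Fin (n + 1) → ℂ) → ℂ} {p : Fin (n + 1) → ℂ}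
    (hF : AnalyticAt ℂ F p) (h : ¬ ∀ᶠ z in 𝓝 p, F z = 0) :
    ∃ v : Fin (n + 1) → ℝ, v ≠ 0 ∧ ¬ ∀ᶠ t in 𝓝 (0 : ℂ), F (p + t • emb v) = 0 := by
  by_cases h0 : F p = 0
  · by_contra! hv
    apply h
    refine totally_real hF ?_
    obtain ⟨ρ, hρ, hA⟩ := exists_ball_analytic hF
    filter_upwards [ball_mem_nhds (0 : Fin (n + 1) → ℝ) (show 0 < ρ / 2 by positivity)] with v hvb
    rw [mem_ball_zero_iff] at hvb
    by_cases hv0 : v = 0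
    · simpa [hv0, emb_zero] using h0
    have hφ : AnalyticOnNhd ℂ (fun s : ℂ => F (p + s • emb v)) (ball 0 2) := by
      intro s hs
      refine AnalyticAt.comp (g := F) (f := fun s : ℂ => p + s • emb v) (hA _ ?_) ?_
      · rw [mem_ball, dist_eq_norm, add_sub_cancel_left, norm_smul, norm_emb]
        rw [mem_ball_zero_iff] at hs
        nlinarith [norm_nonneg v, norm_nonneg s]
      · exact analyticAt_const.add (analyticAt_id.smul analyticAt_const)
    have := hφ.eqOn_zero_of_preconnected_of_eventuallyEq_zero (convex_ball _ _).isPreconnected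
      (mem_ball_self (by norm_num)) (hv v hv0) (show (1 : ℂ) ∈ ball (0 : ℂ) 2 by simp)
    simpa using this
  · refine ⟨fun _ => 1, fun h => by simpa using congrFun h 0, fun h' => h0 ?_⟩
    simpa using h'.self_of_nhds

/-- Linear coordinates `(x, t) ↦ x + t v` on `𝕜ⁿ⁺¹`, where `x` ranges over the hyperplane on which
the `j`-th coordinate vanishes. -/
noncomputable def coordL {𝕜 : Type*} [RCLike 𝕜] {n : ℕ} (j : Fin (n + 1)) (v : Fin (n + 1) → 𝕜)
    (hv : v j ≠ 0) : ((Fin n → 𝕜) × 𝕜) ≃L[𝕜] (Fin (n + 1) → 𝕜) :=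
  LinearEquiv.toContinuousLinearEquiv
  { toFun := fun y => Fin.insertNth (α := fun _ => 𝕜) j 0 y.1 + y.2 • v
    map_add' := fun y z => by
      funext i
      refine Fin.succAboveCases j ?_ (fun i => ?_) i <;> simp <;> ring
    map_smul' := fun c y => by
      funext i
      refine Fin.succAboveCases j ?_ (fun i => ?_) i <;> simp <;> ring
    invFun := fun w => (fun i => w (j.succAbove i) - w j / v j * v (j.succAbove i), w j / v j)
    left_inv := fun y => by
      ext i <;> simp [hv]
    right_inv := fun w => by
      funext i
      refine Fin.succAboveCases j ?_ (fun i => ?_) i <;> simp [hv] }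

theorem coordL_apply {𝕜 : Type*} [RCLike 𝕜] {n : ℕ} (j : Fin (n + 1)) (v : Fin (n + 1) → 𝕜)
    (hv : v j ≠ 0) (y) : coordL j v hv y = Fin.insertNth (α := fun _ => 𝕜) j 0 y.1 + y.2 • v := rfl

theorem coordL_emb {n : ℕ} (j : Fin (n + 1)) (v : Fin (n + 1) → ℝ) (hv : v j ≠ 0)
    (hv' : emb v j ≠ 0) (x : Fin n → ℝ) (t : ℝ) :
    coordL j (emb v) hv' (emb x, (t : ℂ)) = emb (coordL j v hv (x, t)) := by
  funext i
  rw [coordL_apply, emb, coordL_apply]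
  refine Fin.succAboveCases j ?_ (fun i => ?_) i <;> simp [emb]
end

/-! ### Rings of holomorphic germs are noetherian -/

section
section
variable {E : Type*} [NormedAddCommGroup E] [NormedSpace ℂ E]
variable {E' : Type*} [NormedAddCommGroup E'] [NormedSpace ℂ E']

/-- The ring of germs at `p` of holomorphic functions, as a subring of all germs. -/
def GRsub (p : E) : Subring (Germ (𝓝 p) ℂ) where
  carrier := {φ | ∃ f : E → ℂ, AnalyticAt ℂ f p ∧ φ = (f : Germ (𝓝 p) ℂ)}
  mul_mem' := by
    rintro _ _ ⟨f, hf, rfl⟩ ⟨g, hg, rfl⟩; exact ⟨f * g, hf.mul hg, rfl⟩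
  one_mem' := ⟨1, analyticAt_const, rfl⟩
  add_mem' := by
    rintro _ _ ⟨f, hf, rfl⟩ ⟨g, hg, rfl⟩; exact ⟨f + g, hf.add hg, rfl⟩
  zero_mem' := ⟨0, analyticAt_const, rfl⟩
  neg_mem' := by
    rintro _ ⟨f, hf, rfl⟩; exact ⟨-f, hf.neg, rfl⟩

/-- The ring of germs at `p` of holomorphic functions. -/
def GR (p : E) : Type _ := GRsub p

noncomputable instance (p : E) : CommRing (GR p) := inferInstanceAs (CommRing (GRsub p))

namespace GR

/-- The germ of a function analytic at `p`. -/
def mk {p : E} (f : E → ℂ) (hf : AnalyticAt ℂ f p) : GR p := ⟨(f : Germ (𝓝 p) ℂ), f, hf, rfl⟩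

theorem exists_rep {p : E} (φ : GR p) : ∃ f : E → ℂ, ∃ hf : AnalyticAt ℂ f p, mk f hf = φ := by
  obtain ⟨φ, f, hf, rfl⟩ := φ
  exact ⟨f, hf, rfl⟩

/-- A chosen representative of a germ. -/
noncomputable def rep {p : E} (φ : GR p) : E → ℂ := (exists_rep φ).choose

theorem rep_an {p : E} (φ : GR p) : AnalyticAt ℂ φ.rep p := (exists_rep φ).choose_spec.choose

theorem mk_rep {p : E} (φ : GR p) : mk φ.rep φ.rep_an = φ := (exists_rep φ).choose_spec.choose_spec

theorem mk_eq {p : E} {f g : E → ℂ} {hf : AnalyticAt ℂ f p} {hg : AnalyticAt ℂ g p} :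
    mk f hf = mk g hg ↔ f =ᶠ[𝓝 p] g := by
  exact Subtype.ext_iff.trans Germ.coe_eq

theorem rep_mk {p : E} {f : E → ℂ} (hf : AnalyticAt ℂ f p) : (mk f hf).rep =ᶠ[𝓝 p] f :=
  mk_eq.mp (mk_rep (mk f hf))

theorem ext_rep {p : E} {φ ψ : GR p} (h : φ.rep =ᶠ[𝓝 p] ψ.rep) : φ = ψ := by
  rw [← mk_rep φ, ← mk_rep ψ]; exact mk_eq.mpr h

theorem mk_mul {p : E} {f g : E → ℂ} (hf : AnalyticAt ℂ f p) (hg : AnalyticAt ℂ g p) :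
    mk f hf * mk g hg = mk (fun z => f z * g z) (hf.mul hg) := rfl

theorem mk_add {p : E} {f g : E → ℂ} (hf : AnalyticAt ℂ f p) (hg : AnalyticAt ℂ g p) :
    mk f hf + mk g hg = mk (fun z => f z + g z) (hf.add hg) := rfl

theorem rep_mul {p : E} (φ ψ : GR p) : (φ * ψ).rep =ᶠ[𝓝 p] fun z => φ.rep z * ψ.rep z := by
  have : φ * ψ = mk (fun z => φ.rep z * ψ.rep z) (φ.rep_an.mul ψ.rep_an) := by
    rw [← mk_mul φ.rep_an ψ.rep_an, mk_rep, mk_rep]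
  rw [this]; exact rep_mk _

theorem rep_add {p : E} (φ ψ : GR p) : (φ + ψ).rep =ᶠ[𝓝 p] fun z => φ.rep z + ψ.rep z := by
  have : φ + ψ = mk (fun z => φ.rep z + ψ.rep z) (φ.rep_an.add ψ.rep_an) := by
    rw [← mk_add φ.rep_an ψ.rep_an, mk_rep, mk_rep]
  rw [this]; exact rep_mk _

theorem mk_zero {p : E} : mk (p := p) (fun _ => 0) analyticAt_const = 0 := rfl
theorem mk_one {p : E} : mk (p := p) (fun _ => 1) analyticAt_const = 1 := rfl

theorem rep_zero {p : E} : (0 : GR p).rep =ᶠ[𝓝 p] fun _ => 0 := by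
  rw [← mk_zero]; exact rep_mk _

theorem rep_one {p : E} : (1 : GR p).rep =ᶠ[𝓝 p] fun _ => 1 := by
  rw [← mk_one]; exact rep_mk _

theorem mk_sum {p : E} {ι : Type*} (s : Finset ι) {f : ι → E → ℂ}
    (hf : ∀ i, AnalyticAt ℂ (f i) p) : ∑ i ∈ s, mk (f i) (hf i) =
      mk (fun z => ∑ i ∈ s, f i z) (Finset.analyticAt_fun_sum _ fun i _ => hf i) := by
  classical
  induction s using Finset.induction_on with
  | empty => simpa using mk_zero.symm
  | insert i s hi ih =>
    rw [Finset.sum_insert hi, ih, mk_add, mk_eq]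
    exact Eventually.of_forall fun z => by simp [Finset.sum_insert hi]

theorem rep_sum {p : E} {ι : Type*} (s : Finset ι) (φ : ι → GR p) :
    (∑ i ∈ s, φ i).rep =ᶠ[𝓝 p] fun z => ∑ i ∈ s, (φ i).rep z := by
  have : ∑ i ∈ s, φ i = mk (fun z => ∑ i ∈ s, (φ i).rep z)
      (Finset.analyticAt_fun_sum _ fun i _ => (φ i).rep_an) := by
    rw [← mk_sum s (fun i => (φ i).rep_an)]; simp only [mk_rep]
  rw [this]; exact rep_mk _

theorem mk_eq_zero {p : E} {f : E → ℂ} {hf : AnalyticAt ℂ f p} :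
    mk f hf = 0 ↔ ∀ᶠ z in 𝓝 p, f z = 0 := by
  rw [← mk_zero, mk_eq]; rfl

instance {p : E} : IsDomain (GR p) := by
  have : Nontrivial (GR p) := ⟨0, 1, fun h => by
    rw [← mk_zero, ← mk_one, mk_eq] at h
    simpa using h.self_of_nhds⟩
  have : NoZeroDivisors (GR p) := ⟨by
    intro φ ψ h
    rw [← mk_rep φ, ← mk_rep ψ, mk_mul, mk_eq_zero] at h
    rw [← mk_rep φ, ← mk_rep ψ, mk_eq_zero, mk_eq_zero]
    exact eventually_zero_of_mul φ.rep_an ψ.rep_an h⟩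
  exact NoZeroDivisors.to_isDomain _

theorem tendsto_of_eq {X Y : Type*} [TopologicalSpace X] [TopologicalSpace Y] {ψ : X → Y} {p : X}
    {q : Y} (h : ContinuousAt ψ p) (hq : ψ p = q) : Tendsto ψ (𝓝 p) (𝓝 q) := hq ▸ h.tendsto

/-- Pullback of germs along an analytic map. -/
noncomputable def pull {p : E} {q : E'} (ψ : E → E') (hψ : AnalyticAt ℂ ψ p) (hq : ψ p = q) :
    GR q →+* GR p where
  toFun φ := mk (fun z => φ.rep (ψ z)) (AnalyticAt.comp_of_eq φ.rep_an hψ hq)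
  map_one' := (mk_eq.mpr ((tendsto_of_eq hψ.continuousAt hq).eventually rep_one)).trans
    mk_one
  map_mul' φ χ := ((mk_eq (hg := (AnalyticAt.comp_of_eq φ.rep_an hψ hq).mul
    (AnalyticAt.comp_of_eq χ.rep_an hψ hq))).mpr
    ((tendsto_of_eq hψ.continuousAt hq).eventually (rep_mul φ χ))).trans (mk_mul _ _).symm
  map_zero' := (mk_eq.mpr ((tendsto_of_eq hψ.continuousAt hq).eventually rep_zero)).trans
    mk_zero
  map_add' φ χ := ((mk_eq (hg := (AnalyticAt.comp_of_eq φ.rep_an hψ hq).add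
    (AnalyticAt.comp_of_eq χ.rep_an hψ hq))).mpr
    ((tendsto_of_eq hψ.continuousAt hq).eventually (rep_add φ χ))).trans (mk_add _ _).symm

theorem pull_mk {p : E} {q : E'} (ψ : E → E') (hψ : AnalyticAt ℂ ψ p) (hq : ψ p = q) {f : E' → ℂ}
    (hf : AnalyticAt ℂ f q) :
    pull ψ hψ hq (mk f hf) = mk (fun z => f (ψ z)) (AnalyticAt.comp_of_eq hf hψ hq) :=
  (mk_eq (hf := AnalyticAt.comp_of_eq (mk f hf).rep_an hψ hq)).mpr
    ((tendsto_of_eq hψ.continuousAt hq).eventually (rep_mk hf))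

end GR

variable [FiniteDimensional ℂ E]

/-- Weierstrass division by a Weierstrass polynomial. -/
theorem wdivision {d : ℕ} {x₀ : E} {a : Fin d → E → ℂ} (ha : ∀ k, AnalyticAt ℂ (a k) x₀)
    (ha0 : ∀ k, a k x₀ = 0) {f : E × ℂ → ℂ} (hf : AnalyticAt ℂ f (x₀, 0)) :
    ∃ (r : Fin d → E → ℂ) (q : E × ℂ → ℂ), (∀ k, AnalyticAt ℂ (r k) x₀) ∧
      AnalyticAt ℂ q (x₀, 0) ∧ ∀ᶠ y in 𝓝 (x₀, 0), f y = pv r y + wp a y * q y := by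
  rcases Nat.eq_zero_or_pos d with hd | hd
  · subst hd
    exact ⟨fun _ _ => 0, f, fun k => k.elim0, hf, Eventually.of_forall fun y => by
      simp [pv, wp, monicVal]⟩
  have hw : ∀ ζ, wp a (x₀, ζ) = ζ ^ d := fun ζ => by simp [wp, monicVal, ha0]
  obtain ⟨r, hr, h⟩ := crt_exists ha (fun _ => f) (fun ζ hζ => by
    rw [hw, pow_eq_zero_iff hd.ne'] at hζ; rw [hζ]; exact hf)
  obtain ⟨q, hq, he⟩ := h 0 (by rw [hw]; exact zero_pow hd.ne')
  exact ⟨r, q, hr, hq, he⟩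

/-- The inductive step of the Rückert basis theorem: an ideal containing a germ regular in the last
variable is generated by that germ and finitely many remainders of Weierstrass division. -/
theorem GR.fg_of_regular {x₀ : E} [IsNoetherianRing (GR x₀)] (J : Ideal (GR ((x₀, 0) : E × ℂ)))
    {h : E × ℂ → ℂ} (hh : AnalyticAt ℂ h (x₀, 0)) (hJ : GR.mk h hh ∈ J)
    (hreg : ¬ ∀ᶠ z in 𝓝 (0 : ℂ), h (x₀, z) = 0) : J.FG := by
  obtain ⟨d, a, u, ha, ha0, hu, hu0, he⟩ := weierstrass hh hreg
  have hwpa : AnalyticAt ℂ (wp a) (x₀, (0 : ℂ)) := analyticAt_wp (y := (x₀, (0 : ℂ))) ha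
  set P : GR ((x₀, 0) : E × ℂ) := GR.mk (wp a) hwpa with hP
  have hPJ : P ∈ J := by
    have : P = GR.mk (fun y => (u y)⁻¹) (hu.inv hu0) * GR.mk h hh := by
      rw [GR.mk_mul, hP, GR.mk_eq]
      filter_upwards [he, hu.continuousAt.eventually_ne hu0] with y h1 h2
      rw [h1]; field_simp
    rw [this]; exact J.mul_mem_left _ hJ
  let π : GR x₀ →+* GR ((x₀, 0) : E × ℂ) := GR.pull Prod.fst analyticAt_fst rfl
  let Z : GR ((x₀, 0) : E × ℂ) := GR.mk Prod.snd analyticAt_snd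
  let T : (Fin d → GR x₀) → GR ((x₀, 0) : E × ℂ) := fun r => ∑ k, π (r k) * Z ^ (k : ℕ)
  have hZ : ∀ k : ℕ, Z ^ k = GR.mk (fun y => y.2 ^ k) (analyticAt_snd.pow k) := by
    intro k
    induction k with
    | zero => rw [pow_zero, ← GR.mk_one, GR.mk_eq]; exact Eventually.of_forall fun y => by simp
    | succ k ih => rw [pow_succ, ih, GR.mk_mul, GR.mk_eq]; exact Eventually.of_forall fun y => by simp [pow_succ]
  have hTadd : ∀ r s, T (r + s) = T r + T s := fun r s => by
    simp only [T, Pi.add_apply, map_add, add_mul, Finset.sum_add_distrib]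
  have hTsmul : ∀ (c : GR x₀) r, T (c • r) = π c * T r := fun c r => by
    simp only [T, Pi.smul_apply, smul_eq_mul, map_mul, Finset.mul_sum, mul_assoc]
  have hTpv : ∀ (r : Fin d → E → ℂ) (hr : ∀ k, AnalyticAt ℂ (r k) x₀),
      T (fun k => GR.mk (r k) (hr k)) = GR.mk (pv r) (analyticAt_pv (y := (x₀, (0 : ℂ))) hr) := by
    intro r hr
    simp only [T, π, GR.pull_mk, hZ, GR.mk_mul]
    rw [GR.mk_sum Finset.univ (f := fun (k : Fin d) (y : E × ℂ) => r k y.1 * y.2 ^ (k : ℕ))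
      (hf := fun k => ((hr k).comp_of_eq analyticAt_fst rfl).mul (analyticAt_snd.pow _))]
    rfl
  let N : Submodule (GR x₀) (Fin d → GR x₀) :=
    { carrier := {r | T r ∈ J}
      add_mem' := fun {r s} hr hs => by
        simp only [mem_ofPred_eq, hTadd] at *; exact J.add_mem hr hs
      zero_mem' := by simp [T]
      smul_mem' := fun c r hr => by
        simp only [mem_ofPred_eq, hTsmul] at *; exact J.mul_mem_left _ hr }
  obtain ⟨s, hs⟩ : N.FG := IsNoetherian.noetherian N
  classical
  refine ⟨insert P (s.image T), le_antisymm ?_ ?_⟩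
  · rw [Ideal.span_le]
    intro x hx
    simp only [Finset.coe_insert, Finset.coe_image, Set.mem_insert_iff, Set.mem_image,
      Finset.mem_coe] at hx
    rcases hx with rfl | ⟨r, hr, rfl⟩
    · exact hPJ
    · have : r ∈ N := by rw [← hs]; exact Submodule.subset_span hr
      exact this
  · intro φ hφ
    set S := Ideal.span ((insert P (s.image T) : Finset _) : Set (GR ((x₀, 0) : E × ℂ)))
    have hPS : P ∈ S := Ideal.subset_span (by simp)
    obtain ⟨r, q, hr, hq, hrq⟩ := wdivision ha ha0 φ.rep_an
    have e : φ = T (fun k => GR.mk (r k) (hr k)) + P * GR.mk q hq := by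
      rw [hTpv, hP, GR.mk_mul, GR.mk_add, ← GR.mk_rep φ, GR.mk_eq]; exact hrq
    have hrN : (fun k => GR.mk (r k) (hr k)) ∈ N := by
      change T _ ∈ J
      have : T (fun k => GR.mk (r k) (hr k)) = φ - P * GR.mk q hq := by rw [e]; ring
      rw [this]; exact J.sub_mem hφ (J.mul_mem_right _ hPJ)
    have hTS : ∀ r ∈ N, T r ∈ S := by
      intro r hrN
      rw [← hs] at hrN
      induction hrN using Submodule.span_induction with
      | mem r hr => exact Ideal.subset_span (by simp; right; exact ⟨r, hr, rfl⟩)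
      | zero => simp [T]
      | add r r' _ _ h1 h2 => rw [hTadd]; exact S.add_mem h1 h2
      | smul c r _ h1 => rw [hTsmul]; exact S.mul_mem_left _ h1
    rw [e]
    exact S.add_mem (hTS _ hrN) (S.mul_mem_right _ hPS)
end

/-- Affine coordinates centred at `p`. -/
noncomputable def aff {n : ℕ} (p : Fin (n + 1) → ℂ)
    (L : ((Fin n → ℂ) × ℂ) ≃L[ℂ] (Fin (n + 1) → ℂ)) (y : (Fin n → ℂ) × ℂ) : Fin (n + 1) → ℂ := p + L y

/-- Inverse of `aff`. -/
noncomputable def affInv {n : ℕ} (p : Fin (n + 1) → ℂ)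
    (L : ((Fin n → ℂ) × ℂ) ≃L[ℂ] (Fin (n + 1) → ℂ)) (w : Fin (n + 1) → ℂ) : (Fin n → ℂ) × ℂ :=
  L.symm (w - p)

section
variable {n : ℕ} (p : Fin (n + 1) → ℂ) (L : ((Fin n → ℂ) × ℂ) ≃L[ℂ] (Fin (n + 1) → ℂ))
theorem aff_affInv (w) : aff p L (affInv p L w) = w := by simp [aff, affInv]
theorem affInv_aff (y) : affInv p L (aff p L y) = y := by simp [aff, affInv]
theorem aff_zero : aff p L (0, 0) = p := by
  have : L (0, 0) = 0 := map_zero L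
  simp [aff, this]
theorem affInv_self : affInv p L p = (0, 0) := by
  simp [affInv, Prod.zero_eq_mk]
theorem analyticAt_aff (y) : AnalyticAt ℂ (aff p L) y :=
  analyticAt_const.add ((L : ((Fin n → ℂ) × ℂ) →L[ℂ] (Fin (n + 1) → ℂ)).analyticAt y)
theorem analyticAt_affInv (w) : AnalyticAt ℂ (affInv p L) w :=
  AnalyticAt.comp (g := L.symm) ((L.symm : (Fin (n + 1) → ℂ) →L[ℂ] ((Fin n → ℂ) × ℂ)).analyticAt _)
    (analyticAt_id.sub analyticAt_const)
end

theorem exists_coord {n : ℕ} {F : (Fin (n + 1) → ℂ) → ℂ} {p : Fin (n + 1) → ℂ}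
    (hF : AnalyticAt ℂ F p) (h : ¬ ∀ᶠ z in 𝓝 p, F z = 0) :
    ∃ (j : Fin (n + 1)) (v : Fin (n + 1) → ℝ) (_ : v j ≠ 0) (hv' : emb v j ≠ 0),
      ¬ ∀ᶠ z in 𝓝 (0 : ℂ), F (aff p (coordL j (emb v) hv') (0, z)) = 0 := by
  obtain ⟨v, hv, hd⟩ := exists_real_direction hF h
  obtain ⟨j, hj⟩ : ∃ j, v j ≠ 0 := by
    by_contra! h0; exact hv (funext h0)
  refine ⟨j, v, hj, by simpa [emb] using hj, fun h' => hd ?_⟩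
  filter_upwards [h'] with z hz
  have : (Fin.insertNth j 0 (0 : Fin n → ℂ) : Fin (n + 1) → ℂ) = 0 := by
    funext i
    refine Fin.succAboveCases j ?_ (fun i => ?_) i <;> simp
  simpa [aff, coordL_apply, this] using hz

/-- The Rückert basis theorem. -/
instance noetherian_GR {n : ℕ} (p : Fin n → ℂ) : IsNoetherianRing (GR p) := by
  induction n with
  | zero =>
    rw [isNoetherianRing_iff_ideal_fg]
    intro J
    by_cases hJ : J = ⊥
    · rw [hJ]; exact Submodule.fg_bot
    · obtain ⟨φ, hφ, hφ0⟩ := Submodule.exists_mem_ne_zero_of_ne_bot hJ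
      have hne : φ.rep p ≠ 0 := by
        intro h0
        apply hφ0
        rw [← GR.mk_rep φ, GR.mk_eq_zero]
        exact Eventually.of_forall fun z => by rw [Subsingleton.elim z p]; exact h0
      have : J = ⊤ := by
        rw [Ideal.eq_top_iff_one]
        have e : GR.mk _ (φ.rep_an.inv hne) * GR.mk _ φ.rep_an = 1 := by
          rw [GR.mk_mul, ← GR.mk_one, GR.mk_eq]
          filter_upwards [φ.rep_an.continuousAt.eventually_ne hne] with z hz
          simp [hz]
        rw [← e, GR.mk_rep]; exact J.mul_mem_left _ hφ
      rw [this]; exact ⟨{1}, by simp⟩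
  | succ n ih =>
    rw [isNoetherianRing_iff_ideal_fg]
    intro J
    by_cases hJ : J = ⊥
    · rw [hJ]; exact Submodule.fg_bot
    · obtain ⟨φ, hφ, hφ0⟩ := Submodule.exists_mem_ne_zero_of_ne_bot hJ
      have hne : ¬ ∀ᶠ z in 𝓝 p, φ.rep z = 0 := fun h => hφ0 (by
        rw [← GR.mk_rep φ, GR.mk_eq_zero]; exact h)
      obtain ⟨j, v, -, hv', hreg⟩ := exists_coord φ.rep_an hne
      set L := coordL j (emb v) hv'
      let e : GR ((0, 0) : (Fin n → ℂ) × ℂ) →+* GR p :=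
        GR.pull (affInv p L) (analyticAt_affInv p L p) (affInv_self p L)
      have hsurj : ∀ ψ : GR p, e (GR.mk (fun y => ψ.rep (aff p L y))
          (AnalyticAt.comp_of_eq ψ.rep_an (analyticAt_aff p L _) (aff_zero p L))) = ψ := by
        intro ψ
        refine (GR.pull_mk _ _ _ _).trans (Eq.trans (GR.mk_eq.mpr ?_) (GR.mk_rep ψ))
        exact Eventually.of_forall fun z => by simp only [aff_affInv]
      have hs : Function.Surjective e := fun ψ => ⟨_, hsurj ψ⟩
      have hfg := GR.fg_of_regular (J.comap e) (AnalyticAt.comp_of_eq φ.rep_an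
        (analyticAt_aff p L _) (aff_zero p L)) (by
          rw [Ideal.mem_comap]; exact (hsurj φ).symm ▸ hφ) hreg
      rw [← Ideal.map_comap_of_surjective e hs J]
      exact hfg.map e
end

/-! ### Oka's coherence theorem -/

section
section
variable {E : Type*} [NormedAddCommGroup E] [NormedSpace ℂ E]
variable {E' : Type*} [NormedAddCommGroup E'] [NormedSpace ℂ E']

/-- The germ of the vector `g` at `y` lies in the submodule generated by the columns of the matrix
of functions `A`. -/
def InIm {ι κ : Type} [Fintype κ] (A : ι → κ → E → ℂ) (g : ι → E → ℂ) (y : E) : Prop :=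
  ∃ c : κ → E → ℂ, (∀ k, AnalyticAt ℂ (c k) y) ∧ ∀ i, ∀ᶠ z in 𝓝 y, g i z = ∑ k, A i k z * c k z

/-- The columns of `B` generate the module of relations between the columns of `A` at `y`. -/
def Exact {ι κ μ : Type} [Fintype κ] [Fintype μ] (A : ι → κ → E → ℂ) (B : κ → μ → E → ℂ)
    (y : E) : Prop :=
  (∀ i m, ∀ᶠ z in 𝓝 y, ∑ k, A i k z * B k m z = 0) ∧
    ∀ c : κ → E → ℂ, (∀ k, AnalyticAt ℂ (c k) y) → (∀ i, ∀ᶠ z in 𝓝 y, ∑ k, A i k z * c k z = 0) →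
      InIm B c y

/-- The coherence property at `p`: relation modules of matrices of germs are finitely generated, by
the same relations at all points near `p`. -/
def OkaAt (p : E) : Prop := ∀ (ι κ : Type) [Finite ι] [Fintype κ] (A : ι → κ → E → ℂ),
  (∀ i k, AnalyticAt ℂ (A i k) p) → ∃ (μ : Type) (_ : Fintype μ) (B : κ → μ → E → ℂ),
    (∀ k m, AnalyticAt ℂ (B k m) p) ∧ ∀ᶠ y in 𝓝 p, Exact A B y

/-- The coherence property at `p` for a single row. -/
def OkaRow (p : E) : Prop := ∀ (κ : Type) [Fintype κ] (f : κ → E → ℂ),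
  (∀ k, AnalyticAt ℂ (f k) p) → ∃ (μ : Type) (_ : Fintype μ) (B : κ → μ → E → ℂ),
    (∀ k m, AnalyticAt ℂ (B k m) p) ∧ ∀ᶠ y in 𝓝 p, Exact (fun _ : Unit => f) B y

theorem InIm.congr {ι κ : Type} [Fintype κ] {A : ι → κ → E → ℂ} {g g' : ι → E → ℂ} {y : E}
    (h : InIm A g y) (hg : ∀ i, ∀ᶠ z in 𝓝 y, g' i z = g i z) : InIm A g' y := by
  obtain ⟨c, hc, he⟩ := h
  refine ⟨c, hc, fun i => ?_⟩
  filter_upwards [he i, hg i] with z h1 h2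
  rw [h2, h1]

theorem InIm.comp {ι κ μ : Type} [Fintype κ] [Fintype μ] {A : ι → κ → E → ℂ}
    {B : κ → μ → E → ℂ} {y : E} {d : μ → E → ℂ} (hd : ∀ m, AnalyticAt ℂ (d m) y)
    {c : κ → E → ℂ} (hc : ∀ k, ∀ᶠ z in 𝓝 y, c k z = ∑ m, B k m z * d m z) {g : ι → E → ℂ}
    (hg : ∀ i, ∀ᶠ z in 𝓝 y, g i z = ∑ k, A i k z * c k z) :
    InIm (fun i m z => ∑ k, A i k z * B k m z) g y := by
  refine ⟨d, hd, fun i => ?_⟩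
  filter_upwards [hg i, eventually_all.mpr hc] with z h1 h2
  rw [h1]
  simp only [h2, Finset.mul_sum, Finset.sum_mul]
  rw [Finset.sum_comm]
  simp only [mul_assoc]

/-- Coherence for one equation gives coherence for systems, by eliminating one row at a time. -/
theorem OkaRow.okaAt {p : E} (h : OkaRow p) : OkaAt p := by
  intro ι κ _ _ A hA
  classical
  have := Fintype.ofFinite ι
  have key : ∀ s : Finset ι, ∃ (μ : Type) (_ : Fintype μ) (B : κ → μ → E → ℂ),
      (∀ k m, AnalyticAt ℂ (B k m) p) ∧ ∀ᶠ y in 𝓝 p,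
        (∀ i ∈ s, ∀ m, ∀ᶠ z in 𝓝 y, ∑ k, A i k z * B k m z = 0) ∧
        ∀ c : κ → E → ℂ, (∀ k, AnalyticAt ℂ (c k) y) →
          (∀ i ∈ s, ∀ᶠ z in 𝓝 y, ∑ k, A i k z * c k z = 0) → InIm B c y := by
    intro s
    induction s using Finset.induction_on with
    | empty =>
      refine ⟨κ, inferInstance, fun k m _ => if k = m then 1 else 0, fun k m => analyticAt_const,
        Eventually.of_forall fun y => ⟨by simp, fun c hc _ => ⟨c, hc, fun i => ?_⟩⟩⟩
      exact Eventually.of_forall fun z => by simp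
    | insert i s _ ih =>
      obtain ⟨μ, _, B₁, hB₁, h₁⟩ := ih
      have hrow : ∀ m, AnalyticAt ℂ (fun z => ∑ k, A i k z * B₁ k m z) p := fun m =>
        Finset.analyticAt_fun_sum _ fun k _ => (hA i k).mul (hB₁ k m)
      obtain ⟨ν, _, B₂, hB₂, h₂⟩ := h μ (fun m z => ∑ k, A i k z * B₁ k m z) hrow
      refine ⟨ν, inferInstance, fun k t z => ∑ m, B₁ k m z * B₂ m t z, fun k t =>
        Finset.analyticAt_fun_sum _ fun m _ => (hB₁ k m).mul (hB₂ m t), ?_⟩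
      have hB₁' : ∀ᶠ y in 𝓝 p, ∀ k m, AnalyticAt ℂ (B₁ k m) y :=
        eventually_all.mpr fun k => eventually_all.mpr fun m => (hB₁ k m).eventually_analyticAt
      filter_upwards [h₁, h₂, hB₁'] with y ⟨h₁a, h₁b⟩ ⟨h₂a, h₂b⟩ h₃
      have swap : ∀ i' t z, ∑ k, A i' k z * ∑ m, B₁ k m z * B₂ m t z =
          ∑ m, (∑ k, A i' k z * B₁ k m z) * B₂ m t z := by
        intro i' t z
        simp only [Finset.mul_sum, Finset.sum_mul]
        rw [Finset.sum_comm]; simp only [mul_assoc]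
      refine ⟨?_, ?_⟩
      · intro i' hi' t
        simp only [swap]
        rcases Finset.mem_insert.mp hi' with rfl | hi'
        · exact h₂a () t
        · filter_upwards [eventually_all.mpr (h₁a i' hi')] with z hz
          simp [hz]
      · intro c hc hz
        obtain ⟨e, he, hce⟩ := h₁b c hc fun i' hi' => hz i' (Finset.mem_insert_of_mem hi')
        obtain ⟨g, hg, heg⟩ := h₂b e he (fun _ => by
          filter_upwards [hz i (Finset.mem_insert_self _ _), eventually_all.mpr hce] with z h4 h5
          rw [← h4]
          simp only [h5, Finset.mul_sum, Finset.sum_mul]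
          rw [Finset.sum_comm]; simp only [mul_assoc])
        exact InIm.comp hg heg hce
  obtain ⟨μ, iμ, B, hB, h⟩ := key Finset.univ
  refine ⟨μ, iμ, B, hB, h.mono fun y hy => ⟨fun i m => hy.1 i (Finset.mem_univ i) m,
    fun c hc hz => hy.2 c hc fun i _ => hz i⟩⟩

theorem InIm.pull {ι κ : Type} [Fintype κ] {A : ι → κ → E' → ℂ} {g : ι → E' → ℂ} {y : E}
    {ψ : E → E'} (hψ : AnalyticAt ℂ ψ y) (h : InIm A g (ψ y)) :
    InIm (fun i k z => A i k (ψ z)) (fun i z => g i (ψ z)) y := by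
  obtain ⟨c, hc, he⟩ := h
  exact ⟨fun k z => c k (ψ z), fun k => (hc k).comp hψ, fun i => hψ.continuousAt.eventually (he i)⟩

theorem OkaRow.transfer {p : E} {q : E'} (ψ : E → E') (φ : E' → E) (hψ : ∀ y, AnalyticAt ℂ ψ y)
    (hφ : ∀ y, AnalyticAt ℂ φ y) (h2 : ∀ y, φ (ψ y) = y) (hp : ψ p = q)
    {κ : Type} [Fintype κ] (f : κ → E → ℂ)
    (h : ∃ (μ : Type) (_ : Fintype μ) (B : κ → μ → E' → ℂ),
      (∀ k m, AnalyticAt ℂ (B k m) q) ∧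
        ∀ᶠ y in 𝓝 q, Exact (fun (_ : Unit) k z => f k (φ z)) B y) :
    ∃ (μ : Type) (_ : Fintype μ) (B : κ → μ → E → ℂ),
      (∀ k m, AnalyticAt ℂ (B k m) p) ∧ ∀ᶠ y in 𝓝 p, Exact (fun _ : Unit => f) B y := by
  obtain ⟨μ, iμ, B, hB, he⟩ := h
  refine ⟨μ, iμ, fun k m z => B k m (ψ z), fun k m => (hB k m).comp_of_eq (hψ p) hp, ?_⟩
  filter_upwards [(GR.tendsto_of_eq (hψ p).continuousAt hp).eventually he] with y ⟨ha, hb⟩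
  refine ⟨fun i m => ?_, fun c hc hz => ?_⟩
  · filter_upwards [(hψ y).continuousAt.eventually (ha i m)] with z hz
    simpa only [h2] using hz
  · have := hb (fun k z => c k (φ z)) (fun k => (hc k).comp_of_eq (hφ _) (h2 y)) (fun i => by
      filter_upwards [(GR.tendsto_of_eq (hφ (ψ y)).continuousAt (h2 y)).eventually (hz i)] with z hz
      exact hz)
    exact (this.pull (hψ y)).congr fun i => Eventually.of_forall fun z => by simp only [h2]

/-- Relations `S` together with the Koszul relations with pivot `k₀` generate a relation `c` as soon
as the entries of `c` off the pivot are combinations of `S` modulo the pivot entry. -/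
theorem koszul_finish {κ μ : Type} [Fintype κ] [DecidableEq κ] [Fintype μ] {f : κ → E → ℂ} {y : E}
    (hf : ∀ k, AnalyticAt ℂ (f k) y) (k₀ : κ) (hne : ¬ ∀ᶠ z in 𝓝 y, f k₀ z = 0)
    {S : κ → μ → E → ℂ} (hS : ∀ k m, AnalyticAt ℂ (S k m) y)
    (hfS : ∀ m, ∀ᶠ z in 𝓝 y, ∑ k, f k z * S k m z = 0) {c : κ → E → ℂ}
    (hc : ∀ k, AnalyticAt ℂ (c k) y) (hfc : ∀ᶠ z in 𝓝 y, ∑ k, f k z * c k z = 0)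
    {d : μ → E → ℂ} (hd : ∀ m, AnalyticAt ℂ (d m) y) {e : κ → E → ℂ}
    (he : ∀ k, AnalyticAt ℂ (e k) y)
    (h : ∀ k, k ≠ k₀ → ∀ᶠ z in 𝓝 y, c k z = ∑ m, S k m z * d m z + f k₀ z * e k z) :
    InIm (fun k (t : μ ⊕ κ) z => Sum.elim (fun m => S k m z)
      (fun j => (if k = j then f k₀ z else 0) - if k = k₀ then f j z else 0) t) c y := by
  refine ⟨fun t => Sum.elim d e t, fun t => by cases t <;> simp [hd, he], ?_⟩
  have hoff : ∀ k, k ≠ k₀ → ∀ z, ∑ j, ((if k = j then f k₀ z else 0) - if k = k₀ then f j z else 0)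
      * e j z = f k₀ z * e k z := by
    intro k hk z
    simp [hk]
  have hon : ∀ z, ∑ j, ((if k₀ = j then f k₀ z else 0) - if k₀ = k₀ then f j z else 0)
      * e j z = f k₀ z * e k₀ z - ∑ j, f j z * e j z := by
    intro z
    simp [sub_mul, Finset.sum_sub_distrib]
  intro k
  simp only [Fintype.sum_sum_type, Sum.elim_inl, Sum.elim_inr]
  by_cases hk : k = k₀
  · subst hk
    refine Eventually.congr (p := fun z => c k z = ∑ m, S k m z * d m z +
      (f k z * e k z - ∑ j, f j z * e j z)) ?_ (Eventually.of_forall fun z => by rw [hon])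
    let w : E → ℂ := fun z => c k z - (∑ m, S k m z * d m z + (f k z * e k z - ∑ j, f j z * e j z))
    have hw : AnalyticAt ℂ w y := by
      refine (hc k).sub ((Finset.analyticAt_fun_sum _ fun m _ => (hS k m).mul (hd m)).add
        (((hf k).mul (he k)).sub (Finset.analyticAt_fun_sum _ fun j _ => (hf j).mul (he j))))
    have hz : ∀ᶠ z in 𝓝 y, f k z * w z = 0 := by
      have h' : ∀ᶠ z in 𝓝 y, ∀ j, j ≠ k → c j z = ∑ m, S j m z * d m z + f k z * e j z :=
        eventually_all.mpr fun j => by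
          by_cases hj : j = k
          · exact Eventually.of_forall fun z h0 => (h0 hj).elim
          · exact (h j hj).mono fun z hz _ => hz
      filter_upwards [h', hfc, eventually_all.mpr hfS] with z h1 h2 h3
      have e1 : ∑ j, f j z * (∑ m, S j m z * d m z) = 0 := by
        simp only [Finset.mul_sum]
        rw [Finset.sum_comm]
        simp only [← mul_assoc, ← Finset.sum_mul, h3, zero_mul, Finset.sum_const_zero]
      rw [← Finset.add_sum_erase _ _ (Finset.mem_univ k)] at h2 e1
      have e2 : ∑ j ∈ Finset.univ.erase k, f j z * c j z =
          ∑ j ∈ Finset.univ.erase k, f j z * (∑ m, S j m z * d m z) +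
          f k z * ∑ j ∈ Finset.univ.erase k, f j z * e j z := by
        rw [Finset.mul_sum, ← Finset.sum_add_distrib]
        refine Finset.sum_congr rfl fun j hj => ?_
        rw [h1 j (Finset.ne_of_mem_erase hj)]; ring
      have e3 := Finset.add_sum_erase Finset.univ (fun j => f j z * e j z) (Finset.mem_univ k)
      simp only [w]
      rw [← e3]
      linear_combination h2 - e1 - e2
    rcases eventually_zero_of_mul (hf k) hw hz with h0 | h0
    · exact (hne h0).elim
    · filter_upwards [h0] with z hz
      exact sub_eq_zero.mp hz
  · simp only [hoff k hk]
    exact h k hk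

theorem koszul_rel {κ μ : Type} [Fintype κ] [DecidableEq κ] [Fintype μ] {f : κ → E → ℂ} {y : E}
    (k₀ : κ) {S : κ → μ → E → ℂ} (hfS : ∀ m, ∀ᶠ z in 𝓝 y, ∑ k, f k z * S k m z = 0) (t : μ ⊕ κ) :
    ∀ᶠ z in 𝓝 y, ∑ k, f k z * Sum.elim (fun m => S k m z)
      (fun j => (if k = j then f k₀ z else 0) - if k = k₀ then f j z else 0) t = 0 := by
  rcases t with m | j
  · exact hfS m
  · refine Eventually.of_forall fun z => ?_
    simp [mul_sub, Finset.sum_sub_distrib, mul_comm]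

end

section
variable {E : Type*} [NormedAddCommGroup E] [NormedSpace ℂ E] [FiniteDimensional ℂ E]

/-- `V'` is the matrix of multiplication by `V` on remainders modulo `wp a`, over the point `x`:
at every root `η` over `x`, `z ^ b * V i j` has remainder with coefficients `V' (i, ·) (j, b)`. -/
def Push {ι κ : Type} {d : ℕ} (a : Fin d → E → ℂ) (V : ι → κ → E × ℂ → ℂ)
    (V' : ι × Fin d → κ × Fin d → E → ℂ) (x : E) : Prop :=
  (∀ k, AnalyticAt ℂ (a k) x) ∧ (∀ s t, AnalyticAt ℂ (V' s t) x) ∧ ∀ η, wp a (x, η) = 0 →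
    (∀ i j, AnalyticAt ℂ (V i j) (x, η)) ∧ ∃ Q : ι → κ → Fin d → E × ℂ → ℂ,
      (∀ i j b, AnalyticAt ℂ (Q i j b) (x, η)) ∧ ∀ i j (b : Fin d), ∀ᶠ y in 𝓝 (x, η),
        y.2 ^ (b : ℕ) * V i j y = pv (fun s => V' (i, s) (j, b)) y + wp a y * Q i j b y

/-- The matrix `V'` of multiplication by `V` on remainders exists, by Weierstrass division. -/
theorem push_exists {ι κ : Type} [Finite ι] [Finite κ] {d : ℕ} {x₀ : E} {a : Fin d → E → ℂ}
    (ha : ∀ k, AnalyticAt ℂ (a k) x₀) (ha0 : ∀ k, a k x₀ = 0) {V : ι → κ → E × ℂ → ℂ}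
    (hV : ∀ i j, AnalyticAt ℂ (V i j) (x₀, 0)) :
    ∃ (V' : ι × Fin d → κ × Fin d → E → ℂ) (Q : ι → κ → Fin d → E × ℂ → ℂ),
      (∀ s t, AnalyticAt ℂ (V' s t) x₀) ∧ (∀ i j b, AnalyticAt ℂ (Q i j b) (x₀, 0)) ∧
      (∀ i j (b : Fin d), ∀ᶠ y in 𝓝 (x₀, 0),
        y.2 ^ (b : ℕ) * V i j y = pv (fun s => V' (i, s) (j, b)) y + wp a y * Q i j b y) ∧
      ∀ᶠ x in 𝓝 x₀, Push a V V' x := by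
  choose r Q hr hQ he using fun i j (b : Fin d) =>
    wdivision ha ha0 (f := fun y => y.2 ^ (b : ℕ) * V i j y) ((analyticAt_snd.pow _).mul (hV i j))
  refine ⟨fun s t => r s.1 t.1 t.2 s.2, Q, fun s t => hr _ _ _ _, hQ, he, ?_⟩
  have hroot : ∀ ζ, wp a (x₀, ζ) = 0 → ζ = 0 := by
    intro ζ hζ
    have : wp a (x₀, ζ) = ζ ^ d := by simp [wp, monicVal, ha0]
    rw [this] at hζ
    exact eq_zero_of_pow_eq_zero hζ
  have h1 : ∀ᶠ x in 𝓝 x₀, ∀ k, AnalyticAt ℂ (a k) x :=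
    eventually_all.mpr fun k => (ha k).eventually_analyticAt
  have h2 : ∀ᶠ x in 𝓝 x₀, ∀ (s : ι × Fin d) (t : κ × Fin d),
      AnalyticAt ℂ (r s.1 t.1 t.2 s.2) x :=
    eventually_all.mpr fun s => eventually_all.mpr fun t => (hr _ _ _ _).eventually_analyticAt
  have h3 := roots_spread (fun k => (ha k).continuousAt) (T := fun y =>
    (∀ i j, AnalyticAt ℂ (V i j) y) ∧ (∀ i j b, AnalyticAt ℂ (Q i j b) y) ∧ ∀ i j (b : Fin d),
      ∀ᶠ y' in 𝓝 y, y'.2 ^ (b : ℕ) * V i j y' = pv (r i j b) y' + wp a y' * Q i j b y')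
    (fun ζ hζ => by
      rw [hroot ζ hζ]
      refine ((eventually_all.mpr fun i => eventually_all.mpr fun j =>
        (hV i j).eventually_analyticAt).and ((eventually_all.mpr fun i => eventually_all.mpr fun j =>
        eventually_all.mpr fun b => (hQ i j b).eventually_analyticAt).and ?_))
      exact eventually_all.mpr fun i => eventually_all.mpr fun j =>
        eventually_all.mpr fun b => (he i j b).eventually_nhds)
  filter_upwards [h1, h2, h3] with x h1 h2 h3
  exact ⟨h1, h2, fun η hη => ⟨(h3 η hη).1, Q, (h3 η hη).2⟩⟩

theorem push_mul {ι κ : Type} [Fintype κ] {d : ℕ} {a : Fin d → E → ℂ}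
    {V : ι → κ → E × ℂ → ℂ} {V' : ι × Fin d → κ × Fin d → E → ℂ} {Q : ι → κ → Fin d → E × ℂ → ℂ}
    {y : E × ℂ} {i : ι}
    (h : ∀ j (b : Fin d), y.2 ^ (b : ℕ) * V i j y =
      pv (fun s => V' (i, s) (j, b)) y + wp a y * Q i j b y)
    (r : κ × Fin d → E → ℂ) :
    ∑ j, V i j y * pv (fun b => r (j, b)) y =
      pv (fun s x => ∑ t, V' (i, s) t x * r t x) y +
        wp a y * ∑ j, ∑ b, r (j, b) y.1 * Q i j b y := by
  have e1 : ∀ j, V i j y * pv (fun b => r (j, b)) y =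
      ∑ b, r (j, b) y.1 * (pv (fun s => V' (i, s) (j, b)) y + wp a y * Q i j b y) := by
    intro j
    simp only [← h]
    rw [pv, Finset.mul_sum]
    exact Finset.sum_congr rfl fun b _ => by ring
  simp only [e1, mul_add, Finset.sum_add_distrib]
  congr 1
  · simp only [pv, Finset.mul_sum, Finset.sum_mul]
    rw [← Fintype.sum_prod_type' (f := fun j b => ∑ s, r (j, b) y.1 * (V' (i, s) (j, b) y.1 * y.2 ^ (s : ℕ))),
      Finset.sum_comm]
    refine Finset.sum_congr rfl fun s _ => Finset.sum_congr rfl fun t _ => by ring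
  · rw [Finset.mul_sum]
    refine Finset.sum_congr rfl fun j _ => ?_
    rw [Finset.mul_sum]
    exact Finset.sum_congr rfl fun b _ => by ring

/-- Over a point where `Push` holds, a polynomial vector `r` of degree `< d` with `V r` divisible by
`wp a` at all roots satisfies `V' r = 0`. -/
theorem push_zero {ι κ : Type} [Finite ι] [Fintype κ] {d : ℕ} {a : Fin d → E → ℂ}
    {V : ι → κ → E × ℂ → ℂ} {V' : ι × Fin d → κ × Fin d → E → ℂ} {x : E} (hP : Push a V V' x)
    {r : κ × Fin d → E → ℂ} (hr : ∀ t, AnalyticAt ℂ (r t) x)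
    (h : ∀ i η, wp a (x, η) = 0 → ∃ q, AnalyticAt ℂ q (x, η) ∧ ∀ᶠ y in 𝓝 (x, η),
      ∑ j, V i j y * pv (fun b => r (j, b)) y = wp a y * q y) (s : ι × Fin d) :
    ∀ᶠ x' in 𝓝 x, ∑ t, V' s t x' * r t x' = 0 := by
  obtain ⟨ha, hV', hroot⟩ := hP
  obtain ⟨i, s⟩ := s
  have := crt_unique (r := fun s x => ∑ t, V' (i, s) t x * r t x) ha (fun η hη => by
    obtain ⟨hV, Q, hQ, he⟩ := hroot η hη
    obtain ⟨q, hq, hqe⟩ := h i η hη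
    refine ⟨fun y => q y - ∑ j, ∑ b, r (j, b) y.1 * Q i j b y, hq.sub
      (Finset.analyticAt_fun_sum _ fun j _ => Finset.analyticAt_fun_sum _ fun b _ =>
        ((hr _).comp_of_eq analyticAt_fst rfl).mul (hQ _ _ _)), ?_⟩
    filter_upwards [hqe, eventually_all.mpr fun j => eventually_all.mpr fun b => he i j b] with y h1 h2
    rw [push_mul h2] at h1
    linear_combination h1)
  exact this.mono fun x' hx' => hx' s

theorem wp_not_eventually_zero {d : ℕ} (a : Fin d → E → ℂ) (y : E × ℂ) :
    ¬ ∀ᶠ z in 𝓝 y, wp a z = 0 := by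
  intro h
  have h1 : ∀ᶠ z in 𝓝 y.2, wp a (y.1, z) = 0 :=
    (Continuous.tendsto (f := fun z : ℂ => (y.1, z)) (by fun_prop) y.2).eventually h
  exact infinite_of_mem_nhds y.2 h1 (finite_roots fun k => a k y.1)

/-- The inductive step of Oka's theorem: if `f k₀` is regular in the last variable, relations reduce,
modulo Koszul relations, to polynomial relations, which are governed by a matrix in one variable
fewer. -/
theorem oka_regular {x₀ : E} (hO : OkaAt x₀) {κ : Type} [Fintype κ] {f : κ → E × ℂ → ℂ}
    (hf : ∀ k, AnalyticAt ℂ (f k) (x₀, 0)) (k₀ : κ)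
    (hreg : ¬ ∀ᶠ z in 𝓝 (0 : ℂ), f k₀ (x₀, z) = 0) :
    ∃ (μ : Type) (_ : Fintype μ) (B : κ → μ → E × ℂ → ℂ),
      (∀ k m, AnalyticAt ℂ (B k m) (x₀, 0)) ∧ ∀ᶠ y in 𝓝 (x₀, 0), Exact (fun _ : Unit => f) B y := by
  classical
  obtain ⟨d, a, u, ha, ha0, hu, hu0, hPu⟩ := weierstrass (hf k₀) hreg
  obtain ⟨V', Q, hV', hQ, hQe, hpush⟩ := push_exists (ι := Unit) (V := fun _ => f) ha ha0 (fun _ => hf)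
  obtain ⟨μ, iμ, B', hB', hex⟩ := hO (Unit × Fin d) (κ × Fin d) V' hV'
  -- the relations lifted from the base
  let S : κ → μ → E × ℂ → ℂ := fun k t y => pv (fun b => B' (k, b) t) y -
    if k = k₀ then (u y)⁻¹ * ∑ j, ∑ b, B' (j, b) t y.1 * Q () j b y else 0
  have hS : ∀ k m, AnalyticAt ℂ (S k m) (x₀, 0) := by
    intro k m
    refine (analyticAt_pv fun b => hB' _ _).sub ?_
    split_ifs
    · exact (hu.inv hu0).mul (Finset.analyticAt_fun_sum _ fun j _ =>
        Finset.analyticAt_fun_sum _ fun b _ => ((hB' _ _).comp_of_eq analyticAt_fst rfl).mul (hQ _ _ _))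
    · exact analyticAt_const
  have hun : ∀ᶠ y in 𝓝 (x₀, (0 : ℂ)), u y ≠ 0 := hu.continuousAt.eventually_ne hu0
  have hfst : Tendsto Prod.fst (𝓝 (x₀, (0 : ℂ))) (𝓝 x₀) := continuous_fst.tendsto _
  have hVB : ∀ᶠ x in 𝓝 x₀, ∀ t s, ∑ l, V' s l x * B' l t x = 0 := by
    refine eventually_all.mpr fun t => eventually_all.mpr fun s => ?_
    exact hex.self_of_nhds.1 s t
  have hfS : ∀ᶠ y in 𝓝 (x₀, 0), ∀ m, ∑ k, f k y * S k m y = 0 := by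
    filter_upwards [hPu, hun, hfst.eventually hVB,
      eventually_all.mpr fun j => eventually_all.mpr fun b => hQe () j b] with y h1 h2 h3 h4 m
    have := push_mul (V := fun _ => f) (i := ()) h4 (fun l => B' l m)
    have hz : pv (fun s x => ∑ t, V' ((), s) t x * B' t m x) y = 0 := by
      simp [pv, h3 m]
    rw [hz, zero_add] at this
    simp only [S, mul_sub, Finset.sum_sub_distrib]
    rw [this]
    simp only [mul_ite, mul_zero, Finset.sum_ite_eq', Finset.mem_univ, if_true]
    rw [h1]
    field_simp
    ring
  refine ⟨μ ⊕ κ, inferInstance, fun k t z => Sum.elim (fun m => S k m z)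
      (fun j => (if k = j then f k₀ z else 0) - if k = k₀ then f j z else 0) t, ?_, ?_⟩
  · rintro k (m | j)
    · exact hS k m
    · simp only [Sum.elim_inr]
      split_ifs <;> first
        | exact (hf _).sub (hf _) | exact (hf _).sub analyticAt_const
        | exact analyticAt_const.sub (hf _) | exact analyticAt_const.sub analyticAt_const
  have hfan : ∀ᶠ y in 𝓝 (x₀, (0 : ℂ)), ∀ k, AnalyticAt ℂ (f k) y :=
    eventually_all.mpr fun k => (hf k).eventually_analyticAt
  have hSan : ∀ᶠ y in 𝓝 (x₀, (0 : ℂ)), ∀ k m, AnalyticAt ℂ (S k m) y :=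
    eventually_all.mpr fun k => eventually_all.mpr fun m => (hS k m).eventually_analyticAt
  filter_upwards [hfst.eventually hpush, hfst.eventually hex, hfan, hSan, hPu.eventually_nhds, hun,
    hu.eventually_analyticAt, hfS.eventually_nhds] with y hy1 hy2 hy3 hy4 hy5 hy6 hy7 hy8
  have hfS' : ∀ m, ∀ᶠ z in 𝓝 y, ∑ k, f k z * S k m z = 0 := fun m => hy8.mono fun z hz => hz m
  refine ⟨fun _ t => koszul_rel k₀ hfS' t, fun c hc hfc => ?_⟩
  have hfc := hfc ()
  have hwa : AnalyticAt ℂ (wp a) y := analyticAt_wp hy1.1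
  have hne : ¬ ∀ᶠ z in 𝓝 y, f k₀ z = 0 := by
    intro h0
    refine wp_not_eventually_zero a y ?_
    filter_upwards [h0, hy5, hy7.continuousAt.eventually_ne hy6] with z h1 h2 h3
    rw [h1] at h2
    exact (mul_eq_zero.mp h2.symm).resolve_right h3
  by_cases hroot : wp a y = 0
  · -- divide the entries of `c` by `wp a`, with remainder zero at the other roots over `y.1`
    have hdiv : ∀ k, ∃ r : Fin d → E → ℂ, (∀ b, AnalyticAt ℂ (r b) y.1) ∧ ∀ ζ, wp a (y.1, ζ) = 0 →
        ∃ q, AnalyticAt ℂ q (y.1, ζ) ∧ ∀ᶠ z in 𝓝 (y.1, ζ),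
          (if ζ = y.2 then c k else fun _ => 0) z = pv r z + wp a z * q z := by
      intro k
      refine crt_exists hy1.1 (fun ζ => if ζ = y.2 then c k else fun _ => 0) fun ζ _ => ?_
      split_ifs with h
      · rw [h]; exact hc k
      · exact analyticAt_const
    choose r hr hrq using hdiv
    have hz := push_zero hy1 (r := fun t => r t.1 t.2) (fun t => hr _ _) (fun _ η hη => by
      choose q hq hqe using fun k => hrq k η hη
      have hfη := (hy1.2.2 η hη).1 ()
      refine ⟨fun z => -∑ k, f k z * q k z, (Finset.analyticAt_fun_sum _ fun k _ =>
        (hfη k).mul (hq k)).neg, ?_⟩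
      have hs : ∀ᶠ z in 𝓝 (y.1, η), ∑ k, f k z * (if η = y.2 then c k else fun _ => 0) z = 0 := by
        by_cases h : η = y.2
        · simp only [h, if_true]; exact hfc
        · simp [h]
      filter_upwards [hs, eventually_all.mpr hqe] with z h1 h2
      simp only [h2, mul_add, Finset.sum_add_distrib] at h1
      rw [mul_neg, Finset.mul_sum, eq_neg_iff_add_eq_zero, ← h1]
      congr 1
      exact Finset.sum_congr rfl fun k _ => by ring)
    obtain ⟨e, he, hre⟩ := hy2.2 _ (fun t => hr _ _) hz
    choose q hq hqe using fun k => hrq k y.2 hroot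
    refine koszul_finish hy3 k₀ hne hy4 hfS' hc hfc (d := fun m z => e m z.1)
      (fun m => (he m).comp_of_eq analyticAt_fst rfl) (e := fun k z => (u z)⁻¹ * q k z)
      (fun k => (hy7.inv hy6).mul (hq k)) fun k hk => ?_
    have hre' : ∀ᶠ z in 𝓝 y, ∀ t : κ × Fin d, r t.1 t.2 z.1 = ∑ m, B' t m z.1 * e m z.1 :=
      (continuous_fst.tendsto y).eventually (eventually_all.mpr hre)
    filter_upwards [hqe k, hre', hy5, hy7.continuousAt.eventually_ne hy6] with z h1 h2 h3 h4
    simp only [if_true] at h1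
    rw [h1, h3]
    simp only [S, hk, if_false, sub_zero]
    have : pv (r k) z = ∑ m, pv (fun b => B' (k, b) m) z * e m z.1 := by
      simp only [pv, Finset.sum_mul]
      rw [Finset.sum_comm]
      refine Finset.sum_congr rfl fun b _ => ?_
      rw [h2 (k, b), Finset.sum_mul]
      exact Finset.sum_congr rfl fun m _ => by ring
    rw [this]
    field_simp
  · have hk0 : f k₀ y ≠ 0 := by
      rw [hy5.self_of_nhds]; exact mul_ne_zero hroot hy6
    refine koszul_finish hy3 k₀ hne hy4 hfS' hc hfc (d := fun _ _ => 0) (fun _ => analyticAt_const)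
      (e := fun k z => (f k₀ z)⁻¹ * c k z) (fun k => ((hy3 k₀).inv hk0).mul (hc k)) fun k _ => ?_
    filter_upwards [(hy3 k₀).continuousAt.eventually_ne hk0] with z hz
    simp only [mul_zero, Finset.sum_const_zero, zero_add]
    field_simp

end

/-- **Oka's coherence theorem**. -/
theorem oka {n : ℕ} (p : Fin n → ℂ) : OkaAt p := by
  induction n with
  | zero =>
    apply OkaRow.okaAt
    intro κ _ f hf
    classical
    by_cases h : ∀ k, ∀ᶠ z in 𝓝 p, f k z = 0
    · refine ⟨κ, inferInstance, fun k m _ => if k = m then 1 else 0, fun _ _ => analyticAt_const, ?_⟩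
      filter_upwards [(eventually_all.mpr h).eventually_nhds] with y hy
      refine ⟨fun _ m => hy.mono fun z hz => by simp [hz], fun c hc _ => ⟨c, hc, fun k => ?_⟩⟩
      exact Eventually.of_forall fun z => by simp
    · obtain ⟨k₀, hne⟩ := not_forall.mp h
      refine ⟨Empty ⊕ κ, inferInstance, fun k t z => Sum.elim (fun m : Empty => Empty.elim (C := (Fin 0 → ℂ) → ℂ) m z)
        (fun j => (if k = j then f k₀ z else 0) - if k = k₀ then f j z else 0) t, ?_, ?_⟩
      · rintro k (m | j)
        · exact m.elim
        · simp only [Sum.elim_inr]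
          split_ifs <;> first
            | exact (hf _).sub (hf _) | exact (hf _).sub analyticAt_const
            | exact analyticAt_const.sub (hf _) | exact analyticAt_const.sub analyticAt_const
      · refine Eventually.of_forall fun y => ?_
        rw [Subsingleton.elim y p]
        have hp : f k₀ p ≠ 0 := fun h => hne (Eventually.of_forall fun z => by
          rw [Subsingleton.elim z p, h])
        refine ⟨fun _ t => koszul_rel (S := fun _ (m : Empty) => m.elim) k₀ (fun m => m.elim) t,
          fun c hc hfc => ?_⟩
        refine koszul_finish (S := fun _ (m : Empty) => m.elim) (d := fun m => m.elim) hf k₀ hne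
          (fun _ m => m.elim) (fun m => m.elim) hc (hfc ()) (fun m => m.elim)
          (e := fun k z => (f k₀ z)⁻¹ * c k z) (fun k => ((hf k₀).inv hp).mul (hc k)) fun k _ => ?_
        filter_upwards [(hf k₀).continuousAt.eventually_ne hp] with z hz
        simp only [Finset.univ_eq_empty, Finset.sum_empty, zero_add]
        field_simp
  | succ n ih =>
    apply OkaRow.okaAt
    intro κ _ f hf
    classical
    by_cases h : ∀ k, ∀ᶠ z in 𝓝 p, f k z = 0
    · refine ⟨κ, inferInstance, fun k m _ => if k = m then 1 else 0, fun _ _ => analyticAt_const, ?_⟩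
      filter_upwards [(eventually_all.mpr h).eventually_nhds] with y hy
      refine ⟨fun _ m => hy.mono fun z hz => by simp [hz], fun c hc _ => ⟨c, hc, fun k => ?_⟩⟩
      exact Eventually.of_forall fun z => by simp
    · obtain ⟨k₀, hk₀⟩ := not_forall.mp h
      obtain ⟨j, v, -, hv', hreg⟩ := exists_coord (hf k₀) hk₀
      set L := coordL j (emb v) hv'
      refine OkaRow.transfer (affInv p L) (aff p L) (analyticAt_affInv p L) (analyticAt_aff p L)
        (aff_affInv p L) (affInv_self p L) f ?_
      exact oka_regular (ih 0) (f := fun k z => f k (aff p L z))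
        (fun k => (hf k).comp_of_eq (analyticAt_aff p L _) (aff_zero p L)) k₀ hreg
end

/-! ### Good sets for a matrix of germs -/

section
theorem geninv_field {K : Type*} [Field K] {ι κ : Type} [Fintype ι] [Fintype κ] [DecidableEq ι]
    [DecidableEq κ] (M : Matrix ι κ K) : ∃ D : Matrix κ ι K, M * D * M = M := by
  let f := Matrix.toLin' M
  obtain ⟨g, hg⟩ := f.rangeRestrict.exists_rightInverse_of_surjective f.range_rangeRestrict
  obtain ⟨g', hg'⟩ := LinearMap.exists_extend g
  refine ⟨LinearMap.toMatrix' g', ?_⟩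
  apply Matrix.toLin'.injective
  rw [Matrix.toLin'_mul, Matrix.toLin'_mul, Matrix.toLin'_toMatrix']
  ext1 v
  have h1 : ∀ w (hw : w ∈ LinearMap.range f), f (g' w) = w := by
    intro w hw
    have h2 : g' w = g ⟨w, hw⟩ := by rw [← hg']; rfl
    rw [h2]
    exact congrArg Subtype.val (LinearMap.congr_fun hg ⟨w, hw⟩)
  refine LinearMap.ext fun x => ?_
  exact h1 _ ⟨_, rfl⟩

/-- Every matrix over a domain has a generalized inverse up to a nonzero factor. -/
theorem geninv {R : Type*} [CommRing R] [IsDomain R] {ι κ : Type} [Fintype ι] [Fintype κ]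
    [DecidableEq ι] [DecidableEq κ] (M : Matrix ι κ R) :
    ∃ (h : R) (D : Matrix κ ι R), h ≠ 0 ∧ M * D * M = h • M := by
  let K := FractionRing R
  obtain ⟨D, hD⟩ := geninv_field (M.map (algebraMap R K))
  obtain ⟨b, hb⟩ := IsLocalization.exist_integer_multiples_of_finite (nonZeroDivisors R)
    (fun t : κ × ι => D t.1 t.2)
  choose D' hD' using hb
  let D0 : Matrix κ ι R := Matrix.of fun k i => D' (k, i)
  refine ⟨b, D0, nonZeroDivisors.ne_zero b.2, ?_⟩
  have hinj : Function.Injective (algebraMap R K) := IsFractionRing.injective R K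
  have e1 : D0.map (algebraMap R K) = algebraMap R K b • D := by
    ext k i
    simp only [D0, Matrix.map_apply, Matrix.of_apply, hD', Matrix.smul_apply, Algebra.smul_def]
    rfl
  have e2 : (M * D0 * M).map (algebraMap R K) = ((b : R) • M).map (algebraMap R K) := by
    rw [Matrix.map_mul, Matrix.map_mul, e1, Matrix.mul_smul, Matrix.smul_mul, hD]
    ext i k
    simp
  exact Matrix.map_injective hinj e2

section
variable {E : Type*} [NormedAddCommGroup E] [NormedSpace ℂ E]

theorem InIm.eventually {ι κ : Type} [Finite ι] [Fintype κ] {A : ι → κ → E → ℂ} {g : ι → E → ℂ}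
    {y : E} (h : InIm A g y) : ∀ᶠ z in 𝓝 y, InIm A g z := by
  obtain ⟨c, hc, he⟩ := h
  filter_upwards [eventually_all.mpr fun k => (hc k).eventually_analyticAt,
    eventually_all.mpr fun i => (he i).eventually_nhds] with z h1 h2
  exact ⟨c, h1, h2⟩

/-- Vanishing of an analytic function near points accumulating at `p` forces vanishing near `p`. -/
theorem eventually_zero_of_frequently {f : E → ℂ} {p : E} (hf : AnalyticAt ℂ f p)
    (h : ∃ᶠ y in 𝓝 p, ∀ᶠ z in 𝓝 y, f z = 0) : ∀ᶠ z in 𝓝 p, f z = 0 := by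
  obtain ⟨ρ, hρ, hfb⟩ := exists_ball_analytic hf
  have b1 : ∀ᶠ z in 𝓝 p, z ∈ ball p ρ := ball_mem_nhds p hρ
  obtain ⟨y, hy, hyb⟩ := (h.and_eventually b1).exists
  have := hfb.eqOn_zero_of_preconnected_of_eventuallyEq_zero
    ((convex_ball p ρ).isPreconnected) hyb hy
  filter_upwards [b1] with w hw
  simpa using this hw

/-- `V` is good along `S` if membership of germs in the image of `V` is a relatively closed
condition along `e '' S`. -/
def Good {X : Type} [TopologicalSpace X] (e : X → E) (S : Set X) {ι κ : Type} [Fintype κ]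
    (V : ι → κ → E → ℂ) : Prop :=
  ∀ y₀ ∈ S, ∀ m : ι → E → ℂ, (∀ i, AnalyticAt ℂ (m i) (e y₀)) →
    (∃ᶠ y in 𝓝[S] y₀, InIm V m (e y)) → InIm V m (e y₀)

/-- Every matrix `V` of germs has a companion `V2`, whose cokernel is killed by one nonzero germ `h`,
such that sets good for `V2` are good for `V`. With `V D V = h V` and `C = h - V D`, the relations of
`C` are generated by a matrix `W`, and `V2` collects the `W`-parts of the relations of `[W | V]`. -/
theorem reduce {p : E} (hO : OkaAt p) {ι κ : Type} [Fintype ι] [Fintype κ] {V : ι → κ → E → ℂ}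
    (hV : ∀ i k, AnalyticAt ℂ (V i k) p) :
    ∃ h : E → ℂ, AnalyticAt ℂ h p ∧ (¬∀ᶠ z in 𝓝 p, h z = 0) ∧
      ∃ (μ ν : Type) (_ : Fintype μ) (_ : DecidableEq μ) (_ : Fintype ν) (V2 : μ → ν → E → ℂ),
        (∀ i k, AnalyticAt ℂ (V2 i k) p) ∧
        (∀ᶠ y in 𝓝 p, ∀ i, InIm V2 (fun j z => if j = i then h z else 0) y) ∧
        ∀ᶠ N in (𝓝 p).smallSets, ∀ (X : Type) [TopologicalSpace X] (e : X → E), Continuous e →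
          ∀ S : Set X, (∀ y ∈ S, e y ∈ N) → Good e S V2 → Good e S V := by
  classical
  obtain ⟨h', D', hh, hD⟩ := geninv (Matrix.of fun i k => GR.mk (V i k) (hV i k))
  obtain ⟨h, hha, rfl⟩ := GR.exists_rep h'
  choose D hDa hDe using fun l j => GR.exists_rep (D' l j)
  have hDz : ∀ i k, ∀ᶠ z in 𝓝 p, ∑ j, (∑ l, V i l z * D l j z) * V j k z = h z * V i k z := by
    intro i k
    have h1 := congrFun (congrFun hD i) k
    simp only [Matrix.mul_apply, Matrix.smul_apply, Matrix.of_apply, smul_eq_mul, ← hDe,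
      GR.mk_mul] at h1
    have h3 : ∀ j, ∑ l, GR.mk (fun z => V i l z * D l j z) ((hV i l).mul (hDa l j)) =
        GR.mk (fun z => ∑ l, V i l z * D l j z)
          (Finset.analyticAt_fun_sum _ fun l _ => (hV i l).mul (hDa l j)) :=
      fun j => GR.mk_sum _ _
    simp only [h3, GR.mk_mul] at h1
    rw [GR.mk_sum, GR.mk_eq] at h1
    exact h1
  let C : ι → ι → E → ℂ := fun i j z => (if i = j then h z else 0) - ∑ l, V i l z * D l j z
  have hC : ∀ i j, AnalyticAt ℂ (C i j) p := fun i j => by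
    refine AnalyticAt.sub ?_ (Finset.analyticAt_fun_sum _ fun l _ => (hV i l).mul (hDa l j))
    by_cases hij : i = j
    · simpa [hij] using hha
    · simpa [hij] using analyticAt_const
  have hCV : ∀ i k, ∀ᶠ z in 𝓝 p, ∑ j, C i j z * V j k z = 0 := by
    intro i k
    filter_upwards [hDz i k] with z hz
    simp only [C, sub_mul, Finset.sum_sub_distrib, ite_mul, zero_mul, Finset.sum_ite_eq,
      Finset.mem_univ, if_true, hz, sub_self]
  obtain ⟨μ, _, W, hW, hWe⟩ := hO ι ι C hC
  obtain ⟨ν, _, B, hB, hBe⟩ := hO ι (μ ⊕ κ) (fun i => Sum.elim (W i) (V i))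
    (fun i k => by cases k <;> simp [hW, hV])
  refine ⟨h, hha, fun h0 => hh (GR.mk_eq_zero.mpr h0), μ, ν, inferInstance, inferInstance,
    inferInstance, fun i k => B (Sum.inl i) k, fun i k => hB _ k, ?_, ?_⟩
  · have hVa : ∀ᶠ y in 𝓝 p, ∀ i k, AnalyticAt ℂ (V i k) y :=
      eventually_all.mpr fun k => eventually_all.mpr fun m => (hV k m).eventually_analyticAt
    have hWa : ∀ᶠ y in 𝓝 p, ∀ i k, AnalyticAt ℂ (W i k) y :=
      eventually_all.mpr fun k => eventually_all.mpr fun m => (hW k m).eventually_analyticAt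
    have hDa' : ∀ᶠ y in 𝓝 p, ∀ i k, AnalyticAt ℂ (D i k) y :=
      eventually_all.mpr fun k => eventually_all.mpr fun m => (hDa k m).eventually_analyticAt
    filter_upwards [hBe, hWe, hWa, hDa', hha.eventually_analyticAt] with y hy1 hy2 hy3 hy4 hy5
    intro i
    have hcomb : InIm B (Sum.elim (fun j z => if j = i then h z else 0)
        (fun k z => - ∑ j, D k j z * W j i z)) y := by
      refine hy1.2 _ ?_ ?_
      · rintro (j | k)
        · by_cases hij : j = i
          · simpa [hij] using hy5
          · simpa [hij] using analyticAt_const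
        · exact (Finset.analyticAt_fun_sum _ fun j _ => (hy4 k j).mul (hy3 j i)).neg
      · intro t
        filter_upwards [hy2.1 t i] with z hz
        simp only [C, sub_mul, Finset.sum_sub_distrib, ite_mul, zero_mul, Finset.sum_ite_eq,
          Finset.mem_univ, if_true] at hz
        simp only [Fintype.sum_sum_type, Sum.elim_inl, Sum.elim_inr, mul_ite, mul_zero,
          Finset.sum_ite_eq', Finset.mem_univ, if_true, mul_neg, Finset.sum_neg_distrib]
        rw [← sub_eq_add_neg, ← hz, mul_comm (h z)]
        congr 1
        simp only [Finset.mul_sum, Finset.sum_mul]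
        rw [Finset.sum_comm]
        simp only [mul_assoc]
    obtain ⟨c, hc, he⟩ := hcomb
    exact ⟨c, hc, fun j => he (Sum.inl j)⟩
  · have hev := hBe.and (hWe.and ((eventually_all.mpr fun i => eventually_all.mpr fun k =>
      (hCV i k).eventually_nhds).and ((eventually_all.mpr fun i => eventually_all.mpr fun k =>
      (hC i k).eventually_analyticAt).and (eventually_all.mpr fun i => eventually_all.mpr fun k =>
      (hB i k).eventually_analyticAt))))
    filter_upwards [eventually_smallSets_forall.mpr hev] with N hN X _ e he S hS hgood
    intro y₀ hy₀ m hm hfreq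
    obtain ⟨h1, h2, h3, h4, h5⟩ := hN _ (hS y₀ hy₀)
    -- `C m` vanishes near `e y₀` by the identity theorem.
    have hCm : ∀ i, ∀ᶠ z in 𝓝 (e y₀), ∑ j, C i j z * m j z = 0 := by
      intro i
      refine eventually_zero_of_frequently
        (Finset.analyticAt_fun_sum _ fun j _ => (h4 i j).mul (hm j)) ?_
      have : Tendsto e (𝓝[S] y₀) (𝓝 (e y₀)) := he.continuousAt.mono_left nhdsWithin_le_nhds
      refine this.frequently ?_
      refine (hfreq.and_eventually self_mem_nhdsWithin).mono ?_
      rintro y ⟨⟨c, hc, hce⟩, hyS⟩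
      filter_upwards [eventually_all.mpr hce, eventually_all.mpr fun k => 
        (hN _ (hS y hyS)).2.2.1 i k] with z hz1 hz2
      simp only [hz1, Finset.mul_sum]
      rw [Finset.sum_comm]
      refine Finset.sum_eq_zero fun k _ => ?_
      rw [← zero_mul (c k z), ← hz2 k, Finset.sum_mul]
      simp only [mul_assoc]
    obtain ⟨c, hc, hce⟩ := h2.2 m hm hCm
    have hcfreq : ∃ᶠ y in 𝓝[S] y₀, InIm (fun i k => B (Sum.inl i) k) c (e y) := by
      have ev1 : ∀ᶠ y in 𝓝[S] y₀, (∀ k, AnalyticAt ℂ (c k) (e y)) ∧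
          ∀ i, ∀ᶠ z in 𝓝 (e y), m i z = ∑ k, W i k z * c k z := by
        have : Tendsto e (𝓝[S] y₀) (𝓝 (e y₀)) := he.continuousAt.mono_left nhdsWithin_le_nhds
        exact this.eventually ((eventually_all.mpr fun k => (hc k).eventually_analyticAt).and
          (eventually_all.mpr fun i => (hce i).eventually_nhds))
      refine (hfreq.and_eventually (ev1.and self_mem_nhdsWithin)).mono ?_
      rintro y ⟨⟨d, hd, hde⟩, ⟨hy1, hy2⟩, hyS⟩
      have hcomb : InIm B (Sum.elim c (fun k z => - d k z)) (e y) := by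
        refine (hN _ (hS y hyS)).1.2 _ ?_ ?_
        · rintro (j | k)
          · exact hy1 j
          · exact (hd k).neg
        · intro t
          filter_upwards [hde t, hy2 t] with z hz1 hz2
          simp only [Fintype.sum_sum_type, Sum.elim_inl, Sum.elim_inr, mul_neg,
            Finset.sum_neg_distrib]
          rw [← hz1, ← hz2, add_neg_cancel]
      obtain ⟨d', hd', he'⟩ := hcomb
      exact ⟨d', hd', fun j => he' (Sum.inl j)⟩
    obtain ⟨d, hd, hde⟩ := hgood y₀ hy₀ c hc hcfreq
    -- `c = B₁ d`, so `m = W c = W B₁ d = - V B₂ d`.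
    refine ⟨fun k z => - ∑ t, B (Sum.inr k) t z * d t z, fun k =>
      (Finset.analyticAt_fun_sum _ fun t _ => (h5 _ t).mul (hd t)).neg, fun i => ?_⟩
    filter_upwards [hce i, eventually_all.mpr hde, eventually_all.mpr (h1.1 i)] with z hz1 hz2 hz3
    simp only [Fintype.sum_sum_type, Sum.elim_inl, Sum.elim_inr] at hz3
    have hz4 : ∀ t, ∑ x, W i x z * B (Sum.inl x) t z = - ∑ x, V i x z * B (Sum.inr x) t z :=
      fun t => eq_neg_of_add_eq_zero_left (hz3 t)
    rw [hz1]
    simp only [hz2, Finset.mul_sum, mul_neg, Finset.sum_neg_distrib]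
    rw [Finset.sum_comm, Finset.sum_comm (s := (Finset.univ : Finset κ)), ← Finset.sum_neg_distrib]
    refine Finset.sum_congr rfl fun t _ => ?_
    simp only [← mul_assoc, ← Finset.sum_mul]
    rw [hz4, neg_mul]
end
end

/-! ### Goodness of the pushed-forward matrix -/

section
section
variable {E : Type*} [NormedAddCommGroup E] [NormedSpace ℂ E]

theorem InIm.add {ι κ : Type} [Fintype κ] {A : ι → κ → E → ℂ} {g g' : ι → E → ℂ} {y : E}
    (h : InIm A g y) (h' : InIm A g' y) : InIm A (fun i z => g i z + g' i z) y := by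
  obtain ⟨c, hc, he⟩ := h
  obtain ⟨c', hc', he'⟩ := h'
  refine ⟨fun k z => c k z + c' k z, fun k => (hc k).add (hc' k), fun i => ?_⟩
  filter_upwards [he i, he' i] with z h1 h2
  rw [h1, h2, ← Finset.sum_add_distrib]
  simp only [mul_add]

/-- If `P • e i` lies in the image of `A` for each `i`, so does `P • q`. -/
theorem InIm.of_unit {ι κ : Type} [Fintype ι] [DecidableEq ι] [Fintype κ] {A : ι → κ → E → ℂ}
    {P : E → ℂ} {y : E} (h : ∀ i, InIm A (fun j z => if j = i then P z else 0) y)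
    {q : ι → E → ℂ} (hq : ∀ i, AnalyticAt ℂ (q i) y) : InIm A (fun i z => P z * q i z) y := by
  choose c hc he using h
  refine ⟨fun k z => ∑ i, c i k z * q i z, fun k =>
    Finset.analyticAt_fun_sum _ fun i _ => (hc i k).mul (hq i), fun j => ?_⟩
  filter_upwards [eventually_all.mpr fun i => he i j] with z hz
  have : P z * q j z = ∑ i, (if j = i then P z else 0) * q i z := by simp
  rw [this]
  simp only [hz, Finset.mul_sum, Finset.sum_mul]
  rw [Finset.sum_comm]
  simp only [mul_assoc]

theorem InIm.of_cols {ι κ : Type} [Fintype κ] {A : ι → κ → E → ℂ} {c : κ → E → ℂ} {y : E}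
    (hc : ∀ k, AnalyticAt ℂ (c k) y) : InIm A (fun i z => ∑ k, A i k z * c k z) y :=
  ⟨c, hc, fun _ => Eventually.of_forall fun _ => rfl⟩
end

section
variable {E : Type*} [NormedAddCommGroup E] [NormedSpace ℂ E] [FiniteDimensional ℂ E]

/-- The image of `V'` over `x` consists of the polynomial vectors that lie in the image of `V` at
every root over `x`. -/
theorem push_inIm {ι κ : Type} [Fintype ι] [DecidableEq ι] [Fintype κ] {d : ℕ} {a : Fin d → E → ℂ}
    {V : ι → κ → E × ℂ → ℂ} {V' : ι × Fin d → κ × Fin d → E → ℂ} {x : E} (hP : Push a V V' x)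
    (hu : ∀ η, wp a (x, η) = 0 → ∀ i, InIm V (fun j z => if j = i then wp a z else 0) (x, η))
    {r : ι × Fin d → E → ℂ} :
    InIm V' r x ↔ ∀ η, wp a (x, η) = 0 → InIm V (fun i => pv (fun s => r (i, s))) (x, η) := by
  obtain ⟨ha, hV', hroot⟩ := hP
  constructor
  · rintro ⟨c, hc, he⟩ η hη
    obtain ⟨hV, Q, hQ, hQe⟩ := hroot η hη
    have hq : ∀ i, AnalyticAt ℂ (fun y => - ∑ j, ∑ b, c (j, b) y.1 * Q i j b y) (x, η) := fun i =>
      (Finset.analyticAt_fun_sum _ fun j _ => Finset.analyticAt_fun_sum _ fun b _ =>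
        ((hc _).comp_of_eq analyticAt_fst rfl).mul (hQ _ _ _)).neg
    have h1 := (InIm.of_cols (A := V) (c := fun j => pv (fun b => c (j, b))) (y := (x, η))
      (fun j => analyticAt_pv (fun b => hc _))).add (InIm.of_unit (hu η hη) hq)
    refine h1.congr fun i => ?_
    have he' : ∀ᶠ y : E × ℂ in 𝓝 (x, η), ∀ s, r (i, s) y.1 = ∑ t, V' (i, s) t y.1 * c t y.1 :=
      (continuous_fst.tendsto ((x, η) : E × ℂ)).eventually
        (p := fun x' => ∀ s, r (i, s) x' = ∑ t, V' (i, s) t x' * c t x')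
        (eventually_all.mpr fun s => he (i, s))
    filter_upwards [he', eventually_all.mpr fun j => eventually_all.mpr fun b => hQe i j b]
      with y hy1 hy2
    rw [push_mul hy2]
    simp only [pv, hy1]
    ring
  · intro h
    choose! c hc he using h
    choose r' hr' hr'e using fun k => crt_exists ha (fun ζ => c ζ k) (fun ζ hζ => hc ζ hζ k)
    refine ⟨fun t => r' t.1 t.2, fun t => hr' _ _, ?_⟩
    have key : ∀ i, ∀ᶠ x' in 𝓝 x, ∀ s : Fin d,
        r (i, s) x' - ∑ t : κ × Fin d, V' (i, s) t x' * r' t.1 t.2 x' = 0 := by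
      intro i
      refine crt_unique (r := fun s x' => r (i, s) x' - ∑ t : κ × Fin d, V' (i, s) t x' *
        r' t.1 t.2 x') ha (fun ζ hζ => ?_)
      obtain ⟨hV, Q, hQ, hQe⟩ := hroot ζ hζ
      choose q hq hqe using fun k => hr'e k ζ hζ
      refine ⟨fun y => (∑ j, ∑ b, r' j b y.1 * Q i j b y) + ∑ k, V i k y * q k y,
        (Finset.analyticAt_fun_sum _ fun j _ => Finset.analyticAt_fun_sum _ fun b _ =>
        ((hr' _ _).comp_of_eq analyticAt_fst rfl).mul (hQ _ _ _)).add
        (Finset.analyticAt_fun_sum _ fun k _ => (hV i k).mul (hq k)), ?_⟩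
      filter_upwards [he ζ hζ i, eventually_all.mpr hqe,
        eventually_all.mpr fun j => eventually_all.mpr fun b => hQe i j b] with y h1 h2 h3
      have h4 := push_mul h3 (fun t => r' t.1 t.2)
      have h5 : ∑ k, V i k y * c ζ k y = ∑ k, V i k y * pv (r' k) y +
          wp a y * ∑ k, V i k y * q k y := by
        simp only [h2, mul_add, Finset.sum_add_distrib, Finset.mul_sum]
        congr 1
        exact Finset.sum_congr rfl fun k _ => by ring
      have h6 : pv (fun s x' => r (i, s) x' - ∑ t : κ × Fin d, V' (i, s) t x' * r' t.1 t.2 x') y =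
          pv (fun s => r (i, s)) y -
            pv (fun s x' => ∑ t : κ × Fin d, V' (i, s) t x' * r' t.1 t.2 x') y := by
        simp only [pv, sub_mul, Finset.sum_sub_distrib]
      rw [h6, h1, h5]
      linear_combination h4
    rintro ⟨i, s⟩
    filter_upwards [key i] with z hz
    exact sub_eq_zero.mp (hz s)

/-- Goodness of the pushed-forward matrix along `S`: if, over points of `S` accumulating at `x₀`,
`m` lies in the image of `V` at all roots close to `ζ₀`, then it does so at `(x₀, ζ₀)`. -/
theorem push_good {X : Type} [TopologicalSpace X] {e : X → E} (hec : Continuous e) {S : Set X}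
    {ι κ : Type} [Fintype ι] [DecidableEq ι] [Fintype κ] {d : ℕ} {a : Fin d → E → ℂ}
    {V : ι → κ → E × ℂ → ℂ} {V' : ι × Fin d → κ × Fin d → E → ℂ} (hP : ∀ x ∈ S, Push a V V' (e x))
    (hu : ∀ x ∈ S, ∀ η, wp a (e x, η) = 0 →
      ∀ i, InIm V (fun j z => if j = i then wp a z else 0) (e x, η))
    (hgood : Good e S V') {x₀ : X} (hx₀ : x₀ ∈ S) {ζ₀ : ℂ} (hζ₀ : wp a (e x₀, ζ₀) = 0)
    {m : ι → E × ℂ → ℂ} (hm : ∀ i, AnalyticAt ℂ (m i) (e x₀, ζ₀))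
    (h : ∃ O ∈ 𝓝 ζ₀, ∃ᶠ x in 𝓝[S] x₀, ∀ ζ ∈ O, wp a (e x, ζ) = 0 → InIm V m (e x, ζ)) :
    InIm V m (e x₀, ζ₀) := by
  classical
  have ha := (hP x₀ hx₀).1
  obtain ⟨O, hO, hfreq⟩ := h
  choose r hr hre using fun i => crt_exists ha (fun ζ => if ζ = ζ₀ then m i else fun _ => 0)
    (fun ζ hζ => by
      by_cases h : ζ = ζ₀
      · subst h; simpa using hm i
      · simpa [h] using analyticAt_const)
  have hO' : ∀ᶠ y : E × ℂ in 𝓝 (e x₀, ζ₀), y.2 ∈ O := continuous_snd.continuousAt.eventually hO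
  -- over a point near `e x₀`, the vector `pv r` is `m` near `ζ₀` and `0` elsewhere, modulo `wp a`
  have hs := roots_spread (fun k => (ha k).continuousAt) (T := fun y =>
    (y.2 ∈ O ∧ ∃ q : ι → E × ℂ → ℂ, (∀ i, AnalyticAt ℂ (q i) y) ∧
      ∀ i, ∀ᶠ z in 𝓝 y, m i z = pv (r i) z + wp a z * q i z) ∨
    ∃ q : ι → E × ℂ → ℂ, (∀ i, AnalyticAt ℂ (q i) y) ∧
      ∀ i, ∀ᶠ z in 𝓝 y, 0 = pv (r i) z + wp a z * q i z) (by
    intro ζ hζ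
    choose q hq hqe using fun i => hre i ζ hζ
    by_cases h : ζ = ζ₀
    · subst h
      simp only [if_true] at hqe
      filter_upwards [eventually_all.mpr fun i => (hq i).eventually_analyticAt,
        eventually_all.mpr fun i => (hqe i).eventually_nhds, hO'] with y h1 h2 h3
      exact Or.inl ⟨h3, q, h1, h2⟩
    · simp only [h, if_false] at hqe
      filter_upwards [eventually_all.mpr fun i => (hq i).eventually_analyticAt,
        eventually_all.mpr fun i => (hqe i).eventually_nhds] with y h1 h2
      exact Or.inr ⟨q, h1, h2⟩)
  have hte : Tendsto e (𝓝[S] x₀) (𝓝 (e x₀)) := hec.continuousAt.mono_left nhdsWithin_le_nhds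
  have hrev : ∀ᶠ x in 𝓝[S] x₀, ∀ i k, AnalyticAt ℂ (r i k) (e x) :=
    hte.eventually (eventually_all.mpr fun i => eventually_all.mpr fun k =>
      (hr i k).eventually_analyticAt)
  have h1 : ∃ᶠ x in 𝓝[S] x₀, InIm V' (fun t => r t.1 t.2) (e x) := by
    refine (hfreq.and_eventually ((hte.eventually hs).and
      (hrev.and self_mem_nhdsWithin))).mono ?_
    rintro x ⟨hx1, hx2, hx3, hxS⟩
    refine (push_inIm (hP x hxS) (hu x hxS)).mpr fun η hη => ?_
    rcases hx2 η hη with ⟨hηO, q, hq, hqe⟩ | ⟨q, hq, hqe⟩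
    · refine ((hx1 η hηO hη).add (InIm.of_unit (hu x hxS η hη) fun i => (hq i).neg)).congr
        fun i => ?_
      filter_upwards [hqe i] with z hz
      simp only [hz, Pi.neg_apply]; ring
    · refine (InIm.of_unit (hu x hxS η hη) fun i => (hq i).neg).congr fun i => ?_
      filter_upwards [hqe i] with z hz
      simp only [Pi.neg_apply]; linear_combination - hz
  have h2 := hgood x₀ hx₀ (fun t => r t.1 t.2) (fun t => hr _ _) h1
  have h3 := (push_inIm (hP x₀ hx₀) (hu x₀ hx₀)).mp h2 ζ₀ hζ₀
  choose q hq hqe using fun i => hre i ζ₀ hζ₀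
  simp only [if_true] at hqe
  refine (h3.add (InIm.of_unit (hu x₀ hx₀ ζ₀ hζ₀) hq)).congr fun i => ?_
  filter_upwards [hqe i] with z hz
  exact hz

end
end

/-! ### Constancy of root multiplicities along good sets -/

section
section
variable {E : Type*} [NormedAddCommGroup E] [NormedSpace ℂ E]

/-- The distinct roots of the monic polynomial with lower coefficients `α`. -/
noncomputable def rootsF {d : ℕ} (α : Fin d → ℂ) : Finset ℂ := (wpoly α).roots.toFinset

theorem mem_rootsF {d : ℕ} {α : Fin d → ℂ} {w : ℂ} : w ∈ rootsF α ↔ monicVal α w = 0 := by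
  rw [rootsF, Multiset.mem_toFinset, Polynomial.mem_roots (monic_wpoly α).ne_zero,
    Polynomial.IsRoot, eval_wpoly]

theorem sum_mult {d : ℕ} (α : Fin d → ℂ) :
    ∑ w ∈ rootsF α, (wpoly α).rootMultiplicity w = d := by
  have h1 := Multiset.toFinset_sum_count_eq (wpoly α).roots
  simp only [Polynomial.count_roots] at h1
  rw [rootsF, h1, ← (IsAlgClosed.splits (wpoly α)).natDegree_eq_card_roots, natDegree_wpoly]

/-- The `k`-th derivative of `wp a` in the second variable. -/
noncomputable def ddz {d : ℕ} (a : Fin d → E → ℂ) (k : ℕ) (y : E × ℂ) : ℂ :=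
  (Polynomial.derivative^[k] (wpoly fun j => a j y.1)).eval y.2

theorem ddz_zero {d : ℕ} (a : Fin d → E → ℂ) (y : E × ℂ) : ddz a 0 y = wp a y := by
  simp [ddz, eval_wpoly, wp]

theorem analyticAt_ddz {d : ℕ} {a : Fin d → E → ℂ} {y : E × ℂ} (k : ℕ)
    (h : ∀ k, AnalyticAt ℂ (a k) y.1) : AnalyticAt ℂ (ddz a k) y := by
  have hc : ∀ i, AnalyticAt ℂ (fun y : E × ℂ => (wpoly fun j => a j y.1).coeff i) y := by
    intro i
    simp only [wpoly, Polynomial.coeff_add, Polynomial.finsetSum_coeff, Polynomial.coeff_C_mul]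
    refine analyticAt_const.add (Finset.analyticAt_fun_sum _ fun j _ => ?_)
    exact ((h j).comp_of_eq analyticAt_fst rfl).mul analyticAt_const
  have e : ddz a k = fun y : E × ℂ => ∑ i ∈ Finset.range (d + 1),
      ((i + k).descFactorial k • (wpoly fun j => a j y.1).coeff (i + k)) * y.2 ^ i := by
    funext y
    rw [ddz, Polynomial.eval_eq_sum_range' (n := d + 1)]
    · simp only [Polynomial.coeff_iterate_derivative]
    · have := Polynomial.natDegree_iterate_derivative (wpoly fun j => a j y.1) k
      rw [natDegree_wpoly] at this
      omega
  rw [e]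
  refine Finset.analyticAt_fun_sum _ fun i _ => ?_
  simp only [nsmul_eq_mul]
  exact (analyticAt_const.mul (hc _)).mul (analyticAt_snd.pow _)

theorem ddz_mult {d : ℕ} (a : Fin d → E → ℂ) (y : E × ℂ) (j : ℕ) :
    (∃ k ≤ j, ddz a k y ≠ 0) ↔ (wpoly fun i => a i y.1).rootMultiplicity y.2 ≤ j := by
  rw [← not_lt, Polynomial.lt_rootMultiplicity_iff_isRoot_iterate_derivative
    (monic_wpoly _).ne_zero]
  simp only [Polynomial.IsRoot, ddz]
  push Not
  rfl

/-- Block matrix with blocks `V` and the rows `(P, P', …, P^(j))` for `j < d`, where `P = wp a`;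
the latter detect the multiplicities of roots. -/
noncomputable def big {ι κ : Type} {d : ℕ} (a : Fin d → E → ℂ) (V : ι → κ → E × ℂ → ℂ) :
    (ι ⊕ Fin d) → (κ ⊕ (Fin d × Fin d)) → E × ℂ → ℂ
  | Sum.inl i, Sum.inl k => V i k
  | Sum.inr j, Sum.inr t => if j = t.1 ∧ t.2 ≤ j then ddz a t.2 else fun _ => 0
  | Sum.inl _, Sum.inr _ => fun _ => 0
  | Sum.inr _, Sum.inl _ => fun _ => 0

theorem big_an {ι κ : Type} {d : ℕ} {a : Fin d → E → ℂ} {V : ι → κ → E × ℂ → ℂ} {y : E × ℂ}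
    (ha : ∀ k, AnalyticAt ℂ (a k) y.1) (hV : ∀ i k, AnalyticAt ℂ (V i k) y) (s t) :
    AnalyticAt ℂ (big a V s t) y := by
  rcases s with i | j <;> rcases t with k | ⟨j', k⟩ <;> simp only [big]
  · exact hV i k
  · exact analyticAt_const
  · exact analyticAt_const
  · split_ifs
    · exact analyticAt_ddz _ ha
    · exact analyticAt_const

theorem big_inl {ι κ : Type} [Fintype κ] {d : ℕ} {a : Fin d → E → ℂ} {V : ι → κ → E × ℂ → ℂ}
    {y : E × ℂ} {m : ι → E × ℂ → ℂ} :
    InIm (big a V) (Sum.elim m fun _ _ => 0) y ↔ InIm V m y := by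
  constructor
  · rintro ⟨c, hc, he⟩
    refine ⟨fun k => c (Sum.inl k), fun k => hc _, fun i => ?_⟩
    filter_upwards [he (Sum.inl i)] with z hz
    simpa [Fintype.sum_sum_type, big] using hz
  · rintro ⟨c, hc, he⟩
    refine ⟨Sum.elim c fun _ _ => 0, fun k => ?_, fun i => ?_⟩
    · rcases k with k | k
      · exact hc k
      · exact analyticAt_const
    · rcases i with i | i
      · filter_upwards [he i] with z hz
        simpa [Fintype.sum_sum_type, big] using hz
      · simp [Fintype.sum_sum_type, big]

/-- The rows added in `big` express the multiplicity of the root `y.2` of `wp a` over `y.1`. -/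
theorem big_inr {ι κ : Type} [Fintype κ] {d : ℕ} {a : Fin d → E → ℂ} {V : ι → κ → E × ℂ → ℂ}
    {y : E × ℂ} (ha : ∀ k, AnalyticAt ℂ (a k) y.1) (j : Fin d) :
    InIm (big a V) (Sum.elim (fun _ _ => 0) fun j' _ => if j' = j then 1 else 0) y ↔
      (wpoly fun i => a i y.1).rootMultiplicity y.2 ≤ j := by
  rw [← ddz_mult a y j]
  constructor
  · rintro ⟨c, hc, he⟩
    by_contra! h
    have h1 := (he (Sum.inr j)).self_of_nhds
    simp only [Sum.elim_inr, if_true, Fintype.sum_sum_type, big, zero_mul, Finset.sum_const_zero,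
      zero_add] at h1
    refine one_ne_zero (h1.trans (Finset.sum_eq_zero fun t _ => ?_))
    split_ifs with ht
    · rw [h _ (by exact_mod_cast ht.2), zero_mul]
    · simp
  · rintro ⟨k, hk, hne⟩
    let k' : Fin d := ⟨k, lt_of_le_of_lt hk j.2⟩
    have han := analyticAt_ddz k ha
    refine ⟨Sum.elim (fun _ _ => 0) fun t z => if t = (j, k') then (ddz a k z)⁻¹ else 0,
      fun t => ?_, fun i => ?_⟩
    · rcases t with t | t
      · exact analyticAt_const
      · by_cases ht : t = (j, k')
        · simp only [Sum.elim_inr, ht, if_true]; exact han.inv hne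
        · simpa [ht] using analyticAt_const
    · rcases i with i | i
      · simp [Fintype.sum_sum_type, big]
      · filter_upwards [han.continuousAt.eventually_ne hne] with z hz
        have hk' : k' ≤ j := hk
        by_cases hi : i = j
        · subst hi; simp [Fintype.sum_sum_type, big, hk', hz, k']
        · simp [Fintype.sum_sum_type, big, hi]

theorem big_unit {ι κ : Type} [DecidableEq ι] [Fintype κ] {d : ℕ} {a : Fin d → E → ℂ}
    {V : ι → κ → E × ℂ → ℂ} {y : E × ℂ}
    (hu : ∀ i, InIm V (fun j z => if j = i then wp a z else 0) y) (s : ι ⊕ Fin d) :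
    InIm (big a V) (fun j z => if j = s then wp a z else 0) y := by
  rcases s with i | j
  · refine (big_inl.mpr (hu i)).congr fun s => Eventually.of_forall fun z => ?_
    rcases s with s | s <;> simp
  · let k' : Fin d := ⟨0, lt_of_le_of_lt (Nat.zero_le _) j.2⟩
    refine ⟨Sum.elim (fun _ _ => 0) fun t z => if t = (j, k') then 1 else 0, fun t => ?_,
      fun i => Eventually.of_forall fun z => ?_⟩
    · rcases t with t | t
      · exact analyticAt_const
      · exact analyticAt_const
    · have hk' : k' ≤ j := Nat.zero_le _
      rcases i with i | i
      · simp [Fintype.sum_sum_type, big]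
      · by_cases hi : i = j
        · subst hi; simp [Fintype.sum_sum_type, big, hk', k', ddz_zero]
        · simp [Fintype.sum_sum_type, big, hi]
end

section
variable {E : Type*} [NormedAddCommGroup E] [NormedSpace ℂ E] [FiniteDimensional ℂ E]
variable {X : Type} [TopologicalSpace X] {e : X → E} {S : Set X}
    {ι κ : Type} [Fintype ι] [DecidableEq ι] [Fintype κ] {d : ℕ} {a : Fin d → E → ℂ}
    {V : ι → κ → E × ℂ → ℂ} {V' : (ι ⊕ Fin d) × Fin d → (κ ⊕ Fin d × Fin d) × Fin d → E → ℂ}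

/-- Along a good set, the multiplicity of a root does not drop. -/
theorem mult_stable (hec : Continuous e) (hP : ∀ x ∈ S, Push a (big a V) V' (e x))
    (hu : ∀ x ∈ S, ∀ η, wp a (e x, η) = 0 →
      ∀ i, InIm V (fun j z => if j = i then wp a z else 0) (e x, η))
    (hgood : Good e S V') {x₀ : X} (hx₀ : x₀ ∈ S) {ζ₀ : ℂ} (hζ₀ : wp a (e x₀, ζ₀) = 0)
    {O : Set ℂ} (hO : O ∈ 𝓝 ζ₀) : ∀ᶠ x in 𝓝[S] x₀, ∃ ζ ∈ O,
      (wpoly fun i => a i (e x₀)).rootMultiplicity ζ₀ ≤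
        (wpoly fun i => a i (e x)).rootMultiplicity ζ := by
  by_contra hcon
  have hfreq := not_eventually.mp hcon
  have hpos : 0 < (wpoly fun i => a i (e x₀)).rootMultiplicity ζ₀ := by
    rw [Polynomial.rootMultiplicity_pos (monic_wpoly _).ne_zero, Polynomial.IsRoot, eval_wpoly]
    exact hζ₀
  have hle : (wpoly fun i => a i (e x₀)).rootMultiplicity ζ₀ ≤ d := by
    have h1 := sum_mult fun i => a i (e x₀)
    have h2 : ζ₀ ∈ rootsF fun i => a i (e x₀) := mem_rootsF.mpr hζ₀
    exact (Finset.single_le_sum (f := fun w => (wpoly fun i => a i (e x₀)).rootMultiplicity w)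
      (fun _ _ => Nat.zero_le _) h2).trans_eq h1
  set μ := (wpoly fun i => a i (e x₀)).rootMultiplicity ζ₀ with hμ
  let j : Fin d := ⟨μ - 1, by omega⟩
  have hlow : ∃ᶠ x in 𝓝[S] x₀, ∀ ζ ∈ O, wp a (e x, ζ) = 0 → InIm (big a V)
      (Sum.elim (fun _ _ => 0) fun j' _ => if j' = j then 1 else 0) (e x, ζ) := by
    refine (hfreq.and_eventually self_mem_nhdsWithin).mono ?_
    rintro x ⟨hx, hxS⟩ ζ hζ _
    push Not at hx
    refine (big_inr (y := (e x, ζ)) (hP x hxS).1 j).mpr ?_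
    have := hx ζ hζ
    simp only [j]
    omega
  have := push_good hec hP (fun x hx η hη => big_unit (hu x hx η hη)) hgood hx₀ hζ₀
    (m := Sum.elim (fun _ _ => 0) fun j' _ => if j' = j then 1 else 0) (fun i => by
      rcases i with i | i <;> exact analyticAt_const) ⟨O, hO, hlow⟩
  rw [big_inr (y := (e x₀, ζ₀)) (hP x₀ hx₀).1 j] at this
  simp only [j] at this
  omega

/-- Along a good set the distinct roots vary continuously, without merging or splitting. -/
theorem root_match (hec : Continuous e) (hP : ∀ x ∈ S, Push a (big a V) V' (e x))
    (hu : ∀ x ∈ S, ∀ η, wp a (e x, η) = 0 →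
      ∀ i, InIm V (fun j z => if j = i then wp a z else 0) (e x, η))
    (hgood : Good e S V') {x₀ : X} (hx₀ : x₀ ∈ S) {ε : ℝ} (hε : 0 < ε)
    (hsep : ∀ ζ ζ', wp a (e x₀, ζ) = 0 → wp a (e x₀, ζ') = 0 → dist ζ ζ' < 2 * ε → ζ = ζ') :
    ∀ᶠ x in 𝓝[S] x₀, (∀ ζ₀, wp a (e x₀, ζ₀) = 0 →
      ∃ ζ, dist ζ ζ₀ < ε ∧ wp a (e x, ζ) = 0 ∧
        ∀ ζ', dist ζ' ζ₀ < ε → wp a (e x, ζ') = 0 → ζ' = ζ) ∧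
      ∀ ζ, wp a (e x, ζ) = 0 → ∃ ζ₀, dist ζ ζ₀ < ε ∧ wp a (e x₀, ζ₀) = 0 := by
  have ha := (hP x₀ hx₀).1
  have hte : Tendsto e (𝓝[S] x₀) (𝓝 (e x₀)) := hec.continuousAt.mono_left nhdsWithin_le_nhds
  have h1 := hte.eventually (roots_spread (fun k => (ha k).continuousAt)
    (T := fun y => ∃ ζ₀, dist y.2 ζ₀ < ε ∧ wp a (e x₀, ζ₀) = 0) (fun ζ hζ => by
      have : ∀ᶠ y : E × ℂ in 𝓝 (e x₀, ζ), y.2 ∈ ball ζ ε :=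
        (continuous_snd.tendsto ((e x₀, ζ) : E × ℂ)).eventually (ball_mem_nhds ζ hε)
      exact this.mono fun y hy => ⟨ζ, hy, hζ⟩))
  have h2 : ∀ᶠ x in 𝓝[S] x₀, ∀ ζ₀ ∈ rootsF fun i => a i (e x₀), ∃ ζ ∈ ball ζ₀ ε,
      (wpoly fun i => a i (e x₀)).rootMultiplicity ζ₀ ≤
        (wpoly fun i => a i (e x)).rootMultiplicity ζ :=
    (Filter.eventually_all_finset _).mpr fun ζ₀ h =>
      mult_stable hec hP hu hgood hx₀ (mem_rootsF.mp h) (ball_mem_nhds ζ₀ hε)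
  filter_upwards [h1, h2] with x hx1 hx2
  refine ⟨fun ζ₀ hζ₀ => ?_, hx1⟩
  choose! φ hφ1 hφ2 using hx2
  have hφ0 : ∀ ζ ∈ rootsF fun i => a i (e x₀), φ ζ ∈ rootsF fun i => a i (e x) := by
    intro ζ hζ
    have hpos : 0 < (wpoly fun i => a i (e x₀)).rootMultiplicity ζ := by
      rw [Polynomial.rootMultiplicity_pos (monic_wpoly _).ne_zero, Polynomial.IsRoot, eval_wpoly]
      exact mem_rootsF.mp hζ
    have := hpos.trans_le (hφ2 ζ hζ)
    rw [Polynomial.rootMultiplicity_pos (monic_wpoly _).ne_zero, Polynomial.IsRoot,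
      eval_wpoly] at this
    exact mem_rootsF.mpr this
  have hsep' : ∀ ζ ∈ rootsF fun i => a i (e x₀), ∀ ζ' ∈ rootsF fun i => a i (e x₀), ∀ w,
      dist w ζ < ε → dist w ζ' < ε → ζ = ζ' := by
    intro ζ hζ ζ' hζ' w h h'
    refine hsep ζ ζ' (mem_rootsF.mp hζ) (mem_rootsF.mp hζ') ?_
    linarith [dist_triangle_left ζ ζ' w]
  have hζ₀' := (mem_rootsF (α := fun i => a i (e x₀))).mpr hζ₀
  refine ⟨φ ζ₀, hφ1 ζ₀ hζ₀', mem_rootsF.mp (hφ0 ζ₀ hζ₀'), fun ζ' hd hζ' => ?_⟩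
  by_contra hne
  -- a second root in the disc would make the multiplicities over `x` add up to more than `d`
  have hinj : Set.InjOn φ (rootsF fun i => a i (e x₀)) := by
    intro ζ hζ η hη he
    exact hsep' ζ hζ η hη (φ ζ) (hφ1 ζ hζ) (he ▸ hφ1 η hη)
  have hnot : ζ' ∉ (rootsF fun i => a i (e x₀)).image φ := by
    rw [Finset.mem_image]
    rintro ⟨η, hη, rfl⟩
    exact hne (by rw [hsep' η hη ζ₀ hζ₀' (φ η) (hφ1 η hη) hd])
  have hζ'm := (mem_rootsF (α := fun i => a i (e x))).mpr hζ'
  have hpos : 0 < (wpoly fun i => a i (e x)).rootMultiplicity ζ' := by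
    rw [Polynomial.rootMultiplicity_pos (monic_wpoly _).ne_zero, Polynomial.IsRoot, eval_wpoly]
    exact hζ'
  have hsub : insert ζ' ((rootsF fun i => a i (e x₀)).image φ) ⊆ rootsF fun i => a i (e x) := by
    intro w hw
    rcases Finset.mem_insert.mp hw with rfl | hw
    · exact hζ'm
    · obtain ⟨η, hη, rfl⟩ := Finset.mem_image.mp hw
      exact hφ0 η hη
  have hle := Finset.sum_le_sum_of_subset
    (f := fun w => (wpoly fun i => a i (e x)).rootMultiplicity w) hsub
  rw [Finset.sum_insert hnot, Finset.sum_image hinj, sum_mult] at hle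
  have hle2 := Finset.sum_le_sum hφ2
  rw [sum_mult] at hle2
  omega
end
end

/-! ### Real roots over good sets -/

section
theorem exists_eps {d : ℕ} (α : Fin d → ℂ) {δ : ℝ} (hδ : 0 < δ) : ∃ ε > 0, ε < δ ∧
    (∀ ζ ζ', monicVal α ζ = 0 → monicVal α ζ' = 0 → dist ζ ζ' < 2 * ε → ζ = ζ') ∧
    ∀ ζ, monicVal α ζ = 0 → |ζ.im| < ε → ζ.im = 0 := by
  have h0 : ∀ c : ℝ, 0 < c → ∀ᶠ ε in 𝓝[>] (0 : ℝ), ε < c := fun c hc =>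
    nhdsWithin_le_nhds (Iio_mem_nhds hc)
  have h1 : ∀ᶠ ε in 𝓝[>] (0 : ℝ), ∀ ζ ∈ rootsF α, ∀ ζ' ∈ rootsF α, dist ζ ζ' < 2 * ε → ζ = ζ' := by
    refine (eventually_all_finset _).mpr fun ζ _ => (eventually_all_finset _).mpr fun ζ' _ => ?_
    by_cases h : ζ = ζ'
    · exact Eventually.of_forall fun _ _ => h
    · filter_upwards [h0 (dist ζ ζ' / 2) (by have := dist_pos.mpr h; positivity)] with ε hε h'
      linarith
  have h2 : ∀ᶠ ε in 𝓝[>] (0 : ℝ), ∀ ζ ∈ rootsF α, |ζ.im| < ε → ζ.im = 0 := by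
    refine (eventually_all_finset _).mpr fun ζ _ => ?_
    by_cases h : ζ.im = 0
    · exact Eventually.of_forall fun _ _ => h
    · filter_upwards [h0 |ζ.im| (by positivity)] with ε hε h'
      linarith
  obtain ⟨ε, h, h1, h2, h3⟩ :=
    ((eventually_mem_nhdsWithin (a := (0 : ℝ)) (s := Ioi 0)).and ((h0 δ hδ).and (h1.and h2))).exists
  exact ⟨ε, h, h1, fun ζ ζ' hζ hζ' => h2 ζ (mem_rootsF.mpr hζ) ζ' (mem_rootsF.mpr hζ'),
    fun ζ hζ => h3 ζ (mem_rootsF.mpr hζ)⟩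

/-- The distinct real roots of the monic polynomial with lower coefficients `α`. -/
noncomputable def rrF {d : ℕ} (α : Fin d → ℂ) : Finset ℝ :=
  (rootsF α).preimage (fun t : ℝ => (t : ℂ)) Complex.ofReal_injective.injOn

theorem mem_rrF {d : ℕ} {α : Fin d → ℂ} {t : ℝ} : t ∈ rrF α ↔ monicVal α (t : ℂ) = 0 := by
  rw [rrF, Finset.mem_preimage, mem_rootsF]

theorem conj_root {d : ℕ} {α : Fin d → ℂ} (hα : ∀ k, (starRingEnd ℂ) (α k) = α k) {w : ℂ}
    (h : monicVal α w = 0) : monicVal α ((starRingEnd ℂ) w) = 0 := by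
  have : monicVal α ((starRingEnd ℂ) w) = (starRingEnd ℂ) (monicVal α w) := by
    simp [monicVal, hα]
  rw [this, h, map_zero]

section
variable {E : Type*} [NormedAddCommGroup E] [NormedSpace ℂ E] [FiniteDimensional ℂ E]
variable {X : Type} [TopologicalSpace X] {e : X → E} {S : Set X}
    {ι κ : Type} [Fintype ι] [DecidableEq ι] [Fintype κ] {d : ℕ} {a : Fin d → E → ℂ}
    {V : ι → κ → E × ℂ → ℂ} {V' : (ι ⊕ Fin d) × Fin d → (κ ⊕ Fin d × Fin d) × Fin d → E → ℂ}

/-- Along a good set, real roots stay real: a complex root near a real one would come with its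
conjugate, and the root would split. -/
theorem real_match (hec : Continuous e) (hP : ∀ x ∈ S, Push a (big a V) V' (e x))
    (hu : ∀ x ∈ S, ∀ η, wp a (e x, η) = 0 →
      ∀ i, InIm V (fun j z => if j = i then wp a z else 0) (e x, η))
    (hgood : Good e S V') (hreal : ∀ x ∈ S, ∀ k, (starRingEnd ℂ) (a k (e x)) = a k (e x))
    {x₀ : X} (hx₀ : x₀ ∈ S) {δ : ℝ} (hδ : 0 < δ) :
    ∃ ε > 0, ε < δ ∧ ∀ᶠ x in 𝓝[S] x₀, ∃ φ : ℝ → ℝ,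
      (∀ t ∈ rrF fun k => a k (e x₀), φ t ∈ (rrF fun k => a k (e x)) ∧ |φ t - t| < ε ∧
        ∀ ζ, dist ζ (t : ℂ) < ε → wp a (e x, ζ) = 0 → ζ = φ t) ∧
      (∀ t ∈ rrF fun k => a k (e x₀), ∀ t' ∈ rrF fun k => a k (e x₀), t < t' → φ t < φ t') ∧
      ∀ s ∈ rrF fun k => a k (e x), ∃ t ∈ rrF fun k => a k (e x₀), φ t = s := by
  obtain ⟨ε, hε, hεδ, hsep, him⟩ := exists_eps (fun k => a k (e x₀)) hδ
  refine ⟨ε, hε, hεδ, ?_⟩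
  filter_upwards [root_match hec hP hu hgood hx₀ hε hsep, self_mem_nhdsWithin] with x ⟨h1, h2⟩ hxS
  choose! ψ hψ1 hψ2 hψ3 using h1
  have hψr : ∀ t ∈ rrF fun k => a k (e x₀), ((ψ (t : ℂ)).re : ℂ) = ψ (t : ℂ) := by
    intro t ht
    have h0 : wp a (e x₀, (t : ℂ)) = 0 := mem_rrF.mp ht
    refine (Complex.conj_eq_iff_re).mp (hψ3 t h0 _ ?_ (conj_root (hreal x hxS) (hψ2 t h0)))
    have h3 := hψ1 t h0
    rwa [← Complex.dist_conj_conj, Complex.conj_ofReal] at h3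
  have hd : ∀ t ∈ rrF fun k => a k (e x₀), |(ψ (t : ℂ)).re - t| < ε := by
    intro t ht
    have h3 := hψ1 t (mem_rrF.mp ht)
    rw [← hψr t ht, dist_eq_norm, ← Complex.ofReal_sub, Complex.norm_real] at h3
    exact h3
  refine ⟨fun t => (ψ (t : ℂ)).re, fun t ht => ?_, fun t ht t' ht' htt' => ?_, fun s hs => ?_⟩
  · have h0 : wp a (e x₀, (t : ℂ)) = 0 := mem_rrF.mp ht
    refine ⟨mem_rrF.mpr ?_, hd t ht, fun ζ hζ hζ0 => ?_⟩
    · simp only [hψr t ht]; exact hψ2 t h0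
    · simp only [hψr t ht]; exact hψ3 t h0 ζ hζ hζ0
  · have h3 : 2 * ε ≤ t' - t := by
      by_contra! h4
      have := hsep t t' (mem_rrF.mp ht) (mem_rrF.mp ht') (by
        rw [dist_comm, dist_eq_norm, ← Complex.ofReal_sub, Complex.norm_real, Real.norm_eq_abs,
          abs_of_pos (by linarith)]
        exact h4)
      rw [Complex.ofReal_inj] at this
      linarith
    have h4 := abs_lt.mp (hd t ht)
    have h5 := abs_lt.mp (hd t' ht')
    simp only
    linarith [h4.2, h5.1]
  · obtain ⟨ζ₀, h3, h4⟩ := h2 s (mem_rrF.mp hs)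
    have h5 : ζ₀.im = 0 := him ζ₀ h4 (by
      refine lt_of_le_of_lt ?_ h3
      rw [dist_comm, dist_eq_norm]
      simpa using Complex.abs_im_le_norm (ζ₀ - s))
    have h6 : ((ζ₀.re : ℝ) : ℂ) = ζ₀ := by
      apply Complex.ext <;> simp [h5]
    refine ⟨ζ₀.re, mem_rrF.mpr (by rw [h6]; exact h4), ?_⟩
    simp only
    rw [h6, ← hψ3 ζ₀ h4 s h3 (mem_rrF.mp hs), Complex.ofReal_re]

/-- Over a preconnected good set the real roots form finitely many continuous sections. -/
theorem real_sections (hec : Continuous e) (hP : ∀ x ∈ S, Push a (big a V) V' (e x))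
    (hu : ∀ x ∈ S, ∀ η, wp a (e x, η) = 0 →
      ∀ i, InIm V (fun j z => if j = i then wp a z else 0) (e x, η))
    (hgood : Good e S V') (hreal : ∀ x ∈ S, ∀ k, (starRingEnd ℂ) (a k (e x)) = a k (e x))
    (hS : IsPreconnected S) : ∃ (M : ℕ) (θ : Fin M → X → ℝ), (∀ j, ContinuousOn (θ j) S) ∧
      ∀ x ∈ S, ∀ t : ℝ, wp a (e x, (t : ℂ)) = 0 ↔ ∃ j, θ j x = t := by
  rcases S.eq_empty_or_nonempty with rfl | ⟨x₁, hx₁⟩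
  · exact ⟨0, fun _ _ => 0, fun _ => continuousOn_empty _, fun x hx => absurd hx (notMem_empty x)⟩
  have hcard : ContinuousOn (fun x => (rrF fun k => a k (e x)).card) S := by
    intro x₀ hx₀
    obtain ⟨ε, -, -, h⟩ := real_match hec hP hu hgood hreal hx₀ one_pos
    refine Tendsto.congr' ?_ tendsto_const_nhds
    filter_upwards [h] with x ⟨φ, h1, h2, h3⟩
    refine Finset.card_bij (fun t _ => φ t) (fun t ht => (h1 t ht).1) ?_ ?_
    · intro t ht t' ht' htt'
      rcases lt_trichotomy t t' with h | h | h
      · exact absurd htt' (h2 t ht t' ht' h).ne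
      · exact h
      · exact absurd htt' (h2 t' ht' t ht h).ne'
    · intro s hs
      obtain ⟨t, ht, hts⟩ := h3 s hs
      exact ⟨t, ht, hts⟩
  have hM : ∀ x ∈ S, (rrF fun k => a k (e x)).card = (rrF fun k => a k (e x₁)).card := fun x hx =>
    hS.constant hcard hx hx₁
  set M := (rrF fun k => a k (e x₁)).card
  let θ : Fin M → X → ℝ := fun j x => if h : (rrF fun k => a k (e x)).card = M then
    (rrF fun k => a k (e x)).orderEmbOfFin h j else 0
  have hθ : ∀ x (hx : x ∈ S) j, θ j x = (rrF fun k => a k (e x)).orderEmbOfFin (hM x hx) j :=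
    fun x hx j => by simp only [θ, dif_pos (hM x hx)]
  refine ⟨M, θ, fun j x₀ hx₀ => ?_, fun x hx t => ?_⟩
  · refine Metric.tendsto_nhds.mpr fun δ hδ => ?_
    obtain ⟨ε, -, hεδ, h⟩ := real_match hec hP hu hgood hreal hx₀ hδ
    filter_upwards [h, self_mem_nhdsWithin] with x ⟨φ, h1, h2, h3⟩ hx
    have hu := Finset.orderEmbOfFin_unique (hM x hx) (f := fun i => φ (θ i x₀))
      (fun i => (h1 _ (by rw [hθ x₀ hx₀]; exact Finset.orderEmbOfFin_mem _ _ _)).1)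
      (fun i i' hii' => h2 _ (by rw [hθ x₀ hx₀]; exact Finset.orderEmbOfFin_mem _ _ _) _
        (by rw [hθ x₀ hx₀]; exact Finset.orderEmbOfFin_mem _ _ _) (by
          rw [hθ x₀ hx₀, hθ x₀ hx₀]
          exact ((rrF fun k => a k (e x₀)).orderEmbOfFin (hM x₀ hx₀)).strictMono hii'))
    have hj := congrFun hu j
    rw [hθ x hx, ← hj, Real.dist_eq]
    exact (h1 _ (by rw [hθ x₀ hx₀]; exact Finset.orderEmbOfFin_mem _ _ _)).2.1.trans hεδ
  · have h1 := Finset.range_orderEmbOfFin (rrF fun k => a k (e x)) (hM x hx)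
    have h2 : t ∈ rrF (fun k => a k (e x)) ↔ ∃ j, θ j x = t := by
      rw [← Finset.mem_coe, ← h1, Set.mem_range]
      simp only [hθ x hx]
    rw [← h2, mem_rrF]; rfl

/-- The graph of a real section is good for `V`. -/
theorem graph_good (hec : Continuous e) (hP : ∀ x ∈ S, Push a (big a V) V' (e x))
    (hu : ∀ x ∈ S, ∀ η, wp a (e x, η) = 0 →
      ∀ i, InIm V (fun j z => if j = i then wp a z else 0) (e x, η))
    (hgood : Good e S V') (hreal : ∀ x ∈ S, ∀ k, (starRingEnd ℂ) (a k (e x)) = a k (e x))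
    {θ : X → ℝ} (hθ : ContinuousOn θ S) (hθ0 : ∀ x ∈ S, wp a (e x, (θ x : ℂ)) = 0) :
    Good (fun y : X × ℝ => (e y.1, (y.2 : ℂ))) ((fun x => (x, θ x)) '' S) V := by
  rintro _ ⟨x₀, hx₀, rfl⟩ m hm hfreq
  rw [← big_inl (a := a)]
  obtain ⟨ε, hε, -, hmatch⟩ := real_match hec hP hu hgood hreal hx₀ one_pos
  refine push_good hec hP (fun x hx η hη => big_unit (hu x hx η hη)) hgood hx₀ (hθ0 x₀ hx₀)
    (fun i => ?_) ⟨ball (θ x₀ : ℂ) ε, ball_mem_nhds _ hε, ?_⟩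
  · rcases i with i | i
    · exact hm i
    · exact analyticAt_const
  · have ht : Tendsto (Prod.fst : X × ℝ → X) (𝓝[(fun x => (x, θ x)) '' S] (x₀, θ x₀)) (𝓝[S] x₀) := by
      refine tendsto_nhdsWithin_iff.mpr ⟨continuous_fst.continuousAt.mono_left nhdsWithin_le_nhds, ?_⟩
      filter_upwards [self_mem_nhdsWithin] with y hy
      obtain ⟨x, hx, rfl⟩ := hy
      exact hx
    refine ht.frequently ((hfreq.and_eventually ((ht.eventually (hmatch.and
      ((hθ x₀ hx₀).eventually (ball_mem_nhds _ hε)))).and self_mem_nhdsWithin)).mono ?_)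
    rintro _ ⟨h1, ⟨⟨φ, h2, -, -⟩, h3⟩, x, hx, rfl⟩ ζ hζ hζ0
    rw [big_inl]
    have ht0 : θ x₀ ∈ rrF fun k => a k (e x₀) := mem_rrF.mpr (hθ0 x₀ hx₀)
    have e1 := (h2 _ ht0).2.2 ζ hζ hζ0
    have e2 := (h2 _ ht0).2.2 (θ x) (by
      rw [dist_eq_norm, ← Complex.ofReal_sub, Complex.norm_real]; exact h3) (hθ0 x hx)
    rw [e1, ← e2]
    exact h1
end
end

/-! ### Chains of good sets for a regular matrix -/

section
section
variable {E : Type*} [NormedAddCommGroup E] [NormedSpace ℂ E]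

/-- `y` can be reached from `p` inside `U` along one preconnected set that is good for `V`. -/
def Reach {X : Type} [TopologicalSpace X] (e : X → E) {ι κ : Type} [Fintype κ] (V : ι → κ → E → ℂ)
    (U : Set X) (p y : X) : Prop :=
  ∃ S ⊆ U, IsPreconnected S ∧ p ∈ closure S ∧ y ∈ S ∧ Good e S V

/-- All points near `p` can be reached from `p` by chains of good preconnected sets. -/
def Strat {X : Type} [TopologicalSpace X] (e : X → E) (p : X) : Prop :=
  ∀ (ι κ : Type) [Fintype ι] [Fintype κ] (V : ι → κ → E → ℂ), (∀ i k, AnalyticAt ℂ (V i k) (e p)) →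
    ∀ U ∈ 𝓝 p, ∀ᶠ y in 𝓝 p, Relation.ReflTransGen (Reach e V U) p y
end

section
variable {E : Type*} [NormedAddCommGroup E] [NormedSpace ℂ E] [FiniteDimensional ℂ E]
variable {X : Type} [TopologicalSpace X] {e : X → E} {S : Set X}
    {ι κ : Type} [Fintype ι] [DecidableEq ι] [Fintype κ] {d : ℕ} {a : Fin d → E → ℂ}
    {V : ι → κ → E × ℂ → ℂ} {V' : (ι ⊕ Fin d) × Fin d → (κ ⊕ Fin d × Fin d) × Fin d → E → ℂ}

/-- The graph of a bounded section of real roots accumulates at a real root over every boundary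
point. -/
theorem graph_limit (hec : Continuous e) {θ : X → ℝ} {δ : ℝ} (hb : ∀ x ∈ S, |θ x| ≤ δ)
    (h0 : ∀ x ∈ S, wp a (e x, (θ x : ℂ)) = 0) {b : X} (hbS : b ∈ closure S)
    (ha : ∀ k, AnalyticAt ℂ (a k) (e b)) :
    ∃ ρ : ℝ, wp a (e b, (ρ : ℂ)) = 0 ∧ (b, ρ) ∈ closure ((fun x => (x, θ x)) '' S) := by
  have hne : (𝓝[S] b).NeBot := mem_closure_iff_nhdsWithin_neBot.mp hbS
  have hev : ∀ᶠ x in 𝓝[S] b, θ x ∈ Icc (-δ) δ := by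
    filter_upwards [self_mem_nhdsWithin] with x hx
    exact abs_le.mp (hb x hx)
  obtain ⟨ρ, -, hρ⟩ := isCompact_Icc.exists_mapClusterPt_of_frequently hev.frequently
  have hcl : (b, ρ) ∈ closure ((fun x => (x, θ x)) '' S) := by
    rw [mem_closure_iff_nhds]
    intro W hW
    obtain ⟨A, hA, B, hB, hAB⟩ := mem_nhds_prod_iff.mp hW
    have hA' : ∀ᶠ x in 𝓝[S] b, x ∈ A := nhdsWithin_le_nhds hA
    have hS' : ∀ᶠ x in 𝓝[S] b, x ∈ S := self_mem_nhdsWithin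
    have h1 := (mapClusterPt_iff_frequently.mp hρ B hB).and_eventually (hA'.and hS')
    obtain ⟨x, hx1, hx2, hx3⟩ := h1.exists
    exact ⟨(x, θ x), hAB ⟨hx2, hx1⟩, x, hx3, rfl⟩
  refine ⟨ρ, ?_, hcl⟩
  by_contra hne0
  have hc : ContinuousAt (fun y : X × ℝ => wp a (e y.1, (y.2 : ℂ))) (b, ρ) := by
    refine ContinuousAt.comp (g := wp a) (f := fun y : X × ℝ => (e y.1, (y.2 : ℂ)))
      (analyticAt_wp (y := (e b, (ρ : ℂ))) ha).continuousAt ?_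
    fun_prop
  obtain ⟨y, ⟨x, hx, rfl⟩, hy2⟩ :=
    ((mem_closure_iff_frequently.mp hcl).and_eventually (hc.eventually_ne hne0)).exists
  exact hy2 (h0 x hx)

/-- The inductive step for chains of good sets. Good sets over the base for the pushed-forward matrix
lift to the graphs of the real roots of `wp a`, which are good by `graph_good`; away from the roots
`V` is surjective, so vertical segments between consecutive roots are good too. -/
theorem strat_regular (hec : Continuous e) {x₀ : X} (hbase : Strat e x₀)
    (ha : ∀ k, AnalyticAt ℂ (a k) (e x₀)) (ha0 : ∀ k, a k (e x₀) = 0)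
    (hreal : ∀ᶠ x in 𝓝 x₀, ∀ k, (starRingEnd ℂ) (a k (e x)) = a k (e x))
    (hroot : ∀ᶠ x in 𝓝 x₀, wp a (e x, 0) = 0)
    (hV : ∀ i k, AnalyticAt ℂ (V i k) (e x₀, 0))
    (hu : ∀ᶠ y in 𝓝 (e x₀, (0 : ℂ)), ∀ i, InIm V (fun j z => if j = i then wp a z else 0) y)
    {U : Set (X × ℝ)} (hU : U ∈ 𝓝 (x₀, (0 : ℝ))) : ∀ᶠ y in 𝓝 (x₀, (0 : ℝ)),
      Relation.ReflTransGen (Reach (fun y : X × ℝ => (e y.1, (y.2 : ℂ))) V U) (x₀, 0) y := by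
  obtain ⟨V', Q, hV', -, -, hP⟩ := push_exists ha ha0 (V := big a V)
    (fun i j => big_an (y := (e x₀, 0)) ha hV i j)
  obtain ⟨A₁, hA₁, B₁, hB₁, hAB₁⟩ := mem_nhds_prod_iff.mp hU
  obtain ⟨A₂, hA₂, B₂, hB₂, hAB₂⟩ := mem_nhds_prod_iff.mp hu
  obtain ⟨δ₁, hδ₁, hball₁⟩ := Metric.mem_nhds_iff.mp hB₁
  obtain ⟨δ₂, hδ₂, hball₂⟩ := Metric.mem_nhds_iff.mp hB₂
  set δ := min δ₁ δ₂ with hδdef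
  have hδ : 0 < δ := lt_min hδ₁ hδ₂
  have hzero : ∀ ζ, wp a (e x₀, ζ) = 0 → ζ = 0 := by
    intro ζ hζ
    have : wp a (e x₀, ζ) = ζ ^ d := by simp [wp, monicVal, ha0]
    rw [this] at hζ
    exact eq_zero_of_pow_eq_zero hζ
  have hsmall := roots_spread (fun k => (ha k).continuousAt) (T := fun y => y.2 ∈ ball (0 : ℂ) δ)
    (fun ζ hζ => by
      rw [hzero ζ hζ]
      exact (continuous_snd.tendsto ((e x₀, 0) : E × ℂ)).eventually (ball_mem_nhds 0 hδ))
  have het := hec.tendsto x₀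
  obtain ⟨U', hU'm, hU'⟩ : ∃ U' ∈ 𝓝 x₀, ∀ x ∈ U', x ∈ A₁ ∧ e x ∈ A₂ ∧
      Push a (big a V) V' (e x) ∧ (∀ η, wp a (e x, η) = 0 → η ∈ ball (0 : ℂ) δ) ∧
      (∀ k, (starRingEnd ℂ) (a k (e x)) = a k (e x)) ∧ wp a (e x, 0) = 0 := by
    have hA₁' : ∀ᶠ x in 𝓝 x₀, x ∈ A₁ := hA₁
    have hA₂' : ∀ᶠ x in 𝓝 (e x₀), x ∈ A₂ := hA₂
    exact ⟨_, hA₁'.and ((het.eventually hA₂').and ((het.eventually hP).and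
      ((het.eventually hsmall).and (hreal.and hroot)))), fun x hx => hx⟩
  have huV : ∀ x ∈ U', ∀ η ∈ ball (0 : ℂ) δ, ∀ i,
      InIm V (fun j z => if j = i then wp a z else 0) (e x, η) := fun x hx η hη =>
    hAB₂ ⟨(hU' x hx).2.1, hball₂ (ball_subset_ball (min_le_right δ₁ δ₂) hη)⟩
  have hx₀U : x₀ ∈ U' := mem_of_mem_nhds hU'm
  have hreal_mem : ∀ t : ℝ, (t : ℂ) ∈ ball (0 : ℂ) δ → t ∈ B₁ := fun t ht => by
    have h1 : |t| < δ := by simpa using ht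
    have h2 : |t| < δ₁ := h1.trans_le (min_le_left δ₁ δ₂)
    exact hball₁ (by simpa using h2)
  have hstep := hbase _ _ V' hV' U' hU'm
  -- real roots over reachable base points are reachable
  have hroots : ∀ c, Relation.ReflTransGen (Reach e V' U') x₀ c → c ∈ U' ∧ ∀ t : ℝ,
      wp a (e c, (t : ℂ)) = 0 → Relation.ReflTransGen
        (Reach (fun y : X × ℝ => (e y.1, (y.2 : ℂ))) V U) (x₀, 0) (c, t) := by
    intro c hc
    induction hc with
    | refl =>
      refine ⟨hx₀U, fun t ht => ?_⟩
      have := hzero t ht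
      rw [Complex.ofReal_eq_zero] at this
      rw [this]
    | @tail b c _ hbc ih =>
      obtain ⟨hbU, ihb⟩ := ih
      obtain ⟨S, hSU, hSc, hbS, hcS, hgood⟩ := hbc
      refine ⟨hSU hcS, fun t ht => ?_⟩
      have hPS : ∀ x ∈ S, Push a (big a V) V' (e x) := fun x hx => (hU' x (hSU hx)).2.2.1
      have huS : ∀ x ∈ S, ∀ η, wp a (e x, η) = 0 →
          ∀ i, InIm V (fun j z => if j = i then wp a z else 0) (e x, η) := fun x hx η hη =>
        huV x (hSU hx) η ((hU' x (hSU hx)).2.2.2.1 η hη)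
      have hrS : ∀ x ∈ S, ∀ k, (starRingEnd ℂ) (a k (e x)) = a k (e x) := fun x hx =>
        (hU' x (hSU hx)).2.2.2.2.1
      obtain ⟨M, θ, hθc, hθ⟩ := real_sections hec hPS huS hgood hrS hSc
      obtain ⟨j, rfl⟩ := (hθ c hcS t).mp ht
      have hθ0 : ∀ x ∈ S, wp a (e x, (θ j x : ℂ)) = 0 := fun x hx => (hθ x hx _).mpr ⟨j, rfl⟩
      have hθm : ∀ x ∈ S, (θ j x : ℂ) ∈ ball (0 : ℂ) δ := fun x hx =>
        (hU' x (hSU hx)).2.2.2.1 _ (hθ0 x hx)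
      obtain ⟨ρ, hρ0, hρ⟩ := graph_limit hec (δ := δ) (fun x hx => by
        have := hθm x hx
        simp only [mem_ball, dist_zero_right, Complex.norm_real, Real.norm_eq_abs] at this
        exact this.le) hθ0 hbS (hU' b hbU).2.2.1.1
      refine (ihb ρ hρ0).tail ⟨_, ?_, ?_, hρ, ⟨c, hcS, rfl⟩,
        graph_good hec hPS huS hgood hrS (hθc j) hθ0⟩
      · rintro _ ⟨x, hx, rfl⟩
        exact hAB₁ ⟨(hU' x (hSU hx)).1, hreal_mem _ (hθm x hx)⟩
      · exact hSc.image _ (continuousOn_id.prodMk (hθc j))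
  have hfst : ∀ᶠ y : X × ℝ in 𝓝 (x₀, 0), Relation.ReflTransGen (Reach e V' U') x₀ y.1 :=
    (continuous_fst.tendsto (x₀, (0 : ℝ))).eventually hstep
  have hsnd : ∀ᶠ y : X × ℝ in 𝓝 (x₀, 0), y.2 ∈ ball (0 : ℝ) δ :=
    (continuous_snd.tendsto (x₀, (0 : ℝ))).eventually (ball_mem_nhds 0 hδ)
  filter_upwards [hfst, hsnd] with ⟨c, t⟩ hc ht
  obtain ⟨hcU, hcr⟩ := hroots c hc
  by_cases hP0 : wp a (e c, (t : ℂ)) = 0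
  · exact hcr t hP0
  -- off the roots, walk from the last root on the segment from `0` to `t`
  have hcont : Continuous fun τ : ℝ => wp a (e c, ((τ * t : ℝ) : ℂ)) := by
    change Continuous fun τ : ℝ => ((τ * t : ℝ) : ℂ) ^ d +
      ∑ k, a k (e c) * ((τ * t : ℝ) : ℂ) ^ (k : ℕ)
    fun_prop
  have hcomp : IsCompact (Icc (0 : ℝ) 1 ∩ {τ : ℝ | wp a (e c, ((τ * t : ℝ) : ℂ)) = 0}) :=
    isCompact_Icc.inter_right (isClosed_eq hcont continuous_const)
  obtain ⟨τ₀, ⟨⟨hτ0, hτ1⟩, hτr⟩, hmax⟩ := hcomp.exists_isGreatest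
    ⟨0, ⟨le_rfl, zero_le_one⟩, by simpa using (hU' c hcU).2.2.2.2.2⟩
  have hτlt : τ₀ < 1 := by
    refine lt_of_le_of_ne hτ1 ?_
    rintro rfl
    exact hP0 (by simpa using hτr)
  have hball : ∀ τ ∈ Icc (0 : ℝ) 1, ((τ * t : ℝ) : ℂ) ∈ ball (0 : ℂ) δ := by
    intro τ hτ
    have ht' : |t| < δ := by simpa using ht
    simp only [mem_ball, dist_zero_right, Complex.norm_real, Real.norm_eq_abs, abs_mul,
      abs_of_nonneg hτ.1]
    nlinarith [abs_nonneg t, hτ.2]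
  refine (hcr (τ₀ * t) hτr).tail ⟨(fun τ : ℝ => (c, τ * t)) '' Ioc τ₀ 1, ?_, ?_, ?_,
    ⟨1, ⟨hτlt, le_rfl⟩, by simp⟩, ?_⟩
  · rintro _ ⟨τ, hτ, rfl⟩
    exact hAB₁ ⟨(hU' c hcU).1, hreal_mem _ (hball τ ⟨hτ0.trans hτ.1.le, hτ.2⟩)⟩
  · exact isPreconnected_Ioc.image _ (by fun_prop)
  · have hc0 : Continuous fun τ : ℝ => (c, τ * t) := by fun_prop
    refine (image_closure_subset_closure_image hc0) ⟨τ₀, ?_, rfl⟩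
    rw [closure_Ioc hτlt.ne]
    exact ⟨le_rfl, hτlt.le⟩
  · rintro _ ⟨τ, hτ, rfl⟩ m hm -
    have hτI : τ ∈ Icc (0 : ℝ) 1 := ⟨hτ0.trans hτ.1.le, hτ.2⟩
    have hne : wp a (e c, ((τ * t : ℝ) : ℂ)) ≠ 0 := fun h0 =>
      absurd (hmax ⟨hτI, h0⟩) (not_le.mpr hτ.1)
    have han := analyticAt_wp (y := (e c, ((τ * t : ℝ) : ℂ))) (hU' c hcU).2.2.1.1
    have h1 := InIm.of_unit (huV c hcU _ (hball τ hτI)) (q := fun i z => (wp a z)⁻¹ * m i z)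
      (fun i => (han.inv hne).mul (hm i))
    refine h1.congr fun i => ?_
    filter_upwards [han.continuousAt.eventually_ne hne] with z hz
    rw [mul_inv_cancel_left₀ hz]
end
end

/-! ### Reflection and real Weierstrass polynomials -/

section
section
variable {E : Type*} [NormedAddCommGroup E] [NormedSpace ℂ E] [FiniteDimensional ℂ E]

/-- Schwarz reflection: conjugating an analytic function on both sides gives an analytic
function. -/
theorem analyticAt_conj {σ : E → E} (hσc : Continuous σ) (hσa : ∀ x y, σ (x + y) = σ x + σ y)
    (hσs : ∀ (c : ℂ) x, σ (c • x) = (starRingEnd ℂ) c • σ x) {f : E → ℂ} {p : E}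
    (hf : AnalyticAt ℂ f (σ p)) : AnalyticAt ℂ (fun z => (starRingEnd ℂ) (f (σ z))) p := by
  have hopen : IsOpen (σ ⁻¹' {z | AnalyticAt ℂ f z}) := (isOpen_analyticAt ℂ f).preimage hσc
  refine osgood hopen ?_ ?_ p hf
  · intro z hz
    have h1 : ContinuousAt (fun z => f (σ z)) z := ContinuousAt.comp (g := f)
      (AnalyticAt.continuousAt hz) hσc.continuousAt
    exact (Complex.continuous_conj.continuousAt.comp h1).continuousWithinAt
  · intro z hz v
    have h1 : DifferentiableAt ℂ (fun t : ℂ => f (σ z + t • σ v)) ((starRingEnd ℂ) 0) := by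
      have h2 : DifferentiableAt ℂ f (σ z + ((starRingEnd ℂ) 0) • σ v) := by
        simpa using (AnalyticAt.differentiableAt hz)
      exact h2.comp (f := fun t : ℂ => σ z + t • σ v) _ (by fun_prop)
    have h3 := h1.conj_conj
    rw [Complex.conj_conj] at h3
    refine h3.congr_of_eventuallyEq (Eventually.of_forall fun t => ?_)
    simp [hσa, hσs]
end

/-- Coordinatewise complex conjugation on `ℂⁿ`. -/
def cj {n : ℕ} (z : Fin n → ℂ) : Fin n → ℂ := fun i => (starRingEnd ℂ) (z i)

theorem continuous_cj {n : ℕ} : Continuous (cj (n := n)) :=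
  continuous_pi fun i => Complex.continuous_conj.comp (continuous_apply i)

theorem cj_emb {n : ℕ} (x : Fin n → ℝ) : cj (emb x) = emb x := by
  funext i; simp [cj, emb]

theorem cj_cj {n : ℕ} (z : Fin n → ℂ) : cj (cj z) = z := by
  funext i; simp [cj]

theorem analyticAt_cj {n : ℕ} {f : (Fin n → ℂ) → ℂ} {p : Fin n → ℂ} (hf : AnalyticAt ℂ f (cj p)) :
    AnalyticAt ℂ (fun z => (starRingEnd ℂ) (f (cj z))) p :=
  analyticAt_conj continuous_cj (fun x y => by funext i; simp [cj])
    (fun c x => by funext i; simp [cj]) hf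

theorem analyticAt_cj_prod {n : ℕ} {f : (Fin n → ℂ) × ℂ → ℂ} {p : (Fin n → ℂ) × ℂ}
    (hf : AnalyticAt ℂ f (cj p.1, (starRingEnd ℂ) p.2)) :
    AnalyticAt ℂ (fun z : (Fin n → ℂ) × ℂ => (starRingEnd ℂ) (f (cj z.1, (starRingEnd ℂ) z.2))) p :=
  analyticAt_conj (σ := fun z : (Fin n → ℂ) × ℂ => (cj z.1, (starRingEnd ℂ) z.2))
    ((continuous_cj.comp continuous_fst).prodMk (Complex.continuous_conj.comp continuous_snd))
    (fun x y => by ext <;> simp [cj])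
    (fun c x => by ext <;> simp [cj]) hf

/-- A Weierstrass polynomial with real coefficients, vanishing at `0` and divisible by a given
germ. -/
theorem real_weierstrass {n : ℕ} {h : (Fin n → ℂ) × ℂ → ℂ} (hh : AnalyticAt ℂ h (0, 0))
    (hreg : ¬ ∀ᶠ z in 𝓝 (0 : ℂ), h (0, z) = 0) :
    ∃ (d : ℕ) (a : Fin d → (Fin n → ℂ) → ℂ) (q : (Fin n → ℂ) × ℂ → ℂ),
      (∀ k, AnalyticAt ℂ (a k) 0) ∧ (∀ k, a k 0 = 0) ∧ AnalyticAt ℂ q (0, 0) ∧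
      (∀ᶠ y in 𝓝 ((0 : Fin n → ℂ), (0 : ℂ)), wp a y = h y * q y) ∧
      (∀ᶠ x in 𝓝 (0 : Fin n → ℝ), ∀ k, (starRingEnd ℂ) (a k (emb x)) = a k (emb x)) ∧
      ∀ᶠ x in 𝓝 (0 : Fin n → ℝ), wp a (emb x, 0) = 0 := by
  have h00 : (cj (0 : Fin n → ℂ), (starRingEnd ℂ) (0 : ℂ)) = (0, 0) := by
    ext <;> simp [cj]
  have hcj0 : cj (0 : Fin n → ℂ) = 0 := congrArg Prod.fst h00
  set hs : (Fin n → ℂ) × ℂ → ℂ := fun z => (starRingEnd ℂ) (h (cj z.1, (starRingEnd ℂ) z.2))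
  have hhs : AnalyticAt ℂ hs (0, 0) := analyticAt_cj_prod (p := (0, 0)) (by rw [h00]; exact hh)
  set G : (Fin n → ℂ) × ℂ → ℂ := fun y => y.2 * h y * hs y with hG
  have hsnd : AnalyticAt ℂ (fun y : (Fin n → ℂ) × ℂ => y.2) (0, 0) := analyticAt_snd
  have hGa : AnalyticAt ℂ G (0, 0) := (hsnd.mul hh).mul hhs
  have hGs : ∀ y, (starRingEnd ℂ) (G (cj y.1, (starRingEnd ℂ) y.2)) = G y := by
    intro y
    simp only [hG, hs, map_mul, cj_cj, Complex.conj_conj]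
    ring
  have hline : AnalyticAt ℂ (fun z : ℂ => ((0 : Fin n → ℂ), z)) 0 := analyticAt_const.prod analyticAt_id
  have hGreg : ¬ ∀ᶠ z in 𝓝 (0 : ℂ), G (0, z) = 0 := by
    intro hc
    have a1 : AnalyticAt ℂ (fun z : ℂ => h (0, z)) 0 := AnalyticAt.fun_comp (g := h) hh hline
    have a2 : AnalyticAt ℂ (fun z : ℂ => hs (0, z)) 0 := AnalyticAt.fun_comp (g := hs) hhs hline
    rcases eventually_zero_of_mul (analyticAt_id.mul a1) a2 hc with h1 | h1
    · rcases eventually_zero_of_mul analyticAt_id a1 h1 with h2 | h2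
      · have h3 : ∀ᶠ z in 𝓝[≠] (0 : ℂ), id z = 0 := nhdsWithin_le_nhds h2
        obtain ⟨z, hz1, hz2⟩ := (h3.and self_mem_nhdsWithin).exists
        exact hz2 hz1
      · exact hreg h2
    · refine hreg ?_
      have h2 : Tendsto (fun z : ℂ => (starRingEnd ℂ) z) (𝓝 0) (𝓝 0) := by
        simpa using Complex.continuous_conj.tendsto 0
      filter_upwards [h2.eventually h1] with z hz
      simpa [hs, hcj0] using hz
  obtain ⟨d, a, u, ha, ha0, hu, hu0, he⟩ := weierstrass hGa hGreg
  set as : Fin d → (Fin n → ℂ) → ℂ := fun k x => (starRingEnd ℂ) (a k (cj x))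
  have has : ∀ k, AnalyticAt ℂ (as k) 0 := fun k => analyticAt_cj (by rw [hcj0]; exact ha k)
  set us : (Fin n → ℂ) × ℂ → ℂ := fun z => (starRingEnd ℂ) (u (cj z.1, (starRingEnd ℂ) z.2))
  have hus : AnalyticAt ℂ us (0, 0) := analyticAt_cj_prod (p := (0, 0)) (by rw [h00]; exact hu)
  have hus0 : us (0, 0) ≠ 0 := by
    simp only [us, h00]
    simpa using hu0
  have hwps : ∀ y : (Fin n → ℂ) × ℂ,
      (starRingEnd ℂ) (wp a (cj y.1, (starRingEnd ℂ) y.2)) = wp as y := by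
    intro y
    simp [wp, monicVal, as]
  have hes : ∀ᶠ y in 𝓝 ((0 : Fin n → ℂ), (0 : ℂ)), G y = wp as y * us y := by
    have ht : Tendsto (fun y : (Fin n → ℂ) × ℂ => (cj y.1, (starRingEnd ℂ) y.2)) (𝓝 (0, 0))
        (𝓝 (0, 0)) := by
      have h1 : Continuous (fun y : (Fin n → ℂ) × ℂ => (cj y.1, (starRingEnd ℂ) y.2)) :=
        (continuous_cj.comp continuous_fst).prodMk (Complex.continuous_conj.comp continuous_snd)
      have h2 := h1.tendsto (0, 0)
      rwa [h00] at h2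
    filter_upwards [ht.eventually he] with y hy
    rw [← hGs, hy, map_mul, hwps]
  have hcrt : ∀ᶠ x in 𝓝 (0 : Fin n → ℂ), ∀ k, (as k x - a k x) = 0 := by
    refine crt_unique (r := fun k x => as k x - a k x) ha fun ζ hζ => ?_
    have hζ0 : ζ = 0 := by
      have : wp a (0, ζ) = ζ ^ d := by simp [wp, monicVal, ha0]
      rw [this] at hζ
      exact eq_zero_of_pow_eq_zero hζ
    subst hζ0
    refine ⟨fun y => u y * (us y)⁻¹ - 1, (hu.mul (hus.inv hus0)).sub analyticAt_const, ?_⟩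
    filter_upwards [he, hes, hus.continuousAt.eventually_ne hus0] with y h1 h2 h3
    have h4 : pv (fun k x => as k x - a k x) y = wp as y - wp a y := by
      rw [wp_eq, wp_eq]
      simp [pv, sub_mul, Finset.sum_sub_distrib]
    rw [h4]
    have h5 : wp as y = wp a y * u y * (us y)⁻¹ := by
      rw [← h1, h2, mul_assoc, mul_inv_cancel₀ h3, mul_one]
    rw [h5]; ring
  have hembt : Tendsto (emb : (Fin n → ℝ) → _) (𝓝 0) (𝓝 0) := by
    have := (continuous_emb (n := n)).tendsto 0
    rwa [emb_zero] at this
  refine ⟨d, a, fun y => y.2 * hs y * (u y)⁻¹, ha, ha0, (hsnd.mul hhs).mul (hu.inv hu0), ?_, ?_, ?_⟩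
  · filter_upwards [he, hu.continuousAt.eventually_ne hu0] with y h1 h2
    have : wp a y = G y * (u y)⁻¹ := by rw [h1, mul_assoc, mul_inv_cancel₀ h2, mul_one]
    rw [this]; simp only [hG]; ring
  · filter_upwards [hembt.eventually hcrt] with x hx k
    have := hx k
    simp only [as, cj_emb] at this
    exact sub_eq_zero.mp this
  · have ht : Tendsto (fun x : Fin n → ℝ => (emb x, (0 : ℂ))) (𝓝 0) (𝓝 (0, 0)) :=
      hembt.prodMk_nhds tendsto_const_nhds
    filter_upwards [ht.eventually he, ht.eventually (hu.continuousAt.eventually_ne hu0)] with x h1 h2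
    have h3 : G (emb x, 0) = 0 := by simp [hG]
    rw [h3] at h1
    exact (mul_eq_zero.mp h1.symm).resolve_right h2
end

/-! ### Strong noetherianity at real points -/

section
/-- Goodness is transported along analytic coordinate changes. -/
theorem Good.transfer {E E' : Type*} [NormedAddCommGroup E] [NormedSpace ℂ E]
    [NormedAddCommGroup E'] [NormedSpace ℂ E'] {X : Type} [TopologicalSpace X] {e' : X → E}
    {e : X → E'} {S : Set X} {ι κ : Type} [Fintype κ] {V : ι → κ → E' → ℂ} {ψ : E → E'}
    {φ : E' → E} (hψ : ∀ y, AnalyticAt ℂ ψ y) (hφ : ∀ y, AnalyticAt ℂ φ y)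
    (h1 : ∀ y, ψ (φ y) = y) (h2 : ∀ y, φ (ψ y) = y) (he : ∀ x, e x = ψ (e' x))
    (hg : Good e' S (fun i k z => V i k (ψ z))) : Good e S V := by
  intro y₀ hy₀ m hm hf
  have h3 := hg y₀ hy₀ (fun i z => m i (ψ z)) (fun i => AnalyticAt.fun_comp (by
    rw [← he]; exact hm i) (hψ _)) (hf.mono fun y hy => by
      rw [he] at hy
      exact hy.pull (hψ _))
  have h4 : InIm (fun i k z => V i k (ψ z)) (fun i z => m i (ψ z)) (φ (e y₀)) := by
    rw [he, h2]; exact h3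
  have h5 := h4.pull (hφ _)
  simpa only [h1] using h5

/-- Induction on the dimension: `reduce` replaces the matrix by one whose cokernel is killed by a
single germ, which in regular real coordinates divides a real Weierstrass polynomial. -/
theorem strat_emb : ∀ (n : ℕ) (p : Fin n → ℝ), Strat (emb : (Fin n → ℝ) → Fin n → ℂ) p := by
  intro n
  induction n with
  | zero =>
    intro p ι κ _ _ V hV U hU
    exact Eventually.of_forall fun y => by rw [Subsingleton.elim y p]
  | succ n ih =>
    intro p ι κ _ _ V hV U hU
    obtain ⟨h, hh, hh0, μ, ν, _, _, _, V2, hV2, hunit, hN⟩ := reduce (oka (emb p)) hV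
    obtain ⟨N, hNm, hN⟩ := eventually_smallSets.mp hN
    replace hN := hN N subset_rfl
    obtain ⟨j, v, hv, hv', hreg⟩ := exists_coord hh hh0
    set L := coordL j (emb v) hv'
    set ψ := aff (emb p) L with hψdef
    let φ : (Fin n → ℝ) × ℝ ≃ₜ (Fin (n + 1) → ℝ) :=
      (coordL j v hv).toHomeomorph.trans (Homeomorph.addLeft p)
    have hφ : ∀ y, φ y = p + coordL j v hv y := fun y => rfl
    have hφ0 : φ (0, 0) = p := by
      rw [hφ]
      have : coordL j v hv (0, 0) = 0 := map_zero (coordL j v hv)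
      rw [this, add_zero]
    have hcomm : ∀ y : (Fin n → ℝ) × ℝ, emb (φ y) = ψ (emb y.1, (y.2 : ℂ)) := by
      intro y
      rw [hφ, emb_add, hψdef, aff, coordL_emb j v hv hv']
    have hψ0 : ψ (0, 0) = emb p := aff_zero _ _
    obtain ⟨d, a, q, ha, ha0, hq, hfac, hreal, hroot⟩ := real_weierstrass (h := fun y => h (ψ y))
      (AnalyticAt.fun_comp (by rw [hψ0]; exact hh) (analyticAt_aff _ _ _)) hreg
    have hψt : Tendsto ψ (𝓝 (0, 0)) (𝓝 (emb p)) := by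
      have := (analyticAt_aff (emb p) L (0, 0)).continuousAt.tendsto
      rwa [aff_zero] at this
    have hu : ∀ᶠ y in 𝓝 ((0 : Fin n → ℂ), (0 : ℂ)), ∀ i,
        InIm (fun i k z => V2 i k (ψ z)) (fun j z => if j = i then wp a z else 0) y := by
      filter_upwards [hψt.eventually hunit, hfac.eventually_nhds, hq.eventually_analyticAt]
        with y h1 h2 h3 i
      have h4 : InIm (fun i k z => V2 i k (ψ z))
          (fun j z => h (ψ z) * (if j = i then q z else 0)) y := by
        refine InIm.of_unit (P := fun z => h (ψ z)) (fun i => (h1 i).pull (analyticAt_aff _ _ _))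
          fun j => ?_
        split_ifs
        · exact h3
        · exact analyticAt_const
      refine h4.congr fun j => ?_
      filter_upwards [h2] with z hz
      split_ifs
      · exact hz
      · simp
    have hU0 : φ ⁻¹' (U ∩ emb ⁻¹' N) ∈ 𝓝 ((0 : Fin n → ℝ), (0 : ℝ)) := by
      refine φ.continuous.continuousAt.preimage_mem_nhds ?_
      rw [hφ0]
      exact inter_mem hU (continuous_emb.continuousAt.preimage_mem_nhds hNm)
    have hmain := strat_regular continuous_emb (ih 0) (a := a) (V := fun i k z => V2 i k (ψ z))
      (by rwa [emb_zero]) (by rwa [emb_zero]) hreal hroot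
      (fun i k => by
        rw [emb_zero]
        exact AnalyticAt.fun_comp (by rw [hψ0]; exact hV2 i k) (analyticAt_aff _ _ _))
      (by rw [emb_zero]; exact hu) hU0
    have hsymm : Tendsto φ.symm (𝓝 p) (𝓝 (0, 0)) := by
      have := φ.symm.continuous.tendsto (φ (0, 0))
      rwa [φ.symm_apply_apply, hφ0] at this
    filter_upwards [hsymm.eventually hmain] with y hy
    have hlift := Relation.ReflTransGen.lift (p := Reach emb V U) φ (fun b c hbc => ?_) (0, 0) (φ.symm y) hy
    · rwa [Function.onFun, hφ0, φ.apply_symm_apply] at hlift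
    obtain ⟨S, hSU, hSc, hbS, hcS, hgood⟩ := hbc
    refine ⟨φ '' S, ?_, hSc.image _ φ.continuous.continuousOn,
      image_closure_subset_closure_image φ.continuous ⟨b, hbS, rfl⟩, ⟨c, hcS, rfl⟩, ?_⟩
    · rintro _ ⟨x, hx, rfl⟩
      exact (hSU hx).1
    have hg1 : Good (fun y => emb (φ y)) S V2 :=
      Good.transfer (analyticAt_aff _ _) (analyticAt_affInv _ _) (aff_affInv _ _) (affInv_aff _ _)
        hcomm hgood
    have hg2 := hN _ (fun y => emb (φ y)) (continuous_emb.comp φ.continuous) S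
      (fun y hy => (hSU hy).2) hg1
    rintro _ ⟨y₀, hy₀, rfl⟩ m hm hf
    refine hg2 y₀ hy₀ m hm ?_
    have hmap := φ.isEmbedding.map_nhdsWithin_eq S y₀
    rw [← hmap] at hf
    exact frequently_map.mp hf

/-- Membership in the image of a matrix of germs spreads from a real point to all nearby real
points, provided the section stays analytic; the neighbourhood depends only on the matrix. -/
theorem strong_noether {n : ℕ} {p : Fin n → ℝ} {ι κ : Type} [Fintype ι] [Fintype κ]
    {V : ι → κ → (Fin n → ℂ) → ℂ} (hV : ∀ i k, AnalyticAt ℂ (V i k) (emb p)) :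
    ∀ U ∈ 𝓝 p, ∀ᶠ y in 𝓝 p, ∀ m : ι → (Fin n → ℂ) → ℂ, (∀ x ∈ U, ∀ i, AnalyticAt ℂ (m i) (emb x)) →
      InIm V m (emb p) → InIm V m (emb y) := by
  intro U hU
  filter_upwards [strat_emb n p ι κ V hV U hU] with y hy m hm h0
  induction hy with
  | refl => exact h0
  | @tail b c _ hbc ih =>
    obtain ⟨S, hSU, hSc, hbS, hcS, hgood⟩ := hbc
    have hbev : ∀ᶠ x in 𝓝 b, InIm V m (emb x) :=
      continuous_emb.continuousAt.eventually ih.eventually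
    obtain ⟨x₀, hx₀, hx₀S⟩ := mem_closure_iff_nhds.mp hbS _ hbev
    have hopen : IsOpen {x : Fin n → ℝ | InIm V m (emb x)} := isOpen_iff_mem_nhds.mpr fun x hx =>
      continuous_emb.continuousAt.eventually (InIm.eventually hx)
    by_contra hc
    -- the complement of the open set of good points is also relatively open in `S`
    have hopen2 : ∀ x ∈ S, ¬ InIm V m (emb x) → ∀ᶠ y in 𝓝[S] x, ¬ InIm V m (emb y) := by
      intro x hx hnot
      by_contra hcon
      exact hnot (hgood x hx m (hm x (hSU hx)) hcon)
    have hcov : ∀ x ∈ S, ¬ InIm V m (emb x) → x ∈ interior {x | x ∈ S → ¬ InIm V m (emb x)} :=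
      fun x hx hnot => mem_interior_iff_mem_nhds.mpr
        (eventually_nhdsWithin_iff.mp (hopen2 x hx hnot))
    obtain ⟨x, hxS, hx1, hx2⟩ := hSc _ _ hopen isOpen_interior
      (fun x hx => (em (InIm V m (emb x))).imp id (hcov x hx)) ⟨x₀, hx₀S, hx₀⟩
      ⟨c, hcS, hcov c hcS hc⟩
    exact interior_subset hx2 hxS hx1
end

/-! ### Complexification of real-analytic functions -/

section
/-- The polynomial on `ℂⁿ` extending the homogeneous form `y ↦ p (y, …, y)`. -/
noncomputable def cform {n k : ℕ} (p : ContinuousMultilinearMap ℝ (fun _ : Fin k => Fin n → ℝ) ℝ)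
    (w : Fin n → ℂ) : ℂ :=
  ∑ i : Fin k → Fin n, (∏ j, w (i j)) * (p fun j => Pi.single (i j) 1 : ℝ)

theorem cform_emb {n k : ℕ} (p : ContinuousMultilinearMap ℝ (fun _ : Fin k => Fin n → ℝ) ℝ)
    (y : Fin n → ℝ) : cform p (emb y) = (p fun _ => y : ℝ) := by
  have h1 : (fun _ : Fin k => y) = fun _ => ∑ i : Fin n, y i • (Pi.single i 1 : Fin n → ℝ) := by
    funext _
    exact pi_eq_sum_univ' y
  rw [h1]
  have h2 := p.toMultilinearMap.map_sum (fun (_ : Fin k) (i : Fin n) =>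
    y i • (Pi.single i 1 : Fin n → ℝ))
  simp only [ContinuousMultilinearMap.coe_coe] at h2
  rw [h2, cform]
  push_cast
  refine Finset.sum_congr rfl fun i _ => ?_
  have h3 := p.map_smul_univ (fun j => y (i j)) (fun j => (Pi.single (i j) 1 : Fin n → ℝ))
  rw [h3]
  simp [emb]

theorem analyticAt_cform {n k : ℕ}
    (p : ContinuousMultilinearMap ℝ (fun _ : Fin k => Fin n → ℝ) ℝ) (w : Fin n → ℂ) :
    AnalyticAt ℂ (cform p) w := by
  unfold cform
  refine Finset.analyticAt_fun_sum _ fun i _ => AnalyticAt.mul ?_ analyticAt_const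
  refine Finset.analyticAt_fun_prod _ fun j _ => ?_
  exact (ContinuousLinearMap.proj (R := ℂ) (φ := fun _ : Fin n => ℂ) (i j)).analyticAt w

theorem norm_cform_le {n k : ℕ}
    (p : ContinuousMultilinearMap ℝ (fun _ : Fin k => Fin n → ℝ) ℝ) (w : Fin n → ℂ) :
    ‖cform p w‖ ≤ ‖p‖ * (n * ‖w‖) ^ k := by
  have h1 : ∀ i : Fin k → Fin n, ‖(∏ j, w (i j)) * ((p fun j => Pi.single (i j) 1 : ℝ) : ℂ)‖ ≤
      ‖w‖ ^ k * ‖p‖ := by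
    intro i
    rw [norm_mul, norm_prod, Complex.norm_real]
    refine mul_le_mul ?_ ?_ (norm_nonneg _) (by positivity)
    · calc ∏ j, ‖w (i j)‖ ≤ ∏ _j : Fin k, ‖w‖ :=
            Finset.prod_le_prod (fun _ _ => norm_nonneg _) fun j _ => norm_le_pi_norm w _
        _ = ‖w‖ ^ k := by simp
    · refine (p.le_opNorm _).trans ?_
      have : ∏ j : Fin k, ‖(Pi.single (i j) 1 : Fin n → ℝ)‖ ≤ 1 :=
        Finset.prod_le_one (fun _ _ => norm_nonneg _) fun j _ => by
          rw [Pi.norm_single]; simp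
      exact mul_le_of_le_one_right (norm_nonneg _) this
  refine (norm_sum_le_of_le _ fun i _ => h1 i).trans (le_of_eq ?_)
  simp [mul_pow]
  ring

/-- A real-analytic germ extends to a complex-analytic germ. -/
theorem complexify_local {n : ℕ} {f : (Fin n → ℝ) → ℝ} {p : Fin n → ℝ} (hf : AnalyticAt ℝ f p) :
    ∃ F : (Fin n → ℂ) → ℂ, AnalyticAt ℂ F (emb p) ∧ ∀ᶠ x in 𝓝 p, F (emb x) = f x := by
  obtain ⟨P, R, hP⟩ := hf
  obtain ⟨r, hr0, hrR⟩ := ENNReal.lt_iff_exists_nnreal_btwn.mp hP.r_pos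
  have hr0' : 0 < (r : ℝ) := by exact_mod_cast hr0
  obtain ⟨C, hC, hPC⟩ := P.norm_mul_pow_le_of_lt_radius (hrR.trans_le hP.r_le)
  set s : ℝ := r / (2 * (n + 1))
  have hs : 0 < s := by positivity
  have hsr : s ≤ r := div_le_self hr0'.le (by
    have : (0 : ℝ) ≤ n := Nat.cast_nonneg n
    linarith)
  refine ⟨fun z => ∑' k, cform (P k) (z - emb p), ?_, ?_⟩
  · refine analyticOnNhd_tsum (U := ball (emb p) s) (u := fun k => C * (1 / 2) ^ k) isOpen_ball
      (summable_geometric_two.mul_left C) (fun k z _ => ?_) (fun k z hz => ?_) (emb p)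
      (mem_ball_self hs)
    · exact AnalyticAt.fun_comp (analyticAt_cform (P k) _) (analyticAt_id.sub analyticAt_const)
    · refine (norm_cform_le _ _).trans ?_
      rw [mem_ball, dist_eq_norm] at hz
      have h1 : (n : ℝ) * ‖z - emb p‖ ≤ r * (1 / 2) := by
        calc (n : ℝ) * ‖z - emb p‖ ≤ (n + 1) * s := by
              gcongr
              linarith
          _ = r * (1 / 2) := by
              simp only [s]; field_simp
      calc ‖P k‖ * (n * ‖z - emb p‖) ^ k ≤ ‖P k‖ * (r * (1 / 2)) ^ k := by gcongr
        _ = (‖P k‖ * (r : ℝ) ^ k) * (1 / 2) ^ k := by rw [mul_pow]; ring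
        _ ≤ C * (1 / 2) ^ k := by gcongr; exact hPC k
  · filter_upwards [ball_mem_nhds p hs] with x hx
    have hx' : x - p ∈ eball (0 : Fin n → ℝ) R := by
      rw [mem_eball, edist_zero_right]
      refine lt_trans ?_ hrR
      rw [mem_ball, dist_eq_norm] at hx
      have h2 : ‖x - p‖ < r := hx.trans_le hsr
      rw [enorm_eq_nnnorm]
      exact_mod_cast h2
    have h1 := hP.hasSum hx'
    rw [add_sub_cancel] at h1
    simp only [← emb_sub, cform_emb]
    exact_mod_cast h1.tsum_eq

/-- Complex-analytic germs at a real point are determined by their values at real points. -/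
theorem germ_ext {n : ℕ} {F G : (Fin n → ℂ) → ℂ} {p : Fin n → ℝ} (hF : AnalyticAt ℂ F (emb p))
    (hG : AnalyticAt ℂ G (emb p)) (h : ∀ᶠ x in 𝓝 p, F (emb x) = G (emb x)) :
    ∀ᶠ z in 𝓝 (emb p), F z = G z := by
  have ht : Tendsto (fun x : Fin n → ℝ => p + x) (𝓝 0) (𝓝 p) := by
    have h1 : Continuous fun x : Fin n → ℝ => p + x := by fun_prop
    simpa using h1.tendsto 0
  have h2 := totally_real (hF.sub hG) (by
    filter_upwards [ht.eventually h] with x hx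
    rw [emb_add] at hx
    simp [hx])
  filter_upwards [h2] with z hz
  exact sub_eq_zero.mp hz

/-- The real part of a vector in `ℂⁿ`. -/
def rePart {n : ℕ} (z : Fin n → ℂ) : Fin n → ℝ := fun i => (z i).re

theorem dist_rePart {n : ℕ} (z : Fin n → ℂ) (x : Fin n → ℝ) :
    dist (emb (rePart z)) (emb x) ≤ dist z (emb x) := by
  rw [dist_eq_norm, dist_eq_norm, ← emb_sub, norm_emb]
  refine (pi_norm_le_iff_of_nonneg (norm_nonneg _)).mpr fun i => ?_
  have h1 : (rePart z - x) i = (z i - (x i : ℂ)).re := by simp [rePart]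
  rw [h1, Real.norm_eq_abs]
  exact (Complex.abs_re_le_norm _).trans (norm_le_pi_norm (z - emb x) i)

/-- Germs at the points of a set of real points, compatible on real points, glue to one
function. -/
theorem glue_germs {n : ℕ} {f : (Fin n → ℝ) → ℂ}
    (h : ∀ p : Fin n → ℝ, ∃ F : (Fin n → ℂ) → ℂ, AnalyticAt ℂ F (emb p) ∧
      ∀ᶠ x in 𝓝 p, F (emb x) = f x) :
    ∃ F : (Fin n → ℂ) → ℂ, (∀ p, AnalyticAt ℂ F (emb p)) ∧ ∀ p, F (emb p) = f p := by
  classical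
  have h' : ∀ p : Fin n → ℝ, ∃ (F : (Fin n → ℂ) → ℂ) (ρ : ℝ), 0 < ρ ∧
      AnalyticOnNhd ℂ F (ball (emb p) ρ) ∧ ∀ x ∈ ball p ρ, F (emb x) = f x := by
    intro p
    obtain ⟨F, hF, hFf⟩ := h p
    obtain ⟨ρ₁, hρ₁, h1⟩ := exists_ball_analytic hF
    obtain ⟨ρ₂, hρ₂, h2⟩ := Metric.nhds_basis_ball.mem_iff.mp hFf
    exact ⟨F, min ρ₁ ρ₂, lt_min hρ₁ hρ₂, h1.mono (ball_subset_ball (min_le_left _ _)),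
      fun x hx => h2 (ball_subset_ball (min_le_right _ _) hx)⟩
  choose F ρ hρ hFa hFf using h'
  have hemb : ∀ (x p : Fin n → ℝ), emb x ∈ ball (emb p) (ρ p) → x ∈ ball p (ρ p) := by
    intro x p hx
    rwa [mem_ball, dist_eq_norm, ← emb_sub, norm_emb, ← dist_eq_norm] at hx
  have hcomp : ∀ p q z, z ∈ ball (emb p) (ρ p) → z ∈ ball (emb q) (ρ q) → F p z = F q z := by
    intro p q z hp hq
    have hr : emb (rePart z) ∈ ball (emb p) (ρ p) ∩ ball (emb q) (ρ q) :=
      ⟨(dist_rePart z p).trans_lt hp, (dist_rePart z q).trans_lt hq⟩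
    have hev : F p =ᶠ[𝓝 (emb (rePart z))] F q := by
      refine germ_ext (hFa p _ hr.1) (hFa q _ hr.2) ?_
      filter_upwards [isOpen_ball.mem_nhds (hemb _ _ hr.1), isOpen_ball.mem_nhds (hemb _ _ hr.2)]
        with x h1 h2
      rw [hFf p x h1, hFf q x h2]
    exact ((hFa p).mono inter_subset_left).eqOn_of_preconnected_of_eventuallyEq
      ((hFa q).mono inter_subset_right)
      ((convex_ball _ _).inter (convex_ball _ _)).isPreconnected hr hev ⟨hp, hq⟩
  let G : (Fin n → ℂ) → ℂ := fun z =>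
    if hz : ∃ p, z ∈ ball (emb p) (ρ p) then F hz.choose z else 0
  have hG : ∀ p z, z ∈ ball (emb p) (ρ p) → G z = F p z := by
    intro p z hz
    have hz' : ∃ p, z ∈ ball (emb p) (ρ p) := ⟨p, hz⟩
    simp only [G, dif_pos hz']
    exact hcomp _ _ _ hz'.choose_spec hz
  refine ⟨G, fun p => ?_, fun p => ?_⟩
  · refine (hFa p _ (mem_ball_self (hρ p))).congr ?_
    filter_upwards [ball_mem_nhds _ (hρ p)] with z hz using (hG p z hz).symm
  · rw [hG p _ (mem_ball_self (hρ p)), hFf p p (mem_ball_self (hρ p))]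

/-- Every real-analytic function on `ℝⁿ` extends holomorphically to a neighbourhood of `ℝⁿ`. -/
theorem complexify {n : ℕ} {f : (Fin n → ℝ) → ℝ} (hf : ∀ x, AnalyticAt ℝ f x) :
    ∃ F : (Fin n → ℂ) → ℂ, (∀ p, AnalyticAt ℂ F (emb p)) ∧ ∀ p, F (emb p) = f p :=
  glue_germs fun p => complexify_local (hf p)
end

/-! ### Laurent decomposition with parameters -/

section
theorem annulus_cauchy {f : ℂ → ℂ} (hf : ∀ ζ : ℂ, 1 / 4 < ‖ζ‖ → ‖ζ‖ < 4 → DifferentiableAt ℂ f ζ)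
    {w : ℂ} (h1 : 1 / 2 < ‖w‖) (h2 : ‖w‖ < 2) :
    f w = (2 * Real.pi * I : ℂ)⁻¹ • (∮ ζ in C(0, 2), (ζ - w)⁻¹ * f ζ) -
      (2 * Real.pi * I : ℂ)⁻¹ • ∮ ζ in C(0, 1 / 2), (ζ - w)⁻¹ * f ζ := by
  have hnhds : closedBall (0 : ℂ) 2 \ ball 0 (1 / 2) ∈ 𝓝 w := by
    filter_upwards [isOpen_ball.mem_nhds (show w ∈ ball (0 : ℂ) 2 by simpa using h2),
      (isClosed_closedBall (x := (0 : ℂ)) (ε := 1 / 2)).isOpen_compl.mem_nhds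
        (show w ∉ closedBall (0 : ℂ) (1 / 2) by simpa using h1)] with z hz1 hz2
    exact ⟨ball_subset_closedBall hz1, fun h => hz2 (ball_subset_closedBall h)⟩
  have hfc : ContinuousOn f (closedBall (0 : ℂ) 2 \ ball 0 (1 / 2)) := by
    rintro z ⟨hz1, hz2⟩
    simp only [mem_closedBall, dist_zero_right, mem_ball, not_lt] at hz1 hz2
    exact (hf z (by linarith) (by linarith)).continuousAt.continuousWithinAt
  have hfw := hf w (by linarith) (by linarith)
  have key := circleIntegral_eq_of_differentiable_on_annulus_off_countable (c := 0) (r := 1 / 2)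
    (R := 2) (by norm_num) (by norm_num) (f := dslope f w) (s := {w}) (countable_singleton w)
    ((continuousOn_dslope hnhds).mpr ⟨hfc, hfw⟩) (by
      rintro z ⟨⟨hz1, hz2⟩, hz3⟩
      simp only [mem_closedBall, dist_zero_right, mem_ball, not_le] at hz1 hz2
      exact (differentiableAt_dslope_of_ne hz3).mpr (hf z (by linarith) (by linarith)))
  have hsub : ∀ R : ℝ, 1 / 4 < R → R < 4 → ‖w‖ ≠ R → (∮ ζ in C(0, R), dslope f w ζ) =
      (∮ ζ in C(0, R), (ζ - w)⁻¹ * f ζ) - (∮ ζ in C(0, R), (ζ - w)⁻¹) * f w := by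
    intro R hR1 hR2 hwR
    have hR0 : 0 ≤ R := by linarith
    have hne : ∀ ζ ∈ sphere (0 : ℂ) R, ζ ≠ w := by
      rintro ζ hζ rfl
      exact hwR (by simpa using hζ)
    have c1 : ContinuousOn (fun ζ => (ζ - w)⁻¹) (sphere (0 : ℂ) R) := by
      refine ContinuousOn.inv₀ (by fun_prop) fun ζ hζ => sub_ne_zero.mpr (hne ζ hζ)
    have c2 : ContinuousOn f (sphere (0 : ℂ) R) := fun ζ hζ =>
      (hf ζ (by simp at hζ; linarith) (by simp at hζ; linarith)).continuousAt.continuousWithinAt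
    have e1 : (∮ ζ in C(0, R), dslope f w ζ) =
        ∮ ζ in C(0, R), ((ζ - w)⁻¹ * f ζ - (ζ - w)⁻¹ * f w) := by
      refine circleIntegral.integral_congr hR0 fun ζ hζ => ?_
      rw [dslope_of_ne _ (hne ζ hζ), slope_def_field]
      ring
    have i1 : CircleIntegrable (fun ζ => (ζ - w)⁻¹ * f ζ) 0 R := (c1.mul c2).circleIntegrable hR0
    have i2 : CircleIntegrable (fun ζ => (ζ - w)⁻¹ * f w) 0 R :=
      (c1.mul continuousOn_const).circleIntegrable hR0
    rw [e1, circleIntegral.integral_sub i1 i2]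
    congr 1
    simp [mul_comm]
  rw [hsub 2 (by norm_num) (by norm_num) h2.ne, hsub (1 / 2) (by norm_num) (by norm_num) h1.ne',
    circleIntegral.integral_sub_inv_of_mem_ball (by simpa using h2)] at key
  have hz : (∮ ζ in C(0, 1 / 2), (ζ - w)⁻¹) = 0 := by
    refine circleIntegral_eq_zero_of_differentiable_on_off_countable (by norm_num)
      countable_empty ?_ ?_
    · refine ContinuousOn.inv₀ (by fun_prop) fun ζ hζ => sub_ne_zero.mpr ?_
      rintro rfl
      simp at hζ; linarith
    · rintro ζ ⟨hζ, -⟩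
      refine DifferentiableAt.inv (by fun_prop) (sub_ne_zero.mpr ?_)
      rintro rfl
      simp at hζ; linarith
  rw [hz] at key
  have hpi : (2 * Real.pi * I : ℂ) ≠ 0 := Complex.two_pi_I_ne_zero
  rw [← smul_sub, smul_eq_mul, eq_inv_mul_iff_mul_eq₀ hpi]
  linear_combination -key

section
variable {E : Type*} [NormedAddCommGroup E] [NormedSpace ℂ E] [FiniteDimensional ℂ E]

/-- The parts of the Laurent decomposition on an annulus, with parameters; the bounds hold on the
full domains, so nothing is lost when the decomposition is iterated. -/
theorem laurent {Ω : Set E} {φ : ℂ × E → ℂ}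
    (hφ : ∀ (w : ℂ) z, 1 / 4 < ‖w‖ → ‖w‖ < 4 → z ∈ Ω → AnalyticAt ℂ φ (w, z)) (hΩ : IsOpen Ω) :
    ∃ φp φm : ℂ × E → ℂ,
      (∀ (w : ℂ) z, ‖w‖ < 4 → z ∈ Ω → AnalyticAt ℂ φp (w, z)) ∧
      (∀ (w : ℂ) z, 1 / 4 < ‖w‖ → z ∈ Ω → AnalyticAt ℂ φm (w, z)) ∧
      (∀ (w : ℂ) z, 1 / 4 < ‖w‖ → ‖w‖ < 4 → z ∈ Ω → φ (w, z) = φp (w, z) - φm (w, z)) ∧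
      ∀ M : ℝ, (∀ (w : ℂ) z, 1 / 4 < ‖w‖ → ‖w‖ < 4 → z ∈ Ω → ‖φ (w, z)‖ ≤ M) →
        (∀ (w : ℂ) z, ‖w‖ < 4 → z ∈ Ω → ‖φp (w, z)‖ ≤ 3 * M) ∧
        ∀ (w : ℂ) z, 1 / 4 < ‖w‖ → z ∈ Ω → ‖φm (w, z)‖ ≤ 3 * M := by
  classical
  set J : ℝ → ℂ × E → ℂ := fun R y =>
    (2 * Real.pi * I : ℂ)⁻¹ • ∮ ζ in C(0, R), (ζ - y.1)⁻¹ * φ (ζ, y.2) with hJ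
  have hJan : ∀ R : ℝ, 1 / 4 < R → R < 4 → ∀ (w : ℂ) z, ‖w‖ ≠ R → z ∈ Ω →
      AnalyticAt ℂ (J R) (w, z) := by
    intro R hR1 hR2 w z hw hz
    change AnalyticAt ℂ (fun y : ℂ × E => (2 * Real.pi * I : ℂ)⁻¹ *
      ∮ ζ in C(0, R), (ζ - y.1)⁻¹ * φ (ζ, y.2)) (w, z)
    refine analyticAt_const.mul (analyticAt_circleIntegral
      (h := fun (y : ℂ × E) ζ => (ζ - y.1)⁻¹ * φ (ζ, y.2)) (by linarith) fun ζ hζ => ?_)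
    have hζ' : ‖ζ‖ = R := by simpa using hζ
    have hne : ζ - w ≠ 0 := by
      intro h0
      rw [sub_eq_zero] at h0
      exact hw (by rw [← h0, hζ'])
    refine AnalyticAt.mul (AnalyticAt.inv ?_ hne) ?_
    · exact analyticAt_snd.sub (analyticAt_fst.fun_comp_of_eq analyticAt_fst rfl)
    · refine AnalyticAt.fun_comp_of_eq (g := φ) (hφ ζ z (by linarith) (by linarith) hz)
        (analyticAt_snd.prod (analyticAt_snd.fun_comp_of_eq analyticAt_fst rfl)) rfl
  have hcauchy : ∀ (w : ℂ) z, 1 / 2 < ‖w‖ → ‖w‖ < 2 → z ∈ Ω →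
      φ (w, z) = J 2 (w, z) - J (1 / 2) (w, z) := by
    intro w z h1 h2 hz
    refine annulus_cauchy (f := fun ζ => φ (ζ, z)) (fun ζ h3 h4 => ?_) h1 h2
    exact (AnalyticAt.fun_comp_of_eq (g := φ) (hφ ζ z h3 h4 hz)
      (analyticAt_id.prod analyticAt_const) rfl).differentiableAt
  have hfst : Continuous fun y : ℂ × E => ‖y.1‖ := by fun_prop
  have evΩ : ∀ (w : ℂ) z, z ∈ Ω → ∀ᶠ y in 𝓝 (w, z), y.2 ∈ Ω := fun w z hz =>
    continuous_snd.continuousAt.preimage_mem_nhds (hΩ.mem_nhds hz)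
  have evlt : ∀ (w : ℂ) z (c : ℝ), ‖w‖ < c → ∀ᶠ y : ℂ × E in 𝓝 (w, z), ‖y.1‖ < c :=
    fun w z c hc => hfst.continuousAt.eventually_lt continuousAt_const hc
  have evgt : ∀ (w : ℂ) z (c : ℝ), c < ‖w‖ → ∀ᶠ y : ℂ × E in 𝓝 (w, z), c < ‖y.1‖ :=
    fun w z c hc => continuousAt_const.eventually_lt hfst.continuousAt hc
  set φp : ℂ × E → ℂ := fun y => if ‖y.1‖ < 2 then J 2 y else φ y + J (1 / 2) y with hφp
  set φm : ℂ × E → ℂ := fun y => if 1 / 2 < ‖y.1‖ then J (1 / 2) y else J 2 y - φ y with hφm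
  have p1 : ∀ (w : ℂ) z, ‖w‖ < 2 → φp (w, z) = J 2 (w, z) := fun w z hw => if_pos hw
  have p2 : ∀ (w : ℂ) z, 1 / 2 < ‖w‖ → z ∈ Ω → φp (w, z) = φ (w, z) + J (1 / 2) (w, z) := by
    intro w z hw hz
    by_cases h : ‖w‖ < 2
    · rw [p1 w z h, hcauchy w z hw h hz]; ring
    · exact if_neg h
  have m1 : ∀ (w : ℂ) z, 1 / 2 < ‖w‖ → φm (w, z) = J (1 / 2) (w, z) := fun w z hw => if_pos hw
  have m2 : ∀ (w : ℂ) z, ‖w‖ < 2 → z ∈ Ω → φm (w, z) = J 2 (w, z) - φ (w, z) := by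
    intro w z hw hz
    by_cases h : 1 / 2 < ‖w‖
    · rw [m1 w z h, hcauchy w z h hw hz]; ring
    · exact if_neg h
  refine ⟨φp, φm, fun w z hw hz => ?_, fun w z hw hz => ?_, fun w z hw1 hw2 hz => ?_,
    fun M hM => ?_⟩
  · by_cases h : ‖w‖ < 2
    · refine (hJan 2 (by norm_num) (by norm_num) w z h.ne hz).congr ?_
      filter_upwards [evlt w z 2 h] with y hy using (p1 y.1 y.2 hy).symm
    · refine ((hφ w z (by linarith) hw hz).add
        (hJan (1 / 2) (by norm_num) (by norm_num) w z (by linarith) hz)).congr ?_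
      filter_upwards [evgt w z (1 / 2) (by linarith), evΩ w z hz] with y hy hy2
        using (p2 y.1 y.2 hy hy2).symm
  · by_cases h : 1 / 2 < ‖w‖
    · refine (hJan (1 / 2) (by norm_num) (by norm_num) w z h.ne' hz).congr ?_
      filter_upwards [evgt w z (1 / 2) h] with y hy using (m1 y.1 y.2 hy).symm
    · refine ((hJan 2 (by norm_num) (by norm_num) w z (by linarith) hz).sub
        (hφ w z hw (by linarith) hz)).congr ?_
      filter_upwards [evlt w z 2 (by linarith), evΩ w z hz] with y hy hy2
        using (m2 y.1 y.2 hy hy2).symm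
  · by_cases h : ‖w‖ < 2
    · rw [p1 w z h, m2 w z h hz]; ring
    · rw [p2 w z (by linarith) hz, m1 w z (by linarith)]; ring
  · have hJb : ∀ R : ℝ, 1 / 4 < R → R < 4 → ∀ δ > 0, ∀ (w : ℂ) z, (∀ ζ : ℂ, ‖ζ‖ = R → δ ≤ ‖ζ - w‖) →
        z ∈ Ω → ‖J R (w, z)‖ ≤ R * (δ⁻¹ * M) := by
      intro R hR1 hR2 δ hδ w z hw hz
      refine circleIntegral.norm_two_pi_i_inv_smul_integral_le_of_norm_le_const (by linarith)
        fun ζ hζ => ?_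
      have hζ' : ‖ζ‖ = R := by simpa using hζ
      rw [norm_mul, norm_inv]
      gcongr
      · exact hw ζ hζ'
      · exact hM ζ z (by linarith) (by linarith) hz
    have hM0 : ∀ z ∈ Ω, 0 ≤ M := fun z hz => (norm_nonneg _).trans
      (hM 1 z (by norm_num) (by norm_num) hz)
    have hJ2 : ∀ (w : ℂ) z, ‖w‖ ≤ 1 → z ∈ Ω → ‖J 2 (w, z)‖ ≤ 2 * M := by
      intro w z hw hz
      have := hJb 2 (by norm_num) (by norm_num) 1 one_pos w z (fun ζ hζ => by
        have := norm_sub_norm_le ζ w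
        linarith) hz
      simpa using this
    have hJ1 : ∀ (w : ℂ) z, 1 ≤ ‖w‖ → z ∈ Ω → ‖J (1 / 2) (w, z)‖ ≤ M := by
      intro w z hw hz
      have := hJb (1 / 2) (by norm_num) (by norm_num) (1 / 2) (by norm_num) w z (fun ζ hζ => by
        have := norm_sub_norm_le w ζ
        rw [norm_sub_rev] at this
        linarith) hz
      linarith
    refine ⟨fun w z hw hz => ?_, fun w z hw hz => ?_⟩
    · have := hM0 z hz
      rcases le_total ‖w‖ 1 with h | h
      · rw [p1 w z (by linarith)]
        linarith [hJ2 w z h hz]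
      · rw [p2 w z (by linarith) hz]
        refine (norm_add_le _ _).trans ?_
        linarith [hJ1 w z h hz, hM w z (by linarith) hw hz]
    · have := hM0 z hz
      rcases le_total 1 ‖w‖ with h | h
      · rw [m1 w z (by linarith)]
        linarith [hJ1 w z h hz]
      · rw [m2 w z (by linarith) hz]
        refine (norm_sub_le _ _).trans ?_
        linarith [hJ2 w z h hz, hM w z hw (by linarith) hz]
end
end

/-! ### Cartan's lemma on an annulus -/

section
section
variable {E : Type*} [NormedAddCommGroup E] [NormedSpace ℂ E] [FiniteDimensional ℂ E]

/-- Cartan's lemma: a matrix `1 + Y` close to the identity on the annulus factors as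
`(1 + h) * (1 + g)⁻¹` in the form `1 + h = (1 + Y) * (1 + g)`, with `h` analytic and small on the
disc and `g` analytic outside. -/
theorem cartan (κ : Type) [Fintype κ] {η : ℝ} (hη : 0 < η) : ∃ ε > 0, ∀ Ω : Set E, IsOpen Ω →
    ∀ Y : κ → κ → ℂ × E → ℂ,
    (∀ k l, ∀ (w : ℂ) z, 1 / 4 < ‖w‖ → ‖w‖ < 4 → z ∈ Ω → AnalyticAt ℂ (Y k l) (w, z)) →
    (∀ k l, ∀ (w : ℂ) z, 1 / 4 < ‖w‖ → ‖w‖ < 4 → z ∈ Ω → ‖Y k l (w, z)‖ ≤ ε) →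
    ∃ h g : κ → κ → ℂ × E → ℂ,
      (∀ k l, ∀ (w : ℂ) z, ‖w‖ < 4 → z ∈ Ω → AnalyticAt ℂ (h k l) (w, z) ∧ ‖h k l (w, z)‖ ≤ η) ∧
      (∀ k l, ∀ (w : ℂ) z, 1 / 4 < ‖w‖ → z ∈ Ω → AnalyticAt ℂ (g k l) (w, z)) ∧
      ∀ k l, ∀ (w : ℂ) z, 1 / 4 < ‖w‖ → ‖w‖ < 4 → z ∈ Ω →
        h k l (w, z) - g k l (w, z) = Y k l (w, z) + ∑ i, Y k i (w, z) * g i l (w, z) := by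
  set c : ℝ := ((Fintype.card κ : ℕ) : ℝ) with hc
  have hc0 : 0 ≤ c := Nat.cast_nonneg _
  set ε : ℝ := min (1 / (6 * (c + 1))) (η / 6) with hε
  have hε0 : 0 < ε := lt_min (by positivity) (by positivity)
  have hε1 : 3 * c * ε ≤ 1 / 2 := by
    have h1 : ε ≤ 1 / (6 * (c + 1)) := min_le_left _ _
    have h2 : ε * (6 * (c + 1)) ≤ 1 := by rwa [le_div_iff₀ (by positivity)] at h1
    nlinarith
  have hε2 : 6 * ε ≤ η := by
    have h1 : ε ≤ η / 6 := min_le_right _ _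
    linarith
  refine ⟨ε, hε0, fun Ω hΩ Y hY hYb => ?_⟩
  choose! P N hP hN hPN hbd using fun (φ : ℂ × E → ℂ) (hφ : ∀ (w : ℂ) z, 1 / 4 < ‖w‖ → ‖w‖ < 4 →
    z ∈ Ω → AnalyticAt ℂ φ (w, z)) => laurent hφ hΩ
  -- the successive right-hand sides
  let Z : ℕ → κ → κ → ℂ × E → ℂ := fun m => Nat.rec (fun k l => Y k l)
    (fun _ W k l y => ∑ i, Y k i y * N (W i l) y) m
  have hZ0 : ∀ k l, Z 0 k l = Y k l := fun k l => rfl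
  have hZs : ∀ m k l, Z (m + 1) k l = fun y => ∑ i, Y k i y * N (Z m i l) y := fun m k l => rfl
  have hZ : ∀ m, (∀ k l, ∀ (w : ℂ) z, 1 / 4 < ‖w‖ → ‖w‖ < 4 → z ∈ Ω →
      AnalyticAt ℂ (Z m k l) (w, z)) ∧
      ∀ k l, ∀ (w : ℂ) z, 1 / 4 < ‖w‖ → ‖w‖ < 4 → z ∈ Ω → ‖Z m k l (w, z)‖ ≤ ε * (1 / 2) ^ m := by
    intro m
    induction m with
    | zero =>
      refine ⟨hY, fun k l w z h1 h2 hz => ?_⟩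
      rw [hZ0, pow_zero, mul_one]; exact hYb k l w z h1 h2 hz
    | succ m ih =>
      refine ⟨fun k l w z h1 h2 hz => ?_, fun k l w z h1 h2 hz => ?_⟩
      · rw [hZs]
        exact Finset.analyticAt_fun_sum _ fun i _ => (hY k i w z h1 h2 hz).mul
          (hN _ (ih.1 i l) w z h1 hz)
      · rw [hZs]
        have hi : ∀ i, ‖Y k i (w, z) * N (Z m i l) (w, z)‖ ≤ ε * (3 * (ε * (1 / 2) ^ m)) := by
          intro i
          rw [norm_mul]
          exact mul_le_mul (hYb k i w z h1 h2 hz) ((hbd _ (ih.1 i l) _ (ih.2 i l)).2 w z h1 hz)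
            (norm_nonneg _) hε0.le
        refine (norm_sum_le_of_le _ fun i _ => hi i).trans ?_
        rw [Finset.sum_const, Finset.card_univ, nsmul_eq_mul, ← hc, pow_succ]
        have hp : 0 ≤ ε * (1 / 2) ^ m := by positivity
        calc c * (ε * (3 * (ε * (1 / 2) ^ m))) = (3 * c * ε) * (ε * (1 / 2) ^ m) := by ring
          _ ≤ (1 / 2) * (ε * (1 / 2) ^ m) := by gcongr
          _ = ε * ((1 / 2) ^ m * (1 / 2)) := by ring
  set u : ℕ → ℝ := fun m => 3 * (ε * (1 / 2) ^ m) with hu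
  have hus : HasSum u (6 * ε) := by
    have h1 := (hasSum_geometric_two.mul_left ε).mul_left 3
    have h2 : 3 * (ε * 2) = 6 * ε := by ring
    rw [h2] at h1; exact h1
  have hPb := fun m k l => (hbd _ ((hZ m).1 k l) _ ((hZ m).2 k l)).1
  have hNb := fun m k l => (hbd _ ((hZ m).1 k l) _ ((hZ m).2 k l)).2
  have op1 : IsOpen {y : ℂ × E | ‖y.1‖ < 4 ∧ y.2 ∈ Ω} :=
    (isOpen_lt continuous_fst.norm continuous_const).inter (hΩ.preimage continuous_snd)
  have op2 : IsOpen {y : ℂ × E | 1 / 4 < ‖y.1‖ ∧ y.2 ∈ Ω} :=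
    (isOpen_lt continuous_const continuous_fst.norm).inter (hΩ.preimage continuous_snd)
  have hPs : ∀ k l, ∀ (w : ℂ) z, ‖w‖ < 4 → z ∈ Ω → Summable fun m => P (Z m k l) (w, z) :=
    fun k l w z h1 hz => Summable.of_norm_bounded hus.summable fun m => hPb m k l w z h1 hz
  have hNs : ∀ k l, ∀ (w : ℂ) z, 1 / 4 < ‖w‖ → z ∈ Ω → Summable fun m => N (Z m k l) (w, z) :=
    fun k l w z h1 hz => Summable.of_norm_bounded hus.summable fun m => hNb m k l w z h1 hz
  refine ⟨fun k l y => ∑' m, P (Z m k l) y, fun k l y => ∑' m, N (Z m k l) y,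
    fun k l w z h1 hz => ⟨?_, ?_⟩, fun k l w z h1 hz => ?_, fun k l w z h1 h2 hz => ?_⟩
  · exact analyticOnNhd_tsum op1 hus.summable (fun m y hy => hP _ ((hZ m).1 k l) y.1 y.2 hy.1 hy.2)
      (fun m y hy => hPb m k l y.1 y.2 hy.1 hy.2) (w, z) ⟨h1, hz⟩
  · exact (tsum_of_norm_bounded hus fun m => hPb m k l w z h1 hz).trans hε2
  · exact analyticOnNhd_tsum op2 hus.summable (fun m y hy => hN _ ((hZ m).1 k l) y.1 y.2 hy.1 hy.2)
      (fun m y hy => hNb m k l y.1 y.2 hy.1 hy.2) (w, z) ⟨h1, hz⟩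
  · have e1 : ∀ m, P (Z m k l) (w, z) - N (Z m k l) (w, z) = Z m k l (w, z) := fun m =>
      (hPN _ ((hZ m).1 k l) w z h1 h2 hz).symm
    have hsum : Summable fun m => Z m k l (w, z) := by
      simp only [← e1]
      exact (hPs k l w z h2 hz).sub (hNs k l w z h1 hz)
    rw [← (hPs k l w z h2 hz).tsum_sub (hNs k l w z h1 hz)]
    simp only [e1]
    rw [hsum.tsum_eq_zero_add, hZ0]
    congr 1
    simp only [hZs, ← tsum_mul_left]
    rw [Summable.tsum_finsetSum]
    intro i _
    exact (hNs i l w z h1 hz).mul_left _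
end
end

/-! ### Splitting across a real hyperplane -/

section
section
variable {n : ℕ}

theorem dist_update_le (z : Fin n → ℂ) (j : Fin n) (a b : ℂ) :
    dist (Function.update z j a) (Function.update z j b) ≤ dist a b := by
  refine (dist_pi_le_iff dist_nonneg).2 fun i => ?_
  by_cases h : i = j
  · subst h; simp
  · simp [Function.update_of_ne h]

/-- The inverse Joukowski-type map: `W` solves `W - 1 / W = σ`, is at most `1` on negative reals and
at least `1` on positive reals. -/
theorem jou : ∃ W : ℂ → ℂ, (∀ σ, W σ - (W σ)⁻¹ = σ) ∧ (∀ r : ℝ, AnalyticAt ℂ W (r : ℂ)) ∧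
    (∀ r : ℝ, r ≤ 0 → ‖W r‖ ≤ 1) ∧ ∀ r : ℝ, 0 ≤ r → 1 ≤ ‖W r‖ := by
  have hval : ∀ r : ℝ, ((r : ℂ) + ((r : ℂ) ^ 2 + 4) ^ (((2 : ℕ) : ℂ)⁻¹)) / 2 =
      (((r + (r ^ 2 + 4) ^ ((2 : ℝ)⁻¹)) / 2 : ℝ) : ℂ) := by
    intro r
    have h : (0 : ℝ) ≤ r ^ 2 + 4 := by positivity
    have := Complex.ofReal_cpow h ((2 : ℝ)⁻¹)
    push_cast at this ⊢
    rw [this]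
  have hsq : ∀ r : ℝ, ((r ^ 2 + 4) ^ ((2 : ℝ)⁻¹)) ^ 2 = r ^ 2 + 4 := by
    intro r
    have h : (0 : ℝ) ≤ r ^ 2 + 4 := by positivity
    have := Real.rpow_inv_natCast_pow h (n := 2) (by norm_num)
    simpa using this
  refine ⟨fun σ => (σ + (σ ^ 2 + 4) ^ (((2 : ℕ) : ℂ)⁻¹)) / 2, fun σ => ?_, fun r => ?_,
    fun r hr => ?_, fun r hr => ?_⟩
  · have hs := Complex.cpow_nat_inv_pow (σ ^ 2 + 4) (n := 2) (by norm_num)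
    simp only
    generalize (σ ^ 2 + 4) ^ (((2 : ℕ) : ℂ)⁻¹) = s at hs
    have h1 : (σ + s) / 2 * ((s - σ) / 2) = 1 := by linear_combination hs / 4
    rw [inv_eq_of_mul_eq_one_right h1]
    ring
  · have h1 : AnalyticAt ℂ (fun σ : ℂ => σ ^ 2 + 4) (r : ℂ) := by fun_prop
    have h2 : ((r : ℂ) ^ 2 + 4) ∈ Complex.slitPlane := by
      left
      have : ((r : ℂ) ^ 2 + 4) = ((r ^ 2 + 4 : ℝ) : ℂ) := by push_cast; ring
      rw [this, Complex.ofReal_re]; positivity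
    exact (analyticAt_id.add (h1.cpow analyticAt_const h2)).div_const
  · simp only [hval, Complex.norm_real, Real.norm_eq_abs]
    have h := hsq r
    have h0 : (0 : ℝ) ≤ (r ^ 2 + 4) ^ ((2 : ℝ)⁻¹) := by positivity
    generalize (r ^ 2 + 4) ^ ((2 : ℝ)⁻¹) = s at h h0
    rw [abs_le]; constructor <;> nlinarith
  · simp only [hval, Complex.norm_real, Real.norm_eq_abs]
    have h := hsq r
    have h0 : (0 : ℝ) ≤ (r ^ 2 + 4) ^ ((2 : ℝ)⁻¹) := by positivity
    generalize (r ^ 2 + 4) ^ ((2 : ℝ)⁻¹) = s at h h0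
    have : 2 ≤ s := by nlinarith
    exact le_trans (by linarith) (le_abs_self _)

/-- Change of variable turning a thin neighbourhood of a compact set in `{z j = t}` into an
annulus times an open set. -/
theorem wmap {K O : Set (Fin n → ℂ)} (hK : IsCompact K) (hO : IsOpen O) (hKO : K ⊆ O) (j : Fin n)
    (t : ℝ) (hKt : ∀ y ∈ K, y j = t) :
    ∃ (Ω : Set (Fin n → ℂ)) (W : (Fin n → ℂ) → ℂ) (Ψ : ℂ × (Fin n → ℂ) → (Fin n → ℂ)), IsOpen Ω ∧
      (∀ (w : ℂ) z, 1 / 4 < ‖w‖ → ‖w‖ < 4 → z ∈ Ω → Ψ (w, z) ∈ O ∧ AnalyticAt ℂ Ψ (w, z)) ∧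
      (∀ y : Fin n → ℂ, (y j).im = 0 → Function.update y j (t : ℂ) ∈ K →
        y ∈ Ω ∧ AnalyticAt ℂ W y ∧ ((y j).re ≤ t → ‖W y‖ ≤ 1) ∧ (t ≤ (y j).re → 1 ≤ ‖W y‖)) ∧
      ∀ z, Ψ (W z, z) = z := by
  obtain ⟨δ, hδ, hth⟩ := hK.exists_thickening_subset_open hO hKO
  obtain ⟨W, hW, hWa, hW1, hW2⟩ := jou
  obtain ⟨q, hq⟩ : ∃ q : ℝ, q = δ / 16 := ⟨_, rfl⟩
  have hq0 : 0 < q := by rw [hq]; positivity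
  have hqC : (q : ℂ) ≠ 0 := by exact_mod_cast hq0.ne'
  refine ⟨{z | Function.update z j (t : ℂ) ∈ thickening (δ / 2) K}, fun z => W ((z j - t) / q),
    fun p => Function.update p.2 j (t + q * (p.1 - p.1⁻¹)), ?_, ?_, ?_, ?_⟩
  · exact isOpen_thickening.preimage (continuous_id.update j continuous_const)
  · intro w z h1 h2 hz
    have hw0 : w ≠ 0 := norm_pos_iff.1 (by linarith)
    refine ⟨hth ?_, ?_⟩
    · have hz' : Function.update z j (t : ℂ) ∈ thickening (δ / 2) K := hz
      obtain ⟨y, hy, hd⟩ := mem_thickening_iff.1 hz'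
      refine mem_thickening_iff.2 ⟨y, hy, ?_⟩
      have h3 := dist_update_le z j (t + q * (w - w⁻¹)) t
      have h4 : dist ((t : ℂ) + q * (w - w⁻¹)) t ≤ δ / 2 := by
        rw [dist_eq_norm, add_sub_cancel_left, norm_mul, Complex.norm_real, Real.norm_eq_abs,
          abs_of_pos hq0]
        have h5 : ‖w⁻¹‖ ≤ 4 := by
          rw [norm_inv]; rw [inv_le_comm₀ (by linarith) (by norm_num)]; linarith
        have h6 : ‖w - w⁻¹‖ ≤ 8 := (norm_sub_le _ _).trans (by linarith)
        calc q * ‖w - w⁻¹‖ ≤ q * 8 := by gcongr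
          _ = δ / 2 := by rw [hq]; ring
      have := dist_triangle (Function.update z j ((t : ℂ) + q * (w - w⁻¹))) (Function.update z j (t : ℂ)) y
      simp only at this ⊢
      linarith
    · rw [analyticAt_pi_iff]
      intro i
      by_cases h : i = j
      · subst h
        simp only [Function.update_self]
        exact analyticAt_const.add (analyticAt_const.mul (analyticAt_fst.sub (analyticAt_fst.inv hw0)))
      · simp only [Function.update_of_ne h]
        exact ((ContinuousLinearMap.proj (R := ℂ) (φ := fun _ : Fin n => ℂ) i).analyticAt _).comp
          analyticAt_snd
  · intro y him hy
    have hyj : (y j - t) / (q : ℂ) = ((((y j).re - t) / q : ℝ) : ℂ) := by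
      have : y j = ((y j).re : ℂ) := by apply Complex.ext <;> simp [him]
      rw [Complex.ofReal_div, Complex.ofReal_sub, ← this]
    have hmem : Function.update y j (t : ℂ) ∈ thickening (δ / 2) K :=
      self_subset_thickening (half_pos hδ) K hy
    refine ⟨hmem, ?_, fun h => ?_, fun h => ?_⟩
    · have ha : AnalyticAt ℂ (fun z : Fin n → ℂ => (z j - t) / (q : ℂ)) y :=
        (((ContinuousLinearMap.proj (R := ℂ) (φ := fun _ : Fin n => ℂ) j).analyticAt y).sub
          analyticAt_const).div_const
      refine AnalyticAt.fun_comp (f := fun z : Fin n → ℂ => (z j - t) / (q : ℂ)) ?_ ha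
      rw [hyj]; exact hWa _
    · simp only [hyj]
      exact hW1 _ (div_nonpos_of_nonpos_of_nonneg (by linarith) hq0.le)
    · simp only [hyj]
      exact hW2 _ (div_nonneg (by linarith) hq0.le)
  · intro z
    simp only [hW]
    rw [mul_div_cancel₀ _ hqC, add_sub_cancel, Function.update_eq_self]

/-- Additive splitting across the hyperplane `z j = t`. -/
theorem add_split {K : Set (Fin n → ℂ)} (hK : IsCompact K) (j : Fin n) (t : ℝ)
    (hKt : ∀ y ∈ K, y j = t) {d : (Fin n → ℂ) → ℂ} (hd : ∀ y ∈ K, AnalyticAt ℂ d y) :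
    ∃ dp dm : (Fin n → ℂ) → ℂ,
      (∀ y : Fin n → ℂ, (y j).im = 0 → Function.update y j (t : ℂ) ∈ K → (y j).re ≤ t →
        AnalyticAt ℂ dp y) ∧
      (∀ y : Fin n → ℂ, (y j).im = 0 → Function.update y j (t : ℂ) ∈ K → t ≤ (y j).re →
        AnalyticAt ℂ dm y) ∧
      ∀ y ∈ K, ∀ᶠ z in 𝓝 y, d z = dp z - dm z := by
  obtain ⟨Ω, W, Ψ, hΩ, hΨ, hW, hid⟩ := wmap hK (isOpen_analyticAt ℂ d) hd j t hKt
  obtain ⟨φp, φm, hp, hm, hpm, -⟩ := laurent (φ := fun p => d (Ψ p)) (Ω := Ω)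
    (fun w z h1 h2 hz => AnalyticAt.fun_comp (hΨ w z h1 h2 hz).1 (hΨ w z h1 h2 hz).2) hΩ
  refine ⟨fun z => φp (W z, z), fun z => φm (W z, z), fun y h1 h2 h3 => ?_, fun y h1 h2 h3 => ?_,
    fun y hy => ?_⟩
  · obtain ⟨a, b, c, -⟩ := hW y h1 h2
    exact AnalyticAt.fun_comp (f := fun z => (W z, z)) (hp _ _ (by linarith [c h3]) a)
      (b.prod analyticAt_id)
  · obtain ⟨a, b, -, c⟩ := hW y h1 h2
    exact AnalyticAt.fun_comp (f := fun z => (W z, z)) (hm _ _ (by linarith [c h3]) a)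
      (b.prod analyticAt_id)
  · have hyt := hKt y hy
    have hu : Function.update y j (t : ℂ) ∈ K := by rwa [← hyt, Function.update_eq_self]
    obtain ⟨a, b, c, c'⟩ := hW y (by simp [hyt]) hu
    have c1 := c (by simp [hyt])
    have c2 := c' (by simp [hyt])
    have e1 : ∀ᶠ z in 𝓝 y, ‖W z‖ < 4 := b.continuousAt.norm.eventually (gt_mem_nhds (by linarith))
    have e2 : ∀ᶠ z in 𝓝 y, 1 / 4 < ‖W z‖ :=
      b.continuousAt.norm.eventually (lt_mem_nhds (by linarith))
    filter_upwards [e1, e2, hΩ.mem_nhds a] with z h1 h2 h3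
    have := hpm _ _ h2 h1 h3
    rw [← this]; simp only [hid]

/-- Multiplicative splitting across the hyperplane `z j = t`. -/
theorem cartan_split {κ : Type} [Fintype κ] {K : Set (Fin n → ℂ)} (hK : IsCompact K) (j : Fin n)
    (t : ℝ) (hKt : ∀ y ∈ K, y j = t) {Y : κ → κ → (Fin n → ℂ) → ℂ}
    (hY : ∀ k l, ∀ y ∈ K, AnalyticAt ℂ (Y k l) y) (hY0 : ∀ k l, ∀ y ∈ K, Y k l y = 0)
    {η : ℝ} (hη : 0 < η) :
    ∃ h g : κ → κ → (Fin n → ℂ) → ℂ,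
      (∀ k l, ∀ y : Fin n → ℂ, (y j).im = 0 → Function.update y j (t : ℂ) ∈ K → (y j).re ≤ t →
        AnalyticAt ℂ (h k l) y ∧ ‖h k l y‖ ≤ η) ∧
      (∀ k l, ∀ y : Fin n → ℂ, (y j).im = 0 → Function.update y j (t : ℂ) ∈ K → t ≤ (y j).re →
        AnalyticAt ℂ (g k l) y) ∧
      ∀ k l, ∀ y ∈ K, ∀ᶠ z in 𝓝 y, h k l z - g k l z = Y k l z + ∑ i, Y k i z * g i l z := by
  obtain ⟨ε, hε, hcart⟩ := cartan (E := Fin n → ℂ) κ hη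
  set O : Set (Fin n → ℂ) := interior {z | ∀ k l, AnalyticAt ℂ (Y k l) z ∧ ‖Y k l z‖ ≤ ε} with hO
  have hKO : K ⊆ O := by
    intro y hy
    rw [hO, mem_interior_iff_mem_nhds]
    have : ∀ᶠ z in 𝓝 y, ∀ k l, AnalyticAt ℂ (Y k l) z ∧ ‖Y k l z‖ ≤ ε := by
      refine eventually_all.2 fun k => eventually_all.2 fun l => ?_
      refine (hY k l y hy).eventually_analyticAt.and ?_
      have h1 := (hY k l y hy).continuousAt.norm
      have h2 : ‖Y k l y‖ < ε := by rw [hY0 k l y hy, norm_zero]; exact hε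
      exact (h1.eventually (gt_mem_nhds h2)).mono fun z hz => le_of_lt hz
    exact this
  obtain ⟨Ω, W, Ψ, hΩ, hΨ, hW, hid⟩ := wmap hK isOpen_interior hKO j t hKt
  have hYO : ∀ k l, ∀ z ∈ O, AnalyticAt ℂ (Y k l) z ∧ ‖Y k l z‖ ≤ ε := fun k l z hz =>
    interior_subset hz k l
  obtain ⟨h, g, hh, hg, hhg⟩ := hcart Ω hΩ (fun k l p => Y k l (Ψ p))
    (fun k l w z h1 h2 hz => AnalyticAt.fun_comp (hYO k l _ (hΨ w z h1 h2 hz).1).1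
      (hΨ w z h1 h2 hz).2)
    (fun k l w z h1 h2 hz => (hYO k l _ (hΨ w z h1 h2 hz).1).2)
  refine ⟨fun k l z => h k l (W z, z), fun k l z => g k l (W z, z), fun k l y h1 h2 h3 => ?_,
    fun k l y h1 h2 h3 => ?_, fun k l y hy => ?_⟩
  · obtain ⟨a, b, c, -⟩ := hW y h1 h2
    obtain ⟨d, e⟩ := hh k l (W y) y (by linarith [c h3]) a
    exact ⟨AnalyticAt.fun_comp (f := fun z => (W z, z)) d (b.prod analyticAt_id), e⟩
  · obtain ⟨a, b, -, c⟩ := hW y h1 h2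
    exact AnalyticAt.fun_comp (f := fun z => (W z, z)) (hg k l _ _ (by linarith [c h3]) a)
      (b.prod analyticAt_id)
  · have hyt := hKt y hy
    have hu : Function.update y j (t : ℂ) ∈ K := by rwa [← hyt, Function.update_eq_self]
    obtain ⟨a, b, c, c'⟩ := hW y (by simp [hyt]) hu
    have c1 := c (by simp [hyt])
    have c2 := c' (by simp [hyt])
    have e1 : ∀ᶠ z in 𝓝 y, ‖W z‖ < 4 := b.continuousAt.norm.eventually (gt_mem_nhds (by linarith))
    have e2 : ∀ᶠ z in 𝓝 y, 1 / 4 < ‖W z‖ :=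
      b.continuousAt.norm.eventually (lt_mem_nhds (by linarith))
    filter_upwards [e1, e2, hΩ.mem_nhds a] with z h1 h2 h3
    have := hhg k l _ _ h2 h1 h3
    simpa only [hid] using this
end
end

/-! ### Theorems A and B: statements and algebraic preparations -/

section
/-- An interval property that holds locally and can be glued holds globally. -/
theorem interval_principle {a b : ℝ} (hab : a ≤ b) (P : ℝ → ℝ → Prop)
    (hloc : ∀ t, a ≤ t → t ≤ b → ∃ ε > 0, ∀ s v, a ≤ s → s ≤ v → v ≤ b → |s - t| < ε →
      |v - t| < ε → P s v)
    (hglue : ∀ s t v, a ≤ s → s ≤ t → t ≤ v → v ≤ b → P s t → P t v → P s v) : P a b := by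
  choose! ε hε hP using hloc
  obtain ⟨τ, h0, hmono, ⟨m, hm⟩, hsub⟩ := exists_monotone_Icc_subset_open_cover_Icc hab
    (c := fun t : Icc a b => ball t (ε t)) (fun _ => isOpen_ball)
    (fun t _ => mem_iUnion.2 ⟨t, mem_ball_self (hε t t.2.1 t.2.2)⟩)
  have key : ∀ k, P (τ k) (τ (k + 1)) := by
    intro k
    obtain ⟨t, ht⟩ := hsub k
    have hk : (τ k : ℝ) ≤ τ (k + 1) := hmono (Nat.le_succ k)
    have h1 : τ k ∈ ball t (ε t) := ht ⟨le_rfl, hk⟩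
    have h2 : τ (k + 1) ∈ ball t (ε t) := ht ⟨hk, le_rfl⟩
    exact hP t t.2.1 t.2.2 _ _ (τ k).2.1 hk (τ (k + 1)).2.2 h1 h2
  have hPk : ∀ k, P a (τ (k + 1)) := by
    intro k
    induction k with
    | zero => have := key 0; rwa [h0] at this
    | succ k ih =>
      exact hglue _ _ _ le_rfl (τ _).2.1 (hmono (Nat.le_succ _)) (τ _).2.2 ih (key _)
  have := hPk m
  rwa [hm (m + 1) (Nat.le_succ m)] at this

section
variable {E : Type*} [NormedAddCommGroup E] [NormedSpace ℂ E]

/-- Relation modules of analytic matrices on `Q` are globally finitely generated. -/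
def ThmA (Q : Set E) : Prop := ∀ (ι κ : Type) [Fintype ι] [Fintype κ] (A : ι → κ → E → ℂ),
  (∀ i k, ∀ y ∈ Q, AnalyticAt ℂ (A i k) y) → ∃ (μ : Type) (_ : Fintype μ) (B : κ → μ → E → ℂ),
    (∀ k m, ∀ y ∈ Q, AnalyticAt ℂ (B k m) y) ∧ ∀ y ∈ Q, Exact A B y

/-- A vector lying pointwise in the image of an analytic matrix lies globally in it. -/
def ThmB (Q : Set E) : Prop := ∀ (ι κ : Type) [Fintype ι] [Fintype κ] (A : ι → κ → E → ℂ)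
  (g : ι → E → ℂ), (∀ i k, ∀ y ∈ Q, AnalyticAt ℂ (A i k) y) →
  (∀ i, ∀ y ∈ Q, AnalyticAt ℂ (g i) y) → (∀ y ∈ Q, InIm A g y) →
  ∃ c : κ → E → ℂ, (∀ k, ∀ y ∈ Q, AnalyticAt ℂ (c k) y) ∧
    ∀ y ∈ Q, ∀ i, ∀ᶠ z in 𝓝 y, g i z = ∑ k, A i k z * c k z

theorem InIm.trans {ι κ μ : Type} [Fintype κ] [Fintype μ] {A : ι → κ → E → ℂ}
    {B : ι → μ → E → ℂ} {y : E} (hB : ∀ m, InIm A (fun i => B i m) y) {g : ι → E → ℂ}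
    (hg : InIm B g y) : InIm A g y := by
  obtain ⟨d, hd, he⟩ := hg
  choose c hc hce using hB
  refine ⟨fun k z => ∑ m, c m k z * d m z, fun k => Finset.analyticAt_fun_sum _ fun m _ =>
    (hc m k).mul (hd m), fun i => ?_⟩
  filter_upwards [he i, eventually_all.2 fun m => hce m i] with z h1 h2
  rw [h1]
  simp only [h2, Finset.mul_sum, Finset.sum_mul]
  rw [Finset.sum_comm]
  exact Finset.sum_congr rfl fun k _ => Finset.sum_congr rfl fun m _ => by ring

theorem Exact.congr {ι κ μ : Type} [Fintype κ] [Fintype μ] {A : ι → κ → E → ℂ}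
    {B B' : κ → μ → E → ℂ} {y : E} (h : Exact A B y) (hB : ∀ k m, B' k m =ᶠ[𝓝 y] B k m) :
    Exact A B' y := by
  refine ⟨fun i m => ?_, fun c hc hz => ?_⟩
  · filter_upwards [h.1 i m, eventually_all.2 fun k => hB k m] with z h1 h2
    simp only [h2, h1]
  · obtain ⟨d, hd, he⟩ := h.2 c hc hz
    refine ⟨d, hd, fun k => ?_⟩
    filter_upwards [he k, eventually_all.2 fun m => hB k m] with z h1 h2
    simp only [h1, h2]

theorem Exact.of_sum {ι κ μ ν : Type} [Fintype κ] [Fintype μ] [Fintype ν] {A : ι → κ → E → ℂ}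
    {B : κ → μ → E → ℂ} {B' : κ → ν → E → ℂ} {y : E}
    (h1 : ∀ i m, ∀ᶠ z in 𝓝 y, ∑ k, A i k z * B k m z = 0)
    (h2 : ∀ i m, ∀ᶠ z in 𝓝 y, ∑ k, A i k z * B' k m z = 0)
    (h : Exact A B y ∨ Exact A B' y) : Exact A (fun k => Sum.elim (B k) (B' k)) y := by
  refine ⟨fun i m => ?_, fun c hc hz => ?_⟩
  · rcases m with m | m
    · simpa using h1 i m
    · simpa using h2 i m
  · rcases h with h | h
    · obtain ⟨d, hd, he⟩ := h.2 c hc hz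
      refine ⟨Sum.elim d (fun _ _ => 0), ?_, fun k => ?_⟩
      · rintro (m | m)
        · exact hd m
        · exact analyticAt_const
      · filter_upwards [he k] with z hz
        simp [hz]
    · obtain ⟨d, hd, he⟩ := h.2 c hc hz
      refine ⟨Sum.elim (fun _ _ => 0) d, ?_, fun k => ?_⟩
      · rintro (m | m)
        · exact analyticAt_const
        · exact hd m
      · filter_upwards [he k] with z hz
        simp [hz]

theorem analyticAt_det {μ : Type} [Fintype μ] [DecidableEq μ] {M : μ → μ → E → ℂ} {y : E}
    (hM : ∀ k l, AnalyticAt ℂ (M k l) y) :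
    AnalyticAt ℂ (fun z => Matrix.det (Matrix.of fun k l => M k l z)) y := by
  simp only [Matrix.det_apply', Matrix.of_apply]
  exact Finset.analyticAt_fun_sum _ fun σ _ => analyticAt_const.mul
    (Finset.analyticAt_fun_prod _ fun i _ => hM _ _)

/-- A matrix close to the identity has an analytic inverse. -/
theorem exists_inverse {μ : Type} [Fintype μ] [DecidableEq μ] {h : μ → μ → E → ℂ} {y : E}
    (ha : ∀ k l, AnalyticAt ℂ (h k l) y)
    (hb : ∀ k l, ‖h k l y‖ ≤ 1 / (2 * ((Fintype.card μ : ℝ) + 1))) :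
    ∃ G : μ → μ → E → ℂ, (∀ k l, AnalyticAt ℂ (G k l) y) ∧ ∀ᶠ z in 𝓝 y, ∀ k l,
      ∑ m, ((if k = m then 1 else 0) + h k m z) * G m l z = if k = l then 1 else 0 := by
  set c : ℝ := 1 / (2 * ((Fintype.card μ : ℝ) + 1)) with hc
  have hM : ∀ k l, AnalyticAt ℂ (fun z => (if k = l then (1 : ℂ) else 0) + h k l z) y :=
    fun k l => analyticAt_const.add (ha k l)
  set M : E → Matrix μ μ ℂ := fun z => Matrix.of fun k l => (if k = l then (1 : ℂ) else 0) + h k l z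
    with hMdef
  have hdet : AnalyticAt ℂ (fun z => (M z).det) y := analyticAt_det hM
  have hcard : (Fintype.card μ : ℝ) * c ≤ 1 / 2 := by
    rw [hc, mul_one_div, div_le_div_iff₀ (by positivity) (by norm_num)]
    linarith
  have hne : (M y).det ≠ 0 := by
    refine det_ne_zero_of_sum_row_lt_diag fun k => ?_
    have hcpos : 0 < c := by positivity
    have h1 : ∑ j ∈ Finset.univ.erase k, ‖M y k j‖ ≤ ∑ j ∈ Finset.univ.erase k, c := by
      refine Finset.sum_le_sum fun j hj => ?_
      have : k ≠ j := (Finset.ne_of_mem_erase hj).symm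
      simp only [hMdef, Matrix.of_apply, if_neg this, zero_add]
      exact hb k j
    have h2 : 1 - c ≤ ‖M y k k‖ := by
      have h3 : ‖(1 : ℂ)‖ - ‖-h k k y‖ ≤ ‖1 - -h k k y‖ := norm_sub_norm_le _ _
      simp only [hMdef, Matrix.of_apply, if_true]
      rw [norm_neg, norm_one, sub_neg_eq_add] at h3
      linarith [hb k k]
    have h4 : (∑ j ∈ Finset.univ.erase k, c) + c = Fintype.card μ * c := by
      rw [Finset.sum_erase_add _ _ (Finset.mem_univ k), Finset.sum_const, Finset.card_univ,
        nsmul_eq_mul]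
    linarith
  refine ⟨fun k l z => (M z).det⁻¹ * (M z).adjugate k l, fun k l => ?_, ?_⟩
  · refine (hdet.inv hne).mul ?_
    simp only [Matrix.adjugate_apply]
    have : (fun z => ((M z).updateRow l (Pi.single k 1)).det) = fun z => Matrix.det
        (Matrix.of fun i m => (fun w => if i = l then (Pi.single k (1 : ℂ) : μ → ℂ) m else M w i m) z) := by
      funext z
      congr 1
      ext i m
      by_cases hi : i = l
      · subst hi; simp
      · simp [hi]
    rw [this]
    refine analyticAt_det fun i m => ?_
    by_cases hi : i = l
    · simp only [hi, if_true]; exact analyticAt_const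
    · simp only [hi, if_false]; exact hM i m
  · filter_upwards [hdet.continuousAt.eventually_ne hne] with z hz k l
    have h1 := congrFun (congrFun (Matrix.mul_adjugate (M z)) k) l
    rw [Matrix.mul_apply, Matrix.smul_apply, Matrix.one_apply] at h1
    have h2 : ∑ m, ((if k = m then 1 else 0) + h k m z) * ((M z).det⁻¹ * (M z).adjugate m l) =
        (M z).det⁻¹ * ∑ m, M z k m * (M z).adjugate m l := by
      rw [Finset.mul_sum]
      exact Finset.sum_congr rfl fun m _ => by simp only [hMdef, Matrix.of_apply]; ring
    rw [h2, h1, smul_eq_mul, ← mul_assoc, inv_mul_cancel₀ hz, one_mul]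
end

section
variable {n : ℕ}

theorem exact_eventually {ι κ μ : Type} [Finite ι] [Fintype κ] [Fintype μ]
    {A : ι → κ → (Fin n → ℂ) → ℂ} {B : κ → μ → (Fin n → ℂ) → ℂ} {y : Fin n → ℂ}
    (hA : ∀ i k, AnalyticAt ℂ (A i k) y) (h : Exact A B y) : ∀ᶠ z in 𝓝 y, Exact A B z := by
  obtain ⟨ν, _, B₀, hB₀, hex⟩ := oka y ι κ A hA
  have h0 := hex.self_of_nhds
  have h1 : ∀ m, InIm B (fun k => B₀ k m) y := fun m =>
    h.2 _ (fun k => hB₀ k m) fun i => h0.1 i m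
  filter_upwards [hex, eventually_all.2 fun m => (h1 m).eventually,
    eventually_all.2 fun i => eventually_all.2 fun m => (h.1 i m).eventually_nhds] with z h2 h3 h4
  exact ⟨h4, fun c hc hz => InIm.trans h3 (h2.2 c hc hz)⟩

theorem analyticAt_update {y : Fin n → ℂ} (j : Fin n) (t : ℂ) :
    AnalyticAt ℂ (fun z : Fin n → ℂ => Function.update z j t) y := by
  rw [analyticAt_pi_iff]
  intro i
  by_cases h : i = j
  · subst h; simp only [Function.update_self]; exact analyticAt_const
  · simp only [Function.update_of_ne h]
    exact (ContinuousLinearMap.proj (R := ℂ) (φ := fun _ : Fin n => ℂ) i).analyticAt _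
end
end

/-! ### Gluing systems of relations -/

section
section
variable {n : ℕ}

/-- The mirror image of `cartan_split`, obtained by reflecting in the hyperplane `z j = t`. -/
theorem cartan_split' {κ : Type} [Fintype κ] {K : Set (Fin n → ℂ)} (hK : IsCompact K) (j : Fin n)
    (t : ℝ) (hKt : ∀ y ∈ K, y j = t) {Y : κ → κ → (Fin n → ℂ) → ℂ}
    (hY : ∀ k l, ∀ y ∈ K, AnalyticAt ℂ (Y k l) y) (hY0 : ∀ k l, ∀ y ∈ K, Y k l y = 0)
    {η : ℝ} (hη : 0 < η) :
    ∃ h g : κ → κ → (Fin n → ℂ) → ℂ,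
      (∀ k l, ∀ y : Fin n → ℂ, (y j).im = 0 → Function.update y j (t : ℂ) ∈ K → t ≤ (y j).re →
        AnalyticAt ℂ (h k l) y ∧ ‖h k l y‖ ≤ η) ∧
      (∀ k l, ∀ y : Fin n → ℂ, (y j).im = 0 → Function.update y j (t : ℂ) ∈ K → (y j).re ≤ t →
        AnalyticAt ℂ (g k l) y) ∧
      ∀ k l, ∀ y ∈ K, ∀ᶠ z in 𝓝 y, h k l z - g k l z = Y k l z + ∑ i, Y k i z * g i l z := by
  -- the reflection in the hyperplane `z j = t`
  set ρ : (Fin n → ℂ) → (Fin n → ℂ) := fun z => Function.update z j (2 * t - z j) with hρ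
  have hρa : ∀ y, AnalyticAt ℂ ρ y := by
    intro y
    rw [analyticAt_pi_iff]
    intro i
    by_cases h : i = j
    · subst h
      simp only [Function.update_self]
      exact analyticAt_const.sub
        ((ContinuousLinearMap.proj (R := ℂ) (φ := fun _ : Fin n => ℂ) i).analyticAt _)
    · simp only [Function.update_of_ne h]
      exact (ContinuousLinearMap.proj (R := ℂ) (φ := fun _ : Fin n => ℂ) i).analyticAt _
  have hρK : ∀ y ∈ K, ρ y = y := by
    intro y hy
    have h := hKt y hy
    have : (2 * t - y j : ℂ) = y j := by rw [h]; ring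
    simp only [hρ, this, Function.update_eq_self]
  have hρρ : ∀ y, ρ (ρ y) = y := by
    intro y
    simp only [hρ, Function.update_self, Function.update_idem, sub_sub_cancel,
      Function.update_eq_self]
  obtain ⟨h, g, h1, h2, h3⟩ := cartan_split hK j t hKt (Y := fun k l z => Y k l (ρ z))
    (fun k l y hy => AnalyticAt.fun_comp (by rw [hρK y hy]; exact hY k l y hy) (hρa y))
    (fun k l y hy => by rw [hρK y hy]; exact hY0 k l y hy) hη
  have him : ∀ y, (y j).im = 0 → (ρ y j).im = 0 := fun y hy => by simp [hρ, hy]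
  have hup : ∀ y, Function.update y j (t : ℂ) ∈ K → Function.update (ρ y) j (t : ℂ) ∈ K :=
    fun y hy => by simpa [hρ] using hy
  have hre : ∀ y, (ρ y j).re = 2 * t - (y j).re := fun y => by simp [hρ]
  refine ⟨fun k l z => h k l (ρ z), fun k l z => g k l (ρ z), fun k l y a b c => ?_,
    fun k l y a b c => ?_, fun k l y hy => ?_⟩
  · obtain ⟨p, q⟩ := h1 k l (ρ y) (him y a) (hup y b) (by rw [hre]; linarith)
    exact ⟨p.fun_comp (hρa y), q⟩
  · exact (h2 k l (ρ y) (him y a) (hup y b) (by rw [hre]; linarith)).fun_comp (hρa y)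
  · have hc : Tendsto ρ (𝓝 y) (𝓝 y) := by
      have := (hρa y).continuousAt.tendsto
      rwa [hρK y hy] at this
    filter_upwards [hc.eventually (h3 k l y hy)] with z hz
    simpa only [hρρ] using hz

/-- One half of the gluing of generating systems across the slice `K`: a system of relations on both
sides which agrees near `K` and generates on the side `L`. -/
theorem half_glue {K L R : Set (Fin n → ℂ)} (hB : ThmB K) (j : Fin n) (t : ℝ)
    (hKt : ∀ y ∈ K, y j = t) (hKL : K ⊆ L) (hKR : K ⊆ R)
    (hR : ∀ y ∈ R, Function.update y j (t : ℂ) ∈ K)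
    (hsplit : ∀ (κ : Type) [Fintype κ] (Y : κ → κ → (Fin n → ℂ) → ℂ),
      (∀ k l, ∀ y ∈ K, AnalyticAt ℂ (Y k l) y) → (∀ k l, ∀ y ∈ K, Y k l y = 0) → ∀ η : ℝ, 0 < η →
      ∃ h g : κ → κ → (Fin n → ℂ) → ℂ, (∀ k l, ∀ y ∈ L, AnalyticAt ℂ (h k l) y ∧ ‖h k l y‖ ≤ η) ∧
        (∀ k l, ∀ y ∈ R, AnalyticAt ℂ (g k l) y) ∧
        ∀ k l, ∀ y ∈ K, ∀ᶠ z in 𝓝 y, h k l z - g k l z = Y k l z + ∑ i, Y k i z * g i l z)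
    {ι κ μ ν : Type} [Fintype ι] [Fintype κ] [Fintype μ] [Fintype ν]
    {A : ι → κ → (Fin n → ℂ) → ℂ} {B : κ → μ → (Fin n → ℂ) → ℂ} {C : κ → ν → (Fin n → ℂ) → ℂ}
    (hBa : ∀ k m, ∀ y ∈ L, AnalyticAt ℂ (B k m) y) (hCa : ∀ k m, ∀ y ∈ R, AnalyticAt ℂ (C k m) y)
    (hBe : ∀ y ∈ L, Exact A B y) (hCe : ∀ y ∈ R, Exact A C y) :
    ∃ S T : κ → μ → (Fin n → ℂ) → ℂ, (∀ k m, ∀ y ∈ L, AnalyticAt ℂ (S k m) y) ∧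
      (∀ k m, ∀ y ∈ R, AnalyticAt ℂ (T k m) y) ∧ (∀ y ∈ L, Exact A S y) ∧
      (∀ y ∈ R, ∀ i m, ∀ᶠ z in 𝓝 y, ∑ k, A i k z * T k m z = 0) ∧
      ∀ y ∈ K, ∀ k m, S k m =ᶠ[𝓝 y] T k m := by
  classical
  have hM : ∀ m, ∃ c : ν → (Fin n → ℂ) → ℂ, (∀ k, ∀ y ∈ K, AnalyticAt ℂ (c k) y) ∧
      ∀ y ∈ K, ∀ i, ∀ᶠ z in 𝓝 y, B i m z = ∑ k, C i k z * c k z := fun m =>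
    hB κ ν C (fun k => B k m) (fun k m y hy => hCa k m y (hKR hy))
      (fun k y hy => hBa k m y (hKL hy)) fun y hy => (hCe y (hKR hy)).2 _
        (fun k => hBa k m y (hKL hy)) fun i => (hBe y (hKL hy)).1 i m
  have hN : ∀ m, ∃ c : μ → (Fin n → ℂ) → ℂ, (∀ k, ∀ y ∈ K, AnalyticAt ℂ (c k) y) ∧
      ∀ y ∈ K, ∀ i, ∀ᶠ z in 𝓝 y, C i m z = ∑ k, B i k z * c k z := fun m =>
    hB κ μ B (fun k => C k m) (fun k m y hy => hBa k m y (hKL hy))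
      (fun k y hy => hCa k m y (hKR hy)) fun y hy => (hBe y (hKL hy)).2 _
        (fun k => hCa k m y (hKR hy)) fun i => (hCe y (hKR hy)).1 i m
  choose M hMa hMe using hM
  choose N hNa hNe using hN
  -- `M m k` is the entry `(k, m)`; `F` is `M` frozen at `z j = t`
  set F : μ → ν → (Fin n → ℂ) → ℂ := fun m k z => M m k (Function.update z j (t : ℂ)) with hF
  have hFa : ∀ m k y, Function.update y j (t : ℂ) ∈ K → AnalyticAt ℂ (F m k) y := fun m k y hy =>
    AnalyticAt.fun_comp (f := fun z : Fin n → ℂ => Function.update z j (t : ℂ)) (hMa m k _ hy)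
      (analyticAt_update j (t : ℂ))
  have hKu : ∀ y ∈ K, Function.update y j (t : ℂ) = y := fun y hy => by
    rw [← hKt y hy, Function.update_eq_self]
  set Y : μ → μ → (Fin n → ℂ) → ℂ := fun a b z => ∑ k, N k a z * (F b k z - M b k z) with hY
  obtain ⟨h, g, hh, hg, hhg⟩ := hsplit μ Y
    (fun a b y hy => Finset.analyticAt_fun_sum _ fun k _ => (hNa k a y hy).mul
      ((hFa b k y (by rw [hKu y hy]; exact hy)).sub (hMa b k y hy)))
    (fun a b y hy => by simp only [hY, hF, hKu y hy, sub_self, mul_zero, Finset.sum_const_zero])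
    (1 / (2 * ((Fintype.card μ : ℝ) + 1))) (by positivity)
  set T0 : κ → μ → (Fin n → ℂ) → ℂ := fun k m z => ∑ v, C k v z * F m v z with hT0
  -- near `K` the frozen system equals `B * (1 + Y)`
  have hT0K : ∀ y ∈ K, ∀ᶠ z in 𝓝 y, ∀ k m, T0 k m z = B k m z + ∑ a, B k a z * Y a m z := by
    intro y hy
    filter_upwards [eventually_all.2 fun m => eventually_all.2 fun k => hMe m y hy k,
      eventually_all.2 fun v => eventually_all.2 fun k => hNe v y hy k] with z h1 h2 k m
    have e1 : ∑ a, B k a z * Y a m z = ∑ v, C k v z * (F m v z - M m v z) := by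
      simp only [hY, Finset.mul_sum]
      rw [Finset.sum_comm]
      refine Finset.sum_congr rfl fun v _ => ?_
      rw [h2 v k, Finset.sum_mul]
      exact Finset.sum_congr rfl fun a _ => by ring
    rw [e1, h1 m k, ← Finset.sum_add_distrib]
    exact Finset.sum_congr rfl fun v _ => by ring
  have hT0a : ∀ k m, ∀ y ∈ R, AnalyticAt ℂ (T0 k m) y := fun k m y hy =>
    Finset.analyticAt_fun_sum _ fun v _ => (hCa k v y hy).mul (hFa m v y (hR y hy))
  have hT0z : ∀ y ∈ R, ∀ i m, ∀ᶠ z in 𝓝 y, ∑ k, A i k z * T0 k m z = 0 := by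
    intro y hy i m
    filter_upwards [eventually_all.2 fun v => (hCe y hy).1 i v] with z hz
    simp only [hT0, Finset.mul_sum]
    rw [Finset.sum_comm]
    refine Finset.sum_eq_zero fun v _ => ?_
    have : ∑ k, A i k z * (C k v z * F m v z) = (∑ k, A i k z * C k v z) * F m v z := by
      rw [Finset.sum_mul]; exact Finset.sum_congr rfl fun k _ => by ring
    rw [this, hz v, zero_mul]
  have hmulz : ∀ {U : κ → μ → (Fin n → ℂ) → ℂ} {q : μ → μ → (Fin n → ℂ) → ℂ} {y : Fin n → ℂ},
      (∀ i m, ∀ᶠ z in 𝓝 y, ∑ k, A i k z * U k m z = 0) → ∀ i m, ∀ᶠ z in 𝓝 y,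
        ∑ k, A i k z * (U k m z + ∑ a, U k a z * q a m z) = 0 := by
    intro U q y hU i m
    filter_upwards [eventually_all.2 fun m => hU i m] with z hz
    simp only [mul_add, Finset.sum_add_distrib, hz m, zero_add, Finset.mul_sum]
    rw [Finset.sum_comm]
    refine Finset.sum_eq_zero fun a _ => ?_
    have : ∑ k, A i k z * (U k a z * q a m z) = (∑ k, A i k z * U k a z) * q a m z := by
      rw [Finset.sum_mul]; exact Finset.sum_congr rfl fun k _ => by ring
    rw [this, hz a, zero_mul]
  refine ⟨fun k m z => B k m z + ∑ a, B k a z * h a m z,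
    fun k m z => T0 k m z + ∑ a, T0 k a z * g a m z, fun k m y hy => ?_, fun k m y hy => ?_,
    fun y hy => ⟨hmulz (hBe y hy).1, fun c hc hz => ?_⟩, fun y hy => hmulz (hT0z y hy),
    fun y hy k m => ?_⟩
  · exact (hBa k m y hy).add (Finset.analyticAt_fun_sum _ fun a _ =>
      (hBa k a y hy).mul (hh a m y hy).1)
  · exact (hT0a k m y hy).add (Finset.analyticAt_fun_sum _ fun a _ =>
      (hT0a k a y hy).mul (hg a m y hy))
  · obtain ⟨G, hGa, hGe⟩ := exists_inverse (fun k l => (hh k l y hy).1) (fun k l => (hh k l y hy).2)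
    refine InIm.trans (fun m => ?_) ((hBe y hy).2 c hc hz)
    refine ⟨fun l => G l m, fun l => hGa l m, fun k => ?_⟩
    filter_upwards [hGe] with z hz
    have e1 : ∀ l, B k l z + ∑ a, B k a z * h a l z =
        ∑ a, B k a z * ((if a = l then 1 else 0) + h a l z) := by
      intro l
      simp only [mul_add, Finset.sum_add_distrib, mul_ite, mul_one, mul_zero]
      simp
    simp only [e1, Finset.sum_mul]
    rw [Finset.sum_comm]
    have e2 : ∀ a, ∑ l, B k a z * ((if a = l then 1 else 0) + h a l z) * G l m z =
        B k a z * if a = m then 1 else 0 := by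
      intro a
      rw [← hz a m, Finset.mul_sum]
      exact Finset.sum_congr rfl fun l _ => by ring
    simp [e2]
  · filter_upwards [hT0K y hy, eventually_all.2 fun a => eventually_all.2 fun b => hhg a b y hy]
      with z h1 h2
    simp only [h1]
    have e1 : ∀ a, h a m z = g a m z + Y a m z + ∑ i, Y a i z * g i m z := fun a => by
      linear_combination h2 a m
    simp only [e1, mul_add, add_mul, Finset.sum_add_distrib, Finset.mul_sum, Finset.sum_mul]
    have e2 : ∑ a, ∑ i, B k a z * (Y a i z * g i m z) = ∑ a, ∑ i, B k i z * Y i a z * g a m z := by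
      rw [Finset.sum_comm]
      exact Finset.sum_congr rfl fun a _ => Finset.sum_congr rfl fun i _ => by ring
    rw [e2]; ring
end
end

/-! ### Theorems A and B on real boxes -/

section
section
variable {n : ℕ}

/-- The part of `Q` over `s ≤ Re (y j) ≤ v`. -/
def slab (Q : Set (Fin n → ℂ)) (j : Fin n) (s v : ℝ) : Set (Fin n → ℂ) :=
  {y | y ∈ Q ∧ s ≤ (y j).re ∧ (y j).re ≤ v}

open Classical in
/-- The function equal to `f` on the left and to `g` on the right of `Re (z j) = t`. -/
noncomputable def glueF (j : Fin n) (t : ℝ) (f g : (Fin n → ℂ) → ℂ) (z : Fin n → ℂ) : ℂ :=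
  if (z j).re ≤ t then f z else g z

theorem glueF_cases {Q : Set (Fin n → ℂ)} {j : Fin n} {s t v : ℝ} {y : Fin n → ℂ}
    (hy : y ∈ slab Q j s v) :
    (y ∈ slab Q j s t ∧ ∀ f g : (Fin n → ℂ) → ℂ, (y ∈ slab Q j t t → f =ᶠ[𝓝 y] g) →
      glueF j t f g =ᶠ[𝓝 y] f) ∨
    (y ∈ slab Q j t v ∧ ∀ f g : (Fin n → ℂ) → ℂ, (y ∈ slab Q j t t → f =ᶠ[𝓝 y] g) →
      glueF j t f g =ᶠ[𝓝 y] g) := by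
  have hc : Continuous fun z : Fin n → ℂ => (z j).re :=
    Complex.continuous_re.comp (continuous_apply j)
  rcases lt_trichotomy (y j).re t with h | h | h
  · refine Or.inl ⟨⟨hy.1, hy.2.1, h.le⟩, fun f g _ => ?_⟩
    filter_upwards [hc.continuousAt.eventually (gt_mem_nhds h)] with z hz
    exact if_pos (le_of_lt hz)
  · refine Or.inl ⟨⟨hy.1, hy.2.1, h.le⟩, fun f g hfg => ?_⟩
    filter_upwards [hfg ⟨hy.1, h.ge, h.le⟩] with z hz
    simp only [glueF, hz, ite_self]
  · refine Or.inr ⟨⟨hy.1, h.le, hy.2.2⟩, fun f g _ => ?_⟩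
    filter_upwards [hc.continuousAt.eventually (lt_mem_nhds h)] with z hz
    exact if_neg (not_le.2 hz)

variable {Q : Set (Fin n → ℂ)} {j : Fin n} {a b : ℝ}

theorem isCompact_slab (hQ : IsCompact Q) (s v : ℝ) : IsCompact (slab Q j s v) := by
  have hc : Continuous fun z : Fin n → ℂ => (z j).re :=
    Complex.continuous_re.comp (continuous_apply j)
  exact hQ.inter_right ((isClosed_le continuous_const hc).inter (isClosed_le hc continuous_const))

/-- A thin slab lies in a given neighbourhood of the slice. -/
theorem thin_slab (hQ : IsCompact Q) (him : ∀ y ∈ Q, (y j).im = 0)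
    (hup : ∀ y ∈ Q, ∀ t : ℝ, a ≤ t → t ≤ b → Function.update y j (t : ℂ) ∈ Q)
    {t : ℝ} (hat : a ≤ t) (htb : t ≤ b) {P : (Fin n → ℂ) → Prop}
    (hP : ∀ y ∈ slab Q j t t, ∀ᶠ z in 𝓝 y, P z) :
    ∃ ε > 0, ∀ s v, a ≤ s → s ≤ v → v ≤ b → |s - t| < ε → |v - t| < ε → ∀ y ∈ slab Q j s v, P y := by
  obtain ⟨δ, hδ, hth⟩ := (isCompact_slab (j := j) hQ t t).exists_thickening_subset_open
    (t := interior {z | P z}) isOpen_interior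
    (fun y hy => mem_interior_iff_mem_nhds.2 (hP y hy))
  refine ⟨δ, hδ, fun s v _ _ _ h1 h2 y hy => ?_⟩
  have h3 : y ∈ thickening δ (slab Q j t t) := by
    refine mem_thickening_iff.2 ⟨Function.update y j (t : ℂ), ⟨hup y hy.1 t hat htb, ?_, ?_⟩, ?_⟩
    · simp
    · simp
    · have h4 := dist_update_le y j (y j) t
      rw [Function.update_eq_self] at h4
      refine h4.trans_lt ?_
      have h5 : y j = ((y j).re : ℂ) := by apply Complex.ext <;> simp [him y hy.1]
      rw [h5, dist_eq_norm, ← Complex.ofReal_sub, Complex.norm_real, Real.norm_eq_abs]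
      rw [abs_lt] at h1 h2 ⊢
      constructor <;> linarith [hy.2.1, hy.2.2]
  exact interior_subset (s := {z | P z}) (hth h3)

/-- Theorem A for `Q` from Theorems A and B for its slices: relation systems on thin slabs are given by
the slices, and adjacent ones are glued by `half_glue` applied in both directions. -/
theorem stepA (hab : a ≤ b) (hQ : IsCompact Q)
    (hQj : ∀ y ∈ Q, (y j).im = 0 ∧ a ≤ (y j).re ∧ (y j).re ≤ b)
    (hup : ∀ y ∈ Q, ∀ t : ℝ, a ≤ t → t ≤ b → Function.update y j (t : ℂ) ∈ Q)
    (hA : ∀ t, a ≤ t → t ≤ b → ThmA (slab Q j t t)) (hB : ∀ t, a ≤ t → t ≤ b → ThmB (slab Q j t t)) :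
    ThmA Q := by
  intro ι κ _ _ A hAa
  have key := interval_principle hab (fun s v => ∃ (μ : Type) (_ : Fintype μ)
    (B : κ → μ → (Fin n → ℂ) → ℂ), (∀ k m, ∀ y ∈ slab Q j s v, AnalyticAt ℂ (B k m) y) ∧
      ∀ y ∈ slab Q j s v, Exact A B y) ?_ ?_
  · obtain ⟨μ, hμ, B, h1, h2⟩ := key
    have hQs : ∀ y ∈ Q, y ∈ slab Q j a b := fun y hy => ⟨hy, (hQj y hy).2⟩
    exact ⟨μ, hμ, B, fun k m y hy => h1 k m y (hQs y hy), fun y hy => h2 y (hQs y hy)⟩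
  · intro t hat htb
    obtain ⟨μ, hμ, B, h1, h2⟩ := hA t hat htb ι κ A fun i k y hy => hAa i k y hy.1
    obtain ⟨ε, hε, h⟩ := thin_slab (P := fun z => (∀ k m, AnalyticAt ℂ (B k m) z) ∧ Exact A B z) hQ
      (fun y hy => (hQj y hy).1) hup hat htb fun y hy =>
        (eventually_all.2 fun k => eventually_all.2 fun m => (h1 k m y hy).eventually_analyticAt).and
          (exact_eventually (fun i k => hAa i k y hy.1) (h2 y hy))
    exact ⟨ε, hε, fun s v p q r p' q' => ⟨μ, hμ, B, fun k m y hy => (h s v p q r p' q' y hy).1 k m,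
      fun y hy => (h s v p q r p' q' y hy).2⟩⟩
  · rintro s t v has hst htv hvb ⟨μ, hμ, B, hBa, hBe⟩ ⟨ν, hν, C, hCa, hCe⟩
    have hat := has.trans hst
    have htb := htv.trans hvb
    have hK := isCompact_slab (j := j) hQ t t
    have hKt : ∀ y ∈ slab Q j t t, y j = t := fun y hy => by
      apply Complex.ext
      · exact le_antisymm hy.2.2 hy.2.1
      · simp [(hQj y hy.1).1]
    have hKL : slab Q j t t ⊆ slab Q j s t := fun y hy => ⟨hy.1, hst.trans hy.2.1, hy.2.2⟩
    have hKR : slab Q j t t ⊆ slab Q j t v := fun y hy => ⟨hy.1, hy.2.1, hy.2.2.trans htv⟩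
    have hupK : ∀ y ∈ Q, Function.update y j (t : ℂ) ∈ slab Q j t t := fun y hy =>
      ⟨hup y hy t hat htb, by simp, by simp⟩
    obtain ⟨S, T, hS, hT, hSe, hTz, hST⟩ := half_glue (hB t hat htb) j t hKt hKL hKR
      (fun y hy => hupK y hy.1) (fun κ _ Y hY hY0 η hη => by
        obtain ⟨h, g, h1, h2, h3⟩ := cartan_split hK j t hKt hY hY0 hη
        exact ⟨h, g, fun k l y hy => h1 k l y (hQj y hy.1).1 (hupK y hy.1) hy.2.2,
          fun k l y hy => h2 k l y (hQj y hy.1).1 (hupK y hy.1) hy.2.1, h3⟩) hBa hCa hBe hCe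
    obtain ⟨S', T', hS', hT', hSe', hTz', hST'⟩ := half_glue (hB t hat htb) j t hKt hKR hKL
      (fun y hy => hupK y hy.1) (fun κ _ Y hY hY0 η hη => by
        obtain ⟨h, g, h1, h2, h3⟩ := cartan_split' hK j t hKt hY hY0 hη
        exact ⟨h, g, fun k l y hy => h1 k l y (hQj y hy.1).1 (hupK y hy.1) hy.2.1,
          fun k l y hy => h2 k l y (hQj y hy.1).1 (hupK y hy.1) hy.2.2, h3⟩) hCa hBa hCe hBe
    have hzc : ∀ {τ : Type} {U U' : κ → τ → (Fin n → ℂ) → ℂ} {y : Fin n → ℂ},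
        (∀ i m, ∀ᶠ z in 𝓝 y, ∑ k, A i k z * U k m z = 0) → (∀ k m, U' k m =ᶠ[𝓝 y] U k m) →
        ∀ i m, ∀ᶠ z in 𝓝 y, ∑ k, A i k z * U' k m z = 0 := by
      intro τ U U' y h1 h2 i m
      filter_upwards [h1 i m, eventually_all.2 fun k => h2 k m] with z h3 h4
      simp only [h4, h3]
    refine ⟨μ ⊕ ν, inferInstance, fun k => Sum.elim (fun m => glueF j t (S k m) (T k m))
      (fun m => glueF j t (T' k m) (S' k m)), fun k m y hy => ?_, fun y hy => ?_⟩
    · rcases glueF_cases (t := t) hy with ⟨hy', he⟩ | ⟨hy', he⟩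
      · rcases m with m | m
        · exact (hS k m y hy').congr (he _ _ fun h => hST y h k m).symm
        · exact (hT' k m y hy').congr (he _ _ fun h => (hST' y h k m).symm).symm
      · rcases m with m | m
        · exact (hT k m y hy').congr (he _ _ fun h => hST y h k m).symm
        · exact (hS' k m y hy').congr (he _ _ fun h => (hST' y h k m).symm).symm
    · rcases glueF_cases (t := t) hy with ⟨hy', he⟩ | ⟨hy', he⟩
      · have e1 := (hSe y hy').congr fun k m => he _ _ fun h => hST y h k m
        have e2 := hzc (hTz' y hy') fun k m => he _ _ fun h => (hST' y h k m).symm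
        exact Exact.of_sum e1.1 e2 (Or.inl e1)
      · have e1 := (hSe' y hy').congr fun k m => he _ _ fun h => (hST' y h k m).symm
        have e2 := hzc (hTz y hy') fun k m => he _ _ fun h => hST y h k m
        exact Exact.of_sum e2 e1.1 (Or.inr e1)

/-- Theorem B for `Q`: solutions on adjacent slabs differ by a relation, which is a combination of the
generators from Theorem A; splitting its coefficients additively corrects the two solutions. -/
theorem stepB (hab : a ≤ b) (hQ : IsCompact Q)
    (hQj : ∀ y ∈ Q, (y j).im = 0 ∧ a ≤ (y j).re ∧ (y j).re ≤ b)
    (hup : ∀ y ∈ Q, ∀ t : ℝ, a ≤ t → t ≤ b → Function.update y j (t : ℂ) ∈ Q)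
    (hA : ThmA Q) (hB : ∀ t, a ≤ t → t ≤ b → ThmB (slab Q j t t)) : ThmB Q := by
  intro ι κ _ _ A g hAa hga hgI
  obtain ⟨μ, _, B, hBa, hBe⟩ := hA ι κ A hAa
  have key := interval_principle hab (fun s v => ∃ c : κ → (Fin n → ℂ) → ℂ,
    (∀ k, ∀ y ∈ slab Q j s v, AnalyticAt ℂ (c k) y) ∧
      ∀ y ∈ slab Q j s v, ∀ i, ∀ᶠ z in 𝓝 y, g i z = ∑ k, A i k z * c k z) ?_ ?_
  · obtain ⟨c, h1, h2⟩ := key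
    have hQs : ∀ y ∈ Q, y ∈ slab Q j a b := fun y hy => ⟨hy, (hQj y hy).2⟩
    exact ⟨c, fun k y hy => h1 k y (hQs y hy), fun y hy => h2 y (hQs y hy)⟩
  · intro t hat htb
    obtain ⟨c, h1, h2⟩ := hB t hat htb ι κ A g (fun i k y hy => hAa i k y hy.1)
      (fun i y hy => hga i y hy.1) (fun y hy => hgI y hy.1)
    obtain ⟨ε, hε, h⟩ := thin_slab (P := fun z => (∀ k, AnalyticAt ℂ (c k) z) ∧
      ∀ i, ∀ᶠ z' in 𝓝 z, g i z' = ∑ k, A i k z' * c k z') hQ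
      (fun y hy => (hQj y hy).1) hup hat htb fun y hy =>
        (eventually_all.2 fun k => (h1 k y hy).eventually_analyticAt).and
          (eventually_all.2 fun i => (h2 y hy i).eventually_nhds)
    exact ⟨ε, hε, fun s v p q r p' q' => ⟨c, fun k y hy => (h s v p q r p' q' y hy).1 k,
      fun y hy => (h s v p q r p' q' y hy).2⟩⟩
  · rintro s t v has hst htv hvb ⟨c, hc, hce⟩ ⟨c', hc', hce'⟩
    have hat := has.trans hst
    have htb := htv.trans hvb
    have hK := isCompact_slab (j := j) hQ t t
    have hKt : ∀ y ∈ slab Q j t t, y j = t := fun y hy => by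
      apply Complex.ext
      · exact le_antisymm hy.2.2 hy.2.1
      · simp [(hQj y hy.1).1]
    have hKL : slab Q j t t ⊆ slab Q j s t := fun y hy => ⟨hy.1, hst.trans hy.2.1, hy.2.2⟩
    have hKR : slab Q j t t ⊆ slab Q j t v := fun y hy => ⟨hy.1, hy.2.1, hy.2.2.trans htv⟩
    have hupK : ∀ y ∈ Q, Function.update y j (t : ℂ) ∈ slab Q j t t := fun y hy =>
      ⟨hup y hy t hat htb, by simp, by simp⟩
    obtain ⟨d, hd, hde⟩ := hB t hat htb κ μ B (fun k z => c k z - c' k z)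
      (fun k m y hy => hBa k m y hy.1)
      (fun k y hy => (hc k y (hKL hy)).sub (hc' k y (hKR hy)))
      (fun y hy => (hBe y hy.1).2 _ (fun k => (hc k y (hKL hy)).sub (hc' k y (hKR hy))) fun i => by
        filter_upwards [hce y (hKL hy) i, hce' y (hKR hy) i] with z h1 h2
        simp only [mul_sub, Finset.sum_sub_distrib]
        rw [← h1, ← h2, sub_self])
    choose dp dm hdp hdm hdd using fun m => add_split hK j t hKt (hd m)
    have hAB : ∀ (q : μ → (Fin n → ℂ) → ℂ) (p : κ → (Fin n → ℂ) → ℂ), ∀ y ∈ Q, (∀ i, ∀ᶠ z in 𝓝 y,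
        g i z = ∑ k, A i k z * p k z) → ∀ i, ∀ᶠ z in 𝓝 y,
        g i z = ∑ k, A i k z * (p k z - ∑ m, B k m z * q m z) := by
      intro q p y hy hp i
      filter_upwards [hp i, eventually_all.2 fun m => (hBe y hy).1 i m] with z h1 h2
      simp only [mul_sub, Finset.sum_sub_distrib, ← h1, Finset.mul_sum]
      rw [Finset.sum_comm, Finset.sum_eq_zero, sub_zero]
      intro m _
      have : ∑ k, A i k z * (B k m z * q m z) = (∑ k, A i k z * B k m z) * q m z := by
        rw [Finset.sum_mul]; exact Finset.sum_congr rfl fun k _ => by ring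
      rw [this, h2 m, zero_mul]
    set p1 : κ → (Fin n → ℂ) → ℂ := fun k z => c k z - ∑ m, B k m z * dp m z with hp1
    set p2 : κ → (Fin n → ℂ) → ℂ := fun k z => c' k z - ∑ m, B k m z * dm m z with hp2
    have hp12 : ∀ y ∈ slab Q j t t, ∀ k, p1 k =ᶠ[𝓝 y] p2 k := by
      intro y hy k
      filter_upwards [hde y hy k, eventually_all.2 fun m => hdd m y hy] with z h1 h2
      simp only [h2, mul_sub, Finset.sum_sub_distrib] at h1
      simp only [hp1, hp2]
      linear_combination h1
    refine ⟨fun k => glueF j t (p1 k) (p2 k), fun k y hy => ?_, fun y hy i => ?_⟩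
    · rcases glueF_cases (t := t) hy with ⟨hy', he⟩ | ⟨hy', he⟩
      · refine AnalyticAt.congr ?_ (he _ _ fun h => hp12 y h k).symm
        exact (hc k y hy').sub (Finset.analyticAt_fun_sum _ fun m _ => (hBa k m y hy.1).mul
          (hdp m y (hQj y hy.1).1 (hupK y hy.1) hy'.2.2))
      · refine AnalyticAt.congr ?_ (he _ _ fun h => hp12 y h k).symm
        exact (hc' k y hy').sub (Finset.analyticAt_fun_sum _ fun m _ => (hBa k m y hy.1).mul
          (hdm m y (hQj y hy.1).1 (hupK y hy.1) hy'.2.1))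
    · rcases glueF_cases (t := t) hy with ⟨hy', he⟩ | ⟨hy', he⟩
      · filter_upwards [hAB dp c y hy.1 (hce y hy') i,
          eventually_all.2 fun k => he (p1 k) (p2 k) fun h => hp12 y h k] with z h1 h2
        simp only [h2]; exact h1
      · filter_upwards [hAB dm c' y hy.1 (hce' y hy') i,
          eventually_all.2 fun k => he (p1 k) (p2 k) fun h => hp12 y h k] with z h1 h2
        simp only [h2]; exact h1

/-- The real box with corners `l`, `u`, inside complex space. -/
def box (l u : Fin n → ℝ) : Set (Fin n → ℂ) := emb '' Icc l u

theorem isCompact_box (l u : Fin n → ℝ) : IsCompact (box l u) :=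
  isCompact_Icc.image continuous_emb

theorem emb_update (x : Fin n → ℝ) (j : Fin n) (t : ℝ) :
    Function.update (emb x) j (t : ℂ) = emb (Function.update x j t) := by
  funext i
  by_cases h : i = j
  · subst h; simp [emb]
  · simp [emb, Function.update_of_ne h]

theorem slab_box {l u : Fin n → ℝ} {j : Fin n} {t : ℝ} (h1 : l j ≤ t) (h2 : t ≤ u j) :
    slab (box l u) j t t = box (Function.update l j t) (Function.update u j t) := by
  ext y
  constructor
  · rintro ⟨⟨x, hx, rfl⟩, h3, h4⟩
    simp only [emb, Complex.ofReal_re] at h3 h4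
    refine ⟨x, ⟨?_, ?_⟩, rfl⟩
    · rw [update_le_iff]; exact ⟨h3, fun i _ => hx.1 i⟩
    · rw [le_update_iff]; exact ⟨h4, fun i _ => hx.2 i⟩
  · rintro ⟨x, ⟨hx1, hx2⟩, rfl⟩
    rw [update_le_iff] at hx1
    rw [le_update_iff] at hx2
    refine ⟨⟨x, ⟨fun i => ?_, fun i => ?_⟩, rfl⟩, by simpa [emb] using hx1.1,
      by simpa [emb] using hx2.1⟩
    · by_cases hi : i = j
      · subst hi; exact h1.trans hx1.1
      · exact hx1.2 i hi
    · by_cases hi : i = j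
      · subst hi; exact hx2.1.trans h2
      · exact hx2.2 i hi

/-- Induction on the set `s` of coordinates in which the box is not degenerate. -/
theorem thmAB_aux (s : Finset (Fin n)) : ∀ l u : Fin n → ℝ, l ≤ u → (∀ i ∉ s, l i = u i) →
    ThmA (box l u) ∧ ThmB (box l u) := by
  induction s using Finset.induction_on with
  | empty =>
    intro l u _ he
    have hlu : l = u := funext fun i => he i (Finset.notMem_empty i)
    subst hlu
    have hb : box l l = {emb l} := by simp [box]
    rw [hb]
    refine ⟨fun ι κ _ _ A hA => ?_, fun ι κ _ _ A g _ _ hI => ?_⟩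
    · obtain ⟨μ, hμ, B, h1, h2⟩ := oka (emb l) ι κ A fun i k => hA i k _ rfl
      refine ⟨μ, hμ, B, fun k m y hy => ?_, fun y hy => ?_⟩
      · rw [mem_singleton_iff.1 hy]; exact h1 k m
      · rw [mem_singleton_iff.1 hy]; exact h2.self_of_nhds
    · obtain ⟨c, h1, h2⟩ := hI _ rfl
      refine ⟨c, fun k y hy => ?_, fun y hy => ?_⟩
      · rw [mem_singleton_iff.1 hy]; exact h1 k
      · rw [mem_singleton_iff.1 hy]; exact h2
  | insert j s _ ih =>
    intro l u hlu he
    have hsl : ∀ t, l j ≤ t → t ≤ u j →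
        ThmA (slab (box l u) j t t) ∧ ThmB (slab (box l u) j t t) := by
      intro t h1 h2
      rw [slab_box h1 h2]
      refine ih _ _ ?_ fun i hi => ?_
      · intro i
        by_cases h : i = j
        · subst h; simp
        · simp [Function.update_of_ne h, hlu i]
      · by_cases h : i = j
        · subst h; simp
        · simp only [Function.update_of_ne h]
          exact he i (by simp [h, hi])
    have hQj : ∀ y ∈ box l u, (y j).im = 0 ∧ l j ≤ (y j).re ∧ (y j).re ≤ u j := by
      rintro _ ⟨x, hx, rfl⟩
      exact ⟨by simp [emb], by simpa [emb] using hx.1 j, by simpa [emb] using hx.2 j⟩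
    have hup : ∀ y ∈ box l u, ∀ t : ℝ, l j ≤ t → t ≤ u j → Function.update y j (t : ℂ) ∈ box l u := by
      rintro _ ⟨x, hx, rfl⟩ t h1 h2
      rw [emb_update]
      refine ⟨_, ⟨?_, ?_⟩, rfl⟩
      · rw [le_update_iff]; exact ⟨h1, fun i _ => hx.1 i⟩
      · rw [update_le_iff]; exact ⟨h2, fun i _ => hx.2 i⟩
    have hA := stepA (hlu j) (isCompact_box l u) hQj hup (fun t h1 h2 => (hsl t h1 h2).1)
      (fun t h1 h2 => (hsl t h1 h2).2)
    exact ⟨hA, stepB (hlu j) (isCompact_box l u) hQj hup hA fun t h1 h2 => (hsl t h1 h2).2⟩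

/-- Cartan's Theorem B (in matrix form) for real boxes. -/
theorem thmB_box (l u : Fin n → ℝ) (h : l ≤ u) : ThmB (box l u) :=
  (thmAB_aux Finset.univ l u h fun i hi => absurd (Finset.mem_univ i) hi).2
end
end

/-! ### Cauchy's formula on a rectangle with four kinds of sides -/

section
/-- The winding integral of a rectangle symmetric about the real axis. -/
theorem rect_log {R δ x : ℝ} (hδ : 0 < δ) (h1 : -R < x) (h2 : x < R) :
    (∫ t in (-R)..R, ((t : ℂ) + ((-δ : ℝ) : ℂ) * I - x)⁻¹) -
      (∫ t in (-R)..R, ((t : ℂ) + (δ : ℂ) * I - x)⁻¹) +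
      I * (∫ s in (-δ)..δ, ((R : ℂ) + s * I - x)⁻¹) -
      I * (∫ s in (-δ)..δ, (((-R : ℝ) : ℂ) + s * I - x)⁻¹) = 2 * Real.pi * I := by
  have hh : ∀ (e : ℝ), e ≠ 0 → ∫ t in (-R)..R, ((t : ℂ) + (e : ℂ) * I - x)⁻¹ =
      Complex.log ((R : ℂ) + e * I - x) - Complex.log (((-R : ℝ) : ℂ) + e * I - x) := by
    intro e he
    have hs : ∀ t : ℝ, (t : ℂ) + (e : ℂ) * I - x ∈ slitPlane := fun t =>
      Or.inr (by simpa using he)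
    refine intervalIntegral.integral_eq_sub_of_hasDerivAt
      (f := fun t : ℝ => Complex.log ((t : ℂ) + (e : ℂ) * I - x)) (fun t _ => ?_) ?_
    · have hd : HasDerivAt (fun t : ℝ => (t : ℂ) + (e : ℂ) * I - x) 1 t :=
        ((Complex.ofRealCLM.hasDerivAt (x := t)).add_const _).sub_const _
      simpa using hd.clog_real (hs t)
    · refine ContinuousOn.intervalIntegrable (ContinuousOn.inv₀ (by fun_prop) fun t _ => ?_)
      exact slitPlane_ne_zero (hs t)
  have hr : I * ∫ s in (-δ)..δ, ((R : ℂ) + s * I - x)⁻¹ =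
      Complex.log ((R : ℂ) + δ * I - x) - Complex.log ((R : ℂ) + ((-δ : ℝ) : ℂ) * I - x) := by
    have hs : ∀ s : ℝ, (R : ℂ) + s * I - x ∈ slitPlane := fun s => Or.inl (by simpa using h2)
    rw [← intervalIntegral.integral_const_mul]
    refine intervalIntegral.integral_eq_sub_of_hasDerivAt
      (f := fun s : ℝ => Complex.log ((R : ℂ) + s * I - x)) (fun s _ => ?_) ?_
    · have hd : HasDerivAt (fun s : ℝ => (R : ℂ) + s * I - x) I s := by
        simpa using (((Complex.ofRealCLM.hasDerivAt (x := s)).mul_const I).const_add (R : ℂ)).sub_const (x : ℂ)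
      simpa [div_eq_mul_inv] using hd.clog_real (hs s)
    · refine ContinuousOn.intervalIntegrable (continuousOn_const.mul
        (ContinuousOn.inv₀ (by fun_prop) fun t _ => ?_))
      exact slitPlane_ne_zero (hs t)
  have hl : I * ∫ s in (-δ)..δ, (((-R : ℝ) : ℂ) + s * I - x)⁻¹ =
      Complex.log (-(((-R : ℝ) : ℂ) + δ * I - x)) -
        Complex.log (-(((-R : ℝ) : ℂ) + ((-δ : ℝ) : ℂ) * I - x)) := by
    have hs : ∀ s : ℝ, -(((-R : ℝ) : ℂ) + s * I - x) ∈ slitPlane := fun s =>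
      Or.inl (by simp; linarith)
    rw [← intervalIntegral.integral_const_mul]
    refine intervalIntegral.integral_eq_sub_of_hasDerivAt
      (f := fun s : ℝ => Complex.log (-(((-R : ℝ) : ℂ) + s * I - x))) (fun s _ => ?_) ?_
    · have hd : HasDerivAt (fun s : ℝ => -(((-R : ℝ) : ℂ) + s * I - x)) (-I) s := by
        have h := (((Complex.ofRealCLM.hasDerivAt (x := s)).mul_const I).const_add
          ((-R : ℝ) : ℂ)).sub_const (x : ℂ)
        have h' := h.fun_neg
        simp only [ofRealCLM_apply, ofReal_one, one_mul] at h'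
        exact h'
      have h3 := hd.clog_real (hs s)
      rwa [neg_div_neg_eq, div_eq_mul_inv] at h3
    · refine ContinuousOn.intervalIntegrable (continuousOn_const.mul
        (ContinuousOn.inv₀ (by fun_prop) fun t _ => ?_))
      exact neg_ne_zero.1 (slitPlane_ne_zero (hs t))
  rw [hh _ (neg_ne_zero.2 hδ.ne'), hh _ hδ.ne', hr, hl]
  have hlog : ∀ w : ℂ, w.im < 0 → Complex.log w = Complex.log (-w) - Real.pi * I := by
    intro w hw
    have h0 : w ≠ 0 := fun h => by simp [h] at hw
    have h3 := arg_neg_eq_arg_add_pi_of_im_neg hw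
    rw [Complex.log, Complex.log, h3, norm_neg]
    push_cast; ring
  have e1 := hlog (((-R : ℝ) : ℂ) + ((-δ : ℝ) : ℂ) * I - x) (by simpa using hδ)
  have e2 := hlog (-(((-R : ℝ) : ℂ) + δ * I - x)) (by simpa using hδ)
  rw [neg_neg] at e2
  linear_combination -e1 - e2

/-- The Cauchy integral over the boundary of the rectangle `[-R, R] × [-δ, δ]`, of a function given
separately on the upper (`φ true true`) and lower (`φ true false`) halves of the vertical sides, on
the top (`φ false true`) and on the bottom (`φ false false`). -/
noncomputable def Lint (R δ : ℝ) (φ : Bool → Bool → ℂ → ℂ) : ℂ :=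
  (2 * Real.pi * I)⁻¹ * ((∫ t in (-R)..R, φ false false ((t : ℂ) + ((-δ : ℝ) : ℂ) * I)) -
    (∫ t in (-R)..R, φ false true ((t : ℂ) + (δ : ℂ) * I)) +
    I * ((∫ s in (-δ)..0, φ true false ((R : ℂ) + s * I)) +
      ∫ s in (0 : ℝ)..δ, φ true true ((R : ℂ) + s * I)) -
    I * ((∫ s in (-δ)..0, φ true false (((-R : ℝ) : ℂ) + s * I)) +
      ∫ s in (0 : ℝ)..δ, φ true true (((-R : ℝ) : ℂ) + s * I)))

/-- The part of the boundary of the rectangle of a given kind: `(true, ·)` vertical,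
`(false, ·)` horizontal; `(·, true)` upper, `(·, false)` lower. -/
def side (R δ : ℝ) (e f : Bool) : Set ℂ :=
  {ζ | |ζ.re| ≤ R ∧ |ζ.im| ≤ δ ∧ (e = true → |ζ.re| = R ∧ 0 ≤ (if f then 1 else -1) * ζ.im) ∧
    (e = false → ζ.im = (if f then 1 else -1) * δ)}

theorem side_ft {R δ t : ℝ} (hδ : 0 < δ) (ht : t ∈ uIcc (-R) R) (hR : 0 < R) :
    (t : ℂ) + (δ : ℂ) * I ∈ side R δ false true := by
  rw [uIcc_of_le (by linarith)] at ht
  refine ⟨?_, ?_, ?_, ?_⟩ <;> simp [abs_le, ht.1, ht.2, abs_of_pos hδ, hδ.le]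

theorem side_ff {R δ t : ℝ} (hδ : 0 < δ) (ht : t ∈ uIcc (-R) R) (hR : 0 < R) :
    (t : ℂ) + ((-δ : ℝ) : ℂ) * I ∈ side R δ false false := by
  rw [uIcc_of_le (by linarith)] at ht
  refine ⟨?_, ?_, ?_, ?_⟩ <;> simp [abs_le, ht.1, ht.2, abs_of_pos hδ, hδ.le]

theorem side_tt {R δ s r : ℝ} (hδ : 0 < δ) (hs : s ∈ uIcc 0 δ) (hr : |r| = R) :
    (r : ℂ) + (s : ℂ) * I ∈ side R δ true true := by
  rw [uIcc_of_le hδ.le] at hs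
  refine ⟨?_, ?_, ?_, ?_⟩
  · simp [hr]
  · simp [abs_of_nonneg hs.1, hs.2]
  · simp [hr, hs.1]
  · simp

theorem side_tf {R δ s r : ℝ} (hδ : 0 < δ) (hs : s ∈ uIcc (-δ) 0) (hr : |r| = R) :
    (r : ℂ) + (s : ℂ) * I ∈ side R δ true false := by
  rw [uIcc_of_le (by linarith)] at hs
  refine ⟨?_, ?_, ?_, ?_⟩
  · simp [hr]
  · simp [abs_of_nonpos hs.2]; linarith [hs.1]
  · simp [hr, hs.2]
  · simp

theorem Lint_congr {R δ : ℝ} (hR : 0 < R) (hδ : 0 < δ) {φ ψ : Bool → Bool → ℂ → ℂ}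
    (h : ∀ e f, ∀ ζ ∈ side R δ e f, φ e f ζ = ψ e f ζ) : Lint R δ φ = Lint R δ ψ := by
  have a1 : |R| = R := abs_of_pos hR
  have a2 : |-R| = R := by rw [abs_neg, a1]
  unfold Lint
  rw [intervalIntegral.integral_congr fun t ht => h false false _ (side_ff hδ ht hR),
    intervalIntegral.integral_congr fun t ht => h false true _ (side_ft hδ ht hR),
    intervalIntegral.integral_congr fun t ht => h true false _ (side_tf hδ ht a1),
    intervalIntegral.integral_congr fun t ht => h true true _ (side_tt hδ ht a1),
    intervalIntegral.integral_congr fun t ht => h true false _ (side_tf hδ ht a2),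
    intervalIntegral.integral_congr fun t ht => h true true _ (side_tt hδ ht a2)]

theorem Lint_add {R δ : ℝ} (hR : 0 < R) (hδ : 0 < δ) {φ ψ : Bool → Bool → ℂ → ℂ}
    (hφ : ∀ e f, ContinuousOn (φ e f) (side R δ e f))
    (hψ : ∀ e f, ContinuousOn (ψ e f) (side R δ e f)) :
    Lint R δ (fun e f ζ => φ e f ζ + ψ e f ζ) = Lint R δ φ + Lint R δ ψ := by
  have a1 : |R| = R := abs_of_pos hR
  have a2 : |-R| = R := by rw [abs_neg, a1]
  have key : ∀ (e f : Bool) (p : ℝ → ℂ) (hp : Continuous p) (a b : ℝ),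
      (∀ t ∈ uIcc a b, p t ∈ side R δ e f) →
      ∫ t in a..b, (φ e f (p t) + ψ e f (p t)) =
        (∫ t in a..b, φ e f (p t)) + ∫ t in a..b, ψ e f (p t) := fun e f p hp a b h =>
    intervalIntegral.integral_add (((hφ e f).comp hp.continuousOn h).intervalIntegrable)
      (((hψ e f).comp hp.continuousOn h).intervalIntegrable)
  unfold Lint
  rw [key false false (fun t => (t : ℂ) + ((-δ : ℝ) : ℂ) * I) (by fun_prop) _ _
      fun t ht => side_ff hδ ht hR,
    key false true (fun t => (t : ℂ) + (δ : ℂ) * I) (by fun_prop) _ _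
      fun t ht => side_ft hδ ht hR,
    key true false (fun t => (R : ℂ) + t * I) (by fun_prop) _ _ fun t ht => side_tf hδ ht a1,
    key true true (fun t => (R : ℂ) + t * I) (by fun_prop) _ _ fun t ht => side_tt hδ ht a1,
    key true false (fun t => ((-R : ℝ) : ℂ) + t * I) (by fun_prop) _ _ fun t ht => side_tf hδ ht a2,
    key true true (fun t => ((-R : ℝ) : ℂ) + t * I) (by fun_prop) _ _ fun t ht => side_tt hδ ht a2]
  ring

/-- Cauchy's integral formula for `Lint`. -/
theorem Lint_cauchy {R δ x : ℝ} (hδ : 0 < δ) (h1 : -R < x) (h2 : x < R) {g : ℂ → ℂ}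
    (hg : ∀ ζ : ℂ, |ζ.re| ≤ R → |ζ.im| ≤ δ → AnalyticAt ℂ g ζ) :
    Lint R δ (fun _ _ ζ => g ζ * (ζ - x)⁻¹) = g x := by
  have hR : 0 < R := by linarith
  have hx : |x| < R := abs_lt.2 ⟨h1, h2⟩
  have hxS : AnalyticAt ℂ g (x : ℂ) := hg x (by simpa using hx.le) (by simpa using hδ.le)
  -- the four sides, with `F` the quotient
  have hrect := Complex.integral_boundary_rect_eq_zero_of_differentiableOn (dslope g (x : ℂ))
    (⟨-R, -δ⟩ : ℂ) (⟨R, δ⟩ : ℂ) (by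
      intro ζ hζ
      rw [mem_reProdIm, uIcc_of_le (by simp; linarith), uIcc_of_le (by simp; linarith)] at hζ
      have hζ' : AnalyticAt ℂ g ζ := hg ζ (abs_le.2 hζ.1) (abs_le.2 hζ.2)
      by_cases h : ζ = x
      · have h3 : ∀ᶠ u in 𝓝 (x : ℂ), DifferentiableAt ℂ g u :=
          hxS.eventually_analyticAt.mono fun u hu => hu.differentiableAt
        have h4 : DifferentiableOn ℂ (dslope g (x : ℂ)) {u | DifferentiableAt ℂ g u} :=
          (Complex.differentiableOn_dslope h3).2 fun u hu => hu.differentiableWithinAt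
        rw [h]
        exact (h4.differentiableAt h3).differentiableWithinAt
      · exact ((differentiableAt_dslope_of_ne h).2 hζ'.differentiableAt).differentiableWithinAt)
  simp only [smul_eq_mul] at hrect
  have hne : ∀ ζ : ℂ, ζ.im ≠ 0 ∨ |ζ.re| = R → ζ ≠ x := by
    rintro ζ (h | h) rfl
    · simp at h
    · simp at h; linarith
  have hInt : ∀ (p : ℝ → ℂ) (hp : Continuous p) (a b : ℝ),
      (∀ t ∈ uIcc a b, (|(p t).re| ≤ R ∧ |(p t).im| ≤ δ) ∧ p t ≠ x) →
      (∫ t in a..b, dslope g (x : ℂ) (p t)) = (∫ t in a..b, g (p t) * (p t - x)⁻¹) -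
        g x * ∫ t in a..b, (p t - x)⁻¹ := by
    intro p hp a b h
    have hi : ContinuousOn (fun t => (p t - x)⁻¹) (uIcc a b) :=
      ContinuousOn.inv₀ (by fun_prop) fun t ht => sub_ne_zero.2 (h t ht).2
    have hgp : ContinuousOn (fun t => g (p t)) (uIcc a b) := fun t ht =>
      ((hg _ (h t ht).1.1 (h t ht).1.2).continuousAt.comp hp.continuousAt).continuousWithinAt
    have k1 : IntervalIntegrable (fun t => g (p t) * (p t - x)⁻¹) MeasureTheory.volume a b :=
      (hgp.mul hi).intervalIntegrable
    have k2 : IntervalIntegrable (fun t => g x * (p t - x)⁻¹) MeasureTheory.volume a b :=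
      (continuousOn_const.mul hi).intervalIntegrable
    rw [← intervalIntegral.integral_const_mul, ← intervalIntegral.integral_sub k1 k2]
    refine intervalIntegral.integral_congr fun t ht => ?_
    simp only [dslope_of_ne _ (h t ht).2, slope_def_field]
    rw [div_eq_mul_inv, sub_mul]
  have habsR : |R| = R := abs_of_pos hR
  have hRR : -R ≤ R := by linarith
  have hdd : -δ ≤ δ := by linarith
  have i1 := hInt (fun t => (t : ℂ) + ((-δ : ℝ) : ℂ) * I) (by fun_prop) (-R) R (fun t ht => by
    rw [uIcc_of_le hRR] at ht
    refine ⟨⟨by simpa [abs_le] using ht, by simp [abs_of_pos hδ]⟩, hne _ (Or.inl (by simp [hδ.ne']))⟩)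
  have i2 := hInt (fun t => (t : ℂ) + (δ : ℂ) * I) (by fun_prop) (-R) R (fun t ht => by
    rw [uIcc_of_le hRR] at ht
    refine ⟨⟨by simpa [abs_le] using ht, by simp [abs_of_pos hδ]⟩, hne _ (Or.inl (by simp [hδ.ne']))⟩)
  have i3 := hInt (fun s => (R : ℂ) + s * I) (by fun_prop) (-δ) δ (fun s hs => by
    rw [uIcc_of_le hdd] at hs
    refine ⟨⟨by simp [habsR], by simpa [abs_le] using hs⟩, hne _ (Or.inr (by simp [habsR]))⟩)
  have i4 := hInt (fun s => ((-R : ℝ) : ℂ) + s * I) (by fun_prop) (-δ) δ (fun s hs => by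
    rw [uIcc_of_le hdd] at hs
    refine ⟨⟨by simp [habsR], by simpa [abs_le] using hs⟩, hne _ (Or.inr (by simp [habsR]))⟩)
  simp only [i1, i2, i3, i4] at hrect
  have hsum : ∀ r : ℝ, |r| = R →
      (∫ s in (-δ)..0, g ((r : ℂ) + s * I) * ((r : ℂ) + s * I - x)⁻¹) +
      (∫ s in (0 : ℝ)..δ, g ((r : ℂ) + s * I) * ((r : ℂ) + s * I - x)⁻¹) =
      ∫ s in (-δ)..δ, g ((r : ℂ) + s * I) * ((r : ℂ) + s * I - x)⁻¹ := by
    intro r hr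
    have hc : ContinuousOn (fun s : ℝ => g ((r : ℂ) + s * I) * ((r : ℂ) + s * I - x)⁻¹)
        (Icc (-δ) δ) := by
      intro s hs
      refine ContinuousAt.continuousWithinAt ?_
      have h3 : ContinuousAt g ((r : ℂ) + s * I) :=
        (hg _ (by simp [hr]) (by simpa [abs_le] using hs)).continuousAt
      have h4 : (r : ℂ) + s * I - x ≠ 0 := sub_ne_zero.2 (hne _ (Or.inr (by simp [hr])))
      refine ContinuousAt.mul (ContinuousAt.comp' (f := fun s : ℝ => (r : ℂ) + s * I) h3
        (by fun_prop)) (ContinuousAt.inv₀ (by fun_prop) h4)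
    refine intervalIntegral.integral_add_adjacent_intervals ?_ ?_
    · exact (hc.mono (by rw [uIcc_of_le (by linarith)]; exact Icc_subset_Icc_right hδ.le)).intervalIntegrable
    · exact (hc.mono (by rw [uIcc_of_le hδ.le]; exact Icc_subset_Icc_left (by linarith))).intervalIntegrable
  have hlog := rect_log (R := R) (x := x) hδ h1 h2
  unfold Lint
  rw [hsum R habsR, hsum (-R) (by rw [abs_neg, habsR])]
  have hpi : (2 * Real.pi * I : ℂ) ≠ 0 := by simp [Real.pi_ne_zero]
  rw [inv_mul_eq_iff_eq_mul₀ hpi]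
  linear_combination hrect + g x * hlog
end

/-! ### Splitting a coefficient into a global part and a part on a tube -/

section
theorem analyticAt_path {X : Type*} [NormedAddCommGroup X] [NormedSpace ℂ X]
    [FiniteDimensional ℂ X] {x₀ : X} {φ : X → ℂ → ℂ} {p : ℝ → ℂ} (hp : Continuous p) {a b : ℝ}
    (h : ∀ t ∈ uIcc a b, AnalyticAt ℂ (fun q : X × ℂ => φ q.1 q.2) (x₀, p t)) :
    AnalyticAt ℂ (fun x => ∫ t in a..b, φ x (p t)) x₀ := by
  set W : Set (X × ℝ) := {q | AnalyticAt ℂ (fun q : X × ℂ => φ q.1 q.2) (q.1, p q.2)} with hW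
  have hWo : IsOpen W := (isOpen_analyticAt ℂ (fun q : X × ℂ => φ q.1 q.2)).preimage
    (f := fun q : X × ℝ => (q.1, p q.2)) (by fun_prop)
  obtain ⟨U, T, hU, hT, hxU, hIT, hUT⟩ := generalized_tube_lemma isCompact_singleton
    (isCompact_uIcc (a := a) (b := b)) hWo (by
      rintro ⟨x, t⟩ ⟨hx, ht⟩
      rw [mem_singleton_iff] at hx
      subst hx
      exact h t ht)
  refine analyticAt_intervalIntegral (F := fun x t => φ x (p t)) hU ?_ ?_ x₀ (hxU rfl)
  · rintro ⟨x, t⟩ ⟨hx, ht⟩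
    have h1 : (x, t) ∈ W := hUT ⟨hx, hIT ht⟩
    have h2 : ContinuousAt (fun q : X × ℂ => φ q.1 q.2) (x, p t) := h1.continuousAt
    exact (ContinuousAt.comp' (f := fun q : X × ℝ => (q.1, p q.2)) (x := (x, t)) h2
      (by fun_prop)).continuousWithinAt
  · intro t ht x hx
    have h1 : (x, t) ∈ W := hUT ⟨hx, hIT ht⟩
    have h2 : AnalyticAt ℂ (fun x : X => (x, p t)) x := analyticAt_id.prod analyticAt_const
    exact AnalyticAt.fun_comp (f := fun x : X => (x, p t)) h1 h2

theorem analyticAt_Lint {X : Type*} [NormedAddCommGroup X] [NormedSpace ℂ X]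
    [FiniteDimensional ℂ X] {R δ : ℝ} (hR : 0 < R) (hδ : 0 < δ) {x₀ : X}
    {φ : Bool → Bool → X → ℂ → ℂ}
    (h : ∀ e f, ∀ ζ ∈ side R δ e f, AnalyticAt ℂ (fun q : X × ℂ => φ e f q.1 q.2) (x₀, ζ)) :
    AnalyticAt ℂ (fun x => Lint R δ fun e f ζ => φ e f x ζ) x₀ := by
  have a1 : |R| = R := abs_of_pos hR
  have a2 : |-R| = R := by rw [abs_neg, a1]
  unfold Lint
  refine analyticAt_const.mul (AnalyticAt.sub (AnalyticAt.add (AnalyticAt.sub ?_ ?_)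
    (analyticAt_const.mul (AnalyticAt.add ?_ ?_))) (analyticAt_const.mul (AnalyticAt.add ?_ ?_)))
  · exact analyticAt_path (p := fun t => (t : ℂ) + ((-δ : ℝ) : ℂ) * I) (by fun_prop)
      fun t ht => h _ _ _ (side_ff hδ ht hR)
  · exact analyticAt_path (p := fun t => (t : ℂ) + (δ : ℂ) * I) (by fun_prop)
      fun t ht => h _ _ _ (side_ft hδ ht hR)
  · exact analyticAt_path (p := fun t => (R : ℂ) + t * I) (by fun_prop)
      fun t ht => h _ _ _ (side_tf hδ ht a1)
  · exact analyticAt_path (p := fun t => (R : ℂ) + t * I) (by fun_prop)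
      fun t ht => h _ _ _ (side_tt hδ ht a1)
  · exact analyticAt_path (p := fun t => ((-R : ℝ) : ℂ) + t * I) (by fun_prop)
      fun t ht => h _ _ _ (side_tf hδ ht a2)
  · exact analyticAt_path (p := fun t => ((-R : ℝ) : ℂ) + t * I) (by fun_prop)
      fun t ht => h _ _ _ (side_tt hδ ht a2)

variable {n : ℕ}

theorem analyticAt_coord_sub (i : Fin n) (q : (Fin n → ℂ) × (Fin n → ℂ)) :
    AnalyticAt ℂ (fun q : (Fin n → ℂ) × (Fin n → ℂ) => q.1 i - q.2 i) q := by
  have h : ∀ y, AnalyticAt ℂ (fun z : Fin n → ℂ => z i) y := fun y =>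
    (ContinuousLinearMap.proj (R := ℂ) (φ := fun _ : Fin n => ℂ) i).analyticAt y
  exact (AnalyticAt.fun_comp (f := Prod.fst) (h _) analyticAt_fst).sub
    (AnalyticAt.fun_comp (f := Prod.snd) (h _) analyticAt_snd)

theorem inv_mul_inv_split {a b c ν : ℂ} (ha : a ≠ 0) (hb : b ≠ 0) (hc : c ≠ 0)
    (h : c = a + ν * b) : a⁻¹ * b⁻¹ = c⁻¹ * b⁻¹ + ν * c⁻¹ * a⁻¹ := by
  field_simp
  linear_combination h

/-- The product of Cauchy kernels over vertical sides (`V`) and horizontal sides (`H`) is a sum of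
a kernel regular at all real points and one regular over the whole tube `|Re z_i| ≤ k`. Induction
via `1/(ab) = 1/(b(a+νb)) + ν/(a(a+νb))`, where the sign of `ν` makes `a + νb` nonzero in both
regions. -/
theorem kernel_split {R δ k : ℝ} (hk : 0 ≤ k) (hkR : k < R) (hδ : 0 < δ) (f : Fin n → Bool)
    (V H : Finset (Fin n)) : ∃ P Q : (Fin n → ℂ) × (Fin n → ℂ) → ℂ,
    ∀ ζ : Fin n → ℂ, (∀ i ∈ V, ζ i ∈ side R δ true (f i)) →
      (∀ i ∈ H, ζ i ∈ side R δ false (f i)) →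
      (∀ x, AnalyticAt ℂ P (ζ, emb x)) ∧
      (∀ z : Fin n → ℂ, (∀ i, |(z i).re| ≤ k) → AnalyticAt ℂ Q (ζ, z)) ∧
      ∀ x : Fin n → ℝ, (∀ i, |x i| ≤ k) →
        (∏ i ∈ V, (ζ i - x i)⁻¹) * ∏ i ∈ H, (ζ i - x i)⁻¹ = P (ζ, emb x) + Q (ζ, emb x) := by
  classical
  have hVne : ∀ (g : Bool) (ζ z : ℂ), ζ ∈ side R δ true g → |z.re| ≤ k → ζ - z ≠ 0 := by
    intro g ζ z hζ hz h0
    have h1 := (hζ.2.2.1 rfl).1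
    rw [sub_eq_zero.1 h0] at h1
    linarith
  have hHne : ∀ (g : Bool) (ζ : ℂ) (x : ℝ), ζ ∈ side R δ false g → ζ - x ≠ 0 := by
    intro g ζ x hζ h0
    have h1 := hζ.2.2.2 rfl
    rw [sub_eq_zero.1 h0] at h1
    cases g <;> simp at h1 <;> linarith
  induction V using Finset.induction_on generalizing H with
  | empty =>
    refine ⟨fun q => ∏ i ∈ H, (q.1 i - q.2 i)⁻¹, fun _ => 0, fun ζ _ hH => ⟨fun x => ?_, fun _ _ =>
      analyticAt_const, fun x _ => by simp [emb]⟩⟩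
    exact Finset.analyticAt_fun_prod _ fun i hi =>
      (analyticAt_coord_sub i _).inv (hHne _ _ _ (hH i hi))
  | insert i V hi IHV =>
    induction H using Finset.induction_on with
    | empty =>
      refine ⟨fun _ => 0, fun q => ∏ i ∈ insert i V, (q.1 i - q.2 i)⁻¹, fun ζ hV _ => ⟨fun _ =>
        analyticAt_const, fun z hz => ?_, fun x _ => by simp [emb]⟩⟩
      exact Finset.analyticAt_fun_prod _ fun i hi =>
        (analyticAt_coord_sub i _).inv (hVne _ _ _ (hV i hi) (hz i))
    | insert l H hl IHH =>
      obtain ⟨P₁, Q₁, h₁⟩ := IHV (insert l H)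
      obtain ⟨P₂, Q₂, h₂⟩ := IHH
      set sg : Bool → ℝ := fun b => if b then 1 else -1 with hsg
      have hsg1 : ∀ b, sg b = 1 ∨ sg b = -1 := fun b => by cases b <;> simp [hsg]
      set ν₀ : ℝ := (R - k) / (2 * (R + k)) with hν₀
      have hRk : 0 < R + k := by linarith
      have hν₀pos : 0 < ν₀ := div_pos (by linarith) (by linarith)
      have hν₀mul : ν₀ * (R + k) = (R - k) / 2 := by rw [hν₀]; field_simp
      set ν : ℝ := ν₀ * sg (f i) * sg (f l) with hν
      set D : (Fin n → ℂ) × (Fin n → ℂ) → ℂ := fun q =>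
        (q.1 i - q.2 i) + (ν : ℂ) * (q.1 l - q.2 l) with hD
      have hDan : ∀ q, AnalyticAt ℂ D q := fun q =>
        (analyticAt_coord_sub i q).add (analyticAt_const.mul (analyticAt_coord_sub l q))
      -- at real points the imaginary part of the denominator is nonzero
      have hD1 : ∀ (ζ : Fin n → ℂ) (x : Fin n → ℝ), ζ i ∈ side R δ true (f i) →
          ζ l ∈ side R δ false (f l) → D (ζ, emb x) ≠ 0 := by
        intro ζ x h1 h2 h0
        have h3 := congrArg Complex.im h0
        simp only [hD, emb, add_im, sub_im, ofReal_im, sub_zero, im_ofReal_mul, zero_im] at h3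
        have h4 : 0 ≤ sg (f i) * (ζ i).im := (h1.2.2.1 rfl).2
        have h5 : (ζ l).im = sg (f l) * δ := h2.2.2.2 rfl
        rw [h5, hν] at h3
        have := mul_pos hν₀pos hδ
        rcases hsg1 (f i) with e1 | e1 <;> rcases hsg1 (f l) with e2 | e2 <;>
          rw [e1] at h3 h4 <;> rw [e2] at h3 <;> nlinarith
      -- over the tube its real part is nonzero
      have hD2 : ∀ (ζ z : Fin n → ℂ), ζ i ∈ side R δ true (f i) →
          ζ l ∈ side R δ false (f l) → (∀ i, |(z i).re| ≤ k) → D (ζ, z) ≠ 0 := by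
        intro ζ z h1 h2 hz h0
        have h3 := congrArg Complex.re h0
        simp only [hD, add_re, sub_re, re_ofReal_mul, zero_re] at h3
        have h4 : |(ζ i).re| = R := (h1.2.2.1 rfl).1
        have h5 : |(ζ l).re| ≤ R := h2.1
        have h6 := hz i
        have h7 := hz l
        have h8 : |ν| = ν₀ := by
          rw [hν, abs_mul, abs_mul, abs_of_pos hν₀pos]
          rcases hsg1 (f i) with e1 | e1 <;> rcases hsg1 (f l) with e2 | e2 <;> simp [e1, e2]
        have h9 : |(ζ i).re - (z i).re| = |ν * ((ζ l).re - (z l).re)| := by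
          rw [eq_neg_of_add_eq_zero_left h3, abs_neg]
        have h10 : |ν * ((ζ l).re - (z l).re)| ≤ ν₀ * (R + k) := by
          rw [abs_mul, h8]
          exact mul_le_mul_of_nonneg_left ((abs_sub _ _).trans (by linarith)) hν₀pos.le
        have h11 := abs_sub_abs_le_abs_sub (ζ i).re (z i).re
        linarith
      refine ⟨fun q => (D q)⁻¹ * P₁ q + ν * (D q)⁻¹ * P₂ q,
        fun q => (D q)⁻¹ * Q₁ q + ν * (D q)⁻¹ * Q₂ q, fun ζ hV hH => ?_⟩
      have hζi := hV i (Finset.mem_insert_self _ _)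
      have hζl := hH l (Finset.mem_insert_self _ _)
      obtain ⟨a1, a2, a3⟩ := h₁ ζ (fun j hj => hV j (Finset.mem_insert_of_mem hj)) hH
      obtain ⟨b1, b2, b3⟩ := h₂ ζ hV (fun j hj => hH j (Finset.mem_insert_of_mem hj))
      refine ⟨fun x => ?_, fun z hz => ?_, fun x hx => ?_⟩
      · have h := (hDan (ζ, emb x)).inv (hD1 ζ x hζi hζl)
        exact (h.mul (a1 x)).add ((analyticAt_const.mul h).mul (b1 x))
      · have h := (hDan (ζ, z)).inv (hD2 ζ z hζi hζl hz)
        exact (h.mul (a2 z hz)).add ((analyticAt_const.mul h).mul (b2 z hz))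
      · have hne := hD1 ζ x hζi hζl
        have n1 := hVne _ _ (x i) hζi (by simpa using hx i)
        have n2 := hHne _ _ (x l) hζl
        have e1 := a3 x hx
        have e2 := b3 x hx
        rw [Finset.prod_insert hl] at e1 ⊢
        rw [Finset.prod_insert hi] at e2 ⊢
        have e3 : (ζ i - x i)⁻¹ * (ζ l - x l)⁻¹ =
            (D (ζ, emb x))⁻¹ * (ζ l - x l)⁻¹ + ν * (D (ζ, emb x))⁻¹ * (ζ i - x i)⁻¹ := by
          have : D (ζ, emb x) = (ζ i - x i) + ν * (ζ l - x l) := rfl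
          exact inv_mul_inv_split n1 n2 hne this
        linear_combination (∏ i ∈ V, (ζ i - x i)⁻¹) * (∏ i ∈ H, (ζ i - x i)⁻¹) * e3 +
          (D (ζ, emb x))⁻¹ * e1 + ν * (D (ζ, emb x))⁻¹ * e2

theorem analyticAt_update_pair (j : Fin n) (q : ((Fin n → ℂ) × (Fin n → ℂ)) × ℂ) : AnalyticAt ℂ
    (fun q : ((Fin n → ℂ) × (Fin n → ℂ)) × ℂ => (Function.update q.1.1 j q.2, q.1.2)) q := by
  refine AnalyticAt.prod ?_ (AnalyticAt.fun_comp (f := Prod.fst) analyticAt_snd analyticAt_fst)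
  refine analyticAt_pi_iff.2 fun i => ?_
  by_cases hij : i = j
  · subst hij
    simpa using analyticAt_snd
  · simp only [Function.update_of_ne hij]
    exact AnalyticAt.fun_comp (f := fun q : ((Fin n → ℂ) × (Fin n → ℂ)) × ℂ => q.1.1)
      ((ContinuousLinearMap.proj (R := ℂ) (φ := fun _ : Fin n => ℂ) i).analyticAt _)
      (AnalyticAt.fun_comp (f := Prod.fst) analyticAt_fst analyticAt_fst)

theorem analyticAt_Lint_update {R δ : ℝ} (hR : 0 < R) (hδ : 0 < δ) (j : Fin n)
    {v : Bool → Bool → (Fin n → ℂ) × (Fin n → ℂ) → ℂ} {ζ z : Fin n → ℂ}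
    (h : ∀ e f, ∀ ξ ∈ side R δ e f, AnalyticAt ℂ (v e f) (Function.update ζ j ξ, z)) :
    AnalyticAt ℂ (fun q : (Fin n → ℂ) × (Fin n → ℂ) =>
      Lint R δ fun e f ξ => v e f (Function.update q.1 j ξ, q.2)) (ζ, z) := by
  refine analyticAt_Lint (X := (Fin n → ℂ) × (Fin n → ℂ)) hR hδ
    (φ := fun e f (q : (Fin n → ℂ) × (Fin n → ℂ)) ξ => v e f (Function.update q.1 j ξ, q.2))
    fun e f ξ hξ => ?_
  exact AnalyticAt.fun_comp (f := fun q : ((Fin n → ℂ) × (Fin n → ℂ)) × ℂ =>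
    (Function.update q.1.1 j q.2, q.1.2)) (x := ((ζ, z), ξ))
    (h e f ξ hξ) (analyticAt_update_pair j _)

set_option maxHeartbeats 1000000 in
/-- The Cousin-type splitting: a function holomorphic near the real cube `[-R, R]ⁿ` is on the
smaller cube `[-k, k]ⁿ` a sum of a function holomorphic near all of `ℝⁿ` and one holomorphic near
the whole tube over `[-k, k]ⁿ`. -/
theorem splitting {R k : ℝ} (hk : 0 ≤ k) (hkR : k < R) {c : (Fin n → ℂ) → ℂ}
    (hc : ∀ x : Fin n → ℝ, (∀ i, |x i| ≤ R) → AnalyticAt ℂ c (emb x)) :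
    ∃ v w : (Fin n → ℂ) → ℂ, (∀ x, AnalyticAt ℂ v (emb x)) ∧
      (∀ z : Fin n → ℂ, (∀ i, |(z i).re| ≤ k) → AnalyticAt ℂ w z) ∧
      ∀ x : Fin n → ℝ, (∀ i, |x i| ≤ k) → c (emb x) = v (emb x) + w (emb x) := by
  classical
  have hR : 0 < R := by linarith
  -- a product of rectangles on which `c` is holomorphic
  obtain ⟨δ, hδ, hcδ⟩ : ∃ δ > 0, ∀ z : Fin n → ℂ, (∀ i, |(z i).re| ≤ R ∧ |(z i).im| ≤ δ) →
      AnalyticAt ℂ c z := by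
    have hK : IsCompact (box (fun _ : Fin n => -R) fun _ => R) := isCompact_box _ _
    obtain ⟨ε, hε, hsub⟩ := hK.exists_thickening_subset_open (isOpen_analyticAt ℂ c) (by
      rintro _ ⟨x, hx, rfl⟩
      exact hc x fun i => abs_le.2 ⟨hx.1 i, hx.2 i⟩)
    refine ⟨ε / 2, by linarith, fun z hz => hsub (mem_thickening_iff.2
      ⟨emb fun i => (z i).re, ⟨_, ⟨fun i => (abs_le.1 (hz i).1).1, fun i => (abs_le.1 (hz i).1).2⟩,
        rfl⟩, ?_⟩)⟩
    refine lt_of_le_of_lt ((dist_pi_le_iff (by linarith : (0 : ℝ) ≤ ε / 2)).2 fun i => ?_)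
      (by linarith : ε / 2 < ε)
    rw [Complex.dist_eq]
    have : z i - emb (fun i => (z i).re) i = ((z i).im : ℂ) * I := by
      apply Complex.ext <;> simp [emb]
    rw [this, norm_mul, norm_I, mul_one, norm_real]
    exact (hz i).2
  have main : ∀ t : Finset (Fin n), ∀ σ : Fin n → Bool × Bool,
      ∃ v w : (Fin n → ℂ) × (Fin n → ℂ) → ℂ,
      ∀ ζ : Fin n → ℂ, (∀ i ∉ t, ζ i ∈ side R δ (σ i).1 (σ i).2) →
      (∀ x, AnalyticAt ℂ v (ζ, emb x)) ∧
      (∀ z : Fin n → ℂ, (∀ i, |(z i).re| ≤ k) → AnalyticAt ℂ w (ζ, z)) ∧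
      ∀ x : Fin n → ℝ, (∀ i, |x i| ≤ k) →
        c (fun i => if i ∈ t then (x i : ℂ) else ζ i) * ∏ i ∈ tᶜ, (ζ i - x i)⁻¹ =
          v (ζ, emb x) + w (ζ, emb x) := by
    intro t
    induction t using Finset.induction_on with
    | empty =>
      intro σ
      obtain ⟨P, Q, hPQ⟩ := kernel_split hk hkR hδ (fun i => (σ i).2)
        (Finset.univ.filter fun i => (σ i).1 = true)
        (Finset.univ.filter fun i => ¬ (σ i).1 = true)
      refine ⟨fun q => c q.1 * P q, fun q => c q.1 * Q q, fun ζ hζ => ?_⟩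
      have hcζ : ∀ z, AnalyticAt ℂ (fun q : (Fin n → ℂ) × (Fin n → ℂ) => c q.1) (ζ, z) := fun z =>
        AnalyticAt.fun_comp (f := Prod.fst) (x := (ζ, z))
          (hcδ ζ fun i => ⟨(hζ i (by simp)).1, (hζ i (by simp)).2.1⟩) analyticAt_fst
      obtain ⟨h1, h2, h3⟩ := hPQ ζ (fun i hi => by
          have h := hζ i (by simp)
          rwa [(Finset.mem_filter.1 hi).2] at h) (fun i hi => by
          have h := hζ i (by simp)
          rwa [eq_false_of_ne_true (Finset.mem_filter.1 hi).2] at h)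
      refine ⟨fun x => (hcζ _).mul (h1 x), fun z hz => (hcζ _).mul (h2 z hz), fun x hx => ?_⟩
      have h4 := h3 x hx
      rw [Finset.prod_filter_mul_prod_filter_not] at h4
      simp only [Finset.notMem_empty, if_false, Finset.compl_empty]
      rw [h4, mul_add]
    | insert j t hj IH =>
      intro σ
      choose v w hvw using fun e f => IH (Function.update σ j (e, f))
      have hup : ∀ (ζ : Fin n → ℂ), (∀ i ∉ insert j t, ζ i ∈ side R δ (σ i).1 (σ i).2) →
          ∀ e f, ∀ ξ ∈ side R δ e f, ∀ i ∉ t, Function.update ζ j ξ i ∈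
            side R δ (Function.update σ j (e, f) i).1 (Function.update σ j (e, f) i).2 := by
        intro ζ hζ e f ξ hξ i hi
        by_cases hij : i = j
        · subst hij; simpa using hξ
        · simpa [hij] using hζ i (by simp [hij, hi])
      refine ⟨fun q => Lint R δ fun e f ξ => v e f (Function.update q.1 j ξ, q.2),
        fun q => Lint R δ fun e f ξ => w e f (Function.update q.1 j ξ, q.2), fun ζ hζ =>
          ⟨fun x => ?_, fun z hz => ?_, fun x hx => ?_⟩⟩
      · exact analyticAt_Lint_update hR hδ j fun e f ξ hξ => (hvw e f _ (hup ζ hζ e f ξ hξ)).1 x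
      · exact analyticAt_Lint_update hR hδ j fun e f ξ hξ =>
          (hvw e f _ (hup ζ hζ e f ξ hξ)).2.1 z hz
      · have hupc : ∀ ξ, AnalyticAt ℂ (fun ξ : ℂ => (Function.update ζ j ξ, emb x)) ξ := by
          intro ξ
          exact AnalyticAt.fun_comp (f := fun ξ : ℂ => ((ζ, emb x), ξ)) (analyticAt_update_pair j _)
            (analyticAt_const.prod analyticAt_id)
        simp only []
        rw [← Lint_add hR hδ (fun e f ξ hξ => ?_) (fun e f ξ hξ => ?_)]
        · set g : ℂ → ℂ := fun ξ => c (fun i => if i ∈ t then (x i : ℂ) else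
            Function.update ζ j ξ i) * ∏ i ∈ (insert j t)ᶜ, (ζ i - x i)⁻¹ with hg
          have hcau := Lint_cauchy (g := g) (R := R) (x := x j) hδ
            (by linarith [(abs_le.1 (hx j)).1]) (by linarith [(abs_le.1 (hx j)).2]) (by
              intro ξ h1 h2
              refine AnalyticAt.mul ?_ analyticAt_const
              refine AnalyticAt.fun_comp (f := fun ξ : ℂ => fun i => if i ∈ t then (x i : ℂ) else
                Function.update ζ j ξ i) (hcδ _ fun i => ?_) (analyticAt_pi_iff.2 fun i => ?_)
              · by_cases hit : i ∈ t
                · simp only [hit, if_true]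
                  exact ⟨by simpa using (hx i).trans hkR.le, by simpa using hδ.le⟩
                · simp only [hit, if_false]
                  by_cases hij : i = j
                  · subst hij; simpa using ⟨h1, h2⟩
                  · have := hζ i (by simp [hij, hit])
                    simpa [hij] using ⟨this.1, this.2.1⟩
              · by_cases hit : i ∈ t
                · simp only [hit, if_true]; exact analyticAt_const
                · simp only [hit, if_false]
                  by_cases hij : i = j
                  · subst hij; simp only [Function.update_self]; exact analyticAt_id
                  · simpa [hij] using analyticAt_const)
          have hcongr : Lint R δ (fun _ _ ξ => g ξ * (ξ - x j)⁻¹) = Lint R δ (fun e f ξ =>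
              v e f (Function.update ζ j ξ, emb x) + w e f (Function.update ζ j ξ, emb x)) := by
            refine Lint_congr hR hδ fun e f ξ hξ => ?_
            rw [← (hvw e f _ (hup ζ hζ e f ξ hξ)).2.2 x hx, hg]
            have hins : tᶜ = insert j (insert j t)ᶜ := by
              ext i
              by_cases hij : i = j
              · subst hij; simp [hj]
              · simp [hij]
            rw [hins, Finset.prod_insert (by simp)]
            have hpr : ∏ i ∈ (insert j t)ᶜ, (Function.update ζ j ξ i - x i)⁻¹ =
                ∏ i ∈ (insert j t)ᶜ, (ζ i - x i)⁻¹ := by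
              refine Finset.prod_congr rfl fun i hi => ?_
              have hij : i ≠ j := by rintro rfl; simp at hi
              rw [Function.update_of_ne hij]
            rw [hpr, Function.update_self]
            ring
          rw [← hcongr, hcau, hg]
          congr 2
          funext i
          by_cases hij : i = j
          · subst hij; simp [hj]
          · simp [hij]
        · have h1 := (hvw e f _ (hup ζ hζ e f ξ hξ)).1 x
          exact (AnalyticAt.fun_comp (f := fun ξ : ℂ => (Function.update ζ j ξ, emb x)) h1
            (hupc ξ)).continuousAt.continuousWithinAt
        · have h1 := (hvw e f _ (hup ζ hζ e f ξ hξ)).2.1 (emb x) (by simpa [emb] using hx)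
          exact (AnalyticAt.fun_comp (f := fun ξ : ℂ => (Function.update ζ j ξ, emb x)) h1
            (hupc ξ)).continuousAt.continuousWithinAt
  obtain ⟨v, w, hvw⟩ := main Finset.univ fun _ => (true, true)
  obtain ⟨h1, h2, h3⟩ := hvw 0 (by simp)
  have hz : ∀ z, AnalyticAt ℂ (fun z : Fin n → ℂ => ((0 : Fin n → ℂ), z)) z := fun z =>
    analyticAt_const.prod analyticAt_id
  refine ⟨fun z => v (0, z), fun z => w (0, z), fun x => ?_, fun z hz' => ?_, fun x hx => ?_⟩
  · exact AnalyticAt.fun_comp (f := fun z : Fin n → ℂ => ((0 : Fin n → ℂ), z)) (h1 x) (hz _)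
  · exact AnalyticAt.fun_comp (f := fun z : Fin n → ℂ => ((0 : Fin n → ℂ), z)) (h2 z hz') (hz _)
  · have := h3 x hx
    simp only [Finset.mem_univ, if_true, Finset.compl_univ, Finset.prod_empty, mul_one] at this
    exact this
end

/-! ### Finite generation over compact cubes -/

section
variable {n : ℕ}

/-- Any set of analytic functions has, over a compact cube, a finite generating subset, with
coefficients holomorphic near the cube. -/
theorem finite_gen {S : Set ((Fin n → ℝ) → ℝ)} (hS : ∀ h ∈ S, ∀ x, AnalyticAt ℝ h x) {k : ℝ}
    (hk : 0 ≤ k) : ∃ F : Finset ((Fin n → ℝ) → ℝ), (∀ b ∈ F, b ∈ S) ∧ ∀ h ∈ S,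
      ∃ c : ((Fin n → ℝ) → ℝ) → (Fin n → ℂ) → ℂ,
        (∀ b, ∀ x : Fin n → ℝ, (∀ i, |x i| ≤ k) → AnalyticAt ℂ (c b) (emb x)) ∧
        ∀ x : Fin n → ℝ, (∀ i, |x i| ≤ k) → (h x : ℂ) = ∑ b ∈ F, c b (emb x) * b x := by
  classical
  have hex : ∀ h : (Fin n → ℝ) → ℝ, ∃ G : (Fin n → ℂ) → ℂ, (∀ p, AnalyticAt ℂ G (emb p)) ∧
      (h ∈ S → ∀ p, G (emb p) = h p) := by
    intro h
    by_cases hh : h ∈ S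
    · obtain ⟨G, h1, h2⟩ := complexify (hS h hh)
      exact ⟨G, h1, fun _ => h2⟩
    · exact ⟨fun _ => 0, fun _ => analyticAt_const, fun h' => absurd h' hh⟩
  choose cx hcx hcxr using hex
  set A : (F : Finset ((Fin n → ℝ) → ℝ)) → Unit → {b // b ∈ F} → (Fin n → ℂ) → ℂ :=
    fun F _ b => cx b.1 with hA
  have hloc : ∀ p : Fin n → ℝ, ∃ F : Finset ((Fin n → ℝ) → ℝ), (∀ b ∈ F, b ∈ S) ∧
      ∀ᶠ y in 𝓝 p, ∀ h ∈ S, InIm (A F) (fun _ => cx h) (emb y) := by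
    intro p
    set v : ((Fin n → ℝ) → ℝ) → GR (emb p) := fun h => GR.mk (cx h) (hcx h p) with hv
    obtain ⟨T, hT, hspan⟩ := (Submodule.fg_span_iff_fg_span_finset_subset (R := GR (emb p))
      (v '' S)).1 (IsNoetherian.noetherian _)
    obtain ⟨F, hF, rfl⟩ := Finset.subset_set_image_iff.1 hT
    refine ⟨F, fun b hb => hF hb, ?_⟩
    filter_upwards [strong_noether (V := A F) (fun _ b => hcx b.1 p) univ univ_mem] with y hy h hh
    refine hy _ (fun x _ _ => hcx h x) ?_
    have h1 : v h ∈ Submodule.span (GR (emb p)) (v '' (F : Set ((Fin n → ℝ) → ℝ))) := by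
      rw [← Finset.coe_image, ← hspan]
      exact Submodule.subset_span ⟨h, hh, rfl⟩
    obtain ⟨c, hc⟩ := (Submodule.mem_span_image_finset_iff_exists_fun (GR (emb p))).1 h1
    refine ⟨fun b => (c b).rep, fun b => (c b).rep_an, fun _ => ?_⟩
    have h2 : v h = GR.mk (fun z => ∑ b, A F () b z * (c b).rep z)
        (Finset.analyticAt_fun_sum _ fun b _ => (hcx b.1 p).mul (c b).rep_an) := by
      rw [← hc, ← GR.mk_sum (f := fun b z => A F () b z * (c b).rep z)
        (hf := fun b => (hcx b.1 p).mul (c b).rep_an)]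
      refine Finset.sum_congr rfl fun b _ => ?_
      rw [← GR.mk_mul (hcx b.1 p) (c b).rep_an, GR.mk_rep, smul_eq_mul, mul_comm]
    exact GR.mk_eq.1 h2
  choose Fp hFp hFe using hloc
  obtain ⟨t, -, ht⟩ := (isCompact_Icc (a := fun _ : Fin n => -k) (b := fun _ => k)).elim_nhds_subcover
    (fun p => {y | ∀ h ∈ S, InIm (A (Fp p)) (fun _ => cx h) (emb y)}) fun p _ => hFe p
  refine ⟨t.biUnion Fp, fun b hb => ?_, fun h hh => ?_⟩
  · obtain ⟨p, -, hp⟩ := Finset.mem_biUnion.1 hb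
    exact hFp p b hp
  obtain ⟨c, hc, he⟩ := thmB_box (fun _ : Fin n => -k) (fun _ => k)
    (fun _ => by show -k ≤ k; linarith) Unit
    {b // b ∈ t.biUnion Fp} (A _) (fun _ => cx h)
    (by rintro _ b _ ⟨x, -, rfl⟩; exact hcx b.1 x) (by rintro _ _ ⟨x, -, rfl⟩; exact hcx h x) (by
      rintro _ ⟨y, hy, rfl⟩
      obtain ⟨p, hp, hyp⟩ := mem_iUnion₂.1 (ht hy)
      refine InIm.trans (fun b => ?_) (hyp h hh)
      refine ⟨fun b' _ => if b'.1 = b.1 then 1 else 0, fun _ => analyticAt_const, fun _ =>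
        Eventually.of_forall fun z => ?_⟩
      rw [Finset.sum_eq_single (⟨b.1, Finset.mem_biUnion.2 ⟨p, hp, b.2⟩⟩ : {b // b ∈ t.biUnion Fp})]
      · simp [hA]
      · intro b' _ hb'
        have h3 : b'.1 ≠ b.1 := fun h => hb' (Subtype.ext h)
        simp [h3]
      · simp)
  refine ⟨fun b => if hb : b ∈ t.biUnion Fp then c ⟨b, hb⟩ else fun _ => 0, fun b x hx => ?_,
    fun x hx => ?_⟩
  · by_cases hb : b ∈ t.biUnion Fp
    · simp only [hb, dif_pos]
      exact hc _ _ ⟨x, ⟨fun i => (abs_le.1 (hx i)).1, fun i => (abs_le.1 (hx i)).2⟩, rfl⟩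
    · simp only [hb, dif_neg, not_false_eq_true]
      exact analyticAt_const
  · have h1 := (he (emb x) ⟨x, ⟨fun i => (abs_le.1 (hx i)).1, fun i => (abs_le.1 (hx i)).2⟩, rfl⟩
      ()).self_of_nhds
    simp only [hcxr h hh] at h1
    rw [h1, ← Finset.sum_coe_sort (t.biUnion Fp)]
    refine Finset.sum_congr rfl fun b _ => ?_
    have hbS : b.1 ∈ S := by
      obtain ⟨p, -, hp⟩ := Finset.mem_biUnion.1 b.2
      exact hFp p b.1 hp
    have h2 : A (t.biUnion Fp) () b (emb x) = b.1 x := hcxr _ hbS x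
    simp only [dif_pos b.2]
    rw [h2, mul_comm]
end

/-! ### Enlarging a generating set -/

section
variable {n : ℕ}

theorem analyticAt_reEmb {F : (Fin n → ℂ) → ℂ} {x : Fin n → ℝ} (hF : AnalyticAt ℂ F (emb x)) :
    AnalyticAt ℝ (fun x => (F (emb x)).re) x := by
  have h1 : AnalyticAt ℝ (emb (n := n)) x := analyticAt_pi_iff.2 fun i =>
    AnalyticAt.fun_comp (f := fun x : Fin n → ℝ => x i) (Complex.ofRealCLM.analyticAt _)
      ((ContinuousLinearMap.proj (R := ℝ) (φ := fun _ : Fin n => ℝ) i).analyticAt x)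
  exact AnalyticAt.fun_comp (f := fun x => F (emb x)) (Complex.reCLM.analyticAt _)
    (AnalyticAt.fun_comp (f := emb) (hF.restrictScalars (𝕜 := ℝ)) h1)

/-- The holomorphic extension of the real part of `c` on `ℝⁿ`. -/
noncomputable def realify (c : (Fin n → ℂ) → ℂ) : (Fin n → ℂ) → ℂ := fun z =>
  (c z + (starRingEnd ℂ) (c (cj z))) / 2

theorem realify_emb (c : (Fin n → ℂ) → ℂ) (x : Fin n → ℝ) :
    realify c (emb x) = ((c (emb x)).re : ℂ) := by
  rw [realify, cj_emb, add_conj]; push_cast; ring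

theorem analyticAt_realify {c : (Fin n → ℂ) → ℂ} {z : Fin n → ℂ} (h1 : AnalyticAt ℂ c z)
    (h2 : AnalyticAt ℂ c (cj z)) : AnalyticAt ℂ (realify c) z :=
  (h1.add (analyticAt_cj h2)).div_const

/-- The real cube `[-k, k]ⁿ`, inside `ℂⁿ`. -/
def KC (n : ℕ) (k : ℝ) : Set (Fin n → ℂ) := {z | ∀ i, |(z i).re| ≤ k ∧ (z i).im = 0}

/-- The tube over the cube `[-k, k]ⁿ`. -/
def TC (n : ℕ) (k : ℝ) : Set (Fin n → ℂ) := {z | ∀ i, |(z i).re| ≤ k}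

theorem emb_mem_KC {k : ℝ} {x : Fin n → ℝ} : emb x ∈ KC n k ↔ ∀ i, |x i| ≤ k := by
  simp [KC, emb]

theorem emb_mem_TC {k : ℝ} {x : Fin n → ℝ} : emb x ∈ TC n k ↔ ∀ i, |x i| ≤ k := by
  simp [TC, emb]

theorem KC_eq {k : ℝ} {z : Fin n → ℂ} (hz : z ∈ KC n k) : ∃ x : Fin n → ℝ, emb x = z :=
  ⟨fun i => (z i).re, funext fun i => Complex.ext (by simp [emb]) (by simp [emb, (hz i).2])⟩

theorem cj_mem_TC {k : ℝ} {z : Fin n → ℂ} (hz : z ∈ TC n k) : cj z ∈ TC n k := fun i => by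
  simpa [cj] using hz i

/-- `g` is, at the real points of `P`, a combination of the functions in `G` with coefficients
holomorphic on `P`. -/
def Comb (G : Finset ((Fin n → ℝ) → ℝ)) (P : Set (Fin n → ℂ)) (g : (Fin n → ℝ) → ℂ) : Prop :=
  ∃ c : ((Fin n → ℝ) → ℝ) → (Fin n → ℂ) → ℂ, (∀ b, ∀ z ∈ P, AnalyticAt ℂ (c b) z) ∧
    ∀ x, emb x ∈ P → g x = ∑ b ∈ G, c b (emb x) * b x

theorem Comb.of_mem {G : Finset ((Fin n → ℝ) → ℝ)} {P : Set (Fin n → ℂ)} {b : (Fin n → ℝ) → ℝ}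
    (hb : b ∈ G) : Comb G P fun x => b x := by
  classical
  exact ⟨fun b' _ => if b' = b then 1 else 0, fun _ _ _ => analyticAt_const, fun x _ => by simp [hb]⟩

theorem Comb.mono {G : Finset ((Fin n → ℝ) → ℝ)} {P Q : Set (Fin n → ℂ)} {g : (Fin n → ℝ) → ℂ}
    (h : Comb G Q g) (hPQ : P ⊆ Q) : Comb G P g := by
  obtain ⟨c, h1, h2⟩ := h
  exact ⟨c, fun b z hz => h1 b z (hPQ hz), fun x hx => h2 x (hPQ hx)⟩

theorem Comb.congr {G : Finset ((Fin n → ℝ) → ℝ)} {P : Set (Fin n → ℂ)} {g g' : (Fin n → ℝ) → ℂ}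
    (h : Comb G P g) (hg : ∀ x, emb x ∈ P → g' x = g x) : Comb G P g' := by
  obtain ⟨c, h1, h2⟩ := h
  exact ⟨c, h1, fun x hx => by rw [hg x hx, h2 x hx]⟩

theorem Comb.add {G : Finset ((Fin n → ℝ) → ℝ)} {P : Set (Fin n → ℂ)} {g g' : (Fin n → ℝ) → ℂ}
    (h : Comb G P g) (h' : Comb G P g') : Comb G P fun x => g x + g' x := by
  obtain ⟨c, h1, h2⟩ := h
  obtain ⟨c', h1', h2'⟩ := h'
  refine ⟨fun b z => c b z + c' b z, fun b z hz => (h1 b z hz).add (h1' b z hz), fun x hx => ?_⟩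
  simp only [h2 x hx, h2' x hx, add_mul, Finset.sum_add_distrib]

theorem Comb.mul {G : Finset ((Fin n → ℝ) → ℝ)} {P : Set (Fin n → ℂ)} {g : (Fin n → ℝ) → ℂ}
    (h : Comb G P g) {u : (Fin n → ℂ) → ℂ} (hu : ∀ z ∈ P, AnalyticAt ℂ u z) :
    Comb G P fun x => u (emb x) * g x := by
  obtain ⟨c, h1, h2⟩ := h
  refine ⟨fun b z => u z * c b z, fun b z hz => (hu z hz).mul (h1 b z hz), fun x hx => ?_⟩
  simp only [h2 x hx, Finset.mul_sum, mul_assoc]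

theorem Comb.sum {ι : Type*} {G : Finset ((Fin n → ℝ) → ℝ)} {P : Set (Fin n → ℂ)} (s : Finset ι)
    {g : ι → (Fin n → ℝ) → ℂ} (h : ∀ i ∈ s, Comb G P (g i)) : Comb G P fun x => ∑ i ∈ s, g i x := by
  classical
  induction s using Finset.induction_on with
  | empty =>
    exact ⟨fun _ _ => 0, fun _ _ _ => analyticAt_const, fun x _ => by simp⟩
  | insert i s hi IH =>
    simp only [Finset.sum_insert hi]
    exact (h i (Finset.mem_insert_self _ _)).add (IH fun j hj => h j (Finset.mem_insert_of_mem hj))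

theorem Comb.trans {G G' : Finset ((Fin n → ℝ) → ℝ)} {P : Set (Fin n → ℂ)} {g : (Fin n → ℝ) → ℂ}
    (h : Comb G' P g) (hG : ∀ b ∈ G', Comb G P fun x => b x) : Comb G P g := by
  obtain ⟨c, h1, h2⟩ := h
  exact (Comb.sum G' fun b hb => (hG b hb).mul (h1 b)).congr h2

/-- The inductive step: a finite set generating over `[-(k+1), k+1]ⁿ` is enlarged to one generating
over `[-(k+2), k+2]ⁿ` whose members are combinations of the old ones with coefficients holomorphic
on the whole tube over `[-k, k]ⁿ`. -/
theorem gen_step {S : Set ((Fin n → ℝ) → ℝ)} (hS : ∀ h ∈ S, ∀ x, AnalyticAt ℝ h x)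
    (hadd : ∀ g ∈ S, ∀ h ∈ S, (fun x => g x + h x) ∈ S)
    (hmul : ∀ u : (Fin n → ℝ) → ℝ, (∀ x, AnalyticAt ℝ u x) → ∀ h ∈ S, (fun x => u x * h x) ∈ S)
    {k : ℝ} (hk : 0 ≤ k) {G : Finset ((Fin n → ℝ) → ℝ)} (hGS : ∀ b ∈ G, b ∈ S)
    (hG : ∀ h ∈ S, Comb G (KC n (k + 1)) fun x => h x) :
    ∃ G' : Finset ((Fin n → ℝ) → ℝ), G ⊆ G' ∧ (∀ b ∈ G', b ∈ S) ∧
      (∀ h ∈ S, Comb G' (KC n (k + 2)) fun x => h x) ∧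
      ∀ b ∈ G', Comb G (TC n k) fun x => b x := by
  classical
  obtain ⟨F, hFS, hF⟩ := finite_gen hS (k := k + 2) (by linarith)
  have hspl : ∀ e : (Fin n → ℝ) → ℝ, ∃ v w : ((Fin n → ℝ) → ℝ) → (Fin n → ℂ) → ℂ, e ∈ F →
      (∀ b x, AnalyticAt ℂ (v b) (emb x)) ∧ (∀ b, ∀ z ∈ TC n k, AnalyticAt ℂ (w b) z) ∧
      ∀ x, (∀ i, |x i| ≤ k) →
        (e x : ℂ) = ∑ b ∈ G, v b (emb x) * b x + ∑ b ∈ G, w b (emb x) * b x := by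
    intro e
    by_cases he : e ∈ F
    · obtain ⟨c, hc, hce⟩ := hG e (hFS e he)
      choose v w hv hw hvw using fun b => splitting hk (by linarith : k < k + 1)
        (c := c b) fun x hx => hc b _ (emb_mem_KC.2 hx)
      refine ⟨v, w, fun _ => ⟨hv, hw, fun x hx => ?_⟩⟩
      beta_reduce at hce
      rw [hce x (emb_mem_KC.2 fun i => (hx i).trans (by linarith)), ← Finset.sum_add_distrib]
      exact Finset.sum_congr rfl fun b _ => by rw [hvw b x hx, add_mul]
    · exact ⟨fun _ _ => 0, fun _ _ => 0, fun h => absurd h he⟩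
  choose v w hvw using hspl
  set new : ((Fin n → ℝ) → ℝ) → (Fin n → ℝ) → ℝ := fun e x =>
    e x + ∑ b ∈ G, (-(v e b (emb x)).re) * b x with hnew
  have hsumS : ∀ e ∈ F, ∀ s ⊆ G, (fun x => e x + ∑ b ∈ s, (-(v e b (emb x)).re) * b x) ∈ S := by
    intro e he s
    induction s using Finset.induction_on with
    | empty => intro _; simpa using hFS e he
    | insert b s hb IH =>
      intro hs
      have h1 := hadd _ (IH ((Finset.subset_insert _ _).trans hs)) _
        (hmul (fun x => -(v e b (emb x)).re) (fun x => (analyticAt_reEmb ((hvw e he).1 b x)).neg) b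
          (hGS b (hs (Finset.mem_insert_self _ _))))
      refine (congrArg (· ∈ S) (funext fun x => ?_)).mp h1
      rw [Finset.sum_insert hb]; ring
  refine ⟨G ∪ F.image new, Finset.subset_union_left, fun b hb => ?_, fun h hh => ?_, fun b hb => ?_⟩
  · rcases Finset.mem_union.1 hb with hb | hb
    · exact hGS b hb
    · obtain ⟨e, he, rfl⟩ := Finset.mem_image.1 hb
      exact hsumS e he G subset_rfl
  · obtain ⟨c, hc, hce⟩ := hF h hh
    have h1 : Comb F (KC n (k + 2)) fun x => h x := by
      refine ⟨c, fun b z hz => ?_, fun x hx => hce x (emb_mem_KC.1 hx)⟩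
      obtain ⟨x, rfl⟩ := KC_eq hz
      exact hc b x (emb_mem_KC.1 hz)
    refine h1.trans fun e he => ?_
    have h2 : Comb (G ∪ F.image new) (KC n (k + 2)) fun x => ((new e x : ℝ) : ℂ) +
        ∑ b ∈ G, realify (v e b) (emb x) * b x := by
      refine (Comb.of_mem (Finset.mem_union_right _ (Finset.mem_image_of_mem new he))).add
        (Comb.sum G fun b hb => (Comb.of_mem (Finset.mem_union_left _ hb)).mul fun z hz => ?_)
      obtain ⟨x, rfl⟩ := KC_eq hz
      exact analyticAt_realify ((hvw e he).1 b x) (by rw [cj_emb]; exact (hvw e he).1 b x)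
    refine h2.congr fun x _ => ?_
    simp only [hnew, realify_emb]
    push_cast
    simp [Finset.sum_neg_distrib]
  · rcases Finset.mem_union.1 hb with hb | hb
    · exact Comb.of_mem hb
    · obtain ⟨e, he, rfl⟩ := Finset.mem_image.1 hb
      obtain ⟨h1, h2, h3⟩ := hvw e he
      refine ⟨fun b => realify (w e b), fun b z hz =>
        analyticAt_realify (h2 b z hz) (h2 b _ (cj_mem_TC hz)), fun x hx => ?_⟩
      have h4 := congrArg Complex.re (h3 x (emb_mem_TC.1 hx))
      simp only [ofReal_re, add_re, re_sum, mul_re, ofReal_im, mul_zero, sub_zero] at h4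
      simp only [hnew, realify_emb]
      rw [h4]
      push_cast
      simp [Finset.sum_neg_distrib]
end

/-! ### The sequence of generators, and fast-growing analytic functions -/

section
variable {n : ℕ}

/-- An increasing sequence of finite sets of generators over growing cubes, such that all later
generators are combinations of `G j` with coefficients holomorphic on the tube over `[-j, j]ⁿ`, a
set that does not depend on the later generator. -/
theorem gen_seq {S : Set ((Fin n → ℝ) → ℝ)} (hS : ∀ h ∈ S, ∀ x, AnalyticAt ℝ h x)
    (hadd : ∀ g ∈ S, ∀ h ∈ S, (fun x => g x + h x) ∈ S)
    (hmul : ∀ u : (Fin n → ℝ) → ℝ, (∀ x, AnalyticAt ℝ u x) → ∀ h ∈ S, (fun x => u x * h x) ∈ S) :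
    ∃ G : ℕ → Finset ((Fin n → ℝ) → ℝ), Monotone G ∧ (∀ k, ∀ b ∈ G k, b ∈ S) ∧
      (∀ k : ℕ, ∀ h ∈ S, Comb (G k) (KC n (k + 1)) fun x => h x) ∧
      ∀ j k : ℕ, j ≤ k → ∀ b ∈ G k, Comb (G j) (TC n j) fun x => b x := by
  classical
  let P : ℕ → Finset ((Fin n → ℝ) → ℝ) → Prop := fun k G => (∀ b ∈ G, b ∈ S) ∧
    ∀ h ∈ S, Comb G (KC n (k + 1)) fun x => h x
  have h0 : ∃ G, P 0 G := by
    obtain ⟨F, hFS, hF⟩ := finite_gen hS (k := 1) zero_le_one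
    refine ⟨F, hFS, fun h hh => ?_⟩
    obtain ⟨c, hc, hce⟩ := hF h hh
    refine ⟨c, fun b z hz => ?_, fun x hx => hce x (by simpa using emb_mem_KC.1 hx)⟩
    obtain ⟨x, rfl⟩ := KC_eq hz
    exact hc b x (by simpa using emb_mem_KC.1 hz)
  have hs : ∀ (k : ℕ) (G : {G // P k G}), ∃ G' : {G' // P (k + 1) G'}, G.1 ⊆ G'.1 ∧
      ∀ b ∈ G'.1, Comb G.1 (TC n k) fun x => b x := by
    rintro k ⟨G, hG1, hG2⟩
    obtain ⟨G', h1, h2, h3, h4⟩ := gen_step hS hadd hmul (Nat.cast_nonneg k) hG1 hG2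
    refine ⟨⟨G', h2, fun h hh => ?_⟩, h1, h4⟩
    have : ((k + 1 : ℕ) : ℝ) + 1 = k + 2 := by push_cast; ring
    rw [this]
    exact h3 h hh
  choose next hn1 hn2 using hs
  let G : (k : ℕ) → {G // P k G} := fun k => Nat.rec ⟨h0.choose, h0.choose_spec⟩ next k
  refine ⟨fun k => (G k).1, monotone_nat_of_le_succ fun k => hn1 k (G k), fun k => (G k).2.1,
    fun k => (G k).2.2, fun j k hjk => ?_⟩
  induction k, hjk using Nat.le_induction with
  | base => exact fun b hb => Comb.of_mem hb
  | succ k hjk IH =>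
    intro b hb
    have hb' : b ∈ (next k (G k)).1 := hb
    refine ((hn2 k (G k) b hb').mono fun z hz i => (hz i).trans ?_).trans IH
    exact_mod_cast hjk

/-- Analytic functions on `ℝⁿ` can grow arbitrarily fast. -/
theorem growth (C : ℕ → ℝ) : ∃ u : (Fin n → ℝ) → ℝ, (∀ x, AnalyticAt ℝ u x) ∧ (∀ x, 0 < u x) ∧
    ∀ (j : ℕ) (x : Fin n → ℝ), (j : ℝ) ≤ ∑ i, x i ^ 2 → C j ≤ u x := by
  have hm : ∀ j : ℕ, ∃ m : ℕ, |C (j + 1)| * (1 / 2 : ℝ) ^ m ≤ (1 / 2) ^ j := by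
    intro j
    have h1 : Tendsto (fun m : ℕ => |C (j + 1)| * (1 / 2 : ℝ) ^ m) atTop (𝓝 (|C (j + 1)| * 0)) :=
      (tendsto_pow_atTop_nhds_zero_of_lt_one (by norm_num) (by norm_num)).const_mul _
    rw [mul_zero] at h1
    exact (h1.eventually_le_const (by positivity : (0 : ℝ) < (1 / 2) ^ j)).exists
  choose m hm using hm
  have hsum : ∀ r : ℝ, 0 ≤ r → Summable fun j : ℕ => |C (j + 1)| * (r / (j + 1)) ^ m j := by
    intro r hr
    refine Summable.of_norm_bounded_eventually_nat (g := fun j => (1 / 2 : ℝ) ^ j)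
      (summable_geometric_of_lt_one (by norm_num) (by norm_num)) ?_
    obtain ⟨N, hN⟩ := exists_nat_ge (2 * r)
    filter_upwards [eventually_ge_atTop N] with j hj
    have hj' : (N : ℝ) ≤ j := by exact_mod_cast hj
    have hpos : (0 : ℝ) < j + 1 := by positivity
    rw [Real.norm_of_nonneg (by positivity)]
    refine le_trans (mul_le_mul_of_nonneg_left (pow_le_pow_left₀ (by positivity) ?_ _)
      (abs_nonneg _)) (hm j)
    rw [div_le_iff₀ hpos]
    linarith
  set F : ℕ → (Fin n → ℂ) → ℂ := fun j z =>
    (|C (j + 1)| : ℝ) * ((∑ i, z i ^ 2) / ((j + 1 : ℝ) : ℂ)) ^ m j with hF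
  have hq : ∀ z, AnalyticAt ℂ (fun z : Fin n → ℂ => ∑ i, z i ^ 2) z := fun z =>
    Finset.analyticAt_fun_sum _ fun i _ =>
      ((ContinuousLinearMap.proj (R := ℂ) (φ := fun _ : Fin n => ℂ) i).analyticAt z).pow 2
  have hFan : ∀ z, AnalyticAt ℂ (fun z => ∑' j, F j z) z := by
    intro z
    set r := ‖∑ i, z i ^ 2‖ + 1 with hr
    have hU : IsOpen {y : Fin n → ℂ | ‖∑ i, y i ^ 2‖ < r} :=
      isOpen_lt (by fun_prop) continuous_const
    refine analyticOnNhd_tsum hU (hsum r (by positivity)) (fun j y _ => ?_) (fun j y hy => ?_) z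
      (by simp only [Set.mem_ofPred_eq, hr]; linarith)
    · exact analyticAt_const.mul ((hq y).div_const.pow _)
    · have hpos : (0 : ℝ) < j + 1 := by positivity
      rw [hF]
      simp only [norm_mul, norm_pow, norm_div, norm_real, Real.norm_eq_abs, abs_abs,
        abs_of_pos hpos]
      gcongr
      exact le_of_lt hy
  have hreal : ∀ (x : Fin n → ℝ) (j : ℕ), F j (emb x) =
      ((|C (j + 1)| * ((∑ i, x i ^ 2) / (j + 1)) ^ m j : ℝ) : ℂ) := by
    intro x j
    simp only [hF, emb]
    push_cast
    rfl
  have hval : ∀ x : Fin n → ℝ, (((1 + |C 0| : ℝ) : ℂ) + ∑' j, F j (emb x)).re =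
      1 + |C 0| + ∑' j : ℕ, |C (j + 1)| * ((∑ i, x i ^ 2) / (j + 1)) ^ m j := by
    intro x
    simp only [hreal, ← ofReal_tsum, add_re, ofReal_re]
  have hnn : ∀ (x : Fin n → ℝ) (j : ℕ), 0 ≤ |C (j + 1)| * ((∑ i, x i ^ 2) / (j + 1)) ^ m j := by
    intro x j
    have : 0 ≤ ∑ i, x i ^ 2 := Finset.sum_nonneg fun i _ => sq_nonneg _
    positivity
  refine ⟨fun x => (((1 + |C 0| : ℝ) : ℂ) + ∑' j, F j (emb x)).re, fun x => ?_, fun x => ?_,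
    fun j x hx => ?_⟩
  · exact analyticAt_reEmb (F := fun z => ((1 + |C 0| : ℝ) : ℂ) + ∑' j, F j z)
      (analyticAt_const.add (hFan _))
  · simp only [hval]
    have : (0 : ℝ) ≤ ∑' j : ℕ, |C (j + 1)| * ((∑ i, x i ^ 2) / (j + 1)) ^ m j :=
      tsum_nonneg (hnn x)
    positivity
  · simp only [hval]
    have h0 : (0 : ℝ) ≤ ∑' j : ℕ, |C (j + 1)| * ((∑ i, x i ^ 2) / (j + 1)) ^ m j :=
      tsum_nonneg (hnn x)
    cases j with
    | zero => linarith [le_abs_self (C 0)]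
    | succ j =>
      have h1 := (hsum (∑ i, x i ^ 2) (Finset.sum_nonneg fun i _ => sq_nonneg _)).le_tsum j
        fun l _ => hnn x l
      have hpos : (0 : ℝ) < j + 1 := by positivity
      have h2 : 1 ≤ ((∑ i, x i ^ 2) / (j + 1)) ^ m j := by
        refine one_le_pow₀ ((one_le_div hpos).2 ?_)
        exact_mod_cast hx
      have h3 := mul_le_mul_of_nonneg_left h2 (abs_nonneg (C (j + 1)))
      linarith [le_abs_self (C (j + 1)), abs_nonneg (C 0)]
end

/-! ### The weighted sum of squares -/

section
variable {n : ℕ}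

/-- The part of the tube over `[-k, k]ⁿ` with imaginary parts at most `1`. -/
def CC (n : ℕ) (k : ℝ) : Set (Fin n → ℂ) := {z | ∀ i, |(z i).re| ≤ k ∧ |(z i).im| ≤ 1}

theorem isCompact_CC (k : ℝ) : IsCompact (CC n k) := by
  have : CC n k = Set.pi univ fun _ : Fin n => Icc (-k) k ×ℂ Icc (-1) 1 := by
    ext z
    simp [CC, Set.mem_pi, mem_reProdIm, abs_le]
  rw [this]
  exact isCompact_univ_pi fun _ => isCompact_Icc.reProdIm isCompact_Icc

/-- If the members of `G'` are combinations of `G` over a tube, their sum of squares is a quadratic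
form in `G` with holomorphic coefficients, bounded on the compact part `CC n k` of the tube. -/
theorem quad_comb {G G' : Finset ((Fin n → ℝ) → ℝ)} {k : ℝ}
    (h : ∀ b ∈ G', Comb G (TC n k) fun x => b x) :
    ∃ (H : ((Fin n → ℝ) → ℝ) → ((Fin n → ℝ) → ℝ) → (Fin n → ℂ) → ℂ) (M : ℝ), 0 ≤ M ∧
      (∀ b b', ∀ z ∈ TC n k, AnalyticAt ℂ (H b b') z) ∧
      (∀ b ∈ G, ∀ b' ∈ G, ∀ z ∈ CC n k, ‖H b b' z‖ ≤ M) ∧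
      ∀ x, emb x ∈ TC n k → ((∑ b ∈ G', b x ^ 2 : ℝ) : ℂ) =
        ∑ b ∈ G, ∑ b' ∈ G, H b b' (emb x) * (b x * b' x) := by
  classical
  have h' : ∀ b : (Fin n → ℝ) → ℝ, ∃ c : ((Fin n → ℝ) → ℝ) → (Fin n → ℂ) → ℂ,
      (∀ b', ∀ z ∈ TC n k, AnalyticAt ℂ (c b') z) ∧
      (b ∈ G' → ∀ x, emb x ∈ TC n k → (b x : ℂ) = ∑ b' ∈ G, c b' (emb x) * b' x) := by
    intro b
    by_cases hb : b ∈ G'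
    · obtain ⟨c, h1, h2⟩ := h b hb
      exact ⟨c, h1, fun _ => h2⟩
    · exact ⟨fun _ _ => 0, fun _ _ _ => analyticAt_const, fun h => absurd h hb⟩
  choose c hc hce using h'
  set H : ((Fin n → ℝ) → ℝ) → ((Fin n → ℝ) → ℝ) → (Fin n → ℂ) → ℂ := fun b b' z =>
    ∑ e ∈ G', c e b z * c e b' z with hH
  have hHan : ∀ b b', ∀ z ∈ TC n k, AnalyticAt ℂ (H b b') z := fun b b' z hz =>
    Finset.analyticAt_fun_sum _ fun e _ => (hc e b z hz).mul (hc e b' z hz)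
  have hbd : ∀ b b', ∃ M : ℝ, 0 ≤ M ∧ ∀ z ∈ CC n k, ‖H b b' z‖ ≤ M := by
    intro b b'
    obtain ⟨M, hM⟩ := (isCompact_CC (n := n) k).exists_bound_of_continuousOn (f := H b b')
      fun z hz => (hHan b b' z fun i => (hz i).1).continuousAt.continuousWithinAt
    exact ⟨max M 0, le_max_right _ _, fun z hz => (hM z hz).trans (le_max_left _ _)⟩
  choose M hM0 hM using hbd
  refine ⟨H, ∑ b ∈ G, ∑ b' ∈ G, M b b', Finset.sum_nonneg fun _ _ => Finset.sum_nonneg fun _ _ =>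
    hM0 _ _, hHan, fun b hb b' hb' z hz => (hM b b' z hz).trans ?_, fun x hx => ?_⟩
  · exact (Finset.single_le_sum (f := M b) (fun _ _ => hM0 _ _) hb').trans
      (Finset.single_le_sum (f := fun b => ∑ b' ∈ G, M b b')
        (fun _ _ => Finset.sum_nonneg fun _ _ => hM0 _ _) hb)
  · push_cast
    have h1 : ∀ e ∈ G', (e x : ℂ) ^ 2 =
        ∑ b ∈ G, ∑ b' ∈ G, c e b (emb x) * c e b' (emb x) * (b x * b' x) := by
      intro e he
      rw [pow_two, hce e he x hx, Finset.sum_mul_sum]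
      exact Finset.sum_congr rfl fun b _ => Finset.sum_congr rfl fun b' _ => by ring
    rw [Finset.sum_congr rfl h1, Finset.sum_comm]
    refine Finset.sum_congr rfl fun b _ => ?_
    rw [Finset.sum_comm]
    refine Finset.sum_congr rfl fun b' _ => ?_
    rw [hH, Finset.sum_mul]

/-- With rapidly decreasing weights, the sum of all squares of all generators converges, and is
locally a combination of finitely many of them. -/
theorem exists_weights {G : ℕ → Finset ((Fin n → ℝ) → ℝ)} (hmono : Monotone G)
    (han : ∀ k, ∀ b ∈ G k, ∀ x, AnalyticAt ℝ b x)
    (hdom : ∀ j k : ℕ, j ≤ k → ∀ b ∈ G k, Comb (G j) (TC n j) fun x => b x) :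
    ∃ ε : ℕ → ℝ, (∀ k, 0 < ε k) ∧ (∀ x, Summable fun k => ε k * ∑ b ∈ G k, b x ^ 2) ∧
      ∀ j : ℕ, ∃ c : ((Fin n → ℝ) → ℝ) → (Fin n → ℝ) → ℝ,
        (∀ b ∈ G j, ∀ x, (∀ i, |x i| < (j : ℝ)) → AnalyticAt ℝ (c b) x) ∧
        ∀ x, (∀ i, |x i| < (j : ℝ)) →
          ∑' k, ε k * ∑ b ∈ G k, b x ^ 2 = ∑ b ∈ G j, c b x * b x := by
  classical
  have h' : ∀ j k : ℕ, ∃ (H : ((Fin n → ℝ) → ℝ) → ((Fin n → ℝ) → ℝ) → (Fin n → ℂ) → ℂ) (M : ℝ),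
      0 ≤ M ∧ (j ≤ k → (∀ b b', ∀ z ∈ TC n j, AnalyticAt ℂ (H b b') z) ∧
      (∀ b ∈ G j, ∀ b' ∈ G j, ∀ z ∈ CC n j, ‖H b b' z‖ ≤ M) ∧
      ∀ x, emb x ∈ TC n j → ((∑ b ∈ G k, b x ^ 2 : ℝ) : ℂ) =
        ∑ b ∈ G j, ∑ b' ∈ G j, H b b' (emb x) * (b x * b' x)) := by
    intro j k
    by_cases hjk : j ≤ k
    · obtain ⟨H, M, h1, h2⟩ := quad_comb (hdom j k hjk)
      exact ⟨H, M, h1, fun _ => h2⟩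
    · exact ⟨fun _ _ _ => 0, 0, le_rfl, fun h => absurd h hjk⟩
  choose H M hM0 hH using h'
  set ε : ℕ → ℝ := fun k => (1 / 2) ^ k / (1 + ∑ j ∈ Finset.range (k + 1), M j k) with hε
  have hden : ∀ k, 0 < 1 + ∑ j ∈ Finset.range (k + 1), M j k := fun k =>
    add_pos_of_pos_of_nonneg one_pos (Finset.sum_nonneg fun _ _ => hM0 _ _)
  have hεpos : ∀ k, 0 < ε k := fun k => div_pos (by positivity) (hden k)
  have hεM : ∀ j k, j ≤ k → ε k * M j k ≤ (1 / 2) ^ k := by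
    intro j k hjk
    have h1 : M j k ≤ 1 + ∑ j ∈ Finset.range (k + 1), M j k := by
      have := Finset.single_le_sum (f := fun j => M j k) (fun _ _ => hM0 _ _)
        (Finset.mem_range.2 (Nat.lt_succ_of_le hjk))
      linarith
    rw [hε]
    beta_reduce
    rw [div_mul_eq_mul_div, div_le_iff₀ (hden k)]
    exact mul_le_mul_of_nonneg_left h1 (by positivity)
  have hgeo : ∀ j : ℕ, Summable fun k : ℕ => (1 / 2 : ℝ) ^ (k + j) := fun j =>
    (summable_nat_add_iff j).2 (summable_geometric_of_lt_one (by norm_num) (by norm_num))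
  have hterm : ∀ (j k : ℕ), ∀ b ∈ G j, ∀ b' ∈ G j, ∀ z ∈ CC n j,
      ‖(ε (k + j) : ℂ) * H j (k + j) b b' z‖ ≤ (1 / 2) ^ (k + j) := by
    intro j k b hb b' hb' z hz
    rw [norm_mul, norm_real, Real.norm_of_nonneg (hεpos _).le]
    exact (mul_le_mul_of_nonneg_left ((hH j (k + j) (Nat.le_add_left _ _)).2.1 b hb b' hb' z hz)
      (hεpos _).le).trans (hεM j (k + j) (Nat.le_add_left _ _))
  set Φ : ℕ → ((Fin n → ℝ) → ℝ) → ((Fin n → ℝ) → ℝ) → (Fin n → ℂ) → ℂ := fun j b b' z =>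
    ∑' k, (ε (k + j) : ℂ) * H j (k + j) b b' z with hΦ
  have hembCC : ∀ (j : ℕ) (x : Fin n → ℝ), (∀ i, |x i| ≤ j) → emb x ∈ CC n j := fun j x hx i => by
    simpa [emb] using hx i
  have hΦan : ∀ j : ℕ, ∀ b ∈ G j, ∀ b' ∈ G j, ∀ x : Fin n → ℝ, (∀ i, |x i| < j) →
      AnalyticAt ℂ (Φ j b b') (emb x) := by
    intro j b hb b' hb' x hx
    have hU : IsOpen {z : Fin n → ℂ | ∀ i, |(z i).re| < j ∧ |(z i).im| < 1} := by
      rw [Set.ofPred_forall]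
      refine isOpen_iInter_of_finite fun i => IsOpen.and ?_ ?_
      · exact isOpen_lt (by fun_prop) continuous_const
      · exact isOpen_lt (by fun_prop) continuous_const
    refine analyticOnNhd_tsum hU (hgeo j) (fun k z hz => ?_) (fun k z hz => ?_) (emb x)
      (fun i => by simpa [emb] using hx i)
    · exact analyticAt_const.mul ((hH j (k + j) (Nat.le_add_left _ _)).1 b b' z fun i =>
        (hz i).1.le)
    · exact hterm j k b hb b' hb' z fun i => ⟨(hz i).1.le, (hz i).2.le⟩
  have hsum : ∀ (j : ℕ) (x : Fin n → ℝ), (∀ i, |x i| ≤ j) →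
      HasSum (fun k => ε (k + j) * ∑ b ∈ G (k + j), b x ^ 2)
        (∑ b ∈ G j, ∑ b' ∈ G j, (Φ j b b' (emb x)).re * (b x * b' x)) := by
    intro j x hx
    have h1 : HasSum (fun k => ∑ b ∈ G j, ∑ b' ∈ G j,
        ((ε (k + j) : ℂ) * H j (k + j) b b' (emb x)) * (b x * b' x))
        (∑ b ∈ G j, ∑ b' ∈ G j, Φ j b b' (emb x) * (b x * b' x)) := by
      refine hasSum_sum fun b hb => hasSum_sum fun b' hb' => HasSum.mul_right _ ?_
      exact (Summable.of_norm_bounded (hgeo j) fun k =>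
        hterm j k b hb b' hb' _ (hembCC j x hx)).hasSum
    have h2 := Complex.reCLM.hasSum h1
    simp only [reCLM_apply] at h2
    convert h2 using 1
    · funext k
      have h3 := (hH j (k + j) (Nat.le_add_left _ _)).2.2 x (emb_mem_TC.2 hx)
      have h4 : ∑ b ∈ G j, ∑ b' ∈ G j, ((ε (k + j) : ℂ) * H j (k + j) b b' (emb x)) *
          (b x * b' x) = ((ε (k + j) * ∑ b ∈ G (k + j), b x ^ 2 : ℝ) : ℂ) := by
        rw [ofReal_mul, h3, Finset.mul_sum]
        refine Finset.sum_congr rfl fun b _ => ?_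
        rw [Finset.mul_sum]
        exact Finset.sum_congr rfl fun b' _ => by ring
      rw [h4, ofReal_re]
    · rw [re_sum]
      refine Finset.sum_congr rfl fun b _ => ?_
      rw [re_sum]
      refine Finset.sum_congr rfl fun b' _ => ?_
      rw [← ofReal_mul, re_mul_ofReal]
  have hsummable : ∀ x, Summable fun k => ε k * ∑ b ∈ G k, b x ^ 2 := by
    intro x
    obtain ⟨j, hj⟩ := exists_nat_ge ‖x‖
    exact (summable_nat_add_iff j).1 (hsum j x fun i => (norm_le_pi_norm x i).trans hj).summable
  refine ⟨ε, hεpos, hsummable, fun j => ⟨fun b x =>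
    (∑ k ∈ Finset.range j, if b ∈ G k then ε k * b x else 0) +
      ∑ b' ∈ G j, (Φ j b' b (emb x)).re * b' x, fun b hb x hx => ?_, fun x hx => ?_⟩⟩
  · refine AnalyticAt.add (Finset.analyticAt_fun_sum _ fun k _ => ?_)
      (Finset.analyticAt_fun_sum _ fun b' hb' => ?_)
    · by_cases h : b ∈ G k
      · simp only [h, if_true]; exact analyticAt_const.mul (han j b hb x)
      · simp only [h, if_false]; exact analyticAt_const
    · exact (analyticAt_reEmb (hΦan j b' hb' b hb x hx)).mul (han j b' hb' x)
  · rw [← (hsummable x).sum_add_tsum_nat_add j, (hsum j x fun i => (hx i).le).tsum_eq]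
    simp only [add_mul, Finset.sum_add_distrib]
    congr 1
    · simp only [Finset.sum_mul]
      rw [Finset.sum_comm]
      refine Finset.sum_congr rfl fun k hk => ?_
      have hsub : G k ⊆ G j := hmono (Finset.mem_range.1 hk).le
      rw [Finset.mul_sum]
      simp only [ite_mul, zero_mul]
      rw [Finset.sum_ite_mem, Finset.inter_eq_right.2 hsub]
      exact Finset.sum_congr rfl fun b _ => by ring
    · rw [Finset.sum_comm]
      refine Finset.sum_congr rfl fun b _ => ?_
      rw [Finset.sum_mul]
      exact Finset.sum_congr rfl fun b' _ => by ring
end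

/-! ### Domination by the sum of squares -/

section
variable {n : ℕ}

/-- Local domination of squares by multiples of `f` passes to combinations with continuous
coefficients. -/
theorem sq_bound_sum {f : (Fin n → ℝ) → ℝ} {p : Fin n → ℝ} {ι : Type*} (s : Finset ι)
    {c A : ι → (Fin n → ℝ) → ℝ} (hc : ∀ i ∈ s, ContinuousAt (c i) p)
    (hA : ∀ i ∈ s, ∃ K : ℝ, 0 ≤ K ∧ ∀ᶠ x in 𝓝 p, A i x ^ 2 ≤ K * f x) :
    ∃ K : ℝ, 0 ≤ K ∧ ∀ᶠ x in 𝓝 p, (∑ i ∈ s, c i x * A i x) ^ 2 ≤ K * f x := by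
  classical
  have h1 : ∀ i ∈ s, ∃ K : ℝ, 0 ≤ K ∧ ∀ᶠ x in 𝓝 p, (c i x * A i x) ^ 2 ≤ K * f x := by
    intro i hi
    obtain ⟨K, hK, hev⟩ := hA i hi
    refine ⟨(c i p ^ 2 + 1) * K, by positivity, ?_⟩
    have h2 : ∀ᶠ x in 𝓝 p, c i x ^ 2 < c i p ^ 2 + 1 :=
      ((hc i hi).pow 2).eventually_lt continuousAt_const
        (show c i p ^ 2 < c i p ^ 2 + 1 by linarith)
    filter_upwards [hev, h2] with x hx1 hx2
    rw [mul_pow, mul_assoc]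
    exact mul_le_mul hx2.le hx1 (sq_nonneg _) (by positivity)
  choose! K hK hev using h1
  refine ⟨s.card * ∑ i ∈ s, K i, mul_nonneg (by positivity) (Finset.sum_nonneg hK), ?_⟩
  filter_upwards [(Finset.eventually_all s).2 hev] with x hx
  refine sq_sum_le_card_mul_sum_sq.trans ?_
  rw [mul_assoc, Finset.sum_mul]
  exact mul_le_mul_of_nonneg_left (Finset.sum_le_sum hx) (by positivity)

/-- Local domination by a nonnegative function upgrades to a global domination, up to a positive
analytic factor. -/
theorem global_bound {f g : (Fin n → ℝ) → ℝ} (hf : ∀ x, 0 ≤ f x)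
    (hloc : ∀ p, ∃ K : ℝ, 0 ≤ K ∧ ∀ᶠ x in 𝓝 p, g x ^ 2 ≤ K * f x) :
    ∃ u : (Fin n → ℝ) → ℝ, (∀ x, AnalyticAt ℝ u x) ∧ (∀ x, 0 < u x) ∧
      ∀ x, g x ^ 2 ≤ f x * u x := by
  have hball : ∀ r : ℝ, ∃ K : ℝ, ∀ x ∈ closedBall (0 : Fin n → ℝ) r, g x ^ 2 ≤ K * f x := by
    intro r
    refine (isCompact_closedBall (0 : Fin n → ℝ) r).induction_on
      (p := fun s => ∃ K : ℝ, ∀ x ∈ s, g x ^ 2 ≤ K * f x) ⟨0, by simp⟩ ?_ ?_ ?_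
    · rintro s t hst ⟨K, hK⟩
      exact ⟨K, fun x hx => hK x (hst hx)⟩
    · rintro s t ⟨K, hK⟩ ⟨L, hL⟩
      refine ⟨max K L, fun x hx => ?_⟩
      rcases hx with hx | hx
      · exact (hK x hx).trans (mul_le_mul_of_nonneg_right (le_max_left _ _) (hf x))
      · exact (hL x hx).trans (mul_le_mul_of_nonneg_right (le_max_right _ _) (hf x))
    · intro p _
      obtain ⟨K, -, hev⟩ := hloc p
      exact ⟨{x | g x ^ 2 ≤ K * f x}, mem_nhdsWithin_of_mem_nhds hev, K, fun x hx => hx⟩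
  choose K hK using hball
  obtain ⟨u, hu, hpos, hgr⟩ := growth (n := n) fun j => K (j + 2)
  refine ⟨u, hu, hpos, fun x => ?_⟩
  have hs : 0 ≤ ∑ i, x i ^ 2 := Finset.sum_nonneg fun i _ => sq_nonneg _
  set j := ⌊∑ i, x i ^ 2⌋₊ with hj
  have hlt : ∑ i, x i ^ 2 < j + 1 := Nat.lt_floor_add_one _
  have hx : x ∈ closedBall (0 : Fin n → ℝ) (j + 2) := by
    rw [mem_closedBall_zero_iff, pi_norm_le_iff_of_nonneg (by positivity)]
    intro i
    have h1 : x i ^ 2 ≤ ∑ i, x i ^ 2 :=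
      Finset.single_le_sum (f := fun i => x i ^ 2) (fun i _ => sq_nonneg _) (Finset.mem_univ i)
    rw [Real.norm_eq_abs]
    refine abs_le_of_sq_le_sq ?_ (by positivity)
    have : (0 : ℝ) ≤ j := by positivity
    nlinarith
  refine (hK _ x hx).trans ?_
  rw [mul_comm]
  exact mul_le_mul_of_nonneg_left (hgr j x (Nat.floor_le hs)) (hf x)
end

end Crespina

open Crespina Filter Topology in
theorem stmt_13 (n : ℕ) (a : Ideal (ORn n)) :
    ∃ f ∈ saturation n (a : Set (ORn n)),
      (∀ x : Fin n → ℝ, 0 ≤ (f : (Fin n → ℝ) → ℝ) x) ∧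
      {x : Fin n → ℝ | (f : (Fin n → ℝ) → ℝ) x = 0} = ZR n a ∧
      ∀ g ∈ saturation n (a : Set (ORn n)),
        ∃ u : ORn n, (∀ x : Fin n → ℝ, 0 < (u : (Fin n → ℝ) → ℝ) x) ∧
          ∀ x : Fin n → ℝ,
            ((g : (Fin n → ℝ) → ℝ) x) ^ 2 ≤
              (f : (Fin n → ℝ) → ℝ) x * (u : (Fin n → ℝ) → ℝ) x := by
  classical
  set S : Set ((Fin n → ℝ) → ℝ) := {h | ∃ hh : h ∈ ORn n, (⟨h, hh⟩ : ORn n) ∈ a} with hSdef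
  have hS : ∀ h ∈ S, ∀ x, AnalyticAt ℝ h x := fun h ⟨hh, _⟩ => hh
  have hadd : ∀ g ∈ S, ∀ h ∈ S, (fun x => g x + h x) ∈ S := fun g ⟨hg, hg'⟩ h ⟨hh, hh'⟩ =>
    ⟨(ORn n).add_mem hg hh, a.add_mem hg' hh'⟩
  have hmul : ∀ u : (Fin n → ℝ) → ℝ, (∀ x, AnalyticAt ℝ u x) → ∀ h ∈ S,
      (fun x => u x * h x) ∈ S := fun u hu h ⟨hh, hh'⟩ =>
    ⟨(ORn n).mul_mem (x := u) hu hh, a.mul_mem_left ⟨u, hu⟩ hh'⟩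
  obtain ⟨G, hmono, hGS, hgen, hdom⟩ := gen_seq hS hadd hmul
  obtain ⟨ε, hε, hsum, hcomb⟩ := exists_weights hmono (fun k b hb => hS b (hGS k b hb)) hdom
  set f : (Fin n → ℝ) → ℝ := fun x => ∑' k, ε k * ∑ b ∈ G k, b x ^ 2 with hf
  have hnn : ∀ x k, 0 ≤ ε k * ∑ b ∈ G k, b x ^ 2 := fun x k =>
    mul_nonneg (hε k).le (Finset.sum_nonneg fun b _ => sq_nonneg _)
  have hf0 : ∀ x, 0 ≤ f x := fun x => tsum_nonneg (hnn x)
  have hopen : ∀ j : ℕ, IsOpen {x : Fin n → ℝ | ∀ i, |x i| < (j : ℝ)} := by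
    intro j
    rw [Set.ofPred_forall]
    exact isOpen_iInter_of_finite fun i => isOpen_lt (by fun_prop) continuous_const
  have hcube : ∀ x : Fin n → ℝ, ∃ j : ℕ, ∀ i, |x i| < (j : ℝ) := by
    intro x
    obtain ⟨j, hj⟩ := exists_nat_gt ‖x‖
    exact ⟨j, fun i => (norm_le_pi_norm x i).trans_lt hj⟩
  have hfan : ∀ x, AnalyticAt ℝ f x := by
    intro x
    obtain ⟨j, hj⟩ := hcube x
    obtain ⟨c, hc, hfc⟩ := hcomb j
    have h1 : AnalyticAt ℝ (fun x => ∑ b ∈ G j, c b x * b x) x :=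
      Finset.analyticAt_fun_sum _ fun b hb => (hc b hb x hj).mul (hS b (hGS j b hb) x)
    refine h1.congr ?_
    filter_upwards [(hopen j).mem_nhds hj] with y hy
    exact (hfc y hy).symm
  have hSbound : ∀ h ∈ S, ∀ p, ∃ K : ℝ, 0 ≤ K ∧ ∀ᶠ x in 𝓝 p, h x ^ 2 ≤ K * f x := by
    intro h hh p
    obtain ⟨j, hj⟩ := hcube p
    obtain ⟨c, hc, hhc⟩ := hgen j h hh
    have hle : ∀ x : Fin n → ℝ, (∀ i, |x i| < (j : ℝ)) → emb x ∈ KC n (j + 1) := fun x hx =>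
      emb_mem_KC.2 fun i => (hx i).le.trans (by linarith)
    have hb : ∀ b ∈ G j, ∃ K : ℝ, 0 ≤ K ∧ ∀ᶠ x in 𝓝 p, b x ^ 2 ≤ K * f x := by
      intro b hb
      refine ⟨(ε j)⁻¹, (inv_pos.2 (hε j)).le, Filter.Eventually.of_forall fun x => ?_⟩
      have h1 : ε j * ∑ b ∈ G j, b x ^ 2 ≤ f x := (hsum x).le_tsum j fun l _ => hnn x l
      have h2 : b x ^ 2 ≤ ∑ b ∈ G j, b x ^ 2 :=
        Finset.single_le_sum (f := fun b : (Fin n → ℝ) → ℝ => b x ^ 2)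
          (fun _ _ => sq_nonneg _) hb
      rw [inv_mul_eq_div, le_div_iff₀ (hε j), mul_comm]
      exact (mul_le_mul_of_nonneg_left h2 (hε j).le).trans h1
    obtain ⟨K, hK, hev⟩ := sq_bound_sum (G j) (c := fun b x => (c b (emb x)).re)
      (A := fun b x => b x) (fun b _ => (analyticAt_reEmb (hc b _ (hle p hj))).continuousAt) hb
    refine ⟨K, hK, ?_⟩
    filter_upwards [hev, (hopen j).mem_nhds hj] with x hx hxj
    have h3 : h x = ∑ b ∈ G j, (c b (emb x)).re * b x := by
      have := congrArg Complex.re (hhc x (hle x hxj))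
      simpa only [Complex.ofReal_re, Complex.re_sum, Complex.re_mul_ofReal] using this
    rw [h3]
    exact hx
  refine ⟨⟨f, hfan⟩, fun x => ?_, hf0, ?_, fun g hg => ?_⟩
  · obtain ⟨j, hj⟩ := hcube x
    obtain ⟨c, hc, hfc⟩ := hcomb j
    refine ⟨_, hopen j, hj, (G j).card,
      fun i => ⟨((G j).equivFin.symm i : (Fin n → ℝ) → ℝ),
        hS _ (hGS j _ ((G j).equivFin.symm i).2)⟩,
      fun i => c ((G j).equivFin.symm i), fun i => ?_, fun i y hy => ?_, fun y hy => ?_⟩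
    · exact (hGS j _ ((G j).equivFin.symm i).2).2
    · exact hc _ ((G j).equivFin.symm i).2 y hy
    · have h1 := hfc y hy
      rw [← Finset.sum_coe_sort] at h1
      refine h1.trans ?_
      exact (Equiv.sum_comp (G j).equivFin.symm
        fun b => c b.1 y * (b : (Fin n → ℝ) → ℝ) y).symm
  · ext x
    refine ⟨fun hx h hh => ?_, fun hx => ?_⟩
    · obtain ⟨K, -, hev⟩ := hSbound h ⟨h.2, hh⟩ x
      have h1 := hev.self_of_nhds
      have hx' : f x = 0 := hx
      rw [hx', mul_zero] at h1
      exact pow_eq_zero_iff two_ne_zero |>.1 (le_antisymm h1 (sq_nonneg _))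
    · have h1 : ∀ k, ε k * ∑ b ∈ G k, b x ^ 2 = 0 := fun k => by
        rw [Finset.sum_eq_zero, mul_zero]
        intro b hb
        obtain ⟨hb1, hb2⟩ := hGS k b hb
        have h2 : b x = 0 := hx _ hb2
        rw [h2]
        norm_num
      change f x = 0
      simp only [hf, h1, tsum_zero]
  · obtain ⟨u, hu, hpos, hle⟩ := global_bound (f := f) (g := g) hf0 fun p => by
      obtain ⟨U, hU, hp, r, A, c, hA, hc, hgc⟩ := hg p
      obtain ⟨K, hK, hev⟩ := sq_bound_sum Finset.univ (c := c)
        (A := fun i x => (A i : (Fin n → ℝ) → ℝ) x) (fun i _ => (hc i p hp).continuousAt)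
        (fun i _ => hSbound _ ⟨(A i).2, hA i⟩ p)
      refine ⟨K, hK, ?_⟩
      filter_upwards [hev, hU.mem_nhds hp] with x hx hxU
      rw [hgc x hxU]
      exact hx
    exact ⟨⟨u, hu⟩, hpos, hle⟩
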